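/- Let β>0 and let V satisfy conditions C1–C3 with equilibrium density ρ. For t∈[0,1] set P_t(ζ) = tP(ζ) + (1−t) and g_t(z) = t·g(z) + ((1−t)/2)(z − X^{1/2}(z)), and let d>0 be such that the closed disk D̄(0,2+3d) ⊆ D, V is analytic on D̄(0,2+3d), and P_t has no zeros in D̄(0,2+3d) for every t∈[0,1]. Let Q_{n,β}^{(0)} denote the normalizing constant for the Gaussian potential V₀(λ)=λ²/2. Then, as n→∞, log Q_{n,β} = log Q_{n,β}^{(0)} + n²·(β/2)·E_V + n²·(3β/8) + n·(1 − β/2)·∫_0^1 (2πi)^{-2} ∮_{|z|=2+2d} ((V(z) − z²/2)/X^{1/2}(z)) ( ∮_{|ζ|=2+d} g_t'(ζ)/(P_t(ζ)(z−ζ)) dζ ) dz dt + O(1), i.e. the difference of the two sides is bounded uniformly in n; here E_V = ∫∫ log|λ−μ| ρ(λ)ρ(μ) dλdμ − ∫ V(λ)ρ(λ)dλ, and circle contours are traversed counterclockwise. -/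

import Mathlib

/-!
The proof interpolates between the Gaussian potential `V0 x = x² / 2` and `V`. The potentials
`Vt V t = t V + (1 - t) V0` have equilibrium density `rt ρ t = t ρ + (1 - t) scd`, with `scd` the
semicircle density, because the equilibrium conditions are linear in the pair (potential, density).
Since `∂_t log Q = -(nβ/2) E_t Σ (V - V0)(x_i)`, it suffices to know the mean of the analytic linear
statistic `Σ (V - V0)(x_i)` up to `O(1/n)`, uniformly in `t` (`lin_exp`). The leading term `n ∫ (V - V0) drt`
integrates to the energies `E_V + 3/4` (`energy_diff`), the next one to the double contour integral.

*Confinement.* By the growth of the potentials, restricting every point to a large box `[-R, R]` changes the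
partition functions by a factor between `1` and `2` (`trunc`), so one may work with the Gibbs measure `Gm`
on the box. The idea is to compare a configuration with the one whose `i`-th point is resampled from the
equilibrium measure (`rl_point`, `rl_set`).

*Rough bounds.* A Jensen lower bound for the partition function (`Qb_lower`) and a pointwise upper bound for
the weight (`sp_le`) show that, outside a set of exponentially small probability, the regularized logarithmic
energy of the fluctuation `Σ δ_{x_i} - n r` is `O(n log n)` (`energy_le`). The regularized logarithm is an
integral of Poisson kernels, which are positive definite by the Fourier transform, so this energy controls
the Stieltjes transform `mz` of the fluctuation off the real axis (`cauchy_sq_le_energy`). With the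
resampling argument this also confines all points to `[-2-d, 2+d]` with overwhelming probability (`good_set`),
and `mz` is then `O(√(n log n))` on circles around that interval (`mz_circle`).

*Loop equation.* The change of variables `x_i ↦ x_i + s h(x_i)` shows that the functional `Lf`, the
first-order change of the log-weight, has mean zero (`Field.loop`) and exponential moments bounded for
`|s| = 1/n` (`Field.expMoment`). For `z` off the interval take for `h` the field
`hz P z ζ = 1 / (Xhalf z · P ζ · (z - ζ))`, cut off far from `[-2-d, 2+d]` (`field_exists`). As the equilibrium
measure satisfies `2 ∫ (z - y)⁻¹ dr(y) = V'(z) - P(z) Xhalf(z)`, a contour computation (`Ens.contour_id`)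
turns `Lf` into `(1 - β/2) Σ h'(x_i) + (β/2) ((2πi)⁻¹ ∮ h m² - n m(z))`, where `m = mz`. This is the master
identity: the linear part of the loop functional has been inverted explicitly.

*Bootstrap.* Using the rough bound for the quadratic term in the identity gives fourth moments of `m` of order
`log⁴ n` (`step1`); using these on a larger circle gives bounded second moments (`step2`); taking the mean of
the identity on a still larger circle then gives `E m(z) = (2/β - 1) ∫ hz' dr + O(1/n)` (`step3`). Cauchy's
formula transfers this to linear statistics (`lin_stat`, `lin_exp`), and an integration by parts on the circle
identifies `∫ hz' dr` with the inner contour integral of the theorem (`Ens.hz_contour`). All constants depend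
only on the uniform data of the interpolation collected in `Ens` and `build`, and the finitely many small `n`
are absorbed into the final constant.
-/

open MeasureTheory Metric

/-- Unnormalized joint eigenvalue density of the β-ensemble with potential `V`. -/
noncomputable def betaWeight (β : ℝ) (V : ℝ → ℝ) (n : ℕ) (Λ : Fin n → ℝ) : ℝ :=
  (∏ i, Real.exp (-((n : ℝ) * β * V (Λ i)) / 2)) *
    ∏ i, ∏ j ∈ Finset.Ioi i, |Λ i - Λ j| ^ β

/-- The partition function `Q_{n,β}`. -/
noncomputable def partitionFn (β : ℝ) (V : ℝ → ℝ) (n : ℕ) : ℝ :=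
  ∫ Λ : Fin n → ℝ, betaWeight β V n Λ

/-- `X^{1/2}(z) = √(z-2)·√(z+2)` with principal branches. -/
noncomputable def Xhalf (z : ℂ) : ℂ := (z - 2) ^ ((1:ℂ)/2) * (z + 2) ^ ((1:ℂ)/2)

/-- Stieltjes transform `g(z) = ∫_{-2}^2 ρ(λ)/(z-λ) dλ` of the equilibrium density. -/
noncomputable def stieltjes (ρ : ℝ → ℝ) (z : ℂ) : ℂ :=
  ∫ l in (-2:ℝ)..2, (ρ l : ℂ) / (z - l)

/-- The interpolating Stieltjes transform `g_t = t·g + (1-t)/2·(z - X^{1/2}(z))`. -/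
noncomputable def stieltjesT (ρ : ℝ → ℝ) (t : ℝ) (z : ℂ) : ℂ :=
  (t : ℂ) * stieltjes ρ z + (((1 - t) / 2 : ℝ) : ℂ) * (z - Xhalf z)

/-- Conditions C1–C3. -/
structure EquilC13 (V : ℝ → ℝ) (D : Set ℂ) (ρ : ℝ → ℝ) (P : ℂ → ℂ) : Prop where
  D_open : IsOpen D
  D_supset : ∀ x : ℝ, x ∈ Set.Icc (-2:ℝ) 2 → (x : ℂ) ∈ D
  ρ_nonneg : ∀ x, 0 ≤ ρ x
  ρ_int : ∫ x, ρ x = 1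
  ρ_supp : ∀ x, x ∉ Set.Icc (-2:ℝ) 2 → ρ x = 0
  P_anal : DifferentiableOn ℂ P D
  P_pos : ∃ c > 0, ∀ x : ℝ, x ∈ Set.Icc (-2:ℝ) 2 → (P x).im = 0 ∧ c ≤ (P x).re
  ρ_eq : ∀ x ∈ Set.Icc (-2:ℝ) 2,
    ρ x = (1 / (2 * Real.pi)) * (P x).re * Real.sqrt (4 - x ^ 2)
  V_anal : ∃ Vc : ℂ → ℂ, DifferentiableOn ℂ Vc D ∧ ∀ x : ℝ, (x : ℂ) ∈ D → Vc x = V x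
  equil : ∃ c : ℝ, (∀ x ∈ Set.Icc (-2:ℝ) 2,
      2 * (∫ μ, Real.log |x - μ| * ρ μ) - V x = c) ∧
    ∀ x, x ∉ Set.Icc (-2:ℝ) 2 → 2 * (∫ μ, Real.log |x - μ| * ρ μ) - V x < c

/-- The equilibrium energy `E_V`. -/
noncomputable def equilEnergy (V : ℝ → ℝ) (ρ : ℝ → ℝ) : ℝ :=
  (∫ l in (-2:ℝ)..2, ∫ m in (-2:ℝ)..2, Real.log |l - m| * ρ l * ρ m)
    - ∫ l in (-2:ℝ)..2, V l * ρ l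

/-! ### Logarithmic potentials of measures with bounded density on `[-2,2]` -/

namespace BetaEns

/-- `r` is a probability measure carried by `[-2,2]` whose density is at most `b`. -/
structure Dens (b : ℝ) (r : Measure ℝ) : Prop where
  prob : IsProbabilityMeasure r
  supp : r (Set.Icc (-2) 2)ᶜ = 0
  le : r ≤ ENNReal.ofReal b • volume

/-- Logarithmic potential of `r`. -/
noncomputable def U (r : Measure ℝ) (x : ℝ) : ℝ := ∫ y, Real.log |x - y| ∂r

/-- Regularized logarithm `½ log (u² + η²)`. -/
noncomputable def lg (η u : ℝ) : ℝ := Real.log (u ^ 2 + η ^ 2) / 2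

/-- Regularized logarithmic potential of `r`. -/
noncomputable def Ue (r : Measure ℝ) (η x : ℝ) : ℝ := ∫ y, lg η (x - y) ∂r

variable {b : ℝ} {r : Measure ℝ}

lemma Dens.null (hr : Dens b r) {s : Set ℝ} (hs : volume s = 0) : r s = 0 := by
  have h := hr.le s
  simp only [Measure.smul_apply, smul_eq_mul, hs, mul_zero] at h
  exact nonpos_iff_eq_zero.1 h

lemma Dens.ae_mem (hr : Dens b r) : ∀ᵐ y ∂r, y ∈ Set.Icc (-2 : ℝ) 2 := by
  rw [ae_iff]; exact hr.supp

lemma Dens.ae_ne (hr : Dens b r) (x : ℝ) : ∀ᵐ y ∂r, y ≠ x := by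
  rw [ae_iff]
  simpa using hr.null (s := {x}) (by simp)

lemma Dens.integrable_of_bdd {E : Type*} [NormedAddCommGroup E] (hr : Dens b r) {f : ℝ → E}
    (hf : AEStronglyMeasurable f r) {C : ℝ} (hC : ∀ y ∈ Set.Icc (-2 : ℝ) 2, ‖f y‖ ≤ C) :
    Integrable f r := by
  have := hr.prob
  refine Integrable.mono' (integrable_const C) hf ?_
  filter_upwards [hr.ae_mem] with y hy using hC y hy

lemma Dens.integrable_of_cont {E : Type*} [NormedAddCommGroup E] (hr : Dens b r) {f : ℝ → E}
    (hf : ContinuousOn f (Set.Icc (-2) 2)) :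
    Integrable f r := by
  have := hr.prob
  have : r.restrict (Set.Icc (-2) 2) = r := Measure.restrict_eq_self_of_ae_mem hr.ae_mem
  rw [← this]
  exact hf.integrableOn_compact isCompact_Icc

lemma Dens.norm_integral_le {E : Type*} [NormedAddCommGroup E] [NormedSpace ℝ E] (hr : Dens b r)
    {f : ℝ → E} {C : ℝ} (hC : ∀ y ∈ Set.Icc (-2 : ℝ) 2, ‖f y‖ ≤ C) :
    ‖∫ y, f y ∂r‖ ≤ C := by
  have := hr.prob
  have := norm_integral_le_of_norm_le_const (μ := r) (f := f) (C := C)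
    (by filter_upwards [hr.ae_mem] with y hy using hC y hy)
  simpa using this

lemma Dens.integrable_of_vol {f : ℝ → ℝ} (hr : Dens b r) (hf : Integrable f) :
    Integrable f r := by
  exact (hf.smul_measure (c := ENNReal.ofReal b) ENNReal.ofReal_ne_top).mono_measure hr.le

lemma Dens.integral_le_vol {f : ℝ → ℝ} (hb : 0 ≤ b) (hr : Dens b r) (hf : Integrable f)
    (h0 : ∀ x, 0 ≤ f x) :
    ∫ y, f y ∂r ≤ b * ∫ y, f y := by
  have h := integral_mono_measure (μ := r) (ν := ENNReal.ofReal b • volume) hr.le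
    (Filter.Eventually.of_forall h0) (hf.smul_measure (c := ENNReal.ofReal b) ENNReal.ofReal_ne_top)
  rw [integral_smul_measure, ENNReal.toReal_ofReal hb] at h
  simpa using h

/-- `|u|^{-1/2}` cut off at `|u| < 1`. -/
noncomputable def sing (u : ℝ) : ℝ := Set.indicator (Set.Ioc (-1:ℝ) 1) (fun u => |u| ^ (-(1/2):ℝ)) u

lemma sing_nonneg (u : ℝ) : 0 ≤ sing u := by
  unfold sing
  apply Set.indicator_nonneg
  intro x _
  positivity

lemma sing_intervalIntegrable : IntervalIntegrable (fun u : ℝ => |u| ^ (-(1/2):ℝ)) volume (-1) 1 := by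
  have h1 : IntervalIntegrable (fun u : ℝ => |u| ^ (-(1/2):ℝ)) volume 0 1 := by
    have := intervalIntegral.intervalIntegrable_rpow' (a := 0) (b := 1) (r := (-(1/2):ℝ)) (by norm_num)
    refine this.congr ?_
    intro x hx
    rw [Set.uIoc_of_le zero_le_one] at hx
    simp only
    rw [abs_of_pos hx.1]
  have h2 : IntervalIntegrable (fun u : ℝ => |u| ^ (-(1/2):ℝ)) volume (-1) 0 := by
    have := ((IntervalIntegrable.iff_comp_neg (by simp)).1 h1).symm
    simpa using this
  exact h2.trans h1

lemma sing_integrable : Integrable sing := by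
  have h := (intervalIntegrable_iff_integrableOn_Ioc_of_le (by norm_num : (-1:ℝ) ≤ 1)).1
    sing_intervalIntegrable
  exact h.integrable_indicator measurableSet_Ioc

lemma rpow_le_sing {u : ℝ} : |u| ^ (-(1/2):ℝ) ≤ 1 + sing u := by
  unfold sing
  by_cases h : u ∈ Set.Ioc (-1:ℝ) 1
  · rw [Set.indicator_of_mem h]; linarith
  · rw [Set.indicator_of_notMem h]
    have : 1 ≤ |u| := by
      by_contra hc
      push Not at hc
      rw [abs_lt] at hc
      exact h ⟨hc.1, hc.2.le⟩
    simpa using Real.rpow_le_one_of_one_le_of_nonpos this (by norm_num)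

/-- `C` in the bound `∫ |x-y|^{-1/2} dr(y) ≤ C`. -/
noncomputable def csing (b : ℝ) : ℝ := 1 + b * ∫ u, sing u

lemma csing_pos (hb : 0 ≤ b) : 0 < csing b := by
  unfold csing
  have := integral_nonneg (μ := volume) (f := sing) (fun u => sing_nonneg u)
  positivity

lemma Dens.rpow_int (hb : 0 ≤ b) (hr : Dens b r) (x : ℝ) :
    Integrable (fun y => |x - y| ^ (-(1/2):ℝ)) r ∧ ∫ y, |x - y| ^ (-(1/2):ℝ) ∂r ≤ csing b := by
  have := hr.prob
  have h1 : Integrable (fun y => sing (x - y)) := sing_integrable.comp_sub_left x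
  have h2 : Integrable (fun y => 1 + sing (x - y)) r :=
    (integrable_const 1).add (hr.integrable_of_vol h1)
  have h3 : Integrable (fun y => |x - y| ^ (-(1/2):ℝ)) r := by
    refine h2.mono' (Measurable.pow_const (by fun_prop) _).aestronglyMeasurable (Filter.Eventually.of_forall fun y => ?_)
    rw [Real.norm_of_nonneg (by positivity)]
    exact rpow_le_sing
  refine ⟨h3, ?_⟩
  calc ∫ y, |x - y| ^ (-(1/2):ℝ) ∂r ≤ ∫ y, (1 + sing (x - y)) ∂r :=
        integral_mono h3 h2 (fun y => rpow_le_sing)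
    _ = 1 + ∫ y, sing (x - y) ∂r := by
        rw [integral_add (integrable_const 1) (hr.integrable_of_vol h1)]; simp
    _ ≤ 1 + b * ∫ y, sing (x - y) := by
        gcongr
        exact hr.integral_le_vol hb h1 (fun y => sing_nonneg _)
    _ = csing b := by
        rw [integral_sub_left_eq_self (fun u => sing u) volume x]; rfl

lemma neg_log_le {u : ℝ} (hu : u ≠ 0) : -Real.log |u| ≤ 2 * |u| ^ (-(1/2):ℝ) := by
  have hp : 0 < |u| := abs_pos.2 hu
  have h := Real.log_le_self (x := |u| ^ (-(1/2):ℝ)) (by positivity)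
  rw [Real.log_rpow hp] at h
  linarith

lemma abs_log_le (u : ℝ) : abs (Real.log |u|) ≤ 2 * |u| ^ (-(1/2):ℝ) + |u| := by
  by_cases hu : u = 0
  · subst hu; simp
  · have h1 := neg_log_le hu
    have h2 := Real.log_le_self (abs_nonneg u)
    have h3 : 0 ≤ |u| ^ (-(1/2):ℝ) := by positivity
    have h4 := abs_nonneg u
    rw [abs_le]; constructor <;> linarith

lemma lg_sub_le {η u : ℝ} (hη : 0 < η) (hu : u ≠ 0) :
    0 ≤ lg η u - Real.log |u| ∧ lg η u - Real.log |u| ≤ 2 * Real.sqrt η * |u| ^ (-(1/2):ℝ) := by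
  have hp : 0 < |u| := abs_pos.2 hu
  have h2 : 0 < u ^ 2 := by positivity
  have e1 : lg η u - Real.log |u| = Real.log (1 + (η / |u|) ^ 2) / 2 := by
    unfold lg
    have : Real.log |u| = Real.log (u ^ 2) / 2 := by
      rw [← sq_abs, Real.log_pow]; push_cast; ring
    rw [this, ← sub_div, ← Real.log_div (by positivity) (by positivity)]
    congr 2
    rw [div_pow, sq_abs]; field_simp
  rw [e1]
  set v := η / |u| with hv
  have hvp : 0 < v := by positivity
  refine ⟨by have := Real.log_nonneg (x := 1 + v ^ 2) (by nlinarith); linarith, ?_⟩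
  have e2 : Real.sqrt η * |u| ^ (-(1/2):ℝ) = Real.sqrt v := by
    rw [hv, Real.sqrt_div hη.le, Real.rpow_neg hp.le, Real.sqrt_eq_rpow |u|]
    rfl
  rw [mul_assoc, e2]
  have h4 : 1 + v ^ 2 ≤ (1 + Real.sqrt v) ^ 4 := by
    have hs : Real.sqrt v ^ 2 = v := Real.sq_sqrt hvp.le
    have hs0 := Real.sqrt_nonneg v
    set w := Real.sqrt v
    rw [← hs]
    nlinarith [pow_nonneg hs0 2, pow_nonneg hs0 3]
  have h5 : Real.log (1 + v ^ 2) ≤ 4 * Real.log (1 + Real.sqrt v) := by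
    have := Real.log_le_log (by positivity) h4
    rw [Real.log_pow] at this
    exact_mod_cast this
  have h6 := Real.log_le_sub_one_of_pos (x := 1 + Real.sqrt v) (by positivity)
  linarith

lemma Dens.log_integrable (hb : 0 ≤ b) (hr : Dens b r) (x : ℝ) :
    Integrable (fun y => Real.log |x - y|) r := by
  have := hr.prob
  have h1 := (hr.rpow_int hb x).1.const_mul 2
  have h2 : Integrable (fun y => |x - y|) r := hr.integrable_of_cont (by fun_prop)
  refine (h1.add h2).mono' ?_ (Filter.Eventually.of_forall fun y => ?_)
  · exact (Real.measurable_log.comp (by fun_prop)).aestronglyMeasurable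
  · exact abs_log_le (x - y)

lemma lg_continuous {η : ℝ} (hη : 0 < η) : Continuous (lg η) := by
  unfold lg
  exact (Continuous.log (by fun_prop) (fun u => by positivity)).div_const 2

lemma Dens.lg_integrable (hr : Dens b r) {η : ℝ} (hη : 0 < η) (x : ℝ) :
    Integrable (fun y => lg η (x - y)) r :=
  hr.integrable_of_cont ((lg_continuous hη).comp (by fun_prop)).continuousOn

lemma Dens.U_le_Ue (hb : 0 ≤ b) (hr : Dens b r) {η : ℝ} (hη : 0 < η) (x : ℝ) :
    U r x ≤ Ue r η x := by
  refine integral_mono_ae (hr.log_integrable hb x) (hr.lg_integrable hη x) ?_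
  filter_upwards [hr.ae_ne x] with y hy
  have := (lg_sub_le hη (sub_ne_zero.2 hy.symm)).1
  linarith

lemma Dens.Ue_le_U (hb : 0 ≤ b) (hr : Dens b r) {η : ℝ} (hη : 0 < η) (x : ℝ) :
    Ue r η x ≤ U r x + 2 * csing b * Real.sqrt η := by
  have h1 := hr.rpow_int hb x
  have h2 : Ue r η x ≤ ∫ y, (Real.log |x - y| + 2 * Real.sqrt η * |x - y| ^ (-(1/2):ℝ)) ∂r := by
    refine integral_mono_ae (hr.lg_integrable hη x)
      ((hr.log_integrable hb x).add (h1.1.const_mul _)) ?_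
    filter_upwards [hr.ae_ne x] with y hy
    have := (lg_sub_le hη (sub_ne_zero.2 hy.symm)).2
    linarith
  rw [integral_add (hr.log_integrable hb x) (h1.1.const_mul _), integral_const_mul] at h2
  have h3 := mul_le_mul_of_nonneg_left h1.2 (show 0 ≤ 2 * Real.sqrt η by positivity)
  unfold U
  linarith

lemma Dens.Ue_continuous (hr : Dens b r) {η : ℝ} (hη : 0 < η) : Continuous (Ue r η) := by
  have := hr.prob
  have : ∀ x, Ue r η x = ∫ y in Set.Icc (-2:ℝ) 2, lg η (x - y) ∂r := by
    intro x
    rw [Measure.restrict_eq_self_of_ae_mem hr.ae_mem]; rfl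
  rw [funext this]
  exact continuous_parametric_integral_of_continuous
    (f := fun x y => lg η (x - y)) ((lg_continuous hη).comp (by fun_prop)) isCompact_Icc

lemma Dens.U_continuous (hb : 0 ≤ b) (hr : Dens b r) : Continuous (U r) := by
  have h : TendstoUniformly (fun (η : ℝ) x => Ue r η x) (U r) (nhdsWithin 0 (Set.Ioi 0)) := by
    rw [Metric.tendstoUniformly_iff]
    intro ε hε
    have h1 : Filter.Tendsto (fun η : ℝ => 2 * csing b * Real.sqrt η) (nhdsWithin 0 (Set.Ioi 0)) (nhds 0) := by
      have : Continuous (fun η : ℝ => 2 * csing b * Real.sqrt η) := by fun_prop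
      have := this.tendsto 0
      simp only [Real.sqrt_zero, mul_zero] at this
      exact this.mono_left nhdsWithin_le_nhds
    filter_upwards [h1.eventually (gt_mem_nhds hε), self_mem_nhdsWithin] with η h2 h3 x
    have := hr.U_le_Ue hb h3 x
    have := hr.Ue_le_U hb h3 x
    rw [Real.dist_eq, abs_lt]
    constructor <;> linarith
  refine h.continuous (Filter.Eventually.frequently ?_)
  filter_upwards [self_mem_nhdsWithin] with η h3
  exact hr.Ue_continuous h3

lemma Dens.U_lower (hb : 0 ≤ b) (hr : Dens b r) (x : ℝ) : -(2 * csing b) ≤ U r x := by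
  have h1 := hr.rpow_int hb x
  have h2 : ∫ y, (-2) * |x - y| ^ (-(1/2):ℝ) ∂r ≤ U r x := by
    refine integral_mono_ae (h1.1.const_mul _) (hr.log_integrable hb x) ?_
    filter_upwards [hr.ae_ne x] with y hy
    have := neg_log_le (sub_ne_zero.2 hy.symm)
    linarith
  rw [integral_const_mul] at h2
  linarith [h1.2]

end BetaEns

/-! ### Positive definiteness of the regularized logarithm -/

namespace BetaEns

/-- `∬ K(x-y) dσ(x) dτ(y)`. -/
noncomputable def bil (σ τ : Measure ℝ) (K : ℝ → ℝ) : ℝ := ∫ p, K (p.1 - p.2) ∂(σ.prod τ)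

/-- The quadratic form of `K(x-y)` on the signed measure `μ - ν`. -/
noncomputable def en (μ ν : Measure ℝ) (K : ℝ → ℝ) : ℝ :=
  bil μ μ K - bil μ ν K - bil ν μ K + bil ν ν K

/-- Cosine transform of a measure. -/
noncomputable def Cm (σ : Measure ℝ) (k : ℝ) : ℝ := ∫ x, Real.cos (k * x) ∂σ
/-- Sine transform of a measure. -/
noncomputable def Sm (σ : Measure ℝ) (k : ℝ) : ℝ := ∫ x, Real.sin (k * x) ∂σ

/-- The Poisson kernel (without the factor `1/π`). -/
noncomputable def pk (s u : ℝ) : ℝ := s / (u ^ 2 + s ^ 2)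

lemma cexp_laplace {z : ℂ} (hz : 0 < z.im) :
    IntegrableOn (fun k : ℝ => Complex.exp (Complex.I * z * k)) (Set.Ioi 0) ∧
    ∫ k : ℝ in Set.Ioi 0, Complex.exp (Complex.I * z * k) = Complex.I / z := by
  have h : (Complex.I * z).re < 0 := by simp [hz]
  refine ⟨integrableOn_exp_mul_complex_Ioi h 0, ?_⟩
  rw [integral_exp_mul_complex_Ioi h 0]
  have : z ≠ 0 := by rintro rfl; simp at hz
  simp only [Complex.ofReal_zero, mul_zero, Complex.exp_zero]
  field_simp
  rw [Complex.I_sq]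

lemma pk_laplace {s : ℝ} (hs : 0 < s) (u : ℝ) :
    ∫ k : ℝ in Set.Ioi 0, Real.exp (-(s * k)) * Real.cos (k * u) = pk s u := by
  have h := cexp_laplace (z := ⟨u, s⟩) hs
  have h2 : ∀ k : ℝ, Real.exp (-(s * k)) * Real.cos (k * u)
      = (Complex.exp (Complex.I * ⟨u, s⟩ * k)).re := by
    intro k
    rw [Complex.exp_re]
    simp [mul_comm]
  simp_rw [h2]
  have h3 := integral_re h.1
  simp only [RCLike.re_eq_complex_re] at h3
  rw [h3, h.2, Complex.div_re]
  simp [pk, Complex.normSq_apply, sq]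

lemma exp_int {s : ℝ} (hs : 0 < s) : IntegrableOn (fun k : ℝ => Real.exp (-(s * k))) (Set.Ioi 0) := by
  simpa using integrableOn_exp_mul_Ioi (a := -s) (by linarith) 0

lemma exp_int_val {s : ℝ} (hs : 0 < s) : ∫ k : ℝ in Set.Ioi 0, Real.exp (-(s * k)) = 1 / s := by
  have := integral_exp_mul_Ioi (a := -s) (by linarith) 0
  simp only [neg_mul, mul_zero, Real.exp_zero] at this
  rw [this]; field_simp

lemma integral_four {α : Type*} [MeasurableSpace α] {m : Measure α} {f₁ f₂ f₃ f₄ : α → ℝ}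
    (h1 : Integrable f₁ m) (h2 : Integrable f₂ m) (h3 : Integrable f₃ m) (h4 : Integrable f₄ m) :
    Integrable (fun x => f₁ x - f₂ x - f₃ x + f₄ x) m ∧
    ∫ x, (f₁ x - f₂ x - f₃ x + f₄ x) ∂m = ∫ x, f₁ x ∂m - ∫ x, f₂ x ∂m - ∫ x, f₃ x ∂m + ∫ x, f₄ x ∂m := by
  have h12 : Integrable (fun x => f₁ x - f₂ x) m := h1.sub h2
  have h123 : Integrable (fun x => f₁ x - f₂ x - f₃ x) m := h12.sub h3
  exact ⟨h123.add h4, by rw [integral_add h123 h4, integral_sub h12 h3, integral_sub h1 h2]⟩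

/-- The transform `|(μ - ν)^(k)|²`. -/
noncomputable def Dm (μ ν : Measure ℝ) (k : ℝ) : ℝ := (Cm μ k - Cm ν k) ^ 2 + (Sm μ k - Sm ν k) ^ 2

lemma Dm_nonneg {μ ν : Measure ℝ} (k : ℝ) : 0 ≤ Dm μ ν k := by
  unfold Dm; positivity

section
variable {σ τ μ ν : Measure ℝ} [IsFiniteMeasure σ] [IsFiniteMeasure τ] [IsFiniteMeasure μ]
  [IsFiniteMeasure ν]

lemma bil_cos (k : ℝ) : bil σ τ (fun u => Real.cos (k * u)) = Cm σ k * Cm τ k + Sm σ k * Sm τ k := by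
  unfold bil Cm Sm
  simp_rw [mul_sub, Real.cos_sub]
  rw [integral_add, integral_prod_mul (fun x => Real.cos (k * x)) (fun x => Real.cos (k * x)),
    integral_prod_mul (fun x => Real.sin (k * x)) (fun x => Real.sin (k * x))]
  · refine Integrable.mono' (integrable_const 1) (by fun_prop) (Filter.Eventually.of_forall fun p => ?_)
    rw [norm_mul]
    exact mul_le_one₀ (Real.abs_cos_le_one _) (norm_nonneg _) (Real.abs_cos_le_one _)
  · refine Integrable.mono' (integrable_const 1) (by fun_prop) (Filter.Eventually.of_forall fun p => ?_)
    rw [norm_mul]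
    exact mul_le_one₀ (Real.abs_sin_le_one _) (norm_nonneg _) (Real.abs_sin_le_one _)

lemma bil_pk {s : ℝ} (hs : 0 < s) :
    IntegrableOn (fun k => Real.exp (-(s * k)) * (Cm σ k * Cm τ k + Sm σ k * Sm τ k)) (Set.Ioi 0) ∧
    bil σ τ (pk s) = ∫ k : ℝ in Set.Ioi 0, Real.exp (-(s * k)) * (Cm σ k * Cm τ k + Sm σ k * Sm τ k) := by
  have hInt : Integrable (Function.uncurry fun (p : ℝ × ℝ) (k : ℝ) =>
      Real.exp (-(s * k)) * Real.cos (k * (p.1 - p.2)))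
      ((σ.prod τ).prod (volume.restrict (Set.Ioi 0))) := by
    have h1 : Integrable (fun q : (ℝ × ℝ) × ℝ => Real.exp (-(s * q.2)))
        ((σ.prod τ).prod (volume.restrict (Set.Ioi 0))) := (exp_int hs).comp_snd _
    refine h1.mono' (by fun_prop) (Filter.Eventually.of_forall fun q => ?_)
    simp only [Function.uncurry]
    rw [norm_mul, Real.norm_of_nonneg (Real.exp_pos _).le]
    exact mul_le_of_le_one_right (Real.exp_pos _).le (Real.abs_cos_le_one _)
  have e : ∀ k : ℝ, Real.exp (-(s * k)) * (Cm σ k * Cm τ k + Sm σ k * Sm τ k)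
      = ∫ p : ℝ × ℝ, Real.exp (-(s * k)) * Real.cos (k * (p.1 - p.2)) ∂(σ.prod τ) := by
    intro k
    rw [integral_const_mul, ← bil_cos]; rfl
  simp_rw [e]
  refine ⟨hInt.integral_prod_right, ?_⟩
  rw [← integral_integral_swap hInt]
  unfold bil
  congr 1; ext p
  rw [pk_laplace hs]

/-- The Poisson kernel is positive definite: its energy is a Laplace transform of `|(μ - ν)^|²`. -/
lemma en_pk {s : ℝ} (hs : 0 < s) :
    IntegrableOn (fun k => Real.exp (-(s * k)) * Dm μ ν k) (Set.Ioi 0) ∧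
    en μ ν (pk s) = ∫ k : ℝ in Set.Ioi 0, Real.exp (-(s * k)) * Dm μ ν k := by
  have h1 := bil_pk (σ := μ) (τ := μ) hs
  have h2 := bil_pk (σ := μ) (τ := ν) hs
  have h3 := bil_pk (σ := ν) (τ := μ) hs
  have h4 := bil_pk (σ := ν) (τ := ν) hs
  have e : (fun k => Real.exp (-(s * k)) * Dm μ ν k) = fun k =>
      Real.exp (-(s * k)) * (Cm μ k * Cm μ k + Sm μ k * Sm μ k)
      - Real.exp (-(s * k)) * (Cm μ k * Cm ν k + Sm μ k * Sm ν k)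
      - Real.exp (-(s * k)) * (Cm ν k * Cm μ k + Sm ν k * Sm μ k)
      + Real.exp (-(s * k)) * (Cm ν k * Cm ν k + Sm ν k * Sm ν k) := by
    ext k; unfold Dm; ring
  rw [e]
  have h := integral_four h1.1 h2.1 h3.1 h4.1
  refine ⟨h.1, ?_⟩
  rw [h.2]
  unfold en
  rw [h1.2, h2.2, h3.2, h4.2]

lemma en_pk_nonneg {s : ℝ} (hs : 0 < s) : 0 ≤ en μ ν (pk s) := by
  rw [(en_pk hs).2]
  exact setIntegral_nonneg measurableSet_Ioi fun k _ => mul_nonneg (Real.exp_pos _).le (Dm_nonneg _)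

lemma en_pk_anti {s t : ℝ} (hs : 0 < s) (hst : s ≤ t) : en μ ν (pk t) ≤ en μ ν (pk s) := by
  rw [(en_pk hs).2, (en_pk (hs.trans_le hst)).2]
  refine setIntegral_mono_on (en_pk (hs.trans_le hst)).1 (en_pk hs).1 measurableSet_Ioi fun k hk => ?_
  refine mul_le_mul_of_nonneg_right ?_ (Dm_nonneg _)
  have : 0 < k := hk
  gcongr

lemma cauchy_laplace {z : ℂ} (hz : 0 < z.im) :
    IntegrableOn (fun k : ℝ => Complex.exp (Complex.I * z * k) * (Cm σ k - Complex.I * Sm σ k)) (Set.Ioi 0) ∧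
    ∫ x : ℝ, 1 / (z - x) ∂σ = -Complex.I *
      ∫ k : ℝ in Set.Ioi 0, Complex.exp (Complex.I * z * k) * (Cm σ k - Complex.I * Sm σ k) := by
  have hInt : Integrable (Function.uncurry fun (x : ℝ) (k : ℝ) =>
      Complex.exp (Complex.I * (z - x) * k))
      (σ.prod (volume.restrict (Set.Ioi 0))) := by
    have h1 : Integrable (fun q : ℝ × ℝ => Real.exp (-(z.im * q.2)))
        (σ.prod (volume.restrict (Set.Ioi 0))) := (exp_int hz).comp_snd _
    refine h1.mono' (by fun_prop) (Filter.Eventually.of_forall fun q => ?_)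
    simp only [Function.uncurry]
    rw [Complex.norm_exp]
    simp
  have e : ∀ k : ℝ, Complex.exp (Complex.I * z * k) * (Cm σ k - Complex.I * Sm σ k)
      = ∫ x : ℝ, Complex.exp (Complex.I * (z - x) * k) ∂σ := by
    intro k
    have : ∀ x : ℝ, Complex.exp (Complex.I * (z - x) * k) =
        Complex.exp (Complex.I * z * k) * (((Real.cos (k * x) : ℝ) : ℂ) - Complex.I * ((Real.sin (k * x) : ℝ) : ℂ)) := by
      intro x
      rw [show Complex.I * (z - x) * k = Complex.I * z * k + (-((k * x : ℝ)) : ℂ) * Complex.I by push_cast; ring,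
        Complex.exp_add, Complex.exp_mul_I]
      congr 1
      rw [Complex.cos_neg, Complex.sin_neg]
      push_cast; ring
    simp_rw [this]
    have hc : Integrable (fun x : ℝ => Real.cos (k * x)) σ :=
      Integrable.mono' (integrable_const (1:ℝ)) (by fun_prop)
        (Filter.Eventually.of_forall fun x => Real.abs_cos_le_one _)
    have hs : Integrable (fun x : ℝ => Real.sin (k * x)) σ :=
      Integrable.mono' (integrable_const (1:ℝ)) (by fun_prop)
        (Filter.Eventually.of_forall fun x => Real.abs_sin_le_one _)
    rw [integral_const_mul, integral_sub, integral_const_mul, integral_complex_ofReal,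
      integral_complex_ofReal]
    · rfl
    · exact hc.ofReal
    · exact hs.ofReal.const_mul _
  simp_rw [e]
  refine ⟨hInt.integral_prod_right, ?_⟩
  rw [← integral_integral_swap hInt, ← integral_const_mul]
  congr 1; ext x
  rw [(cexp_laplace (z := z - x) (by simpa using hz)).2]
  rw [← mul_div_assoc]; simp

/-- Cauchy–Schwarz in the Fourier representation of the Stieltjes transform. -/
lemma cauchy_sq_le {z : ℂ} (hz : 0 < z.im) :
    ‖(∫ x : ℝ, 1 / (z - x) ∂μ) - ∫ x : ℝ, 1 / (z - x) ∂ν‖ ^ 2 ≤ en μ ν (pk z.im) / z.im := by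
  have h1 := cauchy_laplace (σ := μ) hz
  have h2 := cauchy_laplace (σ := ν) hz
  have h3 := en_pk (μ := μ) (ν := ν) hz
  set y := z.im with hy
  set E := en μ ν (pk y) with hE
  have hE0 : 0 ≤ E := en_pk_nonneg hz
  set N := ‖(∫ x : ℝ, 1 / (z - x) ∂μ) - ∫ x : ℝ, 1 / (z - x) ∂ν‖ with hN
  have key : ∀ l : ℝ, 0 < l → N ≤ l / 2 * (1 / y) + (1 / (2 * l)) * E := by
    intro l hl
    have : N ≤ ∫ k : ℝ in Set.Ioi 0, ((l / 2) * Real.exp (-(y * k)) + (1 / (2 * l)) * (Real.exp (-(y * k)) * Dm μ ν k)) := by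
      rw [hN, h1.2, h2.2, ← mul_sub, norm_mul, norm_neg, Complex.norm_I, one_mul,
        ← integral_sub h1.1 h2.1]
      refine norm_integral_le_of_norm_le (((exp_int hz).const_mul _).add (h3.1.const_mul _))
        (Filter.Eventually.of_forall fun k => ?_)
      rw [← mul_sub, norm_mul, Complex.norm_exp]
      have e1 : (Complex.I * z * k).re = -(y * k) := by simp [hy]
      rw [e1]
      have e2 : (Cm μ k - Complex.I * Sm μ k) - (Cm ν k - Complex.I * Sm ν k) =
        ((⟨Cm μ k - Cm ν k, -(Sm μ k - Sm ν k)⟩ : ℂ)) := by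
        apply Complex.ext <;> simp; ring
      rw [e2]
      have e3 : ‖(⟨Cm μ k - Cm ν k, -(Sm μ k - Sm ν k)⟩ : ℂ)‖ ^ 2 = Dm μ ν k := by
        rw [Complex.sq_norm, Complex.normSq_apply]; unfold Dm; ring
      rw [← e3]
      set w := ‖(⟨Cm μ k - Cm ν k, -(Sm μ k - Sm ν k)⟩ : ℂ)‖
      have : w ≤ l / 2 + 1 / (2 * l) * w ^ 2 := by
        have : 0 ≤ (w - l) ^ 2 / (2 * l) := by positivity
        have e : (w - l) ^ 2 / (2 * l) = l / 2 + 1 / (2 * l) * w ^ 2 - w := by field_simp; ring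
        linarith
      nlinarith [Real.exp_pos (-(y * k))]
    rwa [integral_add ((exp_int hz).const_mul _) (h3.1.const_mul _), integral_const_mul,
      integral_const_mul, exp_int_val hz, ← h3.2] at this
  have hN0 : 0 ≤ N := norm_nonneg _
  by_cases hN1 : N = 0
  · rw [hN1]; simpa using div_nonneg hE0 hz.le
  have hNp : 0 < N := lt_of_le_of_ne hN0 (Ne.symm hN1)
  have := key (N * y) (by positivity)
  have e : N * y / 2 * (1 / y) + 1 / (2 * (N * y)) * E = N / 2 + E / (2 * N * y) := by field_simp
  rw [e] at this
  rw [le_div_iff₀ hz]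
  have h5 : N / 2 ≤ E / (2 * N * y) := by linarith
  rw [le_div_iff₀ (by positivity)] at h5
  nlinarith

lemma lg_deriv {s : ℝ} (hs : 0 < s) (u : ℝ) : HasDerivAt (fun s => lg s u) (pk s u) s := by
  unfold lg pk
  have h1 : HasDerivAt (fun s : ℝ => u ^ 2 + s ^ 2) (2 * s) s := by
    simpa using (hasDerivAt_pow 2 s).const_add (u ^ 2)
  exact ((h1.log (by positivity)).div_const 2).congr_deriv (by ring)

lemma pk_cont {u a b : ℝ} (ha : 0 < a) : ContinuousOn (fun s => pk s u) (Set.uIcc a (max a b)) := by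
  unfold pk
  intro s hs
  rw [Set.uIcc_of_le (le_max_left _ _)] at hs
  have : 0 < s := ha.trans_le hs.1
  exact (ContinuousAt.div (by fun_prop) (by fun_prop) (by positivity)).continuousWithinAt

lemma lg_sub_eq {η S : ℝ} (hη : 0 < η) (hS : η ≤ S) (u : ℝ) :
    lg S u - lg η u = ∫ s in Set.Ioc η S, pk s u := by
  rw [← intervalIntegral.integral_of_le hS]
  rw [intervalIntegral.integral_eq_sub_of_hasDerivAt (f := fun s => lg s u)]
  · intro s hs
    rw [Set.uIcc_of_le hS] at hs
    exact lg_deriv (hη.trans_le hs.1) u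
  · have := pk_cont (u := u) (b := S) hη
    rw [max_eq_right hS] at this
    exact this.intervalIntegrable

lemma pk_le {s : ℝ} (hs : 0 < s) (u : ℝ) : ‖pk s u‖ ≤ 1 / s := by
  unfold pk
  rw [Real.norm_of_nonneg (by positivity), div_le_div_iff₀ (by positivity) hs]
  nlinarith [sq_nonneg u]

lemma bil_lg {η S : ℝ} (hη : 0 < η) (hS : η ≤ S) :
    IntegrableOn (fun s => bil σ τ (pk s)) (Set.Ioc η S) ∧
    bil σ τ (fun u => lg S u - lg η u) = ∫ s in Set.Ioc η S, bil σ τ (pk s) := by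
  have hInt : Integrable (Function.uncurry fun (p : ℝ × ℝ) (s : ℝ) => pk s (p.1 - p.2))
      ((σ.prod τ).prod (volume.restrict (Set.Ioc η S))) := by
    refine Integrable.mono' (integrable_const (1 / η)) ?_ ?_
    · have : Measurable (Function.uncurry fun (p : ℝ × ℝ) (s : ℝ) => pk s (p.1 - p.2)) := by
        unfold Function.uncurry pk; fun_prop
      exact this.aestronglyMeasurable
    · have h1 : ∀ᵐ s ∂(volume.restrict (Set.Ioc η S)), s ∈ Set.Ioc η S := ae_restrict_mem measurableSet_Ioc
      have h2 := Measure.quasiMeasurePreserving_snd (μ := σ.prod τ) (ν := volume.restrict (Set.Ioc η S)) |>.ae h1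
      filter_upwards [h2] with q hq
      refine (pk_le (hη.trans hq.1) _).trans ?_
      gcongr; exact hq.1.le
  refine ⟨hInt.integral_prod_right, ?_⟩
  unfold bil
  rw [← integral_integral_swap hInt]
  congr 1; ext p
  exact lg_sub_eq hη hS _

lemma en_lg {η S : ℝ} (hη : 0 < η) (hS : η ≤ S) :
    IntegrableOn (fun s => en μ ν (pk s)) (Set.Ioc η S) ∧
    en μ ν (fun u => lg S u - lg η u) = ∫ s in Set.Ioc η S, en μ ν (pk s) := by
  have h1 := bil_lg (σ := μ) (τ := μ) hη hS
  have h2 := bil_lg (σ := μ) (τ := ν) hη hS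
  have h3 := bil_lg (σ := ν) (τ := μ) hη hS
  have h4 := bil_lg (σ := ν) (τ := ν) hη hS
  unfold en
  have h := integral_four h1.1 h2.1 h3.1 h4.1
  exact ⟨h.1, by rw [h.2, h1.2, h2.2, h3.2, h4.2]⟩

lemma en_lg_nonneg {η S : ℝ} (hη : 0 < η) (hS : η ≤ S) :
    0 ≤ en μ ν (fun u => lg S u - lg η u) := by
  rw [(en_lg hη hS).2]
  exact setIntegral_nonneg measurableSet_Ioc fun s hs => en_pk_nonneg (hη.trans hs.1)

/-- The regularized logarithmic energy of `μ - ν` controls its Stieltjes transform. -/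
lemma cauchy_sq_le_energy {η S : ℝ} (hη : 0 < η) {z : ℂ} (h1 : 2 * η ≤ z.im) (h2 : z.im ≤ S) :
    ‖(∫ x : ℝ, 1 / (z - x) ∂μ) - ∫ x : ℝ, 1 / (z - x) ∂ν‖ ^ 2 ≤
      2 / z.im ^ 2 * en μ ν (fun u => lg S u - lg η u) := by
  set y := z.im with hy
  have hyp : 0 < y := by linarith
  refine (cauchy_sq_le hyp).trans ?_
  have h3 : (y / 2) * en μ ν (pk y) ≤ en μ ν (fun u => lg S u - lg η u) := by
    rw [(en_lg hη (by linarith)).2]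
    calc (y / 2) * en μ ν (pk y) = ∫ s in Set.Ioc (y / 2) y, en μ ν (pk y) := by
          rw [setIntegral_const]; simp [measureReal_def]; left; rw [ENNReal.toReal_ofReal] <;> linarith
      _ ≤ ∫ s in Set.Ioc (y / 2) y, en μ ν (pk s) := by
          refine setIntegral_mono_on (by simp) (en_lg (by linarith) (by linarith)).1 measurableSet_Ioc
            fun s hs => en_pk_anti (by linarith [hs.1]) hs.2
      _ ≤ ∫ s in Set.Ioc η S, en μ ν (pk s) := by
          refine setIntegral_mono_set (en_lg hη (by linarith)).1 ?_ ?_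
          · filter_upwards [ae_restrict_mem measurableSet_Ioc] with s hs using en_pk_nonneg (hη.trans hs.1)
          · exact (Set.Ioc_subset_Ioc (by linarith) (by linarith)).eventuallyLE
  rw [← hy]
  calc en μ ν (pk y) / y = 2 / y ^ 2 * (y / 2 * en μ ν (pk y)) := by field_simp
    _ ≤ _ := by gcongr
end

end BetaEns

/-! ### The weight of a configuration and its energy -/

namespace BetaEns

/-- `Σ_{i,j} log |x_i - x_j|`; the diagonal contributes `log 0 = 0`. -/
noncomputable def sp {n : ℕ} (x : Fin n → ℝ) : ℝ := ∑ i, ∑ j, Real.log |x i - x j|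

lemma sp_eq {n : ℕ} (x : Fin n → ℝ) :
    sp x = 2 * ∑ i, ∑ j ∈ Finset.Ioi i, Real.log |x i - x j| := by
  have h := Finset.sum_sum_Ioi_add_eq_sum_sum_off_diag (fun i j => Real.log |x i - x j|)
  have h2 : sp x = ∑ i, ∑ j ∈ ({i}ᶜ : Finset (Fin n)), Real.log |x j - x i| := by
    unfold sp
    refine Finset.sum_congr rfl fun i _ => ?_
    rw [← Finset.sum_compl_add_sum ({i} : Finset (Fin n))]
    simp only [Finset.sum_singleton, sub_self, abs_zero, Real.log_zero, add_zero]
    exact Finset.sum_congr rfl fun j _ => by rw [abs_sub_comm]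
  rw [h2, ← h, Finset.mul_sum]
  refine Finset.sum_congr rfl fun i _ => ?_
  rw [Finset.mul_sum]
  refine Finset.sum_congr rfl fun j _ => ?_
  rw [abs_sub_comm (x j)]; ring

lemma betaWeight_eq (β : ℝ) (V : ℝ → ℝ) {n : ℕ} {x : Fin n → ℝ} (hx : Function.Injective x) :
    betaWeight β V n x = Real.exp (β / 2 * (sp x - n * ∑ i, V (x i))) := by
  unfold betaWeight
  have h1 : ∀ i, ∀ j ∈ Finset.Ioi i, |x i - x j| ^ β = Real.exp (β * Real.log |x i - x j|) := by
    intro i j hj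
    have : x i ≠ x j := fun h => (Finset.mem_Ioi.1 hj).ne (hx h)
    rw [Real.rpow_def_of_pos (abs_pos.2 (sub_ne_zero.2 this)), mul_comm]
  rw [Finset.prod_congr rfl fun i _ => Finset.prod_congr rfl (h1 i)]
  simp_rw [← Real.exp_sum]
  rw [← Real.exp_add, sp_eq]
  congr 1
  simp_rw [← Finset.mul_sum]
  have : ∑ i, -((n:ℝ) * β * V (x i)) / 2 = -(β / 2 * (n * ∑ i, V (x i))) := by
    rw [Finset.mul_sum, Finset.mul_sum, ← Finset.sum_neg_distrib]
    exact Finset.sum_congr rfl fun i _ => by ring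
  rw [this]; ring

lemma betaWeight_zero {β : ℝ} (hβ : 0 < β) (V : ℝ → ℝ) {n : ℕ} {x : Fin n → ℝ}
    (hx : ¬ Function.Injective x) : betaWeight β V n x = 0 := by
  have : ∃ i j : Fin n, i < j ∧ x i = x j := by
    unfold Function.Injective at hx
    push Not at hx
    obtain ⟨i, j, h1, h2⟩ := hx
    rcases lt_or_gt_of_ne h2 with h | h
    · exact ⟨i, j, h, h1⟩
    · exact ⟨j, i, h, h1.symm⟩
  obtain ⟨i, j, hij, h⟩ := this
  unfold betaWeight
  refine mul_eq_zero_of_right _ (Finset.prod_eq_zero (i := i) (Finset.mem_univ i) ?_)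
  rw [Finset.prod_eq_zero (i := j) (Finset.mem_Ioi.2 hij)]
  rw [h]; simp [hβ.ne']

lemma betaWeight_le {β : ℝ} (hβ : 0 < β) (V : ℝ → ℝ) {n : ℕ} (x : Fin n → ℝ) :
    betaWeight β V n x ≤ Real.exp (β / 2 * (sp x - n * ∑ i, V (x i))) := by
  by_cases hx : Function.Injective x
  · rw [betaWeight_eq β V hx]
  · rw [betaWeight_zero hβ V hx]; positivity

lemma betaWeight_nonneg (β : ℝ) (V : ℝ → ℝ) {n : ℕ} (x : Fin n → ℝ) : 0 ≤ betaWeight β V n x := by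
  unfold betaWeight; positivity

lemma betaWeight_continuous {β : ℝ} (hβ : 0 < β) {V : ℝ → ℝ} (hV : Continuous V) (n : ℕ) :
    Continuous (betaWeight β V n) := by
  unfold betaWeight
  refine Continuous.mul (by fun_prop) ?_
  refine continuous_finsetProd _ fun i _ => continuous_finsetProd _ fun j _ => ?_
  exact Continuous.rpow_const (by fun_prop) fun x => Or.inr hβ.le

/-- Counting measure of a configuration. -/
noncomputable def emp {n : ℕ} (x : Fin n → ℝ) : Measure ℝ := ∑ i, Measure.dirac (x i)

instance {n : ℕ} (x : Fin n → ℝ) : IsFiniteMeasure (emp x) := by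
  unfold emp; infer_instance

lemma integral_emp {n : ℕ} {E : Type*} [NormedAddCommGroup E] [NormedSpace ℝ E] [CompleteSpace E]
    (x : Fin n → ℝ) (f : ℝ → E) :
    ∫ y, f y ∂(emp x) = ∑ i, f (x i) := by
  unfold emp
  rw [integral_finsetSum_measure fun i _ => integrable_dirac (by simp)]
  simp

variable {b : ℝ} {r : Measure ℝ}

lemma nsmul_fin (hr : Dens b r) (n : ℕ) : IsFiniteMeasure ((n : ENNReal) • r) := by
  have := hr.prob
  constructor
  simp [ENNReal.natCast_lt_top]

lemma integral_nsmul_measure {E : Type*} [NormedAddCommGroup E] [NormedSpace ℝ E] [CompleteSpace E]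
    (n : ℕ) (f : ℝ → E) : ∫ y, f y ∂((n : ENNReal) • r) = (n : ℝ) • ∫ y, f y ∂r := by
  rw [integral_smul_measure]; simp

/-- Logarithmic energy of `r`. -/
noncomputable def Lr (r : Measure ℝ) : ℝ := ∫ x, U r x ∂r

/-- `∬ log|x-y| dr dr - ∫ V dr`. -/
noncomputable def EE (V : ℝ → ℝ) (r : Measure ℝ) : ℝ := Lr r - ∫ x, V x ∂r

/-- The effective potential `V - 2 * U r + c`, normalized to vanish on the support. -/
noncomputable def JJ (V : ℝ → ℝ) (r : Measure ℝ) (x : ℝ) : ℝ :=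
  V x - 2 * U r x + (2 * Lr r - ∫ x, V x ∂r)

/-- Regularized logarithmic energy of the fluctuation `Σ δ_{x_i} - n r`. -/
noncomputable def enr (r : Measure ℝ) (η S : ℝ) {n : ℕ} (x : Fin n → ℝ) : ℝ :=
  en (emp x) ((n : ENNReal) • r) (fun u => lg S u - lg η u)

/-- Stieltjes transform of the fluctuation. -/
noncomputable def mz (r : Measure ℝ) {n : ℕ} (x : Fin n → ℝ) (z : ℂ) : ℂ :=
  ∑ i, 1 / (z - x i) - n * ∫ y : ℝ, 1 / (z - y) ∂r

lemma lg_even (η u : ℝ) : lg η (-u) = lg η u := by simp [lg]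

lemma enr_nonneg (hr : Dens b r) {η S : ℝ} (hη : 0 < η) (hS : η ≤ S) {n : ℕ} (x : Fin n → ℝ) :
    0 ≤ enr r η S x := by
  have := hr.prob
  have := nsmul_fin hr n
  exact en_lg_nonneg hη hS

lemma mz_eq {n : ℕ} (x : Fin n → ℝ) (z : ℂ) :
    (∫ y : ℝ, 1 / (z - y) ∂(emp x)) - ∫ y : ℝ, 1 / (z - y) ∂((n : ENNReal) • r) = mz r x z := by
  rw [integral_emp, integral_nsmul_measure]; unfold mz; simp

lemma mz_conj {n : ℕ} (x : Fin n → ℝ) (z : ℂ) :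
    mz r x ((starRingEnd ℂ) z) = (starRingEnd ℂ) (mz r x z) := by
  unfold mz
  rw [map_sub, map_mul, map_sum, ← integral_conj]
  simp

lemma mz_sq_le (hr : Dens b r) {η S : ℝ} (hη : 0 < η) {n : ℕ} (x : Fin n → ℝ) {z : ℂ}
    (h1 : 2 * η ≤ |z.im|) (h2 : |z.im| ≤ S) :
    ‖mz r x z‖ ^ 2 ≤ 2 / z.im ^ 2 * enr r η S x := by
  have := hr.prob
  have := nsmul_fin hr n
  have key : ∀ w : ℂ, 2 * η ≤ w.im → w.im ≤ S → ‖mz r x w‖ ^ 2 ≤ 2 / w.im ^ 2 * enr r η S x := by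
    intro w h1 h2
    rw [← mz_eq]
    exact cauchy_sq_le_energy hη h1 h2
  rcases abs_cases z.im with h | h
  · exact key z (by linarith) (by linarith)
  · have := key ((starRingEnd ℂ) z) (by simp; linarith) (by simp; linarith)
    rw [mz_conj] at this
    simpa using this

lemma lgd_bdd {η S : ℝ} (hη : 0 < η) (hS : η ≤ S) (u : ℝ) : ‖lg S u - lg η u‖ ≤ (S - η) / η := by
  rw [lg_sub_eq hη hS]
  have := norm_setIntegral_le_of_norm_le_const (μ := volume) (s := Set.Ioc η S) (f := fun s => pk s u) (C := 1 / η)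
    (by simp) (fun s hs => (pk_le (hη.trans hs.1) u).trans (by gcongr; exact hs.1.le))
  simp only [measureReal_def, Real.volume_Ioc] at this
  rw [ENNReal.toReal_ofReal (by linarith)] at this
  calc _ ≤ _ := this
    _ = _ := by ring

lemma bil_eq {σ τ : Measure ℝ} [IsFiniteMeasure σ] [IsFiniteMeasure τ] {η S : ℝ} (hη : 0 < η) (hS : η ≤ S) :
    bil σ τ (fun u => lg S u - lg η u) = ∫ x, ∫ y, (lg S (x - y) - lg η (x - y)) ∂τ ∂σ := by
  unfold bil
  rw [integral_prod]
  refine Integrable.mono' (integrable_const ((S - η) / η)) ?_ (Filter.Eventually.of_forall fun p => lgd_bdd hη hS _)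
  have h1 := lg_continuous hη
  have h2 := lg_continuous (hη.trans_le hS)
  exact Continuous.aestronglyMeasurable (by fun_prop)

lemma enr_eq (hr : Dens b r) {η S : ℝ} (hη : 0 < η) (hS : η ≤ S) {n : ℕ} (x : Fin n → ℝ) :
    enr r η S x = ∑ i, ∑ j, (lg S (x i - x j) - lg η (x i - x j))
      - 2 * n * ∑ i, (Ue r S (x i) - Ue r η (x i))
      + n ^ 2 * ∫ y, (Ue r S y - Ue r η y) ∂r := by
  have := hr.prob
  have hSp := hη.trans_le hS
  have hfin := nsmul_fin hr n
  have hU : ∀ y, ∫ z, (lg S (y - z) - lg η (y - z)) ∂r = Ue r S y - Ue r η y := fun y =>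
    integral_sub (hr.lg_integrable hSp y) (hr.lg_integrable hη y)
  have hU' : ∀ y, ∫ z, (lg S (z - y) - lg η (z - y)) ∂r = Ue r S y - Ue r η y := fun y => by
    rw [← hU]; congr 1; ext z
    rw [← lg_even S (y - z), ← lg_even η (y - z)]; simp
  have hc1 := lg_continuous hη
  have hc2 := lg_continuous hSp
  unfold enr en
  rw [bil_eq hη hS, bil_eq hη hS, bil_eq hη hS, bil_eq hη hS]
  simp_rw [integral_emp, integral_nsmul_measure, hU, smul_eq_mul, integral_const_mul]
  rw [integral_finsetSum]
  · simp_rw [hU', ← Finset.mul_sum]; ring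
  · intro i _
    exact hr.integrable_of_cont (Continuous.continuousOn (by fun_prop))

lemma lg_S_bd {S u R : ℝ} (hS : 0 < S) (hu : |u| ≤ R) :
    0 ≤ lg S u - Real.log S ∧ lg S u - Real.log S ≤ R ^ 2 / (2 * S ^ 2) := by
  have e : lg S u - Real.log S = Real.log (1 + u ^ 2 / S ^ 2) / 2 := by
    unfold lg
    have : Real.log S = Real.log (S ^ 2) / 2 := by rw [Real.log_pow]; push_cast; ring
    rw [this, ← sub_div, ← Real.log_div (by positivity) (by positivity)]
    congr 2; field_simp; ring
  rw [e]
  have h0 : 0 ≤ u ^ 2 / S ^ 2 := by positivity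
  have h1 := Real.log_nonneg (x := 1 + u ^ 2 / S ^ 2) (by linarith)
  have h2 := Real.log_le_sub_one_of_pos (x := 1 + u ^ 2 / S ^ 2) (by linarith)
  have h3 : u ^ 2 / S ^ 2 ≤ R ^ 2 / S ^ 2 := by
    have : u ^ 2 ≤ R ^ 2 := sq_le_sq' (by linarith [abs_le.1 hu]) (abs_le.1 hu).2
    gcongr
  have h4 : R ^ 2 / (2 * S ^ 2) = R ^ 2 / S ^ 2 / 2 := by field_simp
  rw [h4]
  constructor <;> linarith

lemma Ue_S_bd (hr : Dens b r) {S x R : ℝ} (hS : 0 < S) (hR : 2 ≤ R) (hx : |x| ≤ R) :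
    0 ≤ Ue r S x - Real.log S ∧ Ue r S x - Real.log S ≤ (2 * R) ^ 2 / (2 * S ^ 2) := by
  have := hr.prob
  have e : Ue r S x - Real.log S = ∫ y, (lg S (x - y) - Real.log S) ∂r := by
    rw [integral_sub (hr.lg_integrable hS x) (integrable_const _)]; simp [Ue]
  have hb : ∀ y ∈ Set.Icc (-2:ℝ) 2, |x - y| ≤ 2 * R := fun y hy => by
    rw [abs_le] at hx ⊢
    constructor <;> linarith [hy.1, hy.2]
  rw [e]
  refine ⟨integral_nonneg_of_ae ?_, ?_⟩
  · filter_upwards [hr.ae_mem] with y hy using (lg_S_bd hS (hb y hy)).1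
  · refine (Real.le_norm_self _).trans (hr.norm_integral_le fun y hy => ?_)
    have := lg_S_bd hS (hb y hy)
    rw [Real.norm_of_nonneg this.1]; exact this.2

/-- Pointwise energy bound for the Hamiltonian. -/
lemma sp_le (hb : 0 ≤ b) (hr : Dens b r) {η S R : ℝ} (hη : 0 < η) (hS : η ≤ S) (hR : 2 ≤ R)
    (V : ℝ → ℝ) {n : ℕ} (x : Fin n → ℝ) (hinj : Function.Injective x) (hx : ∀ i, |x i| ≤ R) :
    sp x - n * ∑ i, V (x i) ≤ n ^ 2 * EE V r - enr r η S x - n * ∑ i, JJ V r (x i)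
      + (4 * csing b * Real.sqrt η + 4 * R ^ 2 / S ^ 2) * n ^ 2 - n * Real.log η := by
  have := hr.prob
  have hSp := hη.trans_le hS
  have hUc := hr.Ue_continuous hη
  have hUSc := hr.Ue_continuous hSp
  have hU0c := hr.U_continuous hb
  have h1 : sp x ≤ ∑ i, ∑ j, lg η (x i - x j) - n * Real.log η := by
    have : ∀ i, ∑ j, Real.log |x i - x j| ≤ ∑ j, lg η (x i - x j) - Real.log η := by
      intro i
      rw [← Finset.sum_erase_add _ _ (Finset.mem_univ i), ← Finset.sum_erase_add (a := i) _ _ (Finset.mem_univ i)]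
      have hd : lg η (x i - x i) = Real.log η := by
        unfold lg; simp
      rw [hd]
      simp only [sub_self, abs_zero, Real.log_zero, add_zero, add_sub_cancel_right]
      refine Finset.sum_le_sum fun j hj => ?_
      have : x i - x j ≠ 0 := sub_ne_zero.2 fun h => (Finset.ne_of_mem_erase hj) (hinj h).symm
      linarith [(lg_sub_le hη this).1]
    calc sp x ≤ ∑ i, (∑ j, lg η (x i - x j) - Real.log η) := Finset.sum_le_sum fun i _ => this i
      _ = _ := by rw [Finset.sum_sub_distrib]; simp
  have h2 := enr_eq hr hη hS x
  -- the large-scale part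
  have h3 : ∑ i, ∑ j, lg S (x i - x j) ≤ n ^ 2 * (Real.log S + (2 * R) ^ 2 / (2 * S ^ 2)) := by
    have : ∀ i j, lg S (x i - x j) ≤ Real.log S + (2 * R) ^ 2 / (2 * S ^ 2) := fun i j => by
      have : |x i - x j| ≤ 2 * R := by
        have := hx i; have := hx j
        rw [abs_le] at *; constructor <;> linarith
      linarith [(lg_S_bd hSp this).2]
    calc _ ≤ ∑ i : Fin n, ∑ j : Fin n, (Real.log S + (2 * R) ^ 2 / (2 * S ^ 2)) :=
          Finset.sum_le_sum fun i _ => Finset.sum_le_sum fun j _ => this i j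
      _ = _ := by simp; ring
  have h4 : n * Real.log S ≤ ∑ i, Ue r S (x i) := by
    calc n * Real.log S = ∑ i : Fin n, Real.log S := by simp
      _ ≤ _ := Finset.sum_le_sum fun i _ => by linarith [(Ue_S_bd hr hSp hR (hx i)).1]
  have h5 : ∑ i, Ue r η (x i) ≤ ∑ i, U r (x i) + n * (2 * csing b * Real.sqrt η) := by
    calc _ ≤ ∑ i, (U r (x i) + 2 * csing b * Real.sqrt η) :=
          Finset.sum_le_sum fun i _ => hr.Ue_le_U hb hη _
      _ = _ := by rw [Finset.sum_add_distrib]; simp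
  have h6 : ∫ y, (Ue r S y - Ue r η y) ∂r ≤ Real.log S + (2 * R) ^ 2 / (2 * S ^ 2) - Lr r := by
    rw [integral_sub (hr.integrable_of_cont hUSc.continuousOn) (hr.integrable_of_cont hUc.continuousOn)]
    have a1 : Lr r ≤ ∫ y, Ue r η y ∂r :=
      integral_mono (hr.integrable_of_cont hU0c.continuousOn) (hr.integrable_of_cont hUc.continuousOn)
        fun y => hr.U_le_Ue hb hη y
    have a2 : ∫ y, Ue r S y ∂r ≤ ∫ y, (Real.log S + (2 * R) ^ 2 / (2 * S ^ 2)) ∂r := by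
      refine integral_mono_ae (hr.integrable_of_cont hUSc.continuousOn) (integrable_const _) ?_
      filter_upwards [hr.ae_mem] with y hy
      have := (Ue_S_bd hr hSp hR (x := y) (by rw [abs_le]; constructor <;> linarith [hy.1, hy.2])).2
      linarith
    simp only [integral_const, probReal_univ, one_smul] at a2
    linarith
  have h7 : ∑ i, JJ V r (x i) = ∑ i, V (x i) - 2 * ∑ i, U r (x i) + n * (2 * Lr r - ∫ x, V x ∂r) := by
    unfold JJ
    rw [Finset.sum_add_distrib, Finset.sum_sub_distrib, ← Finset.mul_sum]; simp; ring
  simp_rw [Finset.sum_sub_distrib] at h2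
  rw [h7]
  unfold EE
  have hn : (0:ℝ) ≤ n := Nat.cast_nonneg n
  have h5' := mul_le_mul_of_nonneg_left h5 hn
  have h4' := mul_le_mul_of_nonneg_left h4 hn
  have h6' := mul_le_mul_of_nonneg_left h6 (by positivity : (0:ℝ) ≤ (n:ℝ) ^ 2)
  have e : (2 * R) ^ 2 / (2 * S ^ 2) = 2 * (R ^ 2 / S ^ 2) := by field_simp
  have e2 : 4 * R ^ 2 / S ^ 2 = 4 * (R ^ 2 / S ^ 2) := by ring
  rw [e] at h3 h6'
  rw [e2]
  set q := R ^ 2 / S ^ 2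
  ring_nf at h1 h2 h3 h5' h4' h6' ⊢
  linarith

end BetaEns

/-! ### Lower bound for the confined partition function -/

namespace BetaEns

/-- The box `[-R,R]^n`. -/
def bx (n : ℕ) (R : ℝ) : Set (Fin n → ℝ) := {x | ∀ i, |x i| ≤ R}

lemma bx_eq (n : ℕ) (R : ℝ) : bx n R = Set.Icc (fun _ => -R) (fun _ => R) := by
  ext x
  simp only [bx, Set.mem_ofPred_eq, Set.mem_Icc, Pi.le_def, abs_le]
  exact forall_and

lemma bx_compact (n : ℕ) (R : ℝ) : IsCompact (bx n R) := by rw [bx_eq]; exact isCompact_Icc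

lemma bx_meas (n : ℕ) (R : ℝ) : MeasurableSet (bx n R) := (bx_compact n R).measurableSet

lemma bx_vol (n : ℕ) {R : ℝ} (hR : 0 ≤ R) : volume.real (bx n R) = (2 * R) ^ n := by
  rw [bx_eq, measureReal_def, Real.volume_Icc_pi]
  simp only [Finset.prod_const, ENNReal.toReal_pow, Finset.card_univ, Fintype.card_fin]
  rw [ENNReal.toReal_ofReal (by linarith)]
  congr 1; ring

/-- The partition function of the ensemble restricted to the box. -/
noncomputable def Qb (β : ℝ) (V : ℝ → ℝ) (n : ℕ) (R : ℝ) : ℝ := ∫ x in bx n R, betaWeight β V n x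

variable {b : ℝ} {r : Measure ℝ}

lemma pi_dom (hr : Dens b r) (n : ℕ) :
    Measure.pi (fun _ : Fin n => r) ≤ (ENNReal.ofReal b) ^ n • (volume : Measure (Fin n → ℝ)) := by
  have := hr.prob
  induction n with
  | zero =>
    rw [Measure.pi_of_empty, volume_pi, Measure.pi_of_empty]; simp
  | succ n ih =>
    have h1 := measurePreserving_piFinSuccAbove (fun _ : Fin (n+1) => r) 0
    have h2 := volume_preserving_piFinSuccAbove (fun _ : Fin (n+1) => ℝ) 0
    have e : Measure.pi (fun _ : Fin (n+1) => r) = (r.prod (Measure.pi fun _ : Fin n => r)).map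
      (MeasurableEquiv.piFinSuccAbove (fun _ => ℝ) 0).symm := (h1.symm).map_eq.symm
    have e2 : (volume : Measure (Fin (n+1) → ℝ)) = (volume : Measure (ℝ × (Fin n → ℝ))).map
      (MeasurableEquiv.piFinSuccAbove (fun _ => ℝ) 0).symm := (h2.symm).map_eq.symm
    rw [e, e2, ← Measure.map_smul]
    refine Measure.map_mono ?_ (MeasurableEquiv.measurable _)
    have : SFinite ((ENNReal.ofReal b) ^ n • (volume : Measure (Fin n → ℝ))) := by infer_instance
    refine (Measure.prod_mono hr.le ih).trans ?_
    rw [Measure.prod_smul_left, Measure.prod_smul_right, smul_smul, pow_succ']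
    exact le_refl _

lemma pair_map (hr : Dens b r) {n : ℕ} {i j : Fin n} (hij : i ≠ j) :
    MeasurePreserving (fun x : Fin n → ℝ => (x i, x j)) (Measure.pi (fun _ : Fin n => r)) (r.prod r) := by
  have := hr.prob
  have h := ProbabilityTheory.iIndepFun_pi (μ := fun _ : Fin n => r) (X := fun _ => id)
    (fun _ => aemeasurable_id)
  have h2 : ProbabilityTheory.IndepFun (fun ω : Fin n → ℝ => ω i) (fun ω => ω j)
    (Measure.pi fun _ => r) := h.indepFun hij
  rw [ProbabilityTheory.indepFun_iff_map_prod_eq_prod_map_map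
    (measurable_pi_apply i).aemeasurable (measurable_pi_apply j).aemeasurable] at h2
  refine ⟨by fun_prop, ?_⟩
  rw [h2]
  congr 1
  · exact (measurePreserving_eval (fun _ : Fin n => r) i).map_eq
  · exact (measurePreserving_eval (fun _ : Fin n => r) j).map_eq

lemma log_prod_integrable' {s : Measure ℝ} (hb : 0 ≤ b) (hs : Dens b s) (hr : Dens b r) :
    Integrable (fun p : ℝ × ℝ => Real.log |p.1 - p.2|) (s.prod r) := by
  have := hr.prob
  have := hs.prob
  have hm : AEStronglyMeasurable (fun p : ℝ × ℝ => Real.log |p.1 - p.2|) (s.prod r) :=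
    (Real.measurable_log.comp (by fun_prop)).aestronglyMeasurable
  rw [integrable_prod_iff hm]
  refine ⟨Filter.Eventually.of_forall fun x => hr.log_integrable hb x, ?_⟩
  refine hs.integrable_of_bdd (C := 2 * csing b + 4) hm.norm.integral_prod_right' fun x hx => ?_
  have h1 := hr.rpow_int hb x
  have h2 : Integrable (fun y => |x - y|) r := hr.integrable_of_cont (by fun_prop)
  rw [Real.norm_of_nonneg (integral_nonneg fun _ => norm_nonneg _)]
  calc ∫ y, ‖Real.log |x - y|‖ ∂r ≤ ∫ y, (2 * |x - y| ^ (-(1/2):ℝ) + |x - y|) ∂r :=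
        integral_mono (hr.log_integrable hb x).norm ((h1.1.const_mul 2).add h2) fun y => abs_log_le (x - y)
    _ = 2 * ∫ y, |x - y| ^ (-(1/2):ℝ) ∂r + ∫ y, |x - y| ∂r := by
        rw [integral_add (h1.1.const_mul 2) h2, integral_const_mul]
    _ ≤ 2 * csing b + 4 := by
        have : ∫ y, |x - y| ∂r ≤ 4 := by
          refine (Real.le_norm_self _).trans (hr.norm_integral_le fun y hy => ?_)
          rw [Real.norm_eq_abs, abs_abs, abs_le]
          constructor <;> linarith [hx.1, hx.2, hy.1, hy.2]
        linarith [h1.2]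

lemma log_prod_integrable (hb : 0 ≤ b) (hr : Dens b r) :
    Integrable (fun p : ℝ × ℝ => Real.log |p.1 - p.2|) (r.prod r) :=
  log_prod_integrable' hb hr hr

lemma Lr_le (hb : 0 ≤ b) (hr : Dens b r) : Lr r ≤ 4 := by
  have := hr.prob
  have h0 : ∀ x ∈ Set.Icc (-2:ℝ) 2, U r x ≤ 4 := fun x hx => by
    have : U r x ≤ ∫ y, (4:ℝ) ∂r := by
      refine integral_mono_ae (hr.log_integrable hb x) (integrable_const _) ?_
      filter_upwards [hr.ae_mem] with y hy
      refine (Real.log_le_self (abs_nonneg _)).trans ?_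
      rw [abs_le]
      constructor <;> linarith [hx.1, hx.2, hy.1, hy.2]
    simpa using this
  have : Lr r ≤ ∫ y, (4:ℝ) ∂r := by
    refine integral_mono_ae (hr.integrable_of_cont (hr.U_continuous hb).continuousOn) (integrable_const _) ?_
    filter_upwards [hr.ae_mem] with y hy using h0 y hy
  simpa using this

lemma Lr_ge (hb : 0 ≤ b) (hr : Dens b r) : -(2 * csing b) ≤ Lr r := by
  have := hr.prob
  have : ∫ y, (-(2 * csing b)) ∂r ≤ Lr r :=
    integral_mono (integrable_const _) (hr.integrable_of_cont (hr.U_continuous hb).continuousOn)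
      fun y => hr.U_lower hb y
  simpa using this

/-- Lower bound for the partition function, by Jensen's inequality under `r^{⊗n}`. -/
lemma Qb_lower {β : ℝ} (hβ : 0 < β) {V : ℝ → ℝ} (hV : Continuous V) (hb : 0 < b) (hr : Dens b r)
    {R : ℝ} (hR : 2 ≤ R) (n : ℕ) :
    Real.exp (β / 2 * (n ^ 2 * EE V r) - (2 * β + Real.log b) * n) ≤ Qb β V n R := by
  have := hr.prob
  set m := Measure.pi (fun _ : Fin n => r) with hm
  have hcont := betaWeight_continuous hβ hV n
  set G : (Fin n → ℝ) → ℝ := fun x => β / 2 * (sp x - n * ∑ i, V (x i)) with hG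
  have hVi : ∀ i : Fin n, Integrable (fun x : Fin n → ℝ => V (x i)) m ∧ ∫ x, V (x i) ∂m = ∫ y, V y ∂r := by
    intro i
    have h := measurePreserving_eval (fun _ : Fin n => r) i
    have hVr : Integrable V r := hr.integrable_of_cont hV.continuousOn
    refine ⟨h.integrable_comp_of_integrable hVr, ?_⟩
    rw [← h.map_eq, integral_map h.measurable.aemeasurable]
    rw [h.map_eq]; exact hVr.1
  have hLi : ∀ i j : Fin n, Integrable (fun x : Fin n → ℝ => Real.log |x i - x j|) m ∧
      ∫ x, Real.log |x i - x j| ∂m = if i = j then 0 else Lr r := by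
    intro i j
    by_cases hij : i = j
    · subst hij; simp
    · have h := pair_map hr hij
      have hL := log_prod_integrable hb.le hr
      refine ⟨h.integrable_comp_of_integrable hL, ?_⟩
      rw [if_neg hij]
      have : ∫ p, Real.log |p.1 - p.2| ∂(r.prod r) = Lr r := integral_prod _ hL
      rw [← this, ← h.map_eq, integral_map h.measurable.aemeasurable]
      rw [h.map_eq]; exact hL.1
  have hspi : Integrable (fun x : Fin n → ℝ => sp x) m :=
    integrable_finsetSum _ fun i _ => integrable_finsetSum _ fun j _ => (hLi i j).1
  have hVs : Integrable (fun x : Fin n → ℝ => ∑ i, V (x i)) m := integrable_finsetSum _ fun i _ => (hVi i).1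
  have hGi : Integrable G m := (hspi.sub (hVs.const_mul _)).const_mul _
  have hGv : ∫ x, G x ∂m = β / 2 * (n ^ 2 * EE V r - n * Lr r) := by
    rw [hG, integral_const_mul, integral_sub hspi (hVs.const_mul _), integral_const_mul,
      integral_finsetSum _ fun i _ => (hVi i).1]
    have : ∫ x, sp x ∂m = (n ^ 2 - n) * Lr r := by
      unfold sp
      rw [integral_finsetSum _ fun i _ => integrable_finsetSum _ fun j _ => (hLi i j).1]
      have : ∀ i : Fin n, ∫ x : Fin n → ℝ, ∑ j, Real.log |x i - x j| ∂m = (n - 1) * Lr r := by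
        intro i
        rw [integral_finsetSum _ fun j _ => (hLi i j).1, Finset.sum_congr rfl fun j _ => (hLi i j).2]
        rw [← Finset.sum_erase_add _ _ (Finset.mem_univ i), if_pos rfl, add_zero,
          Finset.sum_congr rfl fun j hj => if_neg (Finset.ne_of_mem_erase hj).symm]
        have hn : 1 ≤ n := by have := i.pos; omega
        simp [hn]
      rw [Finset.sum_congr rfl fun i _ => this i]
      simp; ring
    rw [this, Finset.sum_congr rfl fun i _ => (hVi i).2]
    simp only [EE, Finset.sum_const, Finset.card_univ, Fintype.card_fin, nsmul_eq_mul]; ring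
  have hinj : ∀ᵐ x ∂m, Function.Injective x := by
    have : ∀ i j : Fin n, i ≠ j → ∀ᵐ x ∂m, x i ≠ x j := by
      intro i j hij
      have h := pair_map hr hij
      have hd : ∀ᵐ p ∂(r.prod r), p.1 ≠ p.2 := by
        have hms : MeasurableSet {p : ℝ × ℝ | p.1 ≠ p.2} :=
          (measurableSet_eq_fun measurable_fst measurable_snd).compl
        rw [Measure.ae_prod_iff_ae_ae hms]
        exact Filter.Eventually.of_forall fun x => by
          filter_upwards [hr.ae_ne x] with y hy using hy.symm
      exact h.quasiMeasurePreserving.ae hd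
    have h2 : ∀ᵐ x ∂m, ∀ i j : Fin n, i ≠ j → x i ≠ x j := by
      rw [ae_all_iff]; intro i; rw [ae_all_iff]; intro j
      by_cases hij : i = j
      · simp [hij]
      · filter_upwards [this i j hij] with x hx _ using hx
    filter_upwards [h2] with x hx i j h
    by_contra hc; exact hx i j hc h
  have hFG : (fun x => Real.exp (G x)) =ᵐ[m] betaWeight β V n := by
    filter_upwards [hinj] with x hx using (betaWeight_eq β V hx).symm
  have hbox : ∀ᵐ x ∂m, x ∈ bx n R := by
    have : ∀ i : Fin n, ∀ᵐ x ∂m, |x i| ≤ R := fun i => by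
      have h := (measurePreserving_eval (fun _ : Fin n => r) i).quasiMeasurePreserving.ae hr.ae_mem
      filter_upwards [h] with x hx
      rw [abs_le]; constructor <;> linarith [hx.1, hx.2]
    exact ae_all_iff.2 this
  have hFbox : IntegrableOn (betaWeight β V n) (bx n R) := hcont.continuousOn.integrableOn_compact (bx_compact n R)
  have hmle : m ≤ (ENNReal.ofReal b) ^ n • (volume.restrict (bx n R)) := by
    rw [← Measure.restrict_eq_self_of_ae_mem hbox, ← Measure.restrict_smul]
    exact Measure.restrict_mono le_rfl (pi_dom hr n)
  have hbt : (ENNReal.ofReal b) ^ n ≠ ⊤ := ENNReal.pow_ne_top ENNReal.ofReal_ne_top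
  have hFm : Integrable (betaWeight β V n) m := (hFbox.smul_measure hbt).mono_measure hmle
  have hJ := convexOn_exp.map_integral_le (μ := m) (f := G) Real.continuous_exp.continuousOn isClosed_univ
    (by simp) hGi (hFm.congr hFG.symm)
  rw [integral_congr_ae hFG] at hJ
  have h1 : ∫ x, betaWeight β V n x ∂m ≤ b ^ n * Qb β V n R := by
    have h := integral_mono_measure (μ := m) hmle
      (Filter.Eventually.of_forall fun x => betaWeight_nonneg β V x) (hFbox.smul_measure hbt)
    rw [integral_smul_measure, ENNReal.toReal_pow, ENNReal.toReal_ofReal hb.le] at h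
    simpa [Qb] using h
  have h2 := hJ.trans h1
  rw [hGv] at h2
  have h3 : Real.exp (β / 2 * (n ^ 2 * EE V r) - (2 * β + Real.log b) * n) ≤
      Real.exp (β / 2 * (n ^ 2 * EE V r - n * Lr r)) / b ^ n := by
    rw [le_div_iff₀ (by positivity)]
    have : b ^ n = Real.exp (n * Real.log b) := by
      rw [Real.exp_nat_mul, Real.exp_log hb]
    rw [this, ← Real.exp_add]
    refine Real.exp_le_exp.2 ?_
    have h5 := mul_le_mul_of_nonneg_left (Lr_le hb.le hr) (by positivity : (0:ℝ) ≤ β / 2 * n)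
    linarith
  refine h3.trans ?_
  rw [div_le_iff₀ (by positivity)]
  linarith

end BetaEns

/-! ### Resampling one point -/

namespace BetaEns
variable {b : ℝ} {r : Measure ℝ}

/-- Exponent in the comparison of `x` with configurations whose `i`-th point is resampled from `r`. -/
noncomputable def Psi (β : ℝ) (V : ℝ → ℝ) (r : Measure ℝ) {n : ℕ} (i : Fin n) (x : Fin n → ℝ) : ℝ :=
  β * ∑ j ∈ Finset.univ.erase i, (Real.log |x i - x j| - U r (x j))
    - n * β / 2 * (V (x i) - ∫ y, V y ∂r)

lemma sp_split {n : ℕ} (i : Fin n) (x : Fin n → ℝ) :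
    sp x = 2 * ∑ j ∈ Finset.univ.erase i, Real.log |x i - x j|
      + ∑ k ∈ Finset.univ.erase i, ∑ j ∈ Finset.univ.erase i, Real.log |x k - x j| := by
  unfold sp
  rw [← Finset.sum_erase_add _ _ (Finset.mem_univ i)]
  have h1 : ∑ j, Real.log |x i - x j| = ∑ j ∈ Finset.univ.erase i, Real.log |x i - x j| := by
    rw [← Finset.sum_erase_add _ _ (Finset.mem_univ i)]; simp
  have h2 : ∀ k, ∑ j, Real.log |x k - x j| = ∑ j ∈ Finset.univ.erase i, Real.log |x k - x j|
      + Real.log |x i - x k| := fun k => by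
    rw [← Finset.sum_erase_add _ _ (Finset.mem_univ i), abs_sub_comm (x k) (x i)]
  rw [h1, Finset.sum_congr rfl fun k _ => h2 k, Finset.sum_add_distrib]
  ring

lemma sp_update {n : ℕ} (i : Fin n) (x : Fin n → ℝ) (y : ℝ) :
    sp (Function.update x i y) = sp x + 2 * ∑ j ∈ Finset.univ.erase i,
      (Real.log |y - x j| - Real.log |x i - x j|) := by
  rw [sp_split i x, sp_split i (Function.update x i y)]
  have h : ∀ j ∈ Finset.univ.erase i, Function.update x i y j = x j := fun j hj =>
    Function.update_of_ne (Finset.ne_of_mem_erase hj) _ _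
  have h1 : ∑ j ∈ Finset.univ.erase i, Real.log |Function.update x i y i - Function.update x i y j|
      = ∑ j ∈ Finset.univ.erase i, Real.log |y - x j| :=
    Finset.sum_congr rfl fun j hj => by rw [h j hj, Function.update_self]
  have h2 : ∑ k ∈ Finset.univ.erase i, ∑ j ∈ Finset.univ.erase i,
      Real.log |Function.update x i y k - Function.update x i y j|
      = ∑ k ∈ Finset.univ.erase i, ∑ j ∈ Finset.univ.erase i, Real.log |x k - x j| :=
    Finset.sum_congr rfl fun k hk => Finset.sum_congr rfl fun j hj => by rw [h j hj, h k hk]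
  rw [h1, h2, Finset.sum_sub_distrib]; ring

lemma sumV_update (V : ℝ → ℝ) {n : ℕ} (i : Fin n) (x : Fin n → ℝ) (y : ℝ) :
    ∑ j, V (Function.update x i y j) = ∑ j, V (x j) + V y - V (x i) := by
  rw [← Finset.sum_erase_add _ _ (Finset.mem_univ i), ← Finset.sum_erase_add (a := i) _ _ (Finset.mem_univ i),
    Function.update_self]
  rw [Finset.sum_congr rfl fun j hj => by rw [Function.update_of_ne (Finset.ne_of_mem_erase hj)]]
  ring

/-- Comparison with resampled configurations, by Jensen's inequality under `r`. -/
lemma rl_point {β : ℝ} (hβ : 0 < β) {V : ℝ → ℝ} (hV : Continuous V) (hb : 0 < b) (hr : Dens b r)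
    {n : ℕ} (i : Fin n) (x : Fin n → ℝ) :
    betaWeight β V n x ≤ Real.exp (Psi β V r i x) * ∫ y, betaWeight β V n (Function.update x i y) ∂r := by
  have := hr.prob
  by_cases hx : Function.Injective x
  swap
  · rw [betaWeight_zero hβ V hx]
    exact mul_nonneg (Real.exp_pos _).le (integral_nonneg fun y => betaWeight_nonneg _ _ _)
  set G : ℝ → ℝ := fun y => β / 2 * (sp (Function.update x i y) - n * ∑ j, V (Function.update x i y j)) with hG
  have hGe : G = fun y => β / 2 * (sp x - n * ∑ j, V (x j)) + (β * ∑ j ∈ Finset.univ.erase i,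
      (Real.log |y - x j| - Real.log |x i - x j|) - n * β / 2 * (V y - V (x i))) := by
    ext y; rw [hG]; simp only; rw [sp_update, sumV_update]; ring
  have hVr : Integrable V r := hr.integrable_of_cont hV.continuousOn
  have hl : ∀ j, Integrable (fun y => Real.log |y - x j|) r := fun j => by
    have := hr.log_integrable hb.le (x j)
    simpa only [abs_sub_comm] using this
  have hl2 : ∀ j, Integrable (fun y => Real.log |y - x j| - Real.log |x i - x j|) r := fun j =>
    (hl j).sub (integrable_const _)
  have hi1 : Integrable (fun y => ∑ j ∈ Finset.univ.erase i, (Real.log |y - x j| - Real.log |x i - x j|)) r :=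
    integrable_finsetSum _ fun j _ => hl2 j
  have hi2 : Integrable (fun y => V y - V (x i)) r := hVr.sub (integrable_const _)
  have hi3 : Integrable (fun y => β * ∑ j ∈ Finset.univ.erase i, (Real.log |y - x j| - Real.log |x i - x j|)
    - n * β / 2 * (V y - V (x i))) r := (hi1.const_mul _).sub (hi2.const_mul _)
  have hGi : Integrable G r := by rw [hGe]; exact (integrable_const _).add hi3
  have hGv : ∫ y, G y ∂r = β / 2 * (sp x - n * ∑ j, V (x j)) - Psi β V r i x := by
    rw [hGe, integral_add (integrable_const _) hi3, integral_const, integral_sub (hi1.const_mul _) (hi2.const_mul _),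
      integral_const_mul, integral_const_mul, integral_sub hVr (integrable_const _),
      integral_finsetSum _ fun j _ => hl2 j]
    have : ∀ j, ∫ y, (Real.log |y - x j| - Real.log |x i - x j|) ∂r = -(Real.log |x i - x j| - U r (x j)) := by
      intro j
      rw [integral_sub (hl j) (integrable_const _)]
      simp [U, abs_sub_comm]
    rw [Finset.sum_congr rfl fun j _ => this j, Finset.sum_neg_distrib]
    simp only [integral_const, probReal_univ, one_smul]
    unfold Psi; ring
  have hinj : ∀ᵐ y ∂r, Function.Injective (Function.update x i y) := by
    have : ∀ᵐ y ∂r, ∀ j, y ≠ x j := ae_all_iff.2 fun j => hr.ae_ne (x j)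
    filter_upwards [this] with y hy k l hkl
    by_cases hk : k = i <;> by_cases hl : l = i
    · rw [hk, hl]
    · rw [hk, Function.update_self, Function.update_of_ne hl] at hkl; exact absurd hkl (hy l)
    · rw [hl, Function.update_self, Function.update_of_ne hk] at hkl; exact absurd hkl.symm (hy k)
    · rw [Function.update_of_ne hl, Function.update_of_ne hk] at hkl; exact hx hkl
  have hFG : (fun y => Real.exp (G y)) =ᵐ[r] fun y => betaWeight β V n (Function.update x i y) := by
    filter_upwards [hinj] with y hy using (betaWeight_eq β V hy).symm
  have hFi : Integrable (fun y => betaWeight β V n (Function.update x i y)) r := by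
    refine hr.integrable_of_cont (Continuous.continuousOn ?_)
    exact (betaWeight_continuous hβ hV n).comp (continuous_const.update i continuous_id)
  have hJ := convexOn_exp.map_integral_le (μ := r) (f := G) Real.continuous_exp.continuousOn isClosed_univ
    (by simp) hGi (hFi.congr hFG.symm)
  rw [integral_congr_ae hFG, hGv, sub_eq_add_neg, Real.exp_add, ← betaWeight_eq β V hx, Real.exp_neg] at hJ
  have hp := Real.exp_pos (Psi β V r i x)
  calc betaWeight β V n x = Real.exp (Psi β V r i x) * (betaWeight β V n x * (Real.exp (Psi β V r i x))⁻¹) := by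
        field_simp
    _ ≤ _ := by gcongr

/-- Resampling the `i`-th point: mass of a set on which `Psi` is controlled by a function of `x_i`. -/
lemma rl_set {β : ℝ} (hβ : 0 < β) {V : ℝ → ℝ} (hV : Continuous V) (hb : 0 < b) (hr : Dens b r)
    {n : ℕ} (i : Fin n) {R : ℝ} (hR : 2 ≤ R) {A : Set (Fin n → ℝ)} (hA : MeasurableSet A)
    (hAR : A ⊆ bx n R) {g : ℝ → ℝ} (hg : Measurable g)
    (h : ∀ x ∈ A, Function.Injective x → Real.exp (Psi β V r i x) ≤ g (x i)) :
    ∫⁻ x in A, ENNReal.ofReal (betaWeight β V n x) ≤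
      (∫⁻ u, ENNReal.ofReal (g u)) * ENNReal.ofReal b *
        ∫⁻ x in bx n R, ENNReal.ofReal (betaWeight β V n x) := by
  have := hr.prob
  have hc := betaWeight_continuous hβ hV n
  have hFm : Measurable fun x => ENNReal.ofReal (betaWeight β V n x) := hc.measurable.ennreal_ofReal
  set F : (Fin n → ℝ) → ENNReal := A.indicator fun x => ENNReal.ofReal (betaWeight β V n x) with hF
  set H : (Fin n → ℝ) → ENNReal := (bx n R).indicator fun x => ENNReal.ofReal (betaWeight β V n x) with hH
  have hFm' : Measurable F := hFm.indicator hA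
  have hHm : Measurable H := hFm.indicator (bx_meas n R)
  have key : ∀ x, F x ≤ ENNReal.ofReal (g (x i)) * ∫⁻ y, H (Function.update x i y) ∂r := by
    intro x
    by_cases hx : x ∈ A
    swap
    · rw [hF, Set.indicator_of_notMem hx]; exact bot_le
    by_cases hinj : Function.Injective x
    swap
    · rw [hF, Set.indicator_of_mem hx, betaWeight_zero hβ V hinj]; simp
    rw [hF, Set.indicator_of_mem hx]
    have h1 := rl_point hβ hV hb hr i x
    have hFi : Integrable (fun y => betaWeight β V n (Function.update x i y)) r := by
      refine hr.integrable_of_cont (Continuous.continuousOn ?_)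
      exact hc.comp (continuous_const.update i continuous_id)
    calc ENNReal.ofReal (betaWeight β V n x)
        ≤ ENNReal.ofReal (Real.exp (Psi β V r i x) * ∫ y, betaWeight β V n (Function.update x i y) ∂r) :=
          ENNReal.ofReal_le_ofReal h1
      _ = ENNReal.ofReal (Real.exp (Psi β V r i x)) * ∫⁻ y, ENNReal.ofReal (betaWeight β V n (Function.update x i y)) ∂r := by
          rw [ENNReal.ofReal_mul (Real.exp_pos _).le, ofReal_integral_eq_lintegral_ofReal hFi
            (Filter.Eventually.of_forall fun y => betaWeight_nonneg _ _ _)]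
      _ = ENNReal.ofReal (Real.exp (Psi β V r i x)) * ∫⁻ y, H (Function.update x i y) ∂r := by
          congr 1
          refine lintegral_congr_ae ?_
          filter_upwards [hr.ae_mem] with y hy
          rw [hH, Set.indicator_of_mem]
          intro j
          by_cases hj : j = i
          · rw [hj, Function.update_self, abs_le]; constructor <;> linarith [hy.1, hy.2]
          · rw [Function.update_of_ne hj]; exact hAR hx j
      _ ≤ _ := by gcongr; exact h x hx hinj
  have hgm : Measurable fun x : Fin n → ℝ => ENNReal.ofReal (g (x i)) * ∫⁻ y, H (Function.update x i y) ∂r := by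
    refine Measurable.mul (hg.comp (measurable_pi_apply i)).ennreal_ofReal ?_
    refine Measurable.lintegral_prod_right' (f := fun p : (Fin n → ℝ) × ℝ => H (Function.update p.1 i p.2)) ?_
    refine hHm.comp ?_
    rw [measurable_pi_iff]
    intro j
    by_cases hj : j = i
    · subst hj; simpa using measurable_snd
    · simp only [Function.update_of_ne hj]; fun_prop
  rw [← lintegral_indicator hA, ← lintegral_indicator (bx_meas n R), ← lintegral_const_mul _ hHm]
  refine (lintegral_mono key).trans ?_
  rw [volume_pi]
  refine lintegral_le_of_lmarginal_le {i} hgm (hHm.const_mul _) ?_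
  intro x
  rw [lmarginal_singleton, lmarginal_singleton]
  simp only [Function.update_self, Function.update_idem]
  have hm2 : Measurable (fun y => H (Function.update x i y)) := hHm.comp (measurable_update x)
  rw [lintegral_mul_const _ hg.ennreal_ofReal, lintegral_const_mul _ hm2, mul_assoc]
  gcongr
  calc ∫⁻ y, H (Function.update x i y) ∂r ≤ ∫⁻ y, H (Function.update x i y) ∂(ENNReal.ofReal b • volume) :=
        lintegral_mono' hr.le le_rfl
    _ = _ := by rw [lintegral_smul_measure, smul_eq_mul]

end BetaEns

/-! ### Confinement to a box -/

namespace BetaEns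
variable {b : ℝ} {r : Measure ℝ}

lemma Psi_le_of_growth {β : ℝ} (hβ : 0 < β) {V : ℝ → ℝ} (hb : 0 < b)
    (hr : Dens b r) {ε C0 : ℝ}
    (hg : ∀ x, 2 * (1 + ε) * Real.log (1 + |x|) - C0 ≤ V x)
    {n : ℕ} (i : Fin n) (x : Fin n → ℝ) (hx : ∀ j, |x j| ≤ |x i|) :
    Psi β V r i x ≤ n * β * (Real.log 2 + 2 * csing b + C0 / 2 + |∫ y, V y ∂r| / 2
      - ε * Real.log (1 + |x i|)) := by
  have hcs := csing_pos hb.le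
  have hl2 : 0 < Real.log 2 := Real.log_pos (by norm_num)
  set u := |x i| with hu
  have hu0 : 0 ≤ u := abs_nonneg _
  have hlu : 0 ≤ Real.log (1 + u) := Real.log_nonneg (by linarith)
  set c := Real.log 2 + Real.log (1 + u) + 2 * csing b with hc
  have hc0 : 0 ≤ c := by positivity
  have h1 : ∑ j ∈ Finset.univ.erase i, (Real.log |x i - x j| - U r (x j)) ≤ n * c := by
    have : ∀ j ∈ Finset.univ.erase i, Real.log |x i - x j| - U r (x j) ≤ c := by
      intro j _
      have h2 := hr.U_lower hb.le (x j)
      have h3 : Real.log |x i - x j| ≤ Real.log 2 + Real.log (1 + u) := by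
        rw [← Real.log_mul (by norm_num) (by linarith)]
        rcases eq_or_ne (x i - x j) 0 with h0 | h0
        · rw [h0]; simp only [abs_zero, Real.log_zero]
          exact Real.log_nonneg (by linarith)
        · refine Real.log_le_log (abs_pos.2 h0) ?_
          calc |x i - x j| ≤ |x i| + |x j| := abs_sub _ _
            _ ≤ _ := by have := hx j; linarith
      linarith
    calc _ ≤ ((Finset.univ.erase i).card : ℝ) * c := by
          have := Finset.sum_le_card_nsmul _ _ _ this
          simpa only [nsmul_eq_mul] using this
      _ ≤ n * c := by
          gcongr
          simpa using Finset.card_le_univ (Finset.univ.erase i)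
  have h4 := hg (x i)
  have h5 := le_abs_self (∫ y, V y ∂r)
  have h6 : 0 ≤ (n:ℝ) * β / 2 := by positivity
  unfold Psi
  have h7 : n * β / 2 * (2 * (1 + ε) * Real.log (1 + u) - C0 - |∫ y, V y ∂r|) ≤ n * β / 2 * (V (x i) - ∫ y, V y ∂r) := by
    gcongr
  have h8 := mul_le_mul_of_nonneg_left h1 hβ.le
  have : β * (n * c) - n * β / 2 * (2 * (1 + ε) * Real.log (1 + u) - C0 - |∫ y, V y ∂r|)
    = n * β * (Real.log 2 + 2 * csing b + C0 / 2 + |∫ y, V y ∂r| / 2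
      - ε * Real.log (1 + u)) := by rw [hc]; ring
  linarith

/-- The tail weight `1_{|u|>R} (1+|u|)^{-p}`. -/
noncomputable def tw (R p : ℝ) : ℝ → ℝ :=
  Set.indicator {u : ℝ | R < |u|} fun u => Real.exp (-(p * Real.log (1 + |u|)))

lemma tw_measurable (R p : ℝ) : Measurable (tw R p) := by
  unfold tw
  refine Measurable.indicator ?_ (measurableSet_lt measurable_const (by fun_prop))
  fun_prop

lemma tw_lint {R p : ℝ} (hR : 0 ≤ R) (hp : 2 ≤ p) :
    ∫⁻ u, ENNReal.ofReal (tw R p u) ≤ ENNReal.ofReal (Real.exp (-((p - 2) * Real.log (1 + R))) * Real.pi) := by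
  rw [← integral_univ_inv_one_add_sq, ← integral_const_mul, ofReal_integral_eq_lintegral_ofReal
    (integrable_inv_one_add_sq.const_mul _) (Filter.Eventually.of_forall fun u => by positivity)]
  refine lintegral_mono fun u => ENNReal.ofReal_le_ofReal ?_
  unfold tw
  by_cases h : u ∈ {u : ℝ | R < |u|}
  swap
  · rw [Set.indicator_of_notMem h]; positivity
  rw [Set.indicator_of_mem h]
  have h' : R < |u| := h
  have hu : 0 ≤ |u| := abs_nonneg u
  have e : -(p * Real.log (1 + |u|)) = -((p - 2) * Real.log (1 + |u|)) + -(2 * Real.log (1 + |u|)) := by ring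
  rw [e, Real.exp_add]
  have h2 : Real.exp (-(2 * Real.log (1 + |u|))) ≤ (1 + u ^ 2)⁻¹ := by
    rw [Real.exp_neg, mul_comm, Real.exp_mul, Real.exp_log (by linarith)]
    refine inv_anti₀ (by positivity) ?_
    rw [Real.rpow_two, ← sq_abs u]; nlinarith
  have h3 : Real.log (1 + R) ≤ Real.log (1 + |u|) := Real.log_le_log (by linarith) (by linarith)
  gcongr

/-- Confinement: restricting to a large box loses at most half of the mass. -/
lemma trunc {β : ℝ} (hβ : 0 < β) {V : ℝ → ℝ} (hV : Continuous V) (hb : 0 < b)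
    (hr : Dens b r) {ε C0 : ℝ} (hε : 0 < ε)
    (hg : ∀ x, 2 * (1 + ε) * Real.log (1 + |x|) - C0 ≤ V x) :
    ∃ R0 : ℝ, 2 ≤ R0 ∧ ∀ R, R0 ≤ R → ∀ᶠ n : ℕ in Filter.atTop,
      Qb β V n R ≤ partitionFn β V n ∧ partitionFn β V n ≤ 2 * Qb β V n R := by
  -- `R0` is chosen so that the growth margin `ε log (1 + |x|)` of `V` beats the constants collected in `C2`.
  set C2 := Real.log 2 + 2 * csing b + C0 / 2 + |∫ y, V y ∂r| / 2 with hC2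
  refine ⟨max 2 (Real.exp (2 * C2 / ε)), le_max_left _ _, fun R hR => ?_⟩
  have hR2 : 2 ≤ R := (le_max_left _ _).trans hR
  have hRe : C2 ≤ ε / 2 * Real.log (1 + R) := by
    have h1 : Real.exp (2 * C2 / ε) ≤ 1 + R := ((le_max_right _ _).trans hR).trans (by linarith)
    have h2 := Real.log_le_log (Real.exp_pos _) h1
    rw [Real.log_exp] at h2
    have h3 := mul_le_mul_of_nonneg_left h2 (by positivity : 0 ≤ ε / 2)
    have h4 : ε / 2 * (2 * C2 / ε) = C2 := by field_simp
    linarith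
  have hlR : 0 < Real.log (1 + R) := Real.log_pos (by linarith)
  set c := β * ε / 2 * Real.log (1 + R) with hc
  have hcp : 0 < c := by positivity
  have ht : Filter.Tendsto (fun n : ℕ => (n * Real.exp (-(c * n))) * (Real.exp (2 * Real.log (1 + R)) * Real.pi * b))
      Filter.atTop (nhds (0 * (Real.exp (2 * Real.log (1 + R)) * Real.pi * b))) := by
    refine Filter.Tendsto.mul_const _ ?_
    have h1 := (Real.tendsto_pow_mul_exp_neg_atTop_nhds_zero 1)
    have h2 : Filter.Tendsto (fun n : ℕ => c * (n:ℝ)) Filter.atTop Filter.atTop :=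
      Filter.Tendsto.const_mul_atTop hcp tendsto_natCast_atTop_atTop
    have h3 := (h1.comp h2).const_mul c⁻¹
    simp only [mul_zero] at h3
    refine h3.congr fun n => ?_
    simp only [Function.comp, pow_one]
    field_simp
  rw [zero_mul] at ht
  have e1 := ht.eventually (gt_mem_nhds (show (0:ℝ) < 1 / 2 by norm_num))
  have e2 : ∀ᶠ n : ℕ in Filter.atTop, 2 ≤ (n:ℝ) * (β * ε / 2) :=
    (Filter.Tendsto.atTop_mul_const (by positivity) tendsto_natCast_atTop_atTop).eventually_ge_atTop 2
  filter_upwards [e1, e2] with n hn1 hn2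
  set F : (Fin n → ℝ) → ENNReal := fun x => ENNReal.ofReal (betaWeight β V n x) with hF
  have hcont := betaWeight_continuous hβ hV n
  have hFm : Measurable F := hcont.measurable.ennreal_ofReal
  set S : ℝ → ENNReal := fun M => ∫⁻ x in bx n M, F x with hS
  have hSint : ∀ M, IntegrableOn (betaWeight β V n) (bx n M) := fun M =>
    hcont.continuousOn.integrableOn_compact (bx_compact n M)
  have hSQ : ∀ M, S M = ENNReal.ofReal (Qb β V n M) := fun M => by
    rw [hS, Qb, ofReal_integral_eq_lintegral_ofReal (hSint M)
      (Filter.Eventually.of_forall fun y => betaWeight_nonneg _ _ _)]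
  set p := (n:ℝ) * (β * ε / 2) with hp
  set κ := Real.exp (-((p - 2) * Real.log (1 + R))) * Real.pi with hκ
  have hκ2 : (n:ℝ) * (κ * b) ≤ 1 / 2 := by
    have : (n:ℝ) * (κ * b) = (n * Real.exp (-(c * n))) * (Real.exp (2 * Real.log (1 + R)) * Real.pi * b) := by
      rw [hκ, hp, hc]
      have : -((n * (β * ε / 2) - 2) * Real.log (1 + R)) = -(β * ε / 2 * Real.log (1 + R) * n) + 2 * Real.log (1 + R) := by ring
      rw [this, Real.exp_add]; ring
    rw [this]; exact hn1.le
  have hκ0 : 0 ≤ κ := by positivity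
  have step : ∀ M, R ≤ M → S M ≤ 2 * S R := by
    intro M hM
    set A : Fin n → Set (Fin n → ℝ) := fun i => bx n M ∩ {x | R < |x i| ∧ ∀ j, |x j| ≤ |x i|} with hA
    have hAm : ∀ i, MeasurableSet (A i) := fun i => by
      have e : {x : Fin n → ℝ | R < |x i| ∧ ∀ j, |x j| ≤ |x i|}
          = {x : Fin n → ℝ | R < |x i|} ∩ ⋂ j, {x | |x j| ≤ |x i|} := by ext; simp
      rw [hA]; simp only; rw [e]
      refine (bx_meas n M).inter ((measurableSet_lt measurable_const (by fun_prop)).inter ?_)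
      exact MeasurableSet.iInter fun j => measurableSet_le (by fun_prop) (by fun_prop)
    have hAle : ∀ i, ∫⁻ x in A i, F x ≤ ENNReal.ofReal (κ * b) * S M := by
      intro i
      refine (rl_set hβ hV hb hr i (hR2.trans hM) (hAm i) Set.inter_subset_left (tw_measurable R p) ?_).trans ?_
      · intro x hx _
        obtain ⟨-, hx1, hx2⟩ := hx
        unfold tw
        rw [Set.indicator_of_mem (show x i ∈ {u : ℝ | R < |u|} from hx1)]
        refine Real.exp_le_exp.2 ((Psi_le_of_growth hβ hb hr hg i x hx2).trans ?_)
        rw [← hC2]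
        have h3 : Real.log (1 + R) ≤ Real.log (1 + |x i|) := Real.log_le_log (by linarith) (by linarith)
        have h4 : C2 - ε * Real.log (1 + |x i|) ≤ - (ε / 2 * Real.log (1 + |x i|)) := by nlinarith
        have h5 : (0:ℝ) ≤ n * β := by positivity
        have := mul_le_mul_of_nonneg_left h4 h5
        rw [hp]; nlinarith
      · rw [ENNReal.ofReal_mul hκ0]
        gcongr
        exact tw_lint (by linarith) hn2
    have hcov : bx n M ⊆ bx n R ∪ ⋃ i, A i := by
      intro x hx
      by_cases h : x ∈ bx n R
      · exact Or.inl h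
      right
      have h' : ∃ i, R < |x i| := by
        by_contra hcon
        push Not at hcon
        exact h hcon
      obtain ⟨i0, hi0⟩ := h'
      obtain ⟨i, -, hi⟩ := Finset.exists_max_image Finset.univ (fun i => |x i|) ⟨i0, Finset.mem_univ _⟩
      exact Set.mem_iUnion.2 ⟨i, hx, hi0.trans_le (hi i0 (Finset.mem_univ _)), fun j => hi j (Finset.mem_univ _)⟩
    have h1 : S M ≤ S R + (n:ENNReal) * (ENNReal.ofReal (κ * b) * S M) := by
      calc S M ≤ ∫⁻ x in bx n R ∪ ⋃ i, A i, F x := lintegral_mono_set hcov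
        _ ≤ S R + ∫⁻ x in ⋃ i, A i, F x := lintegral_union_le _ _ _
        _ ≤ S R + ∑' i, ∫⁻ x in A i, F x := by gcongr; exact lintegral_iUnion_le _ _
        _ = S R + ∑ i, ∫⁻ x in A i, F x := by rw [tsum_fintype]
        _ ≤ S R + ∑ i : Fin n, ENNReal.ofReal (κ * b) * S M := by
            gcongr with i; exact hAle i
        _ = _ := by simp
    have hq0 : ∀ M, 0 ≤ Qb β V n M := fun M => integral_nonneg fun x => betaWeight_nonneg _ _ _
    rw [hSQ M, hSQ R, ← ENNReal.ofReal_natCast, ← ENNReal.ofReal_mul (by positivity),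
      ← ENNReal.ofReal_mul (by positivity), ← ENNReal.ofReal_add (hq0 _) (by have := hq0 M; positivity)] at h1
    rw [hSQ M, hSQ R]
    have h2 := (ENNReal.ofReal_le_ofReal_iff (by have := hq0 M; have := hq0 R; positivity)).1 h1
    rw [show (2:ENNReal) = ENNReal.ofReal 2 by simp, ← ENNReal.ofReal_mul (by norm_num)]
    refine ENNReal.ofReal_le_ofReal ?_
    have := mul_le_mul_of_nonneg_right hκ2 (hq0 M)
    nlinarith
  have htot : ∫⁻ x, F x ≤ 2 * S R := by
    have hU : (⋃ k : ℕ, bx n (R + k)) = Set.univ := by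
      rw [Set.eq_univ_iff_forall]
      intro x
      obtain ⟨k, hk⟩ := exists_nat_ge (∑ j, |x j|)
      refine Set.mem_iUnion.2 ⟨k, fun i => ?_⟩
      have := Finset.single_le_sum (f := fun j => |x j|) (fun j _ => abs_nonneg _) (Finset.mem_univ i)
      linarith
    have hmono : Monotone fun k : ℕ => bx n (R + k) := by
      intro k l hkl x hx i
      have : (k:ℝ) ≤ l := by exact_mod_cast hkl
      exact (hx i).trans (by linarith)
    rw [← setLIntegral_univ, ← hU, setLIntegral_iUnion_of_directed _ hmono.directed_le]
    exact iSup_le fun k => step _ (by have : (0:ℝ) ≤ k := by positivity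
                                      linarith)
  have hfin : ∫⁻ x, F x < ⊤ := htot.trans_lt (by
    rw [hSQ]; exact ENNReal.mul_lt_top (by simp) ENNReal.ofReal_lt_top)
  have hInt : Integrable (betaWeight β V n) := by
    refine ⟨hcont.aestronglyMeasurable, ?_⟩
    rw [hasFiniteIntegral_iff_ofReal (Filter.Eventually.of_forall fun y => betaWeight_nonneg _ _ _)]
    exact hfin
  constructor
  · exact setIntegral_le_integral hInt (Filter.Eventually.of_forall fun y => betaWeight_nonneg _ _ _)
  · have h1 : ENNReal.ofReal (partitionFn β V n) ≤ ENNReal.ofReal (2 * Qb β V n R) := by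
      rw [partitionFn, ofReal_integral_eq_lintegral_ofReal hInt
        (Filter.Eventually.of_forall fun y => betaWeight_nonneg _ _ _), ENNReal.ofReal_mul (by norm_num), ← hSQ]
      simpa using htot
    exact (ENNReal.ofReal_le_ofReal_iff (mul_nonneg (by norm_num)
      (integral_nonneg fun x => betaWeight_nonneg _ _ _))).1 h1

end BetaEns

/-! ### The confined Gibbs measure and its energy bound -/

namespace BetaEns
variable {b : ℝ} {r : Measure ℝ}

/-- The Gibbs measure of the ensemble restricted to the box `[-R,R]^n`. -/
noncomputable def Gm (β : ℝ) (V : ℝ → ℝ) (n : ℕ) (R : ℝ) : Measure (Fin n → ℝ) :=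
  (ENNReal.ofReal (Qb β V n R))⁻¹ •
    (volume.restrict (bx n R)).withDensity fun x => ENNReal.ofReal (betaWeight β V n x)

lemma Qb_pos {β : ℝ} (hβ : 0 < β) {V : ℝ → ℝ} (hV : Continuous V) (hb : 0 < b) (hr : Dens b r)
    {R : ℝ} (hR : 2 ≤ R) (n : ℕ) : 0 < Qb β V n R :=
  (Real.exp_pos _).trans_le (Qb_lower hβ hV hb hr hR n)

lemma bw_integrableOn {β : ℝ} (hβ : 0 < β) {V : ℝ → ℝ} (hV : Continuous V) (n : ℕ) (R : ℝ) :
    IntegrableOn (betaWeight β V n) (bx n R) :=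
  (betaWeight_continuous hβ hV n).continuousOn.integrableOn_compact (bx_compact n R)

lemma bw_lint {β : ℝ} (hβ : 0 < β) {V : ℝ → ℝ} (hV : Continuous V) (n : ℕ) (R : ℝ) :
    ∫⁻ x in bx n R, ENNReal.ofReal (betaWeight β V n x) = ENNReal.ofReal (Qb β V n R) := by
  rw [Qb, ofReal_integral_eq_lintegral_ofReal (bw_integrableOn hβ hV n R)
      (Filter.Eventually.of_forall fun y => betaWeight_nonneg _ _ _)]

lemma Gm_prob {β : ℝ} (hβ : 0 < β) {V : ℝ → ℝ} (hV : Continuous V) {n : ℕ} {R : ℝ}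
    (hQ : 0 < Qb β V n R) : IsProbabilityMeasure (Gm β V n R) := by
  constructor
  rw [Gm, Measure.smul_apply, withDensity_apply _ MeasurableSet.univ, Measure.restrict_univ, bw_lint hβ hV,
    smul_eq_mul]
  exact ENNReal.inv_mul_cancel (by simpa using hQ) (by simp)

lemma Gm_apply {β : ℝ} {V : ℝ → ℝ} {n : ℕ} {R : ℝ} {s : Set (Fin n → ℝ)} (hs : MeasurableSet s) :
    Gm β V n R s = (ENNReal.ofReal (Qb β V n R))⁻¹ *
      ∫⁻ x in s ∩ bx n R, ENNReal.ofReal (betaWeight β V n x) := by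
  rw [Gm, Measure.smul_apply, withDensity_apply _ hs, Measure.restrict_restrict hs, smul_eq_mul]

lemma Gm_integral {β : ℝ} (hβ : 0 < β) {V : ℝ → ℝ} (hV : Continuous V) {n : ℕ} {R : ℝ}
    (hQ : 0 < Qb β V n R) {E : Type*} [NormedAddCommGroup E] [NormedSpace ℝ E]
    (f : (Fin n → ℝ) → E) :
    ∫ x, f x ∂(Gm β V n R) = (Qb β V n R)⁻¹ • ∫ x in bx n R, betaWeight β V n x • f x := by
  rw [Gm, integral_smul_measure, ENNReal.toReal_inv, ENNReal.toReal_ofReal hQ.le]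
  congr 1
  rw [integral_withDensity_eq_integral_toReal_smul
    (betaWeight_continuous hβ hV n).measurable.ennreal_ofReal (by simp)]
  refine integral_congr_ae (Filter.Eventually.of_forall fun x => ?_)
  simp only
  rw [ENNReal.toReal_ofReal (betaWeight_nonneg _ _ _)]

lemma Gm_ae_bx {β : ℝ} {V : ℝ → ℝ} {n : ℕ} {R : ℝ} : ∀ᵐ x ∂(Gm β V n R), x ∈ bx n R := by
  rw [ae_iff]
  change Gm β V n R (bx n R)ᶜ = 0
  rw [Gm_apply (bx_meas n R).compl]
  simp

lemma Gm_ae_inj {β : ℝ} (hβ : 0 < β) {V : ℝ → ℝ} (hV : Continuous V) {n : ℕ} {R : ℝ} :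
    ∀ᵐ x ∂(Gm β V n R), Function.Injective x := by
  have hm : MeasurableSet {x : Fin n → ℝ | betaWeight β V n x = 0} :=
    (betaWeight_continuous hβ hV n).measurable (measurableSet_singleton 0)
  have h0 : Gm β V n R {x | betaWeight β V n x = 0} = 0 := by
    rw [Gm_apply hm]
    have : ∫⁻ x in {x | betaWeight β V n x = 0} ∩ bx n R, ENNReal.ofReal (betaWeight β V n x) = 0 := by
      rw [setLIntegral_congr_fun (g := fun _ => 0) (hm.inter (bx_meas n R))]
      · simp
      · intro x hx
        have : betaWeight β V n x = 0 := hx.1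
        simp [this]
    rw [this, mul_zero]
  rw [ae_iff]
  exact measure_mono_null (fun x hx => betaWeight_zero hβ V hx) h0

/-- Data of an equilibrium problem together with bounds that are uniform along the interpolation:
`r` is the equilibrium measure of `V`, `P` the analytic factor of its density, and `W` the analytic
extension of `V'`. -/
structure Ens (d R b j0 : ℝ) (V : ℝ → ℝ) (r : Measure ℝ) (P W : ℂ → ℂ) : Prop where
  dens : Dens b r
  cont : Continuous V
  J0 : ∀ x, |x| ≤ R → 0 ≤ JJ V r x
  J1 : ∀ x, 2 + d ≤ |x| → |x| ≤ R → j0 ≤ JJ V r x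
  Pd : DifferentiableOn ℂ P (ball 0 (2 + 3 * d))
  Wd : DifferentiableOn ℂ W (ball 0 (2 + 3 * d))
  Pb : ∀ z ∈ closedBall (0:ℂ) (2 + 5 * d / 2), P z ≠ 0 ∧ ‖P z‖ ≤ b ∧ ‖(P z)⁻¹‖ ≤ b
  Wb : ∀ z ∈ closedBall (0:ℂ) (2 + 5 * d / 2), ‖W z‖ ≤ b ∧ ‖deriv W z‖ ≤ b
  VW : ∀ x : ℝ, |x| < 2 + 3 * d → HasDerivAt V (W x).re x ∧ (W x).im = 0
  G : ∀ z ∈ ball (0:ℂ) (2 + 3 * d), 2 < ‖z‖ → 2 * ∫ y : ℝ, 1 / (z - y) ∂r = W z - P z * Xhalf z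

/-- Configurations of weight well below the lower bound for the partition function are negligible. -/
lemma low_weight {β : ℝ} (hβ : 0 < β) {V : ℝ → ℝ} (hV : Continuous V) (hb : 0 < b) (hr : Dens b r)
    {R : ℝ} (hR : 2 ≤ R) {n : ℕ} {c : ℝ} (hc : 1 + Real.log (2 * R) + 2 * β + Real.log b ≤ c) :
    (Gm β V n R).real {x | betaWeight β V n x ≤ Real.exp (β / 2 * (n ^ 2 * EE V r) - c * n)}
      ≤ Real.exp (-n) := by
  set a := Real.exp (β / 2 * (n ^ 2 * EE V r) - c * n) with ha
  have hm : MeasurableSet {x : Fin n → ℝ | betaWeight β V n x ≤ a} :=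
    measurableSet_le (betaWeight_continuous hβ hV n).measurable measurable_const
  have hQ := Qb_pos hβ hV hb hr hR n
  rw [measureReal_def, Gm_apply hm]
  have h1 : ∫⁻ x in {x | betaWeight β V n x ≤ a} ∩ bx n R, ENNReal.ofReal (betaWeight β V n x)
      ≤ ENNReal.ofReal (a * (2 * R) ^ n) := by
    calc _ ≤ ∫⁻ x in {x | betaWeight β V n x ≤ a} ∩ bx n R, ENNReal.ofReal a := by
          refine setLIntegral_mono' (hm.inter (bx_meas n R)) fun x hx => ?_
          exact ENNReal.ofReal_le_ofReal hx.1
      _ ≤ ∫⁻ x in bx n R, ENNReal.ofReal a := lintegral_mono_set Set.inter_subset_right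
      _ = ENNReal.ofReal (a * (2 * R) ^ n) := by
          rw [setLIntegral_const, ENNReal.ofReal_mul (Real.exp_pos _).le, ← bx_vol n (by linarith : 0 ≤ R),
            measureReal_def, ENNReal.ofReal_toReal (bx_compact n R).measure_lt_top.ne]
  calc _ ≤ ((ENNReal.ofReal (Qb β V n R))⁻¹ * ENNReal.ofReal (a * (2 * R) ^ n)).toReal := by
        refine ENNReal.toReal_mono ?_ (by gcongr)
        exact ENNReal.mul_ne_top (by simpa using hQ) (by simp)
    _ = (Qb β V n R)⁻¹ * (a * (2 * R) ^ n) := by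
        rw [ENNReal.toReal_mul, ENNReal.toReal_inv, ENNReal.toReal_ofReal hQ.le, ENNReal.toReal_ofReal (by positivity)]
    _ ≤ (Real.exp (β / 2 * (n ^ 2 * EE V r) - (2 * β + Real.log b) * n))⁻¹ * (a * (2 * R) ^ n) := by
        gcongr; exact Qb_lower hβ hV hb hr hR n
    _ ≤ Real.exp (-n) := by
        have : (2 * R) ^ n = Real.exp (Real.log (2 * R) * n) := by
          rw [Real.exp_mul, Real.exp_log (by linarith), Real.rpow_natCast]
        rw [this, ha, ← Real.exp_neg, ← Real.exp_add, ← Real.exp_add]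
        refine Real.exp_le_exp.2 ?_
        have : (0:ℝ) ≤ n := by positivity
        nlinarith

/-- Configurations of non-negligible weight have electrostatic energy `O(n log n)`. -/
lemma energy_le {β : ℝ} (hβ : 0 < β) {V : ℝ → ℝ} (hb : 0 < b) (hr : Dens b r)
    {R : ℝ} (hR : 2 ≤ R) (hJ : ∀ x, |x| ≤ R → 0 ≤ JJ V r x) {n : ℕ} (hn : 3 ≤ n) {c : ℝ} (hc : 0 ≤ c)
    {x : Fin n → ℝ} (hx : x ∈ bx n R)
    (hF : Real.exp (β / 2 * (n ^ 2 * EE V r) - c * n) < betaWeight β V n x) :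
    enr r (1 / (n:ℝ) ^ 2) n x ≤ (2 * c / β + 4 * csing b + 4 * R ^ 2 + 2) * (n * Real.log n) := by
  have hcs := csing_pos hb.le
  have hn0 : (3:ℝ) ≤ n := by exact_mod_cast hn
  have hl : 1 ≤ Real.log n := by
    rw [← Real.log_exp 1]
    exact Real.log_le_log (Real.exp_pos _) (by have := Real.exp_one_lt_d9; linarith)
  have hinj : Function.Injective x := by
    by_contra h
    rw [betaWeight_zero hβ V h] at hF
    exact absurd hF (not_lt.2 (Real.exp_pos _).le)
  rw [betaWeight_eq β V hinj, Real.exp_lt_exp] at hF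
  have hη : (0:ℝ) < 1 / (n:ℝ) ^ 2 := by positivity
  have h1 := sp_le hb.le hr hη (S := n) (by
    rw [div_le_iff₀ (by positivity)]; nlinarith [sq_nonneg (n:ℝ)]) hR V x hinj hx
  have hs : Real.sqrt (1 / (n:ℝ) ^ 2) = 1 / n := by
    rw [Real.sqrt_div (by norm_num), Real.sqrt_sq (by positivity), Real.sqrt_one]
  have hle : Real.log (1 / (n:ℝ) ^ 2) = - (2 * Real.log n) := by
    rw [one_div, Real.log_inv, Real.log_pow]; norm_num
  rw [hs, hle] at h1
  have h2 : 0 ≤ (n:ℝ) * ∑ i, JJ V r (x i) :=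
    mul_nonneg (by positivity) (Finset.sum_nonneg fun i _ => hJ _ (hx i))
  have e1 : (4 * csing b * (1 / (n:ℝ)) + 4 * R ^ 2 / n ^ 2) * n ^ 2 = 4 * csing b * n + 4 * R ^ 2 := by
    field_simp
  rw [e1] at h1
  have h3 : n ^ 2 * EE V r - 2 * c / β * n < sp x - n * ∑ i, V (x i) := by
    have := mul_lt_mul_of_pos_left hF (by positivity : 0 < 2 / β)
    have e2 : 2 / β * (β / 2 * (n ^ 2 * EE V r) - c * n) = n ^ 2 * EE V r - 2 * c / β * n := by
      field_simp
    have e3 : 2 / β * (β / 2 * (sp x - n * ∑ i, V (x i))) = sp x - n * ∑ i, V (x i) := by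
      field_simp
    rwa [e2, e3] at this
  have h4 : (n:ℝ) ≤ n * Real.log n := by nlinarith
  have h5 : (1:ℝ) ≤ n * Real.log n := by nlinarith
  have h6 : 0 ≤ 2 * c / β := by positivity
  have h7 := mul_le_mul_of_nonneg_left h4 h6
  have h8 := mul_le_mul_of_nonneg_left h4 hcs.le
  have h9 := mul_le_mul_of_nonneg_left h5 (sq_nonneg R)
  nlinarith

end BetaEns

/-! ### Points outside the support -/

namespace BetaEns
variable {b : ℝ} {r : Measure ℝ}

lemma bil_dirac (y : ℝ) {τ : Measure ℝ} [IsFiniteMeasure τ] {K : ℝ → ℝ} (hK : Continuous K) :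
    bil (Measure.dirac y) τ K = ∫ u, K (y - u) ∂τ := by
  unfold bil
  rw [Measure.dirac_prod, integral_map (by fun_prop)]
  exact (hK.comp (by fun_prop)).aestronglyMeasurable

lemma pk_continuous {s : ℝ} (hs : 0 < s) : Continuous (pk s) := by
  unfold pk
  refine continuous_const.div (by fun_prop) fun u => ?_
  positivity

lemma pk_im {s : ℝ} (y u : ℝ) : (1 / ((y:ℂ) + s * Complex.I - u)).im = - pk s (y - u) := by
  unfold pk
  rw [one_div, Complex.inv_im, Complex.normSq_apply]
  simp
  ring_nf

lemma mz_im (hr : Dens b r) {s : ℝ} (hs : 0 < s) (y : ℝ) {n : ℕ} (x : Fin n → ℝ) :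
    (mz r x ((y:ℂ) + s * Complex.I)).im = -(∑ j, pk s (y - x j) - n * ∫ u, pk s (y - u) ∂r) := by
  have := hr.prob
  have hi : Integrable (fun u : ℝ => 1 / ((y:ℂ) + s * Complex.I - u)) r := by
    refine hr.integrable_of_cont (Continuous.continuousOn ?_)
    refine continuous_const.div (by fun_prop) fun u h => ?_
    have := congrArg Complex.im h
    simp at this
    exact hs.ne' this
  unfold mz
  have e : (∫ u : ℝ, 1 / ((y:ℂ) + s * Complex.I - u) ∂r).im = - ∫ u, pk s (y - u) ∂r := by
    have := integral_im hi
    simp only [RCLike.im_to_complex] at this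
    rw [← this, ← integral_neg]
    exact integral_congr_ae (Filter.Eventually.of_forall fun u => pk_im y u)
  have e2 : ((n:ℂ) * ∫ u : ℝ, 1 / ((y:ℂ) + s * Complex.I - u) ∂r).im
      = n * (∫ u : ℝ, 1 / ((y:ℂ) + s * Complex.I - u) ∂r).im := by
    simp
  rw [Complex.sub_im, e2, e, Complex.im_sum]
  simp only [pk_im, Finset.sum_neg_distrib]
  ring

/-- Fluctuation of the regularized logarithm, controlled through the Stieltjes transform on the
vertical segment above `y`. -/
lemma Mlg_bd (hr : Dens b r) {a S R y δ : ℝ} (ha : 0 < a) (hS : a ≤ S) (hR : 2 ≤ R) (hy : |y| ≤ R)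
    {n : ℕ} {x : Fin n → ℝ} (hx : x ∈ bx n R)
    (hδ : ∀ s, a ≤ s → s ≤ S → ‖mz r x ((y:ℂ) + s * Complex.I)‖ ≤ δ) :
    |∑ j, lg a (y - x j) - n * Ue r a y| ≤ n * ((2 * R) ^ 2 / S ^ 2) + (S - a) * δ := by
  have := hr.prob
  have hS0 : 0 < S := ha.trans_le hS
  have hcl : Continuous fun u => lg S u - lg a u := (lg_continuous hS0).sub (lg_continuous ha)
  obtain ⟨i1, e1⟩ := bil_lg (σ := Measure.dirac y) (τ := r) ha hS
  obtain ⟨i2, e2⟩ := bil_lg (σ := Measure.dirac y) (τ := emp x) ha hS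
  rw [bil_dirac y hcl, integral_sub (hr.lg_integrable hS0 y) (hr.lg_integrable ha y)] at e1
  rw [bil_dirac y hcl, integral_emp] at e2
  have hd : |(∫ s in Set.Ioc a S, bil (Measure.dirac y) (emp x) (pk s))
      - n * ∫ s in Set.Ioc a S, bil (Measure.dirac y) r (pk s)| ≤ (S - a) * δ := by
    rw [← integral_const_mul, ← integral_sub i2 (i1.const_mul _), ← Real.norm_eq_abs]
    have h1 := norm_setIntegral_le_of_norm_le_const (μ := volume) (s := Set.Ioc a S) (C := δ)
      (f := fun s => bil (Measure.dirac y) (emp x) (pk s) - n * bil (Measure.dirac y) r (pk s))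
      (by simp) (fun s hs => by
        have hs0 : 0 < s := ha.trans hs.1
        rw [bil_dirac y (pk_continuous hs0), bil_dirac y (pk_continuous hs0), integral_emp]
        have h2 := mz_im hr hs0 y x
        have h3 := (Complex.abs_im_le_norm _).trans (hδ s hs.1.le hs.2)
        rw [h2, abs_neg] at h3
        exact h3)
    refine h1.trans (le_of_eq ?_)
    rw [Real.volume_real_Ioc_of_le hS]; ring
  rw [← e1, ← e2, Finset.sum_sub_distrib] at hd
  have hSb : |∑ j, lg S (y - x j) - n * Ue r S y| ≤ n * ((2 * R) ^ 2 / S ^ 2) := by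
    have h1 := Ue_S_bd hr hS0 hR hy
    have e : ∑ j, lg S (y - x j) - n * Ue r S y = ∑ j, (lg S (y - x j) - Real.log S)
      - n * (Ue r S y - Real.log S) := by
      rw [Finset.sum_sub_distrib]; simp; ring
    have h2 : ∀ j, 0 ≤ lg S (y - x j) - Real.log S ∧ lg S (y - x j) - Real.log S ≤ (2 * R) ^ 2 / (2 * S ^ 2) :=
      fun j => lg_S_bd hS0 ((abs_sub _ _).trans (by have := hx j; linarith))
    have h3 : 0 ≤ ∑ j, (lg S (y - x j) - Real.log S) := Finset.sum_nonneg fun j _ => (h2 j).1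
    have h4 : ∑ j, (lg S (y - x j) - Real.log S) ≤ n * ((2 * R) ^ 2 / (2 * S ^ 2)) := by
      have := Finset.sum_le_card_nsmul Finset.univ _ _ fun j _ => (h2 j).2
      simpa only [nsmul_eq_mul, Finset.card_univ, Fintype.card_fin] using this
    have hn : (0:ℝ) ≤ n := by positivity
    have h5 := mul_le_mul_of_nonneg_left h1.1 hn
    have h6 := mul_le_mul_of_nonneg_left h1.2 hn
    have h7 : n * ((2 * R) ^ 2 / S ^ 2) = 2 * (n * ((2 * R) ^ 2 / (2 * S ^ 2))) := by
      field_simp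
    rw [e, h7, abs_le]
    constructor <;> linarith
  have e3 : ∫ u, lg S (y - u) ∂r = Ue r S y := rfl
  have e4 : ∫ u, lg a (y - u) ∂r = Ue r a y := rfl
  rw [e3, e4] at hd
  rw [abs_le] at hd hSb ⊢
  constructor <;> nlinarith [hd.1, hd.2, hSb.1, hSb.2]

lemma U_le_R (hb : 0 ≤ b) (hr : Dens b r) {R y : ℝ} (hy : |y| ≤ R) : U r y ≤ R + 2 := by
  have := hr.prob
  have : U r y ≤ ∫ _, (R + 2) ∂r := by
    refine integral_mono_ae (hr.log_integrable hb y) (integrable_const _) ?_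
    filter_upwards [hr.ae_mem] with u hu
    refine (Real.log_le_self (abs_nonneg _)).trans ((abs_sub _ _).trans ?_)
    have : |u| ≤ 2 := abs_le.2 hu
    linarith
  simpa using this

/-- The exponent `Psi` is at most `-(n β / 2)` times the effective potential at `x i`, up to errors that come
from regularizing the logarithm at scale `a`, cutting it off at scale `S`, and the fluctuation bound `δ`. -/
lemma tail_Psi {β : ℝ} (hβ : 0 < β) (V : ℝ → ℝ) (hb : 0 < b) (hr : Dens b r) {a S R δ : ℝ}
    (ha : 0 < a) (hS : a ≤ S) (hR : 2 ≤ R) {n : ℕ} {x : Fin n → ℝ} (hx : x ∈ bx n R)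
    (hinj : Function.Injective x)
    (hδ : ∀ y s : ℝ, a ≤ s → s ≤ S → ‖mz r x ((y:ℂ) + s * Complex.I)‖ ≤ δ) (i : Fin n) :
    Psi β V r i x ≤ -(n * β / 2) * JJ V r (x i) + β * (4 * n * csing b * Real.sqrt a
      + 2 * (n * ((2 * R) ^ 2 / S ^ 2) + (S - a) * δ) - Real.log a + R + 2) := by
  have := hr.prob
  set err := n * ((2 * R) ^ 2 / S ^ 2) + (S - a) * δ with herr
  set y := x i with hy
  have h1 : ∑ j ∈ Finset.univ.erase i, Real.log |y - x j| ≤ ∑ j, lg a (y - x j) - Real.log a := by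
    rw [← Finset.sum_erase_add (a := i) _ _ (Finset.mem_univ i)]
    have : lg a (y - x i) = Real.log a := by
      rw [hy, sub_self]; simp [lg]
    rw [this, add_sub_cancel_right]
    refine Finset.sum_le_sum fun j hj => ?_
    have : y - x j ≠ 0 := sub_ne_zero.2 fun h => (Finset.ne_of_mem_erase hj) (hinj h).symm
    linarith [(lg_sub_le ha this).1]
  have h2 := (abs_le.1 (Mlg_bd hr ha hS hR (hx i) hx (hδ (x i)))).2
  have h3 := hr.Ue_le_U hb.le ha y
  have h4 : n * Lr r - err ≤ ∑ j, Ue r a (x j) := by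
    have e : ∑ j, Ue r a (x j) = ∫ v, ∑ j, lg a (v - x j) ∂r := by
      rw [integral_finsetSum]
      · refine Finset.sum_congr rfl fun j _ => ?_
        unfold Ue
        refine integral_congr_ae (Filter.Eventually.of_forall fun v => ?_)
        simp only
        rw [← lg_even, neg_sub]
      · intro j _
        exact hr.integrable_of_cont ((lg_continuous ha).comp (by fun_prop)).continuousOn
    have e2 : n * Lr r - err = ∫ v, (n * U r v - err) ∂r := by
      rw [integral_sub, integral_const_mul]
      · simp [Lr]
      · exact (hr.integrable_of_cont (hr.U_continuous hb.le).continuousOn).const_mul _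
      · exact integrable_const _
    rw [e, e2]
    refine integral_mono_ae ?_ ?_ ?_
    · exact ((hr.integrable_of_cont (hr.U_continuous hb.le).continuousOn).const_mul _).sub (integrable_const _)
    · refine integrable_finsetSum _ fun j _ => ?_
      exact hr.integrable_of_cont ((lg_continuous ha).comp (by fun_prop)).continuousOn
    · filter_upwards [hr.ae_mem] with v hv
      have hv' : |v| ≤ R := (abs_le.2 hv).trans hR
      have h5 := (abs_le.1 (Mlg_bd hr ha hS hR hv' hx (hδ v))).1
      have h6 := hr.U_le_Ue hb.le ha v
      have : n * U r v ≤ n * Ue r a v := by gcongr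
      linarith
  have h5 : ∑ j, Ue r a (x j) ≤ ∑ j, U r (x j) + n * (2 * csing b * Real.sqrt a) := by
    have : ∑ j, Ue r a (x j) ≤ ∑ j, (U r (x j) + 2 * csing b * Real.sqrt a) :=
      Finset.sum_le_sum fun j _ => hr.Ue_le_U hb.le ha (x j)
    rw [Finset.sum_add_distrib] at this
    simpa using this
  have h6 : ∑ j ∈ Finset.univ.erase i, U r (x j) = ∑ j, U r (x j) - U r y := by
    rw [← Finset.sum_erase_add (a := i) Finset.univ _ (Finset.mem_univ i)]; ring
  have h7 := U_le_R hb.le hr (hx i)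
  unfold Psi
  rw [Finset.sum_sub_distrib, h6]
  have h8 : (n:ℝ) * Ue r a y ≤ n * (U r y + 2 * csing b * Real.sqrt a) := by gcongr
  have h9 : (∑ j ∈ Finset.univ.erase i, Real.log |y - x j| - (∑ j, U r (x j) - U r y))
      ≤ n * U r y - n * Lr r + (4 * n * csing b * Real.sqrt a + 2 * err - Real.log a + R + 2) := by
    linarith
  have h10 := mul_le_mul_of_nonneg_left h9 hβ.le
  unfold JJ
  linarith

end BetaEns

/-! ### Localization near `[-2,2]` -/

namespace BetaEns
variable {b : ℝ} {r : Measure ℝ}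

lemma mz_vert (hr : Dens b r) {a S K : ℝ} (ha : 0 < a) {n : ℕ} {x : Fin n → ℝ} (hn : 0 < n)
    (h1 : 2 * (1 / (n:ℝ) ^ 2) ≤ a) (h2 : S ≤ n) (hE : enr r (1 / (n:ℝ) ^ 2) n x ≤ K)
    (y s : ℝ) (hs : a ≤ s) (hs2 : s ≤ S) :
    ‖mz r x ((y:ℂ) + s * Complex.I)‖ ≤ Real.sqrt (2 / a ^ 2 * K) := by
  have hn' : (0:ℝ) < n := by exact_mod_cast hn
  refine Real.le_sqrt_of_sq_le ?_
  have him : ((y:ℂ) + s * Complex.I).im = s := by simp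
  have hs0 : 0 < s := ha.trans_le hs
  have h := mz_sq_le hr (η := 1 / (n:ℝ) ^ 2) (S := n) (by positivity) x (z := (y:ℂ) + s * Complex.I)
    (by rw [him, abs_of_pos hs0]; linarith) (by rw [him, abs_of_pos hs0]; linarith)
  rw [him] at h
  have he : 0 ≤ enr r (1 / (n:ℝ) ^ 2) n x := enr_nonneg hr (by positivity) (by
    have h3 : (1:ℝ) ≤ n := by exact_mod_cast hn
    rw [div_le_iff₀ (by positivity)]
    nlinarith [sq_nonneg (n:ℝ)]) x
  refine h.trans ?_
  gcongr

/-- With overwhelming probability all points lie in `[-2-d, 2+d]` and the energy is `O(n log n)`. -/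
lemma good_set {β d R b j0 : ℝ} (hβ : 0 < β) (hd : 0 < d) (hb : 1 ≤ b) (hR : 2 + 3 * d ≤ R) (hj : 0 < j0) :
    ∃ C > 0, ∀ᶠ n : ℕ in Filter.atTop, ∀ V r P W, Ens d R b j0 V r P W →
      ∃ A : Set (Fin n → ℝ), MeasurableSet A ∧
        (∀ x ∈ A, (∀ i, |x i| ≤ 2 + d) ∧ enr r (1 / (n:ℝ) ^ 2) n x ≤ C * (n * Real.log n)) ∧
        (Gm β V n R).real Aᶜ ≤ 1 / (n:ℝ) ^ 4 := by
  have hb0 : 0 < b := by linarith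
  have hR2 : 2 ≤ R := by linarith
  have hcs := csing_pos hb0.le
  set c := 1 + Real.log (2 * R) + 2 * β + Real.log b with hc
  have hc0 : 0 ≤ c := by
    have h1 : 0 ≤ Real.log (2 * R) := Real.log_nonneg (by linarith)
    have h2 : 0 ≤ Real.log b := Real.log_nonneg hb
    positivity
  set C := 2 * c / β + 4 * csing b + 4 * R ^ 2 + 2 with hC
  have hCp : 0 < C := by positivity
  refine ⟨C, hCp, ?_⟩
  -- `a` and `S` are the scales at which the logarithm is regularized and cut off; they are fixed so that
  -- the two resulting errors add up to at most `n * j0 / 8`.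
  set a := (j0 / (64 * csing b)) ^ 2 with ha
  have ha0 : 0 < a := by positivity
  have hsa : Real.sqrt a = j0 / (64 * csing b) := by rw [ha, Real.sqrt_sq (by positivity)]
  set S := a + 1 + 128 * R ^ 2 / j0 with hS
  have hSa : a ≤ S := by rw [hS]; have : 0 ≤ 128 * R ^ 2 / j0 := by positivity
                         linarith
  have hS1 : 1 ≤ S := by rw [hS]; have : 0 ≤ 128 * R ^ 2 / j0 := by positivity
                         linarith
  have hSS : 2 * ((2 * R) ^ 2 / S ^ 2) ≤ j0 / 16 := by
    have h1 : 128 * R ^ 2 / j0 ≤ S := by rw [hS]; linarith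
    have h2 : 128 * R ^ 2 / j0 ≤ S ^ 2 := by nlinarith
    rw [div_le_iff₀ hj] at h2
    rw [← mul_div_assoc, div_le_iff₀ (by positivity)]
    linarith
  -- all the conditions on the size of `n`
  have lim : ∀ᶠ n : ℕ in Filter.atTop, Real.sqrt (2 / a ^ 2 * (C * (n * Real.log n))) * (2 * (S - a))
      + (-Real.log a + R + 2) ≤ n * (j0 / 8) := by
    have t1 : Filter.Tendsto (fun n : ℕ => Real.log n / n) Filter.atTop (nhds 0) := by
      have := (Real.isLittleO_log_id_atTop.tendsto_div_nhds_zero).comp (tendsto_natCast_atTop_atTop (R := ℝ))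
      exact this
    have t2 : Filter.Tendsto (fun n : ℕ => Real.sqrt (2 / a ^ 2 * C * (Real.log n / n)) * (2 * (S - a))
      + (-Real.log a + R + 2) * (1 / (n:ℝ))) Filter.atTop (nhds (Real.sqrt (2 / a ^ 2 * C * 0) * (2 * (S - a))
      + (-Real.log a + R + 2) * 0)) := by
      refine (((t1.const_mul _).sqrt).mul_const _).add (Filter.Tendsto.const_mul _ ?_)
      exact tendsto_one_div_atTop_nhds_zero_nat
    simp only [mul_zero, Real.sqrt_zero, zero_mul, add_zero] at t2
    filter_upwards [t2.eventually (gt_mem_nhds (show (0:ℝ) < j0 / 8 by positivity)), Filter.eventually_ge_atTop 1] with n h1 h2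
    have hn : (0:ℝ) < n := by exact_mod_cast h2
    have e : Real.sqrt (2 / a ^ 2 * (C * (n * Real.log n))) = n * Real.sqrt (2 / a ^ 2 * C * (Real.log n / n)) := by
      rw [show 2 / a ^ 2 * (C * (n * Real.log n)) = (n:ℝ) ^ 2 * (2 / a ^ 2 * C * (Real.log n / n)) by
        field_simp, Real.sqrt_mul (by positivity), Real.sqrt_sq hn.le]
    rw [e]
    have h3 := mul_le_mul_of_nonneg_left h1.le hn.le
    have e2 : (n:ℝ) * ((-Real.log a + R + 2) * (1 / (n:ℝ))) = -Real.log a + R + 2 := by field_simp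
    rw [mul_add, e2] at h3
    linarith
  have lim2 : ∀ᶠ n : ℕ in Filter.atTop, Real.exp (-n) + n * (2 * R * Real.exp (-(β * j0 / 4 * n)) * b)
      ≤ 1 / (n:ℝ) ^ 4 := by
    have key : ∀ (q : ℝ), 0 < q → ∀ k : ℕ, Filter.Tendsto (fun n : ℕ => (n:ℝ) ^ k * Real.exp (-(q * n))) Filter.atTop (nhds 0) := by
      intro q hq k
      have h1 := (Real.tendsto_pow_mul_exp_neg_atTop_nhds_zero k)
      have h2 : Filter.Tendsto (fun n : ℕ => q * (n:ℝ)) Filter.atTop Filter.atTop :=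
        Filter.Tendsto.const_mul_atTop hq tendsto_natCast_atTop_atTop
      have h3 := (h1.comp h2).const_mul (q ^ k)⁻¹
      simp only [mul_zero] at h3
      refine h3.congr fun n => ?_
      simp only [Function.comp, mul_pow]
      field_simp
    have t := (key 1 one_pos 4).add ((key (β * j0 / 4) (by positivity) 5).mul_const (2 * R * b))
    simp only [zero_mul, add_zero] at t
    filter_upwards [t.eventually (gt_mem_nhds one_pos), Filter.eventually_ge_atTop 1] with n h1 h2
    have hn : (0:ℝ) < n := by exact_mod_cast h2
    rw [le_div_iff₀ (by positivity)]
    rw [one_mul] at h1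
    refine le_trans (le_of_eq ?_) h1.le
    ring
  have lim3 : ∀ᶠ n : ℕ in Filter.atTop, 2 * (1 / (n:ℝ) ^ 2) ≤ a := by
    have t : Filter.Tendsto (fun n : ℕ => 2 * (1 / (n:ℝ) ^ 2)) Filter.atTop (nhds (2 * 0)) := by
      refine Filter.Tendsto.const_mul _ ?_
      have := (tendsto_one_div_atTop_nhds_zero_nat (𝕜 := ℝ)).pow 2
      simpa using this
    rw [mul_zero] at t
    filter_upwards [t.eventually (gt_mem_nhds ha0)] with n hn using hn.le
  have lim4 : ∀ᶠ n : ℕ in Filter.atTop, S ≤ n := tendsto_natCast_atTop_atTop.eventually_ge_atTop S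
  filter_upwards [lim, lim2, lim3, lim4, Filter.eventually_ge_atTop 3] with n l1 l2 l3 l4 hn V r P W hE
  have hr := hE.dens
  have hQ := Qb_pos hβ hE.cont hb0 hr hR2 n
  have := Gm_prob hβ hE.cont hQ
  have hcont := betaWeight_continuous hβ hE.cont n
  -- `L`: configurations of negligible weight; `B i`: the others, with `i`-th point outside `[-2-d, 2+d]`.
  set L : Set (Fin n → ℝ) := {x | betaWeight β V n x ≤ Real.exp (β / 2 * (n ^ 2 * EE V r) - c * n)} with hL
  have hLm : MeasurableSet L := measurableSet_le hcont.measurable measurable_const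
  set B : Fin n → Set (Fin n → ℝ) := fun i => (bx n R ∩ Lᶜ) ∩ {x | 2 + d < |x i|} with hB
  have hBm : ∀ i, MeasurableSet (B i) := fun i =>
    ((bx_meas n R).inter hLm.compl).inter (measurableSet_lt measurable_const (by fun_prop))
  set g : ℝ → ℝ := Set.indicator (Set.Icc (-R) R) fun _ => Real.exp (-(β * j0 / 4 * n)) with hg
  have hgm : Measurable g := measurable_const.indicator measurableSet_Icc
  have hgi : ∫⁻ u, ENNReal.ofReal (g u) = ENNReal.ofReal (2 * R * Real.exp (-(β * j0 / 4 * n))) := by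
    have : (fun u => ENNReal.ofReal (g u)) = Set.indicator (Set.Icc (-R) R)
        fun _ => ENNReal.ofReal (Real.exp (-(β * j0 / 4 * n))) := by
      ext u
      by_cases hu : u ∈ Set.Icc (-R) R
      · rw [hg, Set.indicator_of_mem hu, Set.indicator_of_mem hu]
      · rw [hg, Set.indicator_of_notMem hu, Set.indicator_of_notMem hu, ENNReal.ofReal_zero]
    rw [this, lintegral_indicator measurableSet_Icc, setLIntegral_const, Real.volume_Icc,
      ← ENNReal.ofReal_mul (Real.exp_pos _).le]
    congr 1; ring
  -- Resampling the `i`-th point from `r` gains a factor exponential in `n` on `B i`.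
  have hBle : ∀ i, (Gm β V n R).real (B i) ≤ 2 * R * Real.exp (-(β * j0 / 4 * n)) * b := by
    intro i
    have h1 := rl_set hβ hE.cont hb0 hr i hR2 (hBm i) (fun x hx => hx.1.1) hgm (by
      intro x hx hinj
      obtain ⟨⟨hx1, hx2⟩, hx3⟩ := hx
      have hxi : x i ∈ Set.Icc (-R) R := abs_le.1 (hx1 i)
      rw [hg, Set.indicator_of_mem hxi]
      refine Real.exp_le_exp.2 ?_
      have he := energy_le hβ hb0 hr hR2 hE.J0 hn hc0 hx1 (not_le.1 hx2)
      have ht := tail_Psi hβ V hb0 hr ha0 hSa hR2 hx1 hinj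
        (fun y s h1 h2 => mz_vert hr ha0 (by omega) l3 l4 he y s h1 h2) i
      refine ht.trans ?_
      have hJ := hE.J1 (x i) (le_of_lt hx3) (hx1 i)
      have h5 : 4 * n * csing b * Real.sqrt a = n * (j0 / 16) := by
        rw [hsa]; field_simp; ring
      have hn0 : (0:ℝ) ≤ n := by positivity
      have h6 := mul_le_mul_of_nonneg_left hSS hn0
      have h7 : 4 * n * csing b * Real.sqrt a
          + 2 * (n * ((2 * R) ^ 2 / S ^ 2) + (S - a) * Real.sqrt (2 / a ^ 2 * (C * (n * Real.log n)))) - Real.log a + R + 2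
          ≤ n * (j0 / 4) := by
        rw [h5]; linarith
      have h8 := mul_le_mul_of_nonneg_left h7 hβ.le
      have h9 := mul_le_mul_of_nonneg_left hJ (by positivity : 0 ≤ n * β / 2)
      linarith)
    rw [bw_lint hβ hE.cont, hgi, ← ENNReal.ofReal_mul (by positivity)] at h1
    rw [measureReal_def, Gm_apply (hBm i)]
    have e : B i ∩ bx n R = B i := Set.inter_eq_left.2 fun x hx => hx.1.1
    rw [e]
    calc _ ≤ ((ENNReal.ofReal (Qb β V n R))⁻¹ * (ENNReal.ofReal (2 * R * Real.exp (-(β * j0 / 4 * n)) * b) *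
          ENNReal.ofReal (Qb β V n R))).toReal := by
          refine ENNReal.toReal_mono ?_ (by gcongr)
          exact ENNReal.mul_ne_top (by simpa using hQ) (ENNReal.mul_ne_top (by simp) (by simp))
      _ = _ := by
          rw [ENNReal.toReal_mul, ENNReal.toReal_mul, ENNReal.toReal_inv, ENNReal.toReal_ofReal hQ.le,
            ENNReal.toReal_ofReal (by positivity)]
          field_simp
  set A : Set (Fin n → ℝ) := (bx n R ∩ Lᶜ) \ ⋃ i, B i with hA
  have hAm : MeasurableSet A := ((bx_meas n R).inter hLm.compl).diff (MeasurableSet.iUnion hBm)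
  refine ⟨A, hAm, ?_, ?_⟩
  · intro x hx
    obtain ⟨⟨hx1, hx2⟩, hx3⟩ := hx
    refine ⟨fun i => ?_, energy_le hβ hb0 hr hR2 hE.J0 hn hc0 hx1 (not_le.1 hx2)⟩
    by_contra h
    exact hx3 (Set.mem_iUnion.2 ⟨i, ⟨hx1, hx2⟩, not_le.1 h⟩)
  · have hsub : Aᶜ ⊆ (bx n R)ᶜ ∪ (L ∪ ⋃ i, B i) := by
      intro x hx
      by_contra hcon
      simp only [Set.mem_union, not_or, Set.mem_compl_iff, not_not] at hcon
      exact hx ⟨⟨hcon.1, hcon.2.1⟩, hcon.2.2⟩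
    have h0 : (Gm β V n R).real (bx n R)ᶜ = 0 := by
      rw [measureReal_def]
      have : Gm β V n R (bx n R)ᶜ = 0 := Gm_ae_bx
      rw [this]; simp
    calc (Gm β V n R).real Aᶜ ≤ (Gm β V n R).real ((bx n R)ᶜ ∪ (L ∪ ⋃ i, B i)) := measureReal_mono hsub
      _ ≤ (Gm β V n R).real (bx n R)ᶜ + ((Gm β V n R).real L + (Gm β V n R).real (⋃ i, B i)) := by
          refine (measureReal_union_le _ _).trans ?_
          gcongr
          exact measureReal_union_le _ _
      _ ≤ 0 + (Real.exp (-n) + ∑ i, (Gm β V n R).real (B i)) := by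
          rw [h0]
          gcongr
          · exact low_weight hβ hE.cont hb0 hr hR2 le_rfl
          · exact measureReal_iUnion_fintype_le _
      _ ≤ 0 + (Real.exp (-n) + ∑ i : Fin n, 2 * R * Real.exp (-(β * j0 / 4 * n)) * b) := by
          gcongr with i; exact hBle i
      _ = Real.exp (-n) + n * (2 * R * Real.exp (-(β * j0 / 4 * n)) * b) := by simp
      _ ≤ _ := l2

end BetaEns

/-! ### The Stieltjes transform of the fluctuation on a circle -/

namespace BetaEns
variable {b : ℝ} {r : Measure ℝ}

lemma norm_sub_real {z : ℂ} {ρ y : ℝ} (hy : |y| ≤ ρ) : ‖z‖ - ρ ≤ ‖z - y‖ := by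
  have := norm_sub_norm_le z (y:ℂ)
  rw [Complex.norm_real, Real.norm_eq_abs] at this
  linarith

lemma sub_real_ne {z : ℂ} {ρ y : ℝ} (hz : ρ < ‖z‖) (hy : |y| ≤ ρ) : z - y ≠ 0 := by
  have := norm_sub_real (z := z) hy
  exact norm_pos_iff.1 (by linarith)

lemma st_hasDeriv (hr : Dens b r) {z : ℂ} (hz : 2 < ‖z‖) :
    HasDerivAt (fun z : ℂ => ∫ y : ℝ, 1 / (z - y) ∂r) (-∫ y : ℝ, 1 / (z - y) ^ 2 ∂r) z := by
  have := hr.prob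
  set ε := (‖z‖ - 2) / 2 with hε
  have hε0 : 0 < ε := by rw [hε]; linarith
  have hw : ∀ w ∈ ball z ε, ∀ y ∈ Set.Icc (-2:ℝ) 2, ε ≤ ‖w - (y:ℂ)‖ := by
    intro w hw y hy
    have h1 := norm_sub_real (z := w) (abs_le.2 hy)
    have h2 := norm_sub_norm_le z w
    rw [mem_ball, dist_eq_norm, norm_sub_rev] at hw
    linarith
  have hmeas : ∀ w : ℂ, AEStronglyMeasurable (fun y : ℝ => 1 / (w - y)) r := fun w => by
    apply Measurable.aestronglyMeasurable; fun_prop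
  have h := hasDerivAt_integral_of_dominated_loc_of_deriv_le (μ := r) (𝕜 := ℂ) (x₀ := z) (s := ball z ε)
    (F := fun w (y:ℝ) => 1 / (w - y)) (F' := fun w (y:ℝ) => -(1 / (w - y) ^ 2)) (bound := fun _ => 1 / ε ^ 2)
    (ball_mem_nhds z hε0) (Filter.Eventually.of_forall fun w => hmeas w)
    (hr.integrable_of_bdd (hmeas z) (C := 1 / ε) fun y hy => by
      rw [norm_div, norm_one]
      exact one_div_le_one_div_of_le hε0 (hw z (mem_ball_self hε0) y hy))
    (by apply Measurable.aestronglyMeasurable; fun_prop) ?_ (integrable_const _) ?_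
  · rw [← integral_neg]; exact h.2
  · filter_upwards [hr.ae_mem] with y hy w hw'
    rw [norm_neg, norm_div, norm_one, norm_pow]
    have := hw w hw' y hy
    exact one_div_le_one_div_of_le (by positivity) (by gcongr)
  · filter_upwards [hr.ae_mem] with y hy w hw'
    have hne : w - (y:ℂ) ≠ 0 := norm_pos_iff.1 (hε0.trans_le (hw w hw' y hy))
    have := ((hasDerivAt_id w).sub_const (y:ℂ)).inv hne
    simp only [one_div]
    exact this.congr_deriv (by simp [div_eq_mul_inv])

lemma mz_diff (hr : Dens b r) {ρ : ℝ} (hρ : 2 ≤ ρ) {n : ℕ} {x : Fin n → ℝ} (hx : ∀ i, |x i| ≤ ρ) {z : ℂ}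
    (hz : ρ < ‖z‖) : DifferentiableAt ℂ (mz r x) z := by
  unfold mz
  refine DifferentiableAt.sub ?_ ((differentiableAt_const _).mul (st_hasDeriv hr (by linarith)).differentiableAt)
  refine DifferentiableAt.fun_sum fun i _ => ?_
  exact (differentiableAt_const _).div (by fun_prop) (sub_real_ne hz (hx i))

lemma mz_bd (hr : Dens b r) {ρ : ℝ} (hρ : 2 ≤ ρ) {n : ℕ} {x : Fin n → ℝ} (hx : ∀ i, |x i| ≤ ρ) {z : ℂ}
    (hz : ρ < ‖z‖) : ‖mz r x z‖ ≤ 2 * n / (‖z‖ - ρ) := by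
  have hp : 0 < ‖z‖ - ρ := by linarith
  have h1 : ∀ y : ℝ, |y| ≤ ρ → ‖1 / (z - (y:ℂ))‖ ≤ 1 / (‖z‖ - ρ) := fun y hy => by
    rw [norm_div, norm_one]
    exact one_div_le_one_div_of_le hp (norm_sub_real hy)
  have h2 : ‖∫ y : ℝ, 1 / (z - y) ∂r‖ ≤ 1 / (‖z‖ - ρ) :=
    hr.norm_integral_le fun y hy => h1 y ((abs_le.2 hy).trans hρ)
  have h3 : ‖∑ i, 1 / (z - (x i:ℂ))‖ ≤ n * (1 / (‖z‖ - ρ)) := by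
    refine (norm_sum_le_of_le _ fun i _ => h1 _ (hx i)).trans ?_
    simp
  unfold mz
  calc _ ≤ n * (1 / (‖z‖ - ρ)) + n * (1 / (‖z‖ - ρ)) := by
        refine (norm_sub_le _ _).trans (add_le_add h3 ?_)
        rw [norm_mul, Complex.norm_natCast]; gcongr
    _ = _ := by ring

/-- The energy bounds the Stieltjes transform of the fluctuation up to the real axis away from the
points: near the axis, the maximum principle is applied to `m(z)((z-x₀)²-ϱ²)`. -/
lemma mz_circle (hr : Dens b r) {d K : ℝ} (hd : 0 < d) {n : ℕ} (hn : 0 < n)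
    (hn1 : 2 * (1 / (n:ℝ) ^ 2) ≤ d / 16) (hn2 : 2 + 5 * d / 4 ≤ n)
    {x : Fin n → ℝ} (hx : ∀ i, |x i| ≤ 2 + d)
    (hE : enr r (1 / (n:ℝ) ^ 2) n x ≤ K) {z : ℂ} (hz : ‖z‖ = 2 + 5 * d / 4) :
    ‖mz r x z‖ ≤ 64 / d * (Real.sqrt (2 * K) + 32 / d) := by
  have hn' : (1:ℝ) ≤ n := by exact_mod_cast hn
  set η : ℝ := 1 / (n:ℝ) ^ 2 with hη
  have hη0 : 0 < η := by positivity
  have he0 : 0 ≤ enr r η n x := enr_nonneg hr hη0 (by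
    rw [hη, div_le_iff₀ (by positivity)]; nlinarith [sq_nonneg (n:ℝ)]) x
  have hK0 : 0 ≤ K := he0.trans hE
  have key : ∀ w : ℂ, 2 * η ≤ |w.im| → |w.im| ≤ n → ‖mz r x w‖ * |w.im| ≤ Real.sqrt (2 * K) := by
    intro w h1 h2
    have hi : 0 < |w.im| := by linarith
    refine Real.le_sqrt_of_sq_le ?_
    have h := mz_sq_le hr hη0 x h1 h2
    rw [mul_pow, sq_abs]
    have h3 : 0 < w.im ^ 2 := by rw [← sq_abs]; positivity
    have hne : w.im ≠ 0 := abs_pos.1 hi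
    calc _ ≤ 2 / w.im ^ 2 * enr r η n x * w.im ^ 2 := by gcongr
      _ = 2 * enr r η n x := by field_simp
      _ ≤ _ := by linarith
  set ϱ := d / 16 with hϱ
  have hϱ0 : 0 < ϱ := by positivity
  have hi2 : |z.im| ≤ n := (Complex.abs_im_le_norm z).trans (by linarith)
  have hsq := Real.sqrt_nonneg (2 * K)
  by_cases hi : ϱ ≤ |z.im|
  · have h := key z (by linarith) hi2
    have h2 : ‖mz r x z‖ * ϱ ≤ Real.sqrt (2 * K) := le_trans (by gcongr) h
    have h3 : ‖mz r x z‖ ≤ 16 / d * Real.sqrt (2 * K) := by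
      rw [hϱ] at h2
      have := mul_le_mul_of_nonneg_left h2 (by positivity : 0 ≤ 16 / d)
      have e : 16 / d * (‖mz r x z‖ * (d / 16)) = ‖mz r x z‖ := by field_simp
      rwa [e] at this
    refine h3.trans ?_
    have : 0 ≤ 32 / d := by positivity
    gcongr
    · norm_num
    · linarith
  · push Not at hi
    set x0 : ℝ := z.re with hx0
    have hre : 2 + 19 * d / 16 ≤ |x0| := by
      have := Complex.norm_le_abs_re_add_abs_im z
      rw [hz] at this
      rw [hϱ] at hi
      linarith
    have hball : ∀ w ∈ closedBall (x0:ℂ) ϱ, 2 + 18 * d / 16 ≤ ‖w‖ := by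
      intro w hw
      rw [mem_closedBall, dist_eq_norm, norm_sub_rev] at hw
      have := norm_sub_norm_le (x0:ℂ) w
      rw [Complex.norm_real, Real.norm_eq_abs] at this
      rw [hϱ] at hw
      linarith
    have hmax := Complex.norm_le_of_forall_mem_frontier_norm_le (U := ball (x0:ℂ) ϱ)
      (f := fun w => mz r x w * ((w - x0) ^ 2 - (ϱ:ℂ) ^ 2)) (C := 2 * ϱ * (Real.sqrt (2 * K) + 32 / d)) isBounded_ball
      (by
        refine DifferentiableOn.diffContOnCl fun w hw => DifferentiableAt.differentiableWithinAt ?_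
        rw [closure_ball _ hϱ0.ne'] at hw
        refine (mz_diff hr (by linarith) hx (by have := hball w hw; linarith)).mul (by fun_prop))
      (by
        intro w hw
        rw [frontier_ball _ hϱ0.ne'] at hw
        have hwn := hball w (sphere_subset_closedBall hw)
        have hw' : ‖w - x0‖ = ϱ := by rwa [mem_sphere, dist_eq_norm] at hw
        have e : ‖(w - x0) ^ 2 - (ϱ:ℂ) ^ 2‖ = 2 * ϱ * |w.im| := by
          set v := w - x0 with hv
          have hvi : v.im = w.im := by simp [hv]
          have h1 : v.re ^ 2 + v.im ^ 2 = ϱ ^ 2 := by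
            rw [← hw', Complex.sq_norm, Complex.normSq_apply]; ring
          have h2 : v ^ 2 - (ϱ:ℂ) ^ 2 = 2 * Complex.I * v.im * v := by
            apply Complex.ext
            · simp [pow_two]; nlinarith
            · simp [pow_two]; ring
          rw [h2, norm_mul, norm_mul, norm_mul, hw', hvi]
          simp; ring
        rw [norm_mul, e]
        have hwi : |w.im| ≤ ϱ := by
          have := Complex.abs_im_le_norm (w - x0)
          rw [hw'] at this; simpa using this
        have h32 : 0 ≤ 32 / d := by positivity
        by_cases hc : 2 * η ≤ |w.im|
        · have := key w hc (by rw [hϱ] at hwi; linarith)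
          have h2 : ‖mz r x w‖ * (2 * ϱ * |w.im|) = 2 * ϱ * (‖mz r x w‖ * |w.im|) := by ring
          rw [h2]; gcongr; linarith
        · push Not at hc
          have h1 := mz_bd hr (by linarith) hx (z := w) (by linarith)
          have h2 : ‖mz r x w‖ ≤ 16 * n / d := by
            refine h1.trans ?_
            rw [div_le_div_iff₀ (by linarith) hd]
            have : d / 8 ≤ ‖w‖ - (2 + d) := by linarith
            nlinarith
          have h3 : ‖mz r x w‖ * |w.im| ≤ 32 / d := by
            calc _ ≤ 16 * n / d * (2 * η) := by gcongr
              _ = 32 / d * (1 / n) := by rw [hη]; field_simp; norm_num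
              _ ≤ 32 / d * 1 := by gcongr; rw [div_le_one (by linarith)]; exact hn'
              _ = _ := by ring
          have h4 : ‖mz r x w‖ * (2 * ϱ * |w.im|) = 2 * ϱ * (‖mz r x w‖ * |w.im|) := by ring
          rw [h4]; gcongr; linarith)
      (z := z) (by
        rw [closure_ball _ hϱ0.ne', mem_closedBall, dist_eq_norm]
        have : z - x0 = z.im * Complex.I := by
          apply Complex.ext <;> simp [hx0]
        rw [this]; simp; exact hi.le)
    simp only [norm_mul] at hmax
    have e2 : ϱ ^ 2 ≤ ‖(z - x0) ^ 2 - (ϱ:ℂ) ^ 2‖ := by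
      have : (z - x0) ^ 2 - (ϱ:ℂ) ^ 2 = ((-(z.im ^ 2 + ϱ ^ 2) : ℝ) : ℂ) := by
        have h : z - x0 = z.im * Complex.I := by
          apply Complex.ext <;> simp [hx0]
        rw [h, mul_pow, Complex.I_sq]; push_cast; ring
      rw [this, Complex.norm_real, Real.norm_eq_abs, abs_neg, abs_of_nonneg (by positivity)]
      nlinarith [sq_nonneg z.im]
    have h5 : ‖mz r x z‖ * ϱ ^ 2 ≤ 2 * ϱ * (Real.sqrt (2 * K) + 32 / d) := le_trans (by gcongr) hmax
    have h6 : ‖mz r x z‖ ≤ 2 / ϱ * (Real.sqrt (2 * K) + 32 / d) := by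
      have := mul_le_mul_of_nonneg_left h5 (by positivity : 0 ≤ 1 / ϱ ^ 2)
      have e3 : 1 / ϱ ^ 2 * (‖mz r x z‖ * ϱ ^ 2) = ‖mz r x z‖ := by field_simp
      have e4 : 1 / ϱ ^ 2 * (2 * ϱ * (Real.sqrt (2 * K) + 32 / d)) = 2 / ϱ * (Real.sqrt (2 * K) + 32 / d) := by
        field_simp
      rwa [e3, e4] at this
    have h7 : 2 / ϱ ≤ 64 / d := by
      rw [hϱ, div_le_div_iff₀ (by positivity) hd]; linarith
    exact h6.trans (mul_le_mul_of_nonneg_right h7 (by positivity))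

end BetaEns

/-! ### Deformation fields and the loop equation -/

namespace BetaEns

/-- The difference quotient of `h`, with value `h'` on the diagonal. -/
noncomputable def dq (h h' : ℝ → ℝ) (x y : ℝ) : ℝ :=
  if x = y then h' x else (h x - h y) / (x - y)

/-- The loop functional: first-order change of `log` of the weight (with Jacobian) under
`x_i ↦ x_i + s h(x_i)`. -/
noncomputable def Lf (β : ℝ) (V' h h' : ℝ → ℝ) {n : ℕ} (x : Fin n → ℝ) : ℝ :=
  (1 - β / 2) * ∑ i, h' (x i) + β / 2 * ∑ i, ∑ j, dq h h' (x i) (x j)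
    - n * (β / 2) * ∑ i, V' (x i) * h (x i)

/-- Admissible deformation fields, with bounds `K`, relative to a potential and a box. -/
structure Field (K R : ℝ) (V V' h h' : ℝ → ℝ) : Prop where
  der : ∀ x, HasDerivAt h (h' x) x
  cont : Continuous h'
  bd : ∀ x, |h x| ≤ K
  bd' : ∀ x, |h' x| ≤ K
  supp : ∀ x s, h x ≠ 0 → |s| * K ≤ 1 / 2 → |x + s * h x| ≤ R
  bdV : ∀ x, |V' x * h x| ≤ K
  meas : Measurable fun x => V' x * h x
  tay : ∀ x s, |s| * K ≤ 1 / 2 → V (x + s * h x) - V x - s * (V' x * h x) ≤ K * s ^ 2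

lemma log_one_add_ge {u : ℝ} (hu : |u| ≤ 1 / 2) : u - 2 * u ^ 2 ≤ Real.log (1 + u) := by
  have h := Real.abs_log_sub_add_sum_range_le (x := -u) (by rw [abs_neg]; linarith) 1
  simp only [Finset.sum_range_one, abs_neg, sub_neg_eq_add] at h
  norm_num at h
  have h1 : u ^ 2 / (1 - |u|) ≤ 2 * u ^ 2 := by
    rw [div_le_iff₀ (by linarith)]; nlinarith [sq_nonneg u]
  have := (abs_le.1 h).1
  linarith

variable {K R : ℝ} {V V' h h' : ℝ → ℝ}

lemma Field.K0 (hF : Field K R V V' h h') : 0 ≤ K := (abs_nonneg _).trans (hF.bd 0)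

lemma Field.lip (hF : Field K R V V' h h') (x y : ℝ) : |h x - h y| ≤ K * |x - y| := by
  have := Convex.norm_image_sub_le_of_norm_hasDerivWithin_le (f := h) (f' := h') (s := Set.univ) (C := K)
    (fun x _ => (hF.der x).hasDerivWithinAt) (fun x _ => hF.bd' x) convex_univ (Set.mem_univ y) (Set.mem_univ x)
  simpa [Real.norm_eq_abs] using this

lemma Field.dq_bd (hF : Field K R V V' h h') (x y : ℝ) : |dq h h' x y| ≤ K := by
  unfold dq
  split_ifs with hxy
  · exact hF.bd' x
  · rw [abs_div, div_le_iff₀ (abs_pos.2 (sub_ne_zero.2 hxy))]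
    exact hF.lip x y

lemma Field.hcont (hF : Field K R V V' h h') : Continuous h :=
  continuous_iff_continuousAt.2 fun x => (hF.der x).continuousAt

lemma Field.Lf_bd (hF : Field K R V V' h h') {β : ℝ} (hβ : 0 < β) {n : ℕ} (x : Fin n → ℝ) :
    |Lf β V' h h' x| ≤ (1 + 2 * β) * K * n ^ 2 := by
  have hK := hF.K0
  have h1 : |∑ i, h' (x i)| ≤ n * K := by
    refine (Finset.abs_sum_le_sum_abs _ _).trans ?_
    refine (Finset.sum_le_sum fun i _ => hF.bd' (x i)).trans (by simp)
  have h2 : |∑ i, ∑ j, dq h h' (x i) (x j)| ≤ n * (n * K) := by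
    refine (Finset.abs_sum_le_sum_abs _ _).trans ?_
    refine (Finset.sum_le_sum fun i _ => (Finset.abs_sum_le_sum_abs _ _).trans
      (Finset.sum_le_sum fun j _ => hF.dq_bd (x i) (x j))).trans (by simp)
  have h3 : |∑ i, V' (x i) * h (x i)| ≤ n * K := by
    refine (Finset.abs_sum_le_sum_abs _ _).trans ?_
    refine (Finset.sum_le_sum fun i _ => hF.bdV (x i)).trans (by simp)
  have hnn : (n:ℝ) * K ≤ n ^ 2 * K := by
    have : (n:ℝ) ≤ n ^ 2 := by exact_mod_cast Nat.le_self_pow (by norm_num) n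
    gcongr
  have hb : |1 - β / 2| ≤ 1 + β / 2 := by
    rw [abs_le]; constructor <;> linarith
  unfold Lf
  calc _ ≤ |1 - β / 2| * |∑ i, h' (x i)| + β / 2 * |∑ i, ∑ j, dq h h' (x i) (x j)|
        + n * (β / 2) * |∑ i, V' (x i) * h (x i)| := by
        refine (abs_sub _ _).trans ?_
        refine add_le_add ((abs_add_le _ _).trans ?_) ?_
        · rw [abs_mul, abs_mul, abs_of_pos (by positivity : 0 < β / 2)]
        · rw [abs_mul, abs_of_nonneg (by positivity : 0 ≤ n * (β / 2))]
    _ ≤ (1 + β / 2) * (n ^ 2 * K) + β / 2 * (n * (n * K)) + n * (β / 2) * (n * K) := by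
        gcongr; exact h1.trans hnn
    _ ≤ _ := by nlinarith [mul_nonneg (mul_nonneg hβ.le hK) (sq_nonneg (n:ℝ))]

lemma Field.Lf_meas (hF : Field K R V V' h h') (β : ℝ) (n : ℕ) :
    Measurable fun x : Fin n → ℝ => Lf β V' h h' x := by
  have h1 : Measurable h := hF.hcont.measurable
  have h2 : Measurable h' := hF.cont.measurable
  have h3 : Measurable fun p : ℝ × ℝ => dq h h' p.1 p.2 := by
    unfold dq
    exact Measurable.ite (measurableSet_eq_fun measurable_fst measurable_snd) (by fun_prop) (by fun_prop)
  have h4 : ∀ i j : Fin n, Measurable fun x : Fin n → ℝ => dq h h' (x i) (x j) := fun i j =>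
    h3.comp (Measurable.prodMk (measurable_pi_apply i) (measurable_pi_apply j))
  have h5 : ∀ i : Fin n, Measurable fun x : Fin n → ℝ => V' (x i) * h (x i) := fun i =>
    hF.meas.comp (measurable_pi_apply i)
  unfold Lf
  refine ((Measurable.const_mul ?_ _).add (Measurable.const_mul ?_ _)).sub (Measurable.const_mul ?_ _)
  · exact Finset.measurable_fun_sum _ fun i _ => by fun_prop
  · exact Finset.measurable_fun_sum _ fun i _ => Finset.measurable_fun_sum _ fun j _ => h4 i j
  · exact Finset.measurable_fun_sum _ fun i _ => h5 i

/-- The deformed weight dominates the weight tilted by the loop functional. -/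
lemma Field.pointwise (hF : Field K R V V' h h') {β : ℝ} (hβ : 0 < β) {n : ℕ} (x : Fin n → ℝ) {s : ℝ}
    (hs : |s| * K ≤ 1 / 2) (hx : Function.Injective x) :
    betaWeight β V n x * Real.exp (s * Lf β V' h h' x - (2 * K ^ 2 + β * K ^ 2 + β * K) * (s ^ 2 * n ^ 2))
      ≤ (∏ i, (1 + s * h' (x i))) * betaWeight β V n (fun i => x i + s * h (x i)) := by
  have hK := hF.K0
  have hsm : ∀ u : ℝ, |u| ≤ K → |s * u| ≤ 1 / 2 ∧ s * u - 2 * (s ^ 2 * K ^ 2) ≤ Real.log (1 + s * u) := by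
    intro u hu
    have h1 : |s * u| ≤ 1 / 2 := by
      rw [abs_mul]; exact le_trans (by gcongr) hs
    refine ⟨h1, le_trans ?_ (log_one_add_ge h1)⟩
    have : u ^ 2 ≤ K ^ 2 := by rw [← sq_abs]; gcongr
    nlinarith [sq_nonneg s]
  have hpos : ∀ u : ℝ, |u| ≤ K → 0 < 1 + s * u := fun u hu => by
    have := (abs_le.1 (hsm u hu).1).1; linarith
  have hfac : ∀ i j, i ≠ j → (x i + s * h (x i)) - (x j + s * h (x j))
      = (x i - x j) * (1 + s * dq h h' (x i) (x j)) := by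
    intro i j hij
    have hne : x i ≠ x j := fun e => hij (hx e)
    have : x i - x j ≠ 0 := sub_ne_zero.2 hne
    unfold dq; rw [if_neg hne]; field_simp; ring
  have hinj : Function.Injective (fun i => x i + s * h (x i)) := by
    intro i j hij
    by_contra hne
    have h1 := hfac i j hne
    simp only at hij
    rw [hij, sub_self] at h1
    rcases mul_eq_zero.1 h1.symm with h2 | h2
    · exact hne (hx (sub_eq_zero.1 h2))
    · exact (hpos _ (hF.dq_bd _ _)).ne' h2
  rw [betaWeight_eq β V hx, betaWeight_eq β V hinj]
  have hprod : ∏ i, (1 + s * h' (x i)) = Real.exp (∑ i, Real.log (1 + s * h' (x i))) := by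
    rw [Real.exp_sum]
    exact Finset.prod_congr rfl fun i _ => (Real.exp_log (hpos _ (hF.bd' _))).symm
  rw [hprod, ← Real.exp_add, ← Real.exp_add]
  refine Real.exp_le_exp.2 ?_
  have a1 : s * ∑ i, h' (x i) - n * (2 * (s ^ 2 * K ^ 2)) ≤ ∑ i, Real.log (1 + s * h' (x i)) := by
    calc _ = ∑ i, (s * h' (x i) - 2 * (s ^ 2 * K ^ 2)) := by
          rw [Finset.sum_sub_distrib, Finset.mul_sum]; simp
      _ ≤ _ := Finset.sum_le_sum fun i _ => (hsm _ (hF.bd' _)).2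
  have a2 : s * (∑ i, ∑ j, dq h h' (x i) (x j) - ∑ i, h' (x i)) - n * (n * (2 * (s ^ 2 * K ^ 2)))
      ≤ sp (fun i => x i + s * h (x i)) - sp x := by
    have e1 : s * (∑ i, ∑ j, dq h h' (x i) (x j) - ∑ i, h' (x i)) - n * (n * (2 * (s ^ 2 * K ^ 2)))
        = ∑ i, ∑ j, ((if i = j then 0 else s * dq h h' (x i) (x j)) - 2 * (s ^ 2 * K ^ 2)) := by
      have : ∑ i, h' (x i) = ∑ i, ∑ j, if i = j then h' (x i) else 0 := by simp
      rw [this, ← Finset.sum_sub_distrib, Finset.mul_sum]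
      simp only [← Finset.sum_sub_distrib, Finset.mul_sum]
      rw [show (n:ℝ) * (n * (2 * (s ^ 2 * K ^ 2))) = ∑ i : Fin n, ∑ j : Fin n, 2 * (s ^ 2 * K ^ 2) by simp]
      rw [← Finset.sum_sub_distrib]
      refine Finset.sum_congr rfl fun i _ => ?_
      rw [← Finset.sum_sub_distrib]
      refine Finset.sum_congr rfl fun j _ => ?_
      split_ifs with hij
      · subst hij; simp [dq]
      · ring
    rw [e1]
    unfold sp
    rw [← Finset.sum_sub_distrib]
    refine Finset.sum_le_sum fun i _ => ?_
    rw [← Finset.sum_sub_distrib]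
    refine Finset.sum_le_sum fun j _ => ?_
    split_ifs with hij
    · subst hij; simp; positivity
    · have hne : x i - x j ≠ 0 := sub_ne_zero.2 fun e => hij (hx e)
      rw [hfac i j hij, abs_mul, Real.log_mul (abs_ne_zero.2 hne) (abs_pos.2 (hpos _ (hF.dq_bd _ _)).ne').ne',
        abs_of_pos (hpos _ (hF.dq_bd _ _))]
      have := (hsm _ (hF.dq_bd (x i) (x j))).2
      linarith
  have a3 : ∑ i, V (x i + s * h (x i)) - ∑ i, V (x i) - s * ∑ i, V' (x i) * h (x i) ≤ n * (K * s ^ 2) := by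
    rw [Finset.mul_sum, ← Finset.sum_sub_distrib, ← Finset.sum_sub_distrib]
    refine (Finset.sum_le_sum fun i _ => hF.tay (x i) s hs).trans (by simp)
  have hn : (n:ℝ) ≤ n ^ 2 := by exact_mod_cast Nat.le_self_pow (by norm_num) n
  have a4 : (n:ℝ) * (2 * (s ^ 2 * K ^ 2)) ≤ n ^ 2 * (2 * (s ^ 2 * K ^ 2)) := by gcongr
  have a5 := mul_le_mul_of_nonneg_left a2 (by positivity : 0 ≤ β / 2)
  have a6 := mul_le_mul_of_nonneg_left a3 (by positivity : 0 ≤ n * (β / 2))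
  have a7 : 0 ≤ β * K * s ^ 2 * n ^ 2 := by positivity
  unfold Lf
  nlinarith

lemma Field.jac (hF : Field K R V V' h h') {n : ℕ} (s : ℝ) (x : Fin n → ℝ) :
    HasFDerivAt (fun x : Fin n → ℝ => fun i => x i + s * h (x i))
      (ContinuousLinearMap.pi fun i => (1 + s * h' (x i)) • ContinuousLinearMap.proj (R := ℝ) (φ := fun _ : Fin n => ℝ) i) x := by
  rw [hasFDerivAt_pi]
  intro i
  have h1 : HasDerivAt (fun u => u + s * h u) (1 + s * h' (x i)) (x i) :=
    (hasDerivAt_id _).add ((hF.der (x i)).const_mul s)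
  have h2 : HasFDerivAt (fun x : Fin n → ℝ => x i)
    (ContinuousLinearMap.proj (R := ℝ) (φ := fun _ : Fin n => ℝ) i) x := hasFDerivAt_apply i x
  exact h1.comp_hasFDerivAt x h2

lemma det_diag {n : ℕ} (c : Fin n → ℝ) :
    (ContinuousLinearMap.pi fun i => (c i) • ContinuousLinearMap.proj (R := ℝ) (φ := fun _ : Fin n => ℝ) i).det
      = ∏ i, c i := by
  have : ((ContinuousLinearMap.pi fun i => (c i) • ContinuousLinearMap.proj (R := ℝ) (φ := fun _ : Fin n => ℝ) i) : (Fin n → ℝ) →ₗ[ℝ] (Fin n → ℝ))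
      = Matrix.toLin' (Matrix.diagonal c) := by
    ext v i
    simp [Matrix.mulVec_diagonal]
  rw [ContinuousLinearMap.det, this, LinearMap.det_toLin', Matrix.det_diagonal]

/-- Change of variables: the exponential moments of the loop functional are Gaussian on the
scale `n`. -/
lemma Field.expMoment (hF : Field K R V V' h h') {β : ℝ} (hβ : 0 < β) (hV : Continuous V) {n : ℕ} {s : ℝ}
    (hs : |s| * K ≤ 1 / 2) (hQ : 0 < Qb β V n R) :
    ∫ x, Real.exp (s * Lf β V' h h' x) ∂(Gm β V n R)
      ≤ Real.exp ((2 * K ^ 2 + β * K ^ 2 + β * K) * (s ^ 2 * n ^ 2)) := by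
  set c := (2 * K ^ 2 + β * K ^ 2 + β * K) * (s ^ 2 * n ^ 2) with hc
  have hK := hF.K0
  set φ : (Fin n → ℝ) → (Fin n → ℝ) := fun x i => x i + s * h (x i) with hφ
  have hpos : ∀ x, 0 < 1 + s * h' x := fun x => by
    have h1 : |s * h' x| ≤ 1 / 2 := by
      rw [abs_mul]; exact le_trans (mul_le_mul_of_nonneg_left (hF.bd' x) (abs_nonneg s)) hs
    have := (abs_le.1 h1).1; linarith
  have hinj : Set.InjOn φ (bx n R) := by
    intro x _ y _ hxy
    funext i
    have h1 : x i + s * h (x i) = y i + s * h (y i) := congrFun hxy i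
    have h2 := hF.lip (x i) (y i)
    have h3 : |x i - y i| = |s| * |h (x i) - h (y i)| := by
      rw [← abs_mul, ← abs_neg]; congr 1; linarith
    have h4 : |s| * |h (x i) - h (y i)| ≤ |s| * K * |x i - y i| := by
      rw [mul_assoc]; gcongr
    have h5 : |s| * K * |x i - y i| ≤ 1 / 2 * |x i - y i| := by gcongr
    have : |x i - y i| = 0 := by linarith [abs_nonneg (x i - y i)]
    exact sub_eq_zero.1 (abs_eq_zero.1 this)
  have himg : φ '' bx n R ⊆ bx n R := by
    rintro _ ⟨x, hx, rfl⟩ i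
    by_cases h0 : h (x i) = 0
    · simp only [hφ, h0]; simpa using hx i
    · exact hF.supp (x i) s h0 hs
  have hcv := lintegral_image_eq_lintegral_abs_det_fderiv_mul volume (bx_meas n R)
    (fun x _ => (hF.jac s x).hasFDerivWithinAt) hinj (fun x => ENNReal.ofReal (betaWeight β V n x))
  have hle : ∫⁻ x in bx n R, ENNReal.ofReal (betaWeight β V n x * Real.exp (s * Lf β V' h h' x - c))
      ≤ ENNReal.ofReal (Qb β V n R) := by
    rw [← bw_lint hβ hV]
    refine le_trans ?_ (lintegral_mono_set himg)
    rw [hcv]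
    refine lintegral_mono fun x => ?_
    simp only
    rw [← ENNReal.ofReal_mul (abs_nonneg _), det_diag, abs_of_pos (Finset.prod_pos fun i _ => hpos _)]
    refine ENNReal.ofReal_le_ofReal ?_
    by_cases hx : Function.Injective x
    · exact hF.pointwise hβ x hs hx
    · rw [betaWeight_zero hβ V hx, zero_mul]
      exact mul_nonneg (Finset.prod_nonneg fun i _ => (hpos _).le) (betaWeight_nonneg _ _ _)
  have hm : Measurable fun x : Fin n → ℝ => betaWeight β V n x * Real.exp (s * Lf β V' h h' x - c) := by
    have := (betaWeight_continuous hβ hV n).measurable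
    have := hF.Lf_meas β n
    fun_prop
  have hreal : ∫ x in bx n R, betaWeight β V n x * Real.exp (s * Lf β V' h h' x - c) ≤ Qb β V n R := by
    rw [integral_eq_lintegral_of_nonneg_ae (Filter.Eventually.of_forall fun x =>
      mul_nonneg (betaWeight_nonneg _ _ _) (Real.exp_pos _).le) hm.aestronglyMeasurable]
    exact ENNReal.toReal_le_of_le_ofReal hQ.le hle
  rw [Gm_integral hβ hV hQ]
  have e : ∫ x in bx n R, betaWeight β V n x • Real.exp (s * Lf β V' h h' x)
      = Real.exp c * ∫ x in bx n R, betaWeight β V n x * Real.exp (s * Lf β V' h h' x - c) := by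
    rw [← integral_const_mul]
    congr 1; funext x
    rw [Real.exp_sub, smul_eq_mul]; field_simp
  rw [e, smul_eq_mul]
  calc _ ≤ (Qb β V n R)⁻¹ * (Real.exp c * Qb β V n R) := by gcongr
    _ = _ := by field_simp

lemma Field.Lf_int (hF : Field K R V V' h h') {β : ℝ} (hβ : 0 < β) (hV : Continuous V) {n : ℕ}
    (hQ : 0 < Qb β V n R) : Integrable (fun x => Lf β V' h h' x) (Gm β V n R) := by
  have := Gm_prob hβ hV hQ
  exact Integrable.of_bound (hF.Lf_meas β n).aestronglyMeasurable _ (Filter.Eventually.of_forall fun x => hF.Lf_bd hβ x)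

lemma Field.exp_int (hF : Field K R V V' h h') {β : ℝ} (hβ : 0 < β) (hV : Continuous V) {n : ℕ}
    (hQ : 0 < Qb β V n R) (s : ℝ) : Integrable (fun x => Real.exp (s * Lf β V' h h' x)) (Gm β V n R) := by
  have := Gm_prob hβ hV hQ
  have hm := hF.Lf_meas β n
  refine Integrable.of_bound (C := Real.exp (|s| * ((1 + 2 * β) * K * n ^ 2))) (by fun_prop) (Filter.Eventually.of_forall fun x => ?_)
  rw [Real.norm_eq_abs, Real.abs_exp]
  refine Real.exp_le_exp.2 ((le_abs_self _).trans ?_)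
  rw [abs_mul]
  gcongr
  exact hF.Lf_bd hβ x

/-- The loop equation. -/
lemma Field.loop (hF : Field K R V V' h h') {β : ℝ} (hβ : 0 < β) (hV : Continuous V) {n : ℕ}
    (hQ : 0 < Qb β V n R) : ∫ x, Lf β V' h h' x ∂(Gm β V n R) = 0 := by
  have := Gm_prob hβ hV hQ
  have hK := hF.K0
  set I := ∫ x, Lf β V' h h' x ∂(Gm β V n R) with hI
  set c := (2 * K ^ 2 + β * K ^ 2 + β * K) * n ^ 2 with hc
  have hc0 : 0 ≤ c := by positivity
  -- `s I ≤ exp (c s²) - 1 ≤ 2 c s²` for small `s` of either sign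
  have key : ∀ s : ℝ, |s| * K ≤ 1 / 2 → c * s ^ 2 ≤ 1 → s * I ≤ 2 * c * s ^ 2 := by
    intro s hs hs1
    have h1 := hF.expMoment hβ hV hs hQ
    have h2 : 1 + s * I ≤ ∫ x, Real.exp (s * Lf β V' h h' x) ∂(Gm β V n R) := by
      have e : 1 + s * I = ∫ x, (1 + s * Lf β V' h h' x) ∂(Gm β V n R) := by
        rw [integral_add (integrable_const _) ((hF.Lf_int hβ hV hQ).const_mul s), integral_const, integral_const_mul]
        simp [hI]
      rw [e]
      refine integral_mono ((integrable_const _).add ((hF.Lf_int hβ hV hQ).const_mul s)) (hF.exp_int hβ hV hQ s) fun x => ?_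
      have := Real.add_one_le_exp (s * Lf β V' h h' x)
      simp only; linarith
    have e2 : (2 * K ^ 2 + β * K ^ 2 + β * K) * (s ^ 2 * n ^ 2) = c * s ^ 2 := by rw [hc]; ring
    rw [e2] at h1
    have h3 : Real.exp (c * s ^ 2) ≤ 1 + 2 * (c * s ^ 2) := by
      have h4 := Real.abs_exp_sub_one_le (x := c * s ^ 2) (by rw [abs_of_nonneg (by positivity)]; exact hs1)
      rw [abs_of_nonneg (by positivity : 0 ≤ c * s ^ 2)] at h4
      have := (abs_le.1 h4).2
      linarith
    linarith
  have key2 : ∀ s : ℝ, 0 < s → s * K ≤ 1 / 2 → c * s ^ 2 ≤ 1 → |I| ≤ 2 * c * s := by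
    intro s h0 h1 h2
    have a := key s (by rwa [abs_of_pos h0]) h2
    have b := key (-s) (by rwa [abs_neg, abs_of_pos h0]) (by simpa using h2)
    rw [abs_le]
    constructor
    · by_contra hcon
      push Not at hcon
      nlinarith
    · by_contra hcon
      push Not at hcon
      nlinarith
  have hlim : Filter.Tendsto (fun s : ℝ => 2 * c * s) (nhdsWithin 0 (Set.Ioi 0)) (nhds 0) := by
    have : Filter.Tendsto (fun s : ℝ => 2 * c * s) (nhds 0) (nhds (2 * c * 0)) :=
      (continuous_const.mul continuous_id).tendsto 0
    rw [mul_zero] at this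
    exact this.mono_left nhdsWithin_le_nhds
  have hev : ∀ᶠ s : ℝ in nhdsWithin 0 (Set.Ioi 0), |I| ≤ 2 * c * s := by
    have e1 : ∀ᶠ s : ℝ in nhds 0, s * K < 1 / 2 :=
      (continuous_id.mul continuous_const).continuousAt.eventually_lt continuousAt_const (by norm_num)
    have e2 : ∀ᶠ s : ℝ in nhds 0, c * s ^ 2 < 1 :=
      (continuous_const.mul (continuous_id.pow 2)).continuousAt.eventually_lt continuousAt_const (by norm_num)
    filter_upwards [nhdsWithin_le_nhds e1, nhdsWithin_le_nhds e2, self_mem_nhdsWithin] with s h1 h2 h3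
    exact key2 s h3 h1.le h2.le
  have := ge_of_tendsto hlim hev
  exact abs_eq_zero.1 (le_antisymm this (abs_nonneg _))

end BetaEns

/-! ### The function `Xhalf` and the arcsine and semicircle laws -/

namespace BetaEns

lemma half_sq (z : ℂ) : (z ^ ((1:ℂ)/2)) ^ 2 = z := by
  rw [← Complex.cpow_nat_mul]; norm_num

lemma half_re_nonneg (z : ℂ) : 0 ≤ (z ^ ((1:ℂ)/2)).re := by
  by_cases hz : z = 0
  · subst hz; rw [Complex.zero_cpow (by norm_num)]; simp
  rw [Complex.cpow_def_of_ne_zero hz, Complex.exp_re]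
  refine mul_nonneg (Real.exp_pos _).le (Real.cos_nonneg_of_mem_Icc ?_)
  have e : (Complex.log z * (1 / 2)).im = z.arg / 2 := by
    rw [show (1:ℂ) / 2 = ((1 / 2 : ℝ) : ℂ) by norm_num, Complex.im_mul_ofReal, Complex.log_im]; ring
  rw [e]
  have h1 := Complex.neg_pi_lt_arg z
  have h2 := Complex.arg_le_pi z
  constructor <;> linarith

lemma Xhalf_sq (z : ℂ) : Xhalf z ^ 2 = z ^ 2 - 4 := by
  unfold Xhalf; rw [mul_pow, half_sq, half_sq]; ring

/-- The complement of the cut `[-2,2]`. -/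
def offCut (z : ℂ) : Prop := z.im ≠ 0 ∨ 2 < |z.re|

lemma offCut_of_norm {z : ℂ} (hz : 2 < ‖z‖) : offCut z := by
  by_cases h : z.im = 0
  · right
    have := Complex.norm_le_abs_re_add_abs_im z
    rw [h, abs_zero] at this; linarith
  · exact Or.inl h

/-- The two branches `√(z-2)`, `√(z+2)` lie in a common open quadrant (or half-axis). -/
lemma half_quadrant {z : ℂ} (hz : offCut z) :
    0 < ((z - 2) ^ ((1:ℂ)/2)).re * ((z + 2) ^ ((1:ℂ)/2)).re
      + ((z - 2) ^ ((1:ℂ)/2)).im * ((z + 2) ^ ((1:ℂ)/2)).im := by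
  by_cases him : z.im = 0
  · have hx : 2 < |z.re| := by
      rcases hz with h | h
      · exact absurd him h
      · exact h
    have hzr : z = (z.re : ℂ) := by apply Complex.ext <;> simp [him]
    rcases lt_abs.1 hx with h | h
    · have e1 : (z - 2) ^ ((1:ℂ)/2) = (((z.re - 2) ^ ((1:ℝ)/2) : ℝ) : ℂ) := by
        rw [Complex.ofReal_cpow (by linarith)]; push_cast; rw [← hzr]
      have e2 : (z + 2) ^ ((1:ℂ)/2) = (((z.re + 2) ^ ((1:ℝ)/2) : ℝ) : ℂ) := by
        rw [Complex.ofReal_cpow (by linarith)]; push_cast; rw [← hzr]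
      rw [e1, e2]
      simp only [Complex.ofReal_re, Complex.ofReal_im, mul_zero, add_zero]
      have := Real.rpow_pos_of_pos (by linarith : 0 < z.re - 2) (1/2)
      have := Real.rpow_pos_of_pos (by linarith : 0 < z.re + 2) (1/2)
      positivity
    · have key : ∀ x : ℝ, x < 0 → (x:ℂ) ^ ((1:ℂ)/2) = (((-x) ^ ((1:ℝ)/2) : ℝ) : ℂ) * Complex.I := by
        intro x hx
        rw [Complex.ofReal_cpow_of_nonpos hx.le, Complex.ofReal_cpow (by linarith)]
        have : Complex.exp (Real.pi * Complex.I * (1 / 2)) = Complex.I := by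
          rw [show (Real.pi:ℂ) * Complex.I * (1 / 2) = (Real.pi:ℂ) / 2 * Complex.I by ring, Complex.exp_pi_div_two_mul_I]
        rw [this]; push_cast; rfl
      have e1 := key (z.re - 2) (by linarith)
      have e2 := key (z.re + 2) (by linarith)
      push_cast at e1 e2
      rw [← hzr] at e1 e2
      have p1 := Real.rpow_pos_of_pos (by linarith : 0 < -(z.re - 2)) (1/2)
      have p2 := Real.rpow_pos_of_pos (by linarith : 0 < -(z.re + 2)) (1/2)
      rw [e1, e2, Complex.re_ofReal_mul, Complex.re_ofReal_mul, Complex.im_ofReal_mul, Complex.im_ofReal_mul]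
      simp only [Complex.I_re, Complex.I_im, mul_zero, mul_one, zero_add]
      positivity
  · set a := (z - 2) ^ ((1:ℂ)/2) with ha
    set c := (z + 2) ^ ((1:ℂ)/2) with hc
    have ha2 : 2 * (a.re * a.im) = z.im := by
      have := congrArg Complex.im (half_sq (z - 2))
      rw [← ha] at this; simp [pow_two] at this; linarith
    have hc2 : 2 * (c.re * c.im) = z.im := by
      have := congrArg Complex.im (half_sq (z + 2))
      rw [← hc] at this; simp [pow_two] at this; linarith
    have ha0 : 0 < a.re := lt_of_le_of_ne (half_re_nonneg _) fun h => him (by rw [← ha2, ← h]; ring)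
    have hc0 : 0 < c.re := lt_of_le_of_ne (half_re_nonneg _) fun h => him (by rw [← hc2, ← h]; ring)
    rcases lt_or_gt_of_ne him with h | h
    · have h1 : a.im < 0 := by by_contra hcon; push Not at hcon; nlinarith
      have h2 : c.im < 0 := by by_contra hcon; push Not at hcon; nlinarith
      nlinarith [mul_pos ha0 hc0]
    · have h1 : 0 < a.im := by by_contra hcon; push Not at hcon; nlinarith
      have h2 : 0 < c.im := by by_contra hcon; push Not at hcon; nlinarith
      nlinarith [mul_pos ha0 hc0]

/-- The Joukowski inverse `w = (z - X)/2`, so that `z = w + 1/w` with `|w| < 1`. -/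
noncomputable def jw (z : ℂ) : ℂ := (z - Xhalf z) / 2

lemma jw_eq (z : ℂ) : jw z * (z - jw z) = 1 := by
  have := Xhalf_sq z
  unfold jw
  linear_combination -(1/4) * this

lemma jw_ne (z : ℂ) : jw z ≠ 0 := left_ne_zero_of_mul_eq_one (jw_eq z)

lemma jw_add (z : ℂ) : z = jw z + (jw z)⁻¹ := by
  have := jw_ne z
  have h := jw_eq z
  field_simp
  linear_combination h

lemma Xhalf_jw (z : ℂ) : Xhalf z = z - 2 * jw z := by unfold jw; ring

lemma jw_norm {z : ℂ} (hz : offCut z) : ‖jw z‖ < 1 := by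
  have hq := half_quadrant hz
  set a := (z - 2) ^ ((1:ℂ)/2) with ha
  set c := (z + 2) ^ ((1:ℂ)/2) with hc
  have ha2 : a ^ 2 = z - 2 := half_sq _
  have hc2 : c ^ 2 = z + 2 := half_sq _
  have e1 : jw z = (a - c) ^ 2 / 4 := by
    unfold jw Xhalf; rw [← ha, ← hc]; linear_combination -(1/4) * ha2 - (1/4) * hc2
  have e2 : (a - c) * (a + c) = -4 := by linear_combination ha2 - hc2
  have h1 : ‖a - c‖ ^ 2 < ‖a + c‖ ^ 2 := by
    rw [Complex.sq_norm, Complex.sq_norm, Complex.normSq_apply, Complex.normSq_apply]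
    simp only [Complex.sub_re, Complex.sub_im, Complex.add_re, Complex.add_im]
    nlinarith
  have h2 : ‖a - c‖ * ‖a + c‖ = 4 := by rw [← norm_mul, e2]; simp
  have h3 : ‖a - c‖ < ‖a + c‖ := lt_of_pow_lt_pow_left₀ 2 (norm_nonneg _) h1
  rw [e1, norm_div, norm_pow]
  simp only [Complex.norm_ofNat]
  rw [div_lt_one (by norm_num)]
  nlinarith [norm_nonneg (a - c)]

lemma Xhalf_lower (z : ℂ) : ‖z‖ ^ 2 - 4 ≤ ‖Xhalf z‖ ^ 2 := by
  rw [← norm_pow (Xhalf z), Xhalf_sq]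
  have := norm_sub_norm_le (z ^ 2) 4
  rw [norm_pow] at this; simpa using this

lemma Xhalf_ne {z : ℂ} (hz : 2 < ‖z‖) : Xhalf z ≠ 0 := by
  intro h
  have := Xhalf_lower z
  rw [h] at this; simp at this
  nlinarith

lemma Xhalf_upper {z : ℂ} (hz : 2 < ‖z‖) : ‖Xhalf z‖ ≤ ‖z‖ + 2 := by
  rw [Xhalf_jw]
  have := jw_norm (offCut_of_norm hz)
  refine (norm_sub_le _ _).trans ?_
  rw [norm_mul]; simp; linarith

/-- The semicircle density. -/
noncomputable def scd (y : ℝ) : ℝ := 1 / (2 * Real.pi) * Real.sqrt (4 - y ^ 2)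

lemma offCut_sub_ne {z : ℂ} (hz : offCut z) {y : ℝ} (hy : |y| ≤ 2) : z - y ≠ 0 := by
  intro h
  have h1 := congrArg Complex.im h
  have h2 := congrArg Complex.re h
  simp at h1 h2
  rcases hz with h3 | h3
  · exact h3 h1
  · rw [sub_eq_zero.1 h2] at h3; linarith

lemma arcsine_int {z : ℂ} (hz : offCut z) :
    ∫ θ in (0:ℝ)..Real.pi, 1 / (z - 2 * Real.cos θ) = Real.pi / Xhalf z := by
  have hw := jw_norm hz
  have hw0 := jw_ne z
  have hzw := jw_add z
  have hX := Xhalf_jw z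
  set w := jw z with hwdef
  have hw1 : ∀ ζ : ℂ, ‖ζ‖ ≤ 1 → 1 - w * ζ ≠ 0 := by
    intro ζ hζ h
    have : ‖w * ζ‖ = 1 := by rw [← sub_eq_zero.1 h]; simp
    rw [norm_mul] at this
    nlinarith [norm_nonneg w, norm_nonneg ζ]
  have hc : ∀ θ : ℝ, z - 2 * Real.cos θ ≠ 0 := fun θ => by
    have := offCut_sub_ne hz (y := 2 * Real.cos θ) (by
      rw [abs_mul, abs_two]; have := Real.abs_cos_le_one θ; linarith)
    push_cast at this ⊢; exact this
  have hcont : Continuous fun θ : ℝ => 1 / (z - 2 * Real.cos θ) := by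
    refine continuous_const.div (by fun_prop) hc
  have hfull : ∫ θ in (0:ℝ)..2 * Real.pi, 1 / (z - 2 * Real.cos θ)
      = 2 * ∫ θ in (0:ℝ)..Real.pi, 1 / (z - 2 * Real.cos θ) := by
    rw [← intervalIntegral.integral_add_adjacent_intervals (hcont.intervalIntegrable 0 Real.pi)
      (hcont.intervalIntegrable _ _)]
    have := intervalIntegral.integral_comp_sub_left (a := (0:ℝ)) (b := Real.pi)
      (fun θ : ℝ => 1 / (z - 2 * Real.cos θ)) (2 * Real.pi)
    rw [show 2 * Real.pi - Real.pi = Real.pi by ring, sub_zero] at this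
    rw [← this]
    simp only [Real.cos_two_pi_sub]
    ring
  have hcirc : ∫ θ in (0:ℝ)..2 * Real.pi, 1 / (z - 2 * Real.cos θ)
      = (1 / Complex.I) * ∮ ζ in C((0:ℂ), 1), (ζ - w)⁻¹ • (w / (1 - w * ζ)) := by
    rw [circleIntegral, ← intervalIntegral.integral_const_mul]
    refine intervalIntegral.integral_congr fun θ _ => ?_
    simp only [deriv_circleMap, smul_eq_mul]
    set ζ := circleMap 0 1 θ with hζ
    have hζn : ‖ζ‖ = 1 := by rw [hζ]; simp
    have hζ0 : ζ ≠ 0 := norm_pos_iff.1 (by rw [hζn]; norm_num)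
    have hcos : 2 * (Real.cos θ : ℂ) = ζ + ζ⁻¹ := by
      rw [hζ, circleMap]
      simp only [Complex.ofReal_one, one_mul, zero_add]
      rw [← Complex.exp_neg, Complex.ofReal_cos, Complex.cos]
      ring_nf
    have h1 := hw1 ζ hζn.le
    have h2 : ζ - w ≠ 0 := by
      intro h; rw [← sub_eq_zero.1 h, hζn] at hw; exact lt_irrefl _ hw
    have h3 : z - 2 * Real.cos θ = (ζ - w) * (1 - w * ζ) / (w * ζ) := by
      rw [hcos, hzw]; field_simp; ring
    rw [h3]
    field_simp
  have hcauchy := Complex.circleIntegral_sub_inv_smul_of_differentiable_on_off_countable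
    (R := 1) (c := (0:ℂ)) (w := w) (f := fun ζ => w / (1 - w * ζ)) Set.countable_empty
    (by rw [mem_ball_zero_iff]; exact hw)
    (by
      refine ContinuousOn.div continuousOn_const (by fun_prop) fun ζ hζ => hw1 ζ ?_
      simpa using hζ)
    (by
      intro ζ hζ
      have h1 := hw1 ζ (by have := hζ.1; rw [mem_ball_zero_iff] at this; exact this.le)
      fun_prop (disch := exact h1))
  rw [hcauchy] at hcirc
  rw [hcirc] at hfull
  have h1 := hw1 w hw.le
  have e : Xhalf z = (1 - w * w) / w := by
    rw [hX, hzw]; field_simp; ring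
  have hI := Complex.I_ne_zero
  rw [e]
  simp only [smul_eq_mul] at hfull
  have h2 : (2:ℂ) ≠ 0 := two_ne_zero
  apply mul_left_cancel₀ h2
  rw [← hfull]
  field_simp

/-- The Stieltjes transform of the semicircle law. -/
lemma sc_interval {z : ℂ} (hz : offCut z) :
    ∫ y in (-2:ℝ)..2, (scd y : ℂ) / (z - y) = jw z := by
  have hX0 : Xhalf z ≠ 0 := by
    intro h
    have h1 := Xhalf_jw z
    have h2 := jw_eq z
    have h3 : z = 2 * jw z := by rw [h] at h1; exact (sub_eq_zero.1 h1.symm)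
    have h4 : jw z ^ 2 = 1 := by rw [← h2]; nth_rw 3 [h3]; ring
    have h5 := jw_norm hz
    have : ‖jw z‖ ^ 2 = 1 := by rw [← norm_pow, h4]; simp
    nlinarith [norm_nonneg (jw z)]
  have hsub := intervalIntegral.integral_deriv_smul_comp'' (a := 0) (b := Real.pi)
    (f := fun θ => 2 * Real.cos θ) (f' := fun θ => -(2 * Real.sin θ)) (g := fun y : ℝ => (scd y : ℂ) / (z - y))
    (by fun_prop)
    (fun θ _ => by
      have := ((Real.hasDerivAt_cos θ).const_mul 2).hasDerivWithinAt (s := Set.Ioi θ)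
      exact this.congr_deriv (by ring))
    (by fun_prop)
    (by
      refine ContinuousOn.div ?_ (by fun_prop) ?_
      · unfold scd; fun_prop
      · rintro _ ⟨θ, _, rfl⟩
        refine offCut_sub_ne hz ?_
        simp only [abs_mul, abs_two]; have := Real.abs_cos_le_one θ; linarith)
  have hc : ∀ θ : ℝ, z - 2 * Real.cos θ ≠ 0 := fun θ => by
    have := offCut_sub_ne hz (y := 2 * Real.cos θ) (by
      rw [abs_mul, abs_two]; have := Real.abs_cos_le_one θ; linarith)
    push_cast at this ⊢; exact this
  have hcont : Continuous fun θ : ℝ => 1 / (z - 2 * Real.cos θ) := by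
    refine continuous_const.div (by fun_prop) hc
  simp only [Real.cos_zero, Real.cos_pi, mul_one] at hsub
  rw [show (2:ℝ) * -1 = -2 by ring, intervalIntegral.integral_symm (-2:ℝ) 2] at hsub
  rw [neg_eq_iff_eq_neg.1 hsub.symm, ← intervalIntegral.integral_neg]
  have e : ∀ θ ∈ Set.uIcc 0 Real.pi, -(-(2 * Real.sin θ) • ((fun y : ℝ => (scd y : ℂ) / (z - y)) ∘ fun θ => 2 * Real.cos θ) θ)
      = (1 / (2 * Real.pi) : ℂ) * ((z + 2 * Real.cos θ) - (z ^ 2 - 4) * (1 / (z - 2 * Real.cos θ))) := by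
    intro θ hθ
    rw [Set.uIcc_of_le Real.pi_pos.le] at hθ
    have hs := Real.sin_nonneg_of_mem_Icc hθ
    have hsq : Real.sqrt (4 - (2 * Real.cos θ) ^ 2) = 2 * Real.sin θ := by
      rw [show 4 - (2 * Real.cos θ) ^ 2 = (2 * Real.sin θ) ^ 2 by nlinarith [Real.sin_sq_add_cos_sq θ]]
      exact Real.sqrt_sq (by positivity)
    have hcs : (Real.sin θ : ℂ) ^ 2 = 1 - (Real.cos θ : ℂ) ^ 2 := by
      have := Real.sin_sq_add_cos_sq θ
      have h2 : Real.sin θ ^ 2 = 1 - Real.cos θ ^ 2 := by linarith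
      exact_mod_cast h2
    have := hc θ
    have hpi : (Real.pi:ℂ) ≠ 0 := by exact_mod_cast Real.pi_ne_zero
    simp only [Function.comp, scd, hsq, Complex.real_smul]
    push_cast at this hcs ⊢
    field_simp
    linear_combination 4 * hcs
  rw [intervalIntegral.integral_congr e, intervalIntegral.integral_const_mul,
    intervalIntegral.integral_sub (by apply Continuous.intervalIntegrable; fun_prop)
      ((hcont.const_mul _).intervalIntegrable _ _), intervalIntegral.integral_const_mul, arcsine_int hz,
    intervalIntegral.integral_add (by simp) (by apply Continuous.intervalIntegrable; fun_prop)]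
  have e2 : ∫ θ in (0:ℝ)..Real.pi, 2 * (Real.cos θ : ℂ) = 0 := by
    have : ∫ θ in (0:ℝ)..Real.pi, 2 * (Real.cos θ : ℂ) = ((∫ θ in (0:ℝ)..Real.pi, 2 * Real.cos θ : ℝ) : ℂ) := by
      rw [← intervalIntegral.integral_ofReal]; push_cast; rfl
    rw [this]; simp
  rw [e2, intervalIntegral.integral_const, ← Xhalf_sq]
  have hpi : (Real.pi:ℂ) ≠ 0 := by exact_mod_cast Real.pi_ne_zero
  simp only [sub_zero, Complex.real_smul]
  unfold jw
  field_simp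
  ring

end BetaEns

/-! ### Densities on `[-2,2]` and the semicircle measure -/

namespace BetaEns

/-- The measure with density `ρ`. -/
noncomputable def mu (ρ : ℝ → ℝ) : Measure ℝ := volume.withDensity fun y => ENNReal.ofReal (ρ y)

/-- Probability densities on `[-2,2]` bounded by `b`. -/
structure PD (b : ℝ) (ρ : ℝ → ℝ) : Prop where
  nonneg : ∀ y, 0 ≤ ρ y
  le : ∀ y, ρ y ≤ b
  supp : ∀ y, y ∉ Set.Icc (-2:ℝ) 2 → ρ y = 0
  int1 : ∫ y, ρ y = 1

variable {b : ℝ} {ρ : ℝ → ℝ}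

lemma PD.integrable (h : PD b ρ) : Integrable ρ := by
  by_contra hc
  have := h.int1
  rw [integral_undef hc] at this; norm_num at this

lemma PD.dens (h : PD b ρ) : Dens b (mu ρ) := by
  refine ⟨⟨?_⟩, ?_, ?_⟩
  · rw [mu, withDensity_apply _ MeasurableSet.univ, Measure.restrict_univ,
      ← ofReal_integral_eq_lintegral_ofReal h.integrable (Filter.Eventually.of_forall h.nonneg), h.int1]
    simp
  · rw [mu, withDensity_apply _ measurableSet_Icc.compl, setLIntegral_congr_fun (g := fun _ => 0) measurableSet_Icc.compl]
    · simp
    · intro y hy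
      simp [h.supp y hy]
  · rw [mu, ← withDensity_const]
    exact withDensity_mono (Filter.Eventually.of_forall fun y => ENNReal.ofReal_le_ofReal (h.le y))

lemma PD.integral_mu (h : PD b ρ) {E : Type*} [NormedAddCommGroup E] [NormedSpace ℝ E] (f : ℝ → E) :
    ∫ y, f y ∂(mu ρ) = ∫ y, ρ y • f y := by
  rw [mu, integral_withDensity_eq_integral_toReal_smul₀ (h.integrable.aemeasurable.ennreal_ofReal) (by simp)]
  congr 1; funext y
  rw [ENNReal.toReal_ofReal (h.nonneg y)]

lemma PD.integral_Icc (h : PD b ρ) {E : Type*} [NormedAddCommGroup E] [NormedSpace ℝ E] (f : ℝ → E) :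
    ∫ y in (-2:ℝ)..2, ρ y • f y = ∫ y, f y ∂(mu ρ) := by
  rw [h.integral_mu, intervalIntegral.integral_of_le (by norm_num), ← integral_Icc_eq_integral_Ioc]
  refine setIntegral_eq_integral_of_forall_compl_eq_zero fun y hy => ?_
  rw [h.supp y hy, zero_smul]

lemma PD.integral_mix {ρ' : ℝ → ℝ} (h : PD b ρ) (h' : PD b ρ') (hm : Measurable ρ') {t : ℝ} (ht : t ∈ Set.Icc (0:ℝ) 1)
    {ρt : ℝ → ℝ} (hρt : ∀ y, ρt y = t * ρ y + (1 - t) * ρ' y)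
    {E : Type*} [NormedAddCommGroup E] [NormedSpace ℝ E] {f : ℝ → E}
    (h1 : Integrable f (mu ρ)) (h2 : Integrable f (mu ρ')) :
    ∫ y, f y ∂(mu ρt) = t • ∫ y, f y ∂(mu ρ) + (1 - t) • ∫ y, f y ∂(mu ρ') := by
  have e : mu ρt = ENNReal.ofReal t • mu ρ + ENNReal.ofReal (1 - t) • mu ρ' := by
    unfold mu
    rw [← withDensity_smul' _ _ ENNReal.ofReal_ne_top, ← withDensity_smul' _ _ ENNReal.ofReal_ne_top,
      ← withDensity_add_right _ (hm.ennreal_ofReal.const_smul (ENNReal.ofReal (1 - t)))]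
    congr 1; funext y
    simp only [Pi.add_apply, Pi.smul_apply, smul_eq_mul]
    rw [hρt, ← ENNReal.ofReal_mul ht.1, ← ENNReal.ofReal_mul (by linarith [ht.2]),
      ← ENNReal.ofReal_add (mul_nonneg ht.1 (h.nonneg y)) (mul_nonneg (by linarith [ht.2]) (h'.nonneg y))]
  rw [e, integral_add_measure (h1.smul_measure (by simp)) (h2.smul_measure (by simp)), integral_smul_measure,
    integral_smul_measure, ENNReal.toReal_ofReal ht.1, ENNReal.toReal_ofReal (by linarith [ht.2])]

lemma PD.mix {ρ' : ℝ → ℝ} (h : PD b ρ) (h' : PD b ρ') {t : ℝ} (ht : t ∈ Set.Icc (0:ℝ) 1) :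
    PD b fun y => t * ρ y + (1 - t) * ρ' y := by
  have h0 := ht.1
  have h1 : 0 ≤ 1 - t := by linarith [ht.2]
  refine ⟨fun y => ?_, fun y => ?_, fun y hy => ?_, ?_⟩
  · have := h.nonneg y; have := h'.nonneg y; positivity
  · have := mul_le_mul_of_nonneg_left (h.le y) h0
    have := mul_le_mul_of_nonneg_left (h'.le y) h1
    linarith
  · rw [h.supp y hy, h'.supp y hy]; ring
  · rw [integral_add (h.integrable.const_mul t) (h'.integrable.const_mul (1 - t)), integral_const_mul, integral_const_mul,
      h.int1, h'.int1]; ring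

lemma scd_cont : Continuous scd := by unfold scd; fun_prop

lemma scd_supp {y : ℝ} (hy : y ∉ Set.Icc (-2:ℝ) 2) : scd y = 0 := by
  unfold scd
  rw [Real.sqrt_eq_zero_of_nonpos, mul_zero]
  rw [Set.mem_Icc, not_and_or] at hy
  rcases hy with h | h <;> push Not at h <;> nlinarith

/-- Integration against the semicircle law through `y = 2 cos θ`. -/
lemma sc_subst (f : ℝ → ℝ) (hf : Continuous f) :
    ∫ y in (-2:ℝ)..2, scd y * f y = ∫ θ in (0:ℝ)..Real.pi, 2 / Real.pi * (Real.sin θ ^ 2 * f (2 * Real.cos θ)) := by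
  have hsub := intervalIntegral.integral_deriv_smul_comp'' (a := 0) (b := Real.pi)
    (f := fun θ => 2 * Real.cos θ) (f' := fun θ => -(2 * Real.sin θ)) (g := fun y : ℝ => scd y * f y)
    (by fun_prop)
    (fun θ _ => by
      have := ((Real.hasDerivAt_cos θ).const_mul 2).hasDerivWithinAt (s := Set.Ioi θ)
      exact this.congr_deriv (by ring))
    (by fun_prop) (scd_cont.mul hf).continuousOn
  simp only [Real.cos_zero, Real.cos_pi, mul_one] at hsub
  rw [show (2:ℝ) * -1 = -2 by ring, intervalIntegral.integral_symm (-2:ℝ) 2] at hsub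
  rw [neg_eq_iff_eq_neg.1 hsub.symm, ← intervalIntegral.integral_neg]
  refine intervalIntegral.integral_congr fun θ hθ => ?_
  rw [Set.uIcc_of_le Real.pi_pos.le] at hθ
  have hs := Real.sin_nonneg_of_mem_Icc hθ
  have hsq : Real.sqrt (4 - (2 * Real.cos θ) ^ 2) = 2 * Real.sin θ := by
    rw [show 4 - (2 * Real.cos θ) ^ 2 = (2 * Real.sin θ) ^ 2 by nlinarith [Real.sin_sq_add_cos_sq θ]]
    exact Real.sqrt_sq (by positivity)
  simp only [Function.comp, scd, hsq, smul_eq_mul]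
  field_simp

lemma sc_PD : PD 1 scd := by
  refine ⟨fun y => by unfold scd; positivity, fun y => ?_, fun y hy => scd_supp hy, ?_⟩
  · unfold scd
    have h1 : Real.sqrt (4 - y ^ 2) ≤ 2 := Real.sqrt_le_iff.2 ⟨by norm_num, by nlinarith [sq_nonneg y]⟩
    have h2 : 1 / (2 * Real.pi) ≤ 1 / 6 := one_div_le_one_div_of_le (by norm_num) (by have := Real.pi_gt_three; linarith)
    calc _ ≤ (1 / 6 : ℝ) * 2 := by gcongr
      _ ≤ _ := by norm_num
  · have h := sc_subst (fun _ => 1) continuous_const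
    simp only [mul_one] at h
    rw [intervalIntegral.integral_const_mul, integral_sin_sq] at h
    rw [← setIntegral_eq_integral_of_forall_compl_eq_zero (s := Set.Icc (-2:ℝ) 2) fun y hy => scd_supp hy,
      integral_Icc_eq_integral_Ioc, ← intervalIntegral.integral_of_le (by norm_num), h]
    simp

lemma PD.mono {b' : ℝ} (h : PD b ρ) (hb : b ≤ b') : PD b' ρ :=
  ⟨h.nonneg, fun y => (h.le y).trans hb, h.supp, h.int1⟩

lemma sc_second_moment : ∫ y, y ^ 2 ∂(mu scd) = 1 := by
  rw [← sc_PD.integral_Icc]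
  simp only [smul_eq_mul]
  rw [sc_subst (fun y => y ^ 2) (by fun_prop), intervalIntegral.integral_const_mul]
  have e : ∀ θ : ℝ, Real.sin θ ^ 2 * (2 * Real.cos θ) ^ 2 = 4 * (Real.sin θ ^ 2 * Real.cos θ ^ 2) := fun θ => by ring
  simp only [e]
  rw [intervalIntegral.integral_const_mul, integral_sin_sq_mul_cos_sq]
  have : Real.sin (4 * Real.pi) = 0 := by
    have := Real.sin_nat_mul_pi 4; simpa using this
  simp [this]
  field_simp; norm_num

lemma sc_stieltjes {z : ℂ} (hz : offCut z) : ∫ y : ℝ, 1 / (z - y) ∂(mu scd) = jw z := by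
  rw [← sc_PD.integral_Icc, ← sc_interval hz]
  refine intervalIntegral.integral_congr fun y _ => ?_
  simp only [Complex.real_smul]; ring

lemma Xhalf_diff {z : ℂ} (hz : 2 < ‖z‖) : DifferentiableAt ℂ Xhalf z := by
  have h1 : DifferentiableAt ℂ (fun z : ℂ => z - 2 * ∫ y : ℝ, 1 / (z - y) ∂(mu scd)) z :=
    differentiableAt_id.sub ((st_hasDeriv sc_PD.dens hz).differentiableAt.const_mul 2)
  refine h1.congr_of_eventuallyEq ?_
  have : ∀ᶠ w : ℂ in nhds z, 2 < ‖w‖ := continuous_norm.continuousAt.eventually_const_lt hz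
  filter_upwards [this] with w hw
  rw [sc_stieltjes (offCut_of_norm hw), Xhalf_jw]

end BetaEns

/-! ### Contour integrals around the support -/

namespace BetaEns
variable {b : ℝ} {r : Measure ℝ}

/-- `(2πi)⁻¹ ∮_{|ζ| = ϱ} f`. -/
noncomputable def ci (ϱ : ℝ) (f : ℂ → ℂ) : ℂ := (2 * Real.pi * Complex.I)⁻¹ * ∮ ζ in C((0:ℂ), ϱ), f ζ

lemma ci_def (ϱ : ℝ) (f : ℂ → ℂ) :
    ci ϱ f = (2 * (Real.pi : ℂ))⁻¹ * ∫ θ in (0:ℝ)..2 * Real.pi, circleMap 0 ϱ θ * f (circleMap 0 ϱ θ) := by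
  unfold ci
  rw [circleIntegral]
  simp only [deriv_circleMap, smul_eq_mul]
  have : ∀ θ : ℝ, circleMap 0 ϱ θ * Complex.I * f (circleMap 0 ϱ θ)
      = Complex.I * (circleMap 0 ϱ θ * f (circleMap 0 ϱ θ)) := fun θ => by ring
  simp only [this]
  rw [intervalIntegral.integral_const_mul, mul_inv, mul_assoc, ← mul_assoc Complex.I⁻¹,
    inv_mul_cancel₀ Complex.I_ne_zero, one_mul]

lemma ci_norm {ϱ C : ℝ} (hϱ : 0 ≤ ϱ) {f : ℂ → ℂ} (hf : ∀ z, ‖z‖ = ϱ → ‖f z‖ ≤ C) : ‖ci ϱ f‖ ≤ ϱ * C := by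
  have h := circleIntegral.norm_two_pi_i_inv_smul_integral_le_of_norm_le_const (c := (0:ℂ)) hϱ (f := f) (C := C)
    (fun z hz => hf z (by simpa using hz))
  simpa [ci, smul_eq_mul] using h

lemma ci_congr {ϱ : ℝ} (hϱ : 0 ≤ ϱ) {f g : ℂ → ℂ} (hfg : ∀ z, ‖z‖ = ϱ → f z = g z) : ci ϱ f = ci ϱ g := by
  unfold ci
  rw [circleIntegral.integral_congr hϱ fun z hz => hfg z (by simpa using hz)]

/-- Continuity on the circle of radius `ϱ`. -/
def CC (ϱ : ℝ) (f : ℂ → ℂ) : Prop := ContinuousOn f (sphere 0 ϱ)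

lemma CC.ii {ϱ : ℝ} (hϱ : 0 ≤ ϱ) {f : ℂ → ℂ} (hf : CC ϱ f) : CircleIntegrable f 0 ϱ :=
  ContinuousOn.circleIntegrable hϱ hf

lemma ci_add {ϱ : ℝ} (hϱ : 0 ≤ ϱ) {f g : ℂ → ℂ} (hf : CC ϱ f) (hg : CC ϱ g) :
    ci ϱ (fun z => f z + g z) = ci ϱ f + ci ϱ g := by
  unfold ci; rw [circleIntegral.integral_add (hf.ii hϱ) (hg.ii hϱ)]; ring

lemma ci_sub {ϱ : ℝ} (hϱ : 0 ≤ ϱ) {f g : ℂ → ℂ} (hf : CC ϱ f) (hg : CC ϱ g) :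
    ci ϱ (fun z => f z - g z) = ci ϱ f - ci ϱ g := by
  unfold ci; rw [circleIntegral.integral_sub (hf.ii hϱ) (hg.ii hϱ)]; ring

lemma ci_mul (ϱ : ℝ) (a : ℂ) (f : ℂ → ℂ) : ci ϱ (fun z => a * f z) = a * ci ϱ f := by
  unfold ci; rw [circleIntegral.integral_const_mul]; ring

lemma ci_sum {ϱ : ℝ} (hϱ : 0 ≤ ϱ) {ι : Type*} (s : Finset ι) {f : ι → ℂ → ℂ} (hf : ∀ i ∈ s, CC ϱ (f i)) :
    ci ϱ (fun z => ∑ i ∈ s, f i z) = ∑ i ∈ s, ci ϱ (f i) := by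
  unfold ci
  rw [circleIntegral.integral_fun_sum fun i hi => (hf i hi).ii hϱ, Finset.mul_sum]

/-- Cauchy's formula on a disc centred at the origin. -/
lemma ci_cauchy {ϱ ϱ1 : ℝ} (h1 : ϱ < ϱ1) {f : ℂ → ℂ} (hf : DifferentiableOn ℂ f (ball 0 ϱ1))
    {w : ℂ} (hw : ‖w‖ < ϱ) : ci ϱ (fun ζ => f ζ * (1 / (ζ - w))) = f w := by
  have h := Complex.circleIntegral_sub_inv_smul_of_differentiable_on_off_countable
    (R := ϱ) (c := (0:ℂ)) (w := w) (f := f) Set.countable_empty (by rwa [mem_ball_zero_iff])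
    (hf.continuousOn.mono (closedBall_subset_ball h1))
    (fun ζ hζ => hf.differentiableAt (isOpen_ball.mem_nhds (ball_subset_ball h1.le hζ.1)))
  unfold ci
  have e : ∀ ζ, f ζ * (1 / (ζ - w)) = (ζ - w)⁻¹ • f ζ := fun ζ => by rw [smul_eq_mul]; ring
  simp only [e]
  rw [h, smul_eq_mul, ← mul_assoc, inv_mul_cancel₀ Complex.two_pi_I_ne_zero, one_mul]

lemma ci_zero {ϱ ϱ1 : ℝ} (h0 : 0 ≤ ϱ) (h1 : ϱ < ϱ1) {f : ℂ → ℂ} (hf : DifferentiableOn ℂ f (ball 0 ϱ1)) :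
    ci ϱ f = 0 := by
  unfold ci
  rw [Complex.circleIntegral_eq_zero_of_differentiable_on_off_countable h0 Set.countable_empty
    (hf.continuousOn.mono (closedBall_subset_ball h1))
    (fun ζ hζ => hf.differentiableAt (isOpen_ball.mem_nhds (ball_subset_ball h1.le hζ.1))), mul_zero]

/-- Difference quotient of a holomorphic function. -/
noncomputable def dqc (f : ℂ → ℂ) (z w : ℂ) : ℂ := if z = w then deriv f z else (f z - f w) / (z - w)

lemma CC_pole {ϱ : ℝ} {w : ℂ} (hw : ‖w‖ ≠ ϱ) : CC ϱ fun ζ => 1 / (ζ - w) := by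
  refine continuousOn_const.div (by fun_prop) fun ζ hζ h => hw ?_
  rw [← sub_eq_zero.1 h]; simpa using hζ

lemma CC.mul {ϱ : ℝ} {f g : ℂ → ℂ} (hf : CC ϱ f) (hg : CC ϱ g) : CC ϱ fun z => f z * g z :=
  ContinuousOn.mul hf hg

lemma CC.add {ϱ : ℝ} {f g : ℂ → ℂ} (hf : CC ϱ f) (hg : CC ϱ g) : CC ϱ fun z => f z + g z :=
  ContinuousOn.add hf hg

lemma CC.sub {ϱ : ℝ} {f g : ℂ → ℂ} (hf : CC ϱ f) (hg : CC ϱ g) : CC ϱ fun z => f z - g z :=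
  ContinuousOn.sub hf hg

lemma CC_const (ϱ : ℝ) (a : ℂ) : CC ϱ fun _ => a := continuousOn_const

lemma CC_of_diff {ϱ ϱ1 : ℝ} (h1 : ϱ < ϱ1) {f : ℂ → ℂ} (hf : DifferentiableOn ℂ f (ball 0 ϱ1)) : CC ϱ f :=
  hf.continuousOn.mono (sphere_subset_closedBall.trans (closedBall_subset_ball h1))

lemma CC_sum {ϱ : ℝ} {ι : Type*} (s : Finset ι) {f : ι → ℂ → ℂ} (hf : ∀ i ∈ s, CC ϱ (f i)) :
    CC ϱ fun z => ∑ i ∈ s, f i z := continuousOn_finsetSum s hf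

lemma ci_dq {ϱ ϱ1 : ℝ} (h1 : ϱ < ϱ1) {f : ℂ → ℂ} (hf : DifferentiableOn ℂ f (ball 0 ϱ1))
    {z w : ℂ} (hz : ‖z‖ < ϱ) (hw : ‖w‖ < ϱ) :
    ci ϱ (fun ζ => f ζ * (1 / (ζ - z)) * (1 / (ζ - w))) = dqc f z w := by
  have hϱ : 0 ≤ ϱ := (norm_nonneg z).trans hz.le
  have hne : ∀ u : ℂ, ‖u‖ < ϱ → ∀ ζ : ℂ, ‖ζ‖ = ϱ → ζ - u ≠ 0 := by
    intro u hu ζ hζ h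
    rw [sub_eq_zero.1 h] at hζ; linarith
  unfold dqc
  split_ifs with hzw
  · subst hzw
    have h := Complex.two_pi_I_inv_smul_circleIntegral_sub_sq_inv_smul_of_differentiable (U := ball 0 ϱ1)
      (c := (0:ℂ)) (R := ϱ) (w₀ := z) isOpen_ball (closedBall_subset_ball h1) hf (by rwa [mem_ball_zero_iff])
    rw [← h, smul_eq_mul]
    unfold ci
    congr 1
    refine circleIntegral.integral_congr hϱ fun ζ hζ => ?_
    simp only [smul_eq_mul, pow_two, mul_inv]; ring
  · have hcf := CC_of_diff h1 hf
    have e : ci ϱ (fun ζ => f ζ * (1 / (ζ - z)) * (1 / (ζ - w)))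
        = ci ϱ (fun ζ => (z - w)⁻¹ * (f ζ * (1 / (ζ - z)) - f ζ * (1 / (ζ - w)))) := by
      refine ci_congr hϱ fun ζ hζ => ?_
      have h2 := hne z hz ζ hζ
      have h3 := hne w hw ζ hζ
      have h4 : z - w ≠ 0 := sub_ne_zero.2 hzw
      field_simp
      ring
    rw [e, ci_mul, ci_sub hϱ (hcf.mul (CC_pole hz.ne)) (hcf.mul (CC_pole hw.ne)), ci_cauchy h1 hf hz, ci_cauchy h1 hf hw]
    ring

/-- Fubini for a contour integral against a Stieltjes transform. -/
lemma ci_fubini (hr : Dens b r) {ϱ : ℝ} (h2 : 2 < ϱ) {f : ℂ → ℂ} (hf : CC ϱ f) :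
    ci ϱ (fun ζ => f ζ * ∫ y : ℝ, 1 / (ζ - y) ∂r) = ∫ y : ℝ, ci ϱ (fun ζ => f ζ * (1 / (ζ - y))) ∂r := by
  have := hr.prob
  have hc : Continuous fun θ : ℝ => f (circleMap 0 ϱ θ) := by
    refine hf.comp_continuous (continuous_circleMap 0 ϱ) fun θ => ?_
    exact circleMap_mem_sphere _ (by linarith) θ
  have hn : ∀ θ : ℝ, ‖circleMap 0 ϱ θ‖ = ϱ := fun θ => by
    rw [norm_circleMap_zero, abs_of_pos (by linarith)]
  obtain ⟨M, hM⟩ := (isCompact_sphere (0:ℂ) ϱ).exists_bound_of_continuousOn hf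
  have hM' : ∀ θ : ℝ, ‖f (circleMap 0 ϱ θ)‖ ≤ M := fun θ => hM _ (circleMap_mem_sphere _ (by linarith) θ)
  simp only [ci_def]
  rw [integral_const_mul]
  congr 1
  have e : ∀ θ : ℝ, circleMap 0 ϱ θ * (f (circleMap 0 ϱ θ) * ∫ y : ℝ, 1 / (circleMap 0 ϱ θ - y) ∂r)
      = ∫ y : ℝ, circleMap 0 ϱ θ * (f (circleMap 0 ϱ θ) * (1 / (circleMap 0 ϱ θ - y))) ∂r := fun θ => by
    rw [integral_const_mul, integral_const_mul]
  simp only [e]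
  have hfin : IsFiniteMeasure ((volume : Measure ℝ).restrict (Set.uIoc 0 (2 * Real.pi))) := by
    rw [Set.uIoc_of_le (by positivity)]; infer_instance
  rw [intervalIntegral_integral_swap]
  have hm : Measurable fun p : ℝ × ℝ => circleMap 0 ϱ p.1 * (f (circleMap 0 ϱ p.1) * (1 / (circleMap 0 ϱ p.1 - p.2))) := by
    have h3 : Measurable fun θ : ℝ => circleMap 0 ϱ θ := (continuous_circleMap 0 ϱ).measurable
    have h4 := hc.measurable
    have h5 : Measurable fun p : ℝ × ℝ => circleMap 0 ϱ p.1 := h3.comp measurable_fst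
    have h6 : Measurable fun p : ℝ × ℝ => f (circleMap 0 ϱ p.1) := h4.comp measurable_fst
    have h7 : Measurable fun p : ℝ × ℝ => (p.2 : ℂ) := Complex.measurable_ofReal.comp measurable_snd
    exact h5.mul (h6.mul (measurable_const.div (h5.sub h7)))
  refine Integrable.mono' (g := fun _ => ϱ * (M * (1 / (ϱ - 2)))) (integrable_const _) hm.aestronglyMeasurable ?_
  have hae : ∀ᵐ p ∂((volume.restrict (Set.uIoc 0 (2 * Real.pi))).prod r), p.2 ∈ Set.Icc (-2:ℝ) 2 :=
    (Measure.quasiMeasurePreserving_snd).ae hr.ae_mem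
  filter_upwards [hae] with p hp
  simp only [Function.uncurry]
  rw [norm_mul, norm_mul, norm_div, norm_one, hn]
  have h3 := norm_sub_real (z := circleMap 0 ϱ p.1) (abs_le.2 hp)
  rw [hn] at h3
  have hM0 : 0 ≤ M := (norm_nonneg _).trans (hM' 0)
  have hM1 := hM' p.1
  have h4 : 1 / ‖circleMap 0 ϱ p.1 - (p.2:ℂ)‖ ≤ 1 / (ϱ - 2) := one_div_le_one_div_of_le (by linarith) h3
  gcongr

lemma ci_meas (hr : Dens b r) {ϱ ϱ1 : ℝ} (h2 : 2 < ϱ) (h1 : ϱ < ϱ1) {f : ℂ → ℂ} (hf : DifferentiableOn ℂ f (ball 0 ϱ1)) :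
    ci ϱ (fun ζ => f ζ * ∫ y : ℝ, 1 / (ζ - y) ∂r) = ∫ y : ℝ, f y ∂r := by
  rw [ci_fubini hr h2 (CC_of_diff h1 hf)]
  refine integral_congr_ae ?_
  filter_upwards [hr.ae_mem] with y hy
  refine ci_cauchy h1 hf ?_
  rw [Complex.norm_real, Real.norm_eq_abs]
  exact (abs_le.2 hy).trans_lt h2

lemma CC_st (hr : Dens b r) {ϱ : ℝ} (h2 : 2 < ϱ) : CC ϱ fun ζ => ∫ y : ℝ, 1 / (ζ - y) ∂r := by
  intro ζ hζ
  exact (st_hasDeriv hr (by have : ‖ζ‖ = ϱ := by simpa using hζ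
                            linarith)).continuousAt.continuousWithinAt

lemma CC_mz (hr : Dens b r) {ρ ϱ : ℝ} (hρ : 2 ≤ ρ) (h2 : ρ < ϱ) {n : ℕ} {x : Fin n → ℝ} (hx : ∀ i, |x i| ≤ ρ) :
    CC ϱ (mz r x) := by
  intro ζ hζ
  exact (mz_diff hr hρ hx (by have : ‖ζ‖ = ϱ := by simpa using hζ
                              linarith)).continuousAt.continuousWithinAt

/-- Linear statistics as contour integrals of the fluctuation. -/
lemma lin_stat (hr : Dens b r) {ρ ϱ ϱ1 : ℝ} (hρ : 2 ≤ ρ) (h2 : ρ < ϱ) (h1 : ϱ < ϱ1) {n : ℕ} {x : Fin n → ℝ}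
    (hx : ∀ i, |x i| ≤ ρ) {f : ℂ → ℂ} (hf : DifferentiableOn ℂ f (ball 0 ϱ1)) :
    ∑ i, f (x i) = n * ∫ y : ℝ, f y ∂r + ci ϱ fun ζ => f ζ * mz r x ζ := by
  have h0 : 0 ≤ ϱ := by linarith
  have hcf := CC_of_diff h1 hf
  have hxn : ∀ i, ‖(x i : ℂ)‖ < ϱ := fun i => by
    rw [Complex.norm_real, Real.norm_eq_abs]; exact (hx i).trans_lt h2
  have e : ci ϱ (fun ζ => f ζ * mz r x ζ) = ci ϱ (fun ζ => (∑ i, f ζ * (1 / (ζ - x i)))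
      - n * (f ζ * ∫ y : ℝ, 1 / (ζ - y) ∂r)) := by
    refine ci_congr h0 fun ζ _ => ?_
    rw [← Finset.mul_sum]; unfold mz; ring
  have c1 : ∀ i ∈ Finset.univ, CC ϱ fun ζ => f ζ * (1 / (ζ - (x i : ℂ))) := fun i _ => hcf.mul (CC_pole (hxn i).ne)
  rw [e, ci_sub h0 (CC_sum _ c1) ((CC_const _ _).mul (hcf.mul (CC_st hr (by linarith)))), ci_mul, ci_sum h0 _ c1,
    ci_meas hr (by linarith) h1 hf]
  rw [Finset.sum_congr rfl fun i _ => ci_cauchy h1 hf (hxn i)]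
  ring

end BetaEns

/-! ### The Stieltjes transform of the equilibrium measure -/

namespace BetaEns
variable {b : ℝ} {r : Measure ℝ}

lemma Ue_zero (x : ℝ) : Ue r 0 x = U r x := by
  unfold Ue U lg
  congr 1; funext y
  rw [zero_pow two_ne_zero, add_zero, Real.log_pow, Real.log_abs]; push_cast; ring

/-- The regularized potential is a primitive of the real part of the Stieltjes transform. -/
lemma Ue_deriv (hr : Dens b r) {ε x δ : ℝ} (hδ : 0 < δ)
    (hd : ∀ x' ∈ ball x δ, ∀ y ∈ Set.Icc (-2:ℝ) 2, δ ^ 2 ≤ (x' - y) ^ 2 + ε ^ 2) :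
    HasDerivAt (Ue r ε) (∫ y : ℝ, 1 / ((x + ε * Complex.I : ℂ) - y) ∂r).re x := by
  have := hr.prob
  have hx : x ∈ ball x δ := mem_ball_self hδ
  have hm : ∀ x' : ℝ, AEStronglyMeasurable (fun y => lg ε (x' - y)) r := fun x' => by
    have : Measurable fun y : ℝ => lg ε (x' - y) := by
      unfold lg
      exact (Real.measurable_log.comp (by fun_prop)).div_const 2
    exact this.aestronglyMeasurable
  have hm' : Measurable fun y : ℝ => (x - y) / ((x - y) ^ 2 + ε ^ 2) := by fun_prop
  have hbd : ∀ x' ∈ ball x δ, ∀ y ∈ Set.Icc (-2:ℝ) 2, ‖(x' - y) / ((x' - y) ^ 2 + ε ^ 2)‖ ≤ 1 / δ := by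
    intro x' hx' y hy
    have h := hd x' hx' y hy
    have h0 : 0 < (x' - y) ^ 2 + ε ^ 2 := lt_of_lt_of_le (by positivity) h
    rw [Real.norm_eq_abs, abs_div, abs_of_pos h0, div_le_div_iff₀ h0 hδ]
    have := sq_abs (x' - y)
    nlinarith [sq_nonneg (|x' - y| - δ), sq_nonneg ε, abs_nonneg (x' - y)]
  have hI : Integrable (fun y => lg ε (x - y)) r := by
    refine hr.integrable_of_cont ?_
    unfold lg
    refine ContinuousOn.div_const (ContinuousOn.log (by fun_prop) fun y hy => ?_) 2
    have h := hd x hx y hy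
    exact (lt_of_lt_of_le (by positivity) h).ne'
  have h := (hasDerivAt_integral_of_dominated_loc_of_deriv_le (μ := r) (F := fun x' y => lg ε (x' - y))
    (F' := fun x' y => (x' - y) / ((x' - y) ^ 2 + ε ^ 2)) (x₀ := x) (s := ball x δ) (bound := fun _ => 1 / δ)
    (ball_mem_nhds x hδ) (Filter.Eventually.of_forall hm) hI hm'.aestronglyMeasurable
    (by filter_upwards [hr.ae_mem] with y hy x' hx' using hbd x' hx' y hy)
    (integrable_const _)
    (by
      filter_upwards [hr.ae_mem] with y hy x' hx'
      have h := hd x' hx' y hy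
      have h0 : 0 < (x' - y) ^ 2 + ε ^ 2 := lt_of_lt_of_le (by positivity) h
      have h1 : HasDerivAt (fun x' : ℝ => (x' - y) ^ 2 + ε ^ 2) (2 * (x' - y)) x' := by
        have := (((hasDerivAt_id x').sub_const y).pow 2).add_const (ε ^ 2)
        exact this.congr_deriv (by simp)
      exact ((h1.log h0.ne').div_const 2).congr_deriv (by field_simp))).2
  refine h.congr_deriv ?_
  have hci : Integrable (fun y : ℝ => 1 / ((x + ε * Complex.I : ℂ) - y)) r := by
    refine hr.integrable_of_bdd (C := 1 / δ) (Measurable.aestronglyMeasurable (by fun_prop)) fun y hy => ?_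
    have h := hd x hx y hy
    rw [norm_div, norm_one]
    refine one_div_le_one_div_of_le hδ ?_
    refine abs_le_of_sq_le_sq' ?_ (norm_nonneg _) |>.2
    rw [← Complex.normSq_eq_norm_sq, Complex.normSq_apply]
    simp; nlinarith
  have := integral_re (𝕜 := ℂ) hci
  simp only [RCLike.re_to_complex] at this
  rw [← this]
  congr 1; funext y
  rw [one_div, Complex.inv_re, Complex.normSq_apply]
  simp
  ring_nf

/-- Regular part of the Stieltjes transform attached to the analytic factor `P`. -/
noncomputable def Bf (P : ℂ → ℂ) (ϱ : ℝ) (z : ℂ) : ℂ := ci ϱ fun ζ => P ζ * jw ζ * (1 / (ζ - z))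

lemma jw_diff {z : ℂ} (hz : 2 < ‖z‖) : DifferentiableAt ℂ jw z := by
  unfold jw
  exact (differentiableAt_id.sub (Xhalf_diff hz)).div_const 2

lemma CC_jw {ϱ : ℝ} (h2 : 2 < ϱ) : CC ϱ jw := by
  intro ζ hζ
  exact (jw_diff (by have : ‖ζ‖ = ϱ := by simpa using hζ
                     linarith)).continuousAt.continuousWithinAt

lemma Bf_diff {P : ℂ → ℂ} {ϱ r1 : ℝ} (h2 : 2 < ϱ) (h1 : ϱ < r1) (hP : DifferentiableOn ℂ P (ball 0 r1)) :
    DifferentiableOn ℂ (Bf P ϱ) (ball 0 ϱ) := by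
  lift ϱ to NNReal using by linarith
  have h := hasFPowerSeriesOn_cauchy_integral (c := (0:ℂ)) (R := ϱ) (f := fun ζ => P ζ * jw ζ)
    (((CC_of_diff h1 hP).mul (CC_jw h2)).ii ϱ.2) (by
      have : (0:ℝ) < ϱ := by linarith
      exact_mod_cast this)
  have h' := h.differentiableOn
  rw [Metric.eball_coe] at h'
  refine h'.congr fun z _ => ?_
  unfold Bf ci
  rw [smul_eq_mul]
  congr 1
  refine circleIntegral.integral_congr ϱ.2 fun ζ _ => ?_
  simp only [smul_eq_mul]; ring

lemma Bf_eq {P : ℂ → ℂ} {ϱ r1 : ℝ} (h2 : 2 < ϱ) (h1 : ϱ < r1) (hP : DifferentiableOn ℂ P (ball 0 r1))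
    {z : ℂ} (hz : ‖z‖ < ϱ) : Bf P ϱ z = ∫ y : ℝ, dqc P z y ∂(mu scd) := by
  have e : Bf P ϱ z = ci ϱ fun ζ => (P ζ * (1 / (ζ - z))) * ∫ y : ℝ, 1 / (ζ - y) ∂(mu scd) := by
    refine ci_congr (by linarith) fun ζ hζ => ?_
    rw [sc_stieltjes (offCut_of_norm (by linarith))]; ring
  rw [e, ci_fubini sc_PD.dens h2 ((CC_of_diff h1 hP).mul (CC_pole hz.ne))]
  refine integral_congr_ae ?_
  filter_upwards [sc_PD.dens.ae_mem] with y hy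
  refine ci_dq h1 hP hz ?_
  rw [Complex.norm_real, Real.norm_eq_abs]
  exact (abs_le.2 hy).trans_lt h2

/-- `ρ` is the semicircle density times the analytic factor `P`. -/
structure Fac (r1 b : ℝ) (ρ : ℝ → ℝ) (P : ℂ → ℂ) : Prop where
  pd : PD b ρ
  diff : DifferentiableOn ℂ P (ball 0 r1)
  real : ∀ x : ℝ, x ∈ Set.Icc (-2:ℝ) 2 → (P x).im = 0
  eq : ∀ x ∈ Set.Icc (-2:ℝ) 2, ρ x = scd x * (P x).re

/-- Regular part of `2 ∫ (z-y)⁻¹ ρ(y) dy`. -/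
noncomputable def W0 (P : ℂ → ℂ) (ϱ : ℝ) (z : ℂ) : ℂ := z * P z - 2 * Bf P ϱ z

variable {ρ : ℝ → ℝ} {P : ℂ → ℂ} {ϱ r1 : ℝ}

lemma Fac.P_cont (h : Fac r1 b ρ P) (h1 : 2 < r1) : ContinuousOn (fun y : ℝ => P y) (Set.Icc (-2:ℝ) 2) := by
  refine h.diff.continuousOn.comp (by fun_prop) fun y hy => ?_
  rw [mem_ball_zero_iff, Complex.norm_real, Real.norm_eq_abs]
  exact (abs_le.2 hy).trans_lt h1

lemma Fac.st (h : Fac r1 b ρ P) (h2 : 2 < ϱ) (h1 : ϱ < r1) {z : ℂ} (hz : ‖z‖ < ϱ) (hc : offCut z) :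
    2 * ∫ y : ℝ, 1 / (z - y) ∂(mu ρ) = W0 P ϱ z - P z * Xhalf z := by
  have hne : ∀ y ∈ Set.Icc (-2:ℝ) 2, z - (y:ℂ) ≠ 0 := fun y hy => offCut_sub_ne hc (abs_le.2 hy)
  have e1 : ∫ y : ℝ, 1 / (z - y) ∂(mu ρ) = ∫ y : ℝ, P y / (z - y) ∂(mu scd) := by
    rw [← h.pd.integral_Icc, ← sc_PD.integral_Icc]
    refine intervalIntegral.integral_congr fun y hy => ?_
    rw [Set.uIcc_of_le (by norm_num)] at hy
    simp only [Complex.real_smul]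
    rw [h.eq y hy]
    have : ((P y).re : ℂ) = P y := Complex.ext (by simp) (by simp [h.real y hy])
    push_cast
    rw [this]; ring
  have e2 : Bf P ϱ z = P z * jw z - ∫ y : ℝ, P y / (z - y) ∂(mu scd) := by
    rw [Bf_eq h2 h1 h.diff hz, ← sc_stieltjes hc, ← integral_const_mul, ← integral_sub]
    · refine integral_congr_ae ?_
      filter_upwards [sc_PD.dens.ae_mem] with y hy
      have h3 := hne y hy
      unfold dqc
      rw [if_neg (sub_ne_zero.1 h3)]; ring
    · refine sc_PD.dens.integrable_of_cont ?_
      exact continuousOn_const.mul (continuousOn_const.div (by fun_prop) hne)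
    · refine sc_PD.dens.integrable_of_cont ?_
      exact (h.P_cont (h2.trans h1)).div (by fun_prop) hne
  rw [e1, W0, Xhalf_jw, e2]; ring

lemma Fac.W0_real (h : Fac r1 b ρ P) (h2 : 2 < ϱ) (h1 : ϱ < r1) {x : ℝ} (hx : x ∈ Set.Icc (-2:ℝ) 2) :
    (W0 P ϱ x).im = 0 := by
  have hn : ‖(x:ℂ)‖ < ϱ := by
    rw [Complex.norm_real, Real.norm_eq_abs]; exact (abs_le.2 hx).trans_lt h2
  have hB : (Bf P ϱ x).im = 0 := by
    rw [Bf_eq h2 h1 h.diff hn]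
    have : ∫ y : ℝ, dqc P x y ∂(mu scd) = ∫ y : ℝ, (((dqc P x y).re : ℝ) : ℂ) ∂(mu scd) := by
      refine integral_congr_ae ?_
      filter_upwards [sc_PD.dens.ae_mem, sc_PD.dens.ae_ne x] with y hy hne
      refine Complex.ext (by simp) ?_
      unfold dqc
      rw [if_neg (by exact_mod_cast hne.symm)]
      rw [← Complex.ofReal_sub, Complex.div_ofReal_im]
      simp [h.real x hx, h.real y hy]
    rw [this, integral_complex_ofReal]; simp
  unfold W0
  simp [hB, h.real x hx]

lemma W0_diff (h2 : 2 < ϱ) (h1 : ϱ < r1) (hP : DifferentiableOn ℂ P (ball 0 r1)) :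
    DifferentiableOn ℂ (W0 P ϱ) (ball 0 ϱ) :=
  (differentiableOn_id.mul (hP.mono (ball_subset_ball h1.le))).sub ((Bf_diff h2 h1 hP).const_mul 2)

lemma Xhalf_re_small {x ε s : ℝ} (hx : |x| ≤ s) (hs : s < 2) (hε : 0 ≤ ε) :
    |(Xhalf (x + ε * Complex.I)).re| ≤ 2 * ε / Real.sqrt (4 - s ^ 2) := by
  have hs0 : 0 ≤ s := (abs_nonneg x).trans hx
  have h := Xhalf_sq (x + ε * Complex.I)
  set X := Xhalf (x + ε * Complex.I)
  have h1 := congrArg Complex.re h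
  have h2 := congrArg Complex.im h
  simp [pow_two] at h1 h2
  have hp : 0 < 4 - s ^ 2 := by nlinarith
  have hx2 : x ^ 2 ≤ s ^ 2 := sq_le_sq' (abs_le.1 hx).1 (abs_le.1 hx).2
  rw [le_div_iff₀ (Real.sqrt_pos.2 hp)]
  refine abs_le_of_sq_le_sq' ?_ (by positivity) |>.2
  rw [mul_pow, Real.sq_sqrt hp.le, sq_abs]
  have h3 : X.re * X.im = x * ε := by linarith
  have h4 : 4 - s ^ 2 ≤ X.im ^ 2 := by nlinarith
  calc X.re ^ 2 * (4 - s ^ 2) ≤ X.re ^ 2 * X.im ^ 2 := by gcongr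
    _ = x ^ 2 * ε ^ 2 := by rw [← mul_pow, h3, mul_pow]
    _ ≤ (2 * ε) ^ 2 := by
      have : x ^ 2 ≤ 4 := by nlinarith
      nlinarith [sq_nonneg ε]

/-- Inside the support the potential of `ρ` has derivative `W0 / 2`. -/
lemma Fac.U_deriv (h : Fac r1 b ρ P) (hb : 0 ≤ b) (h2 : 2 < ϱ) (h1 : ϱ < r1) {x : ℝ} (hx : |x| < 2) :
    HasDerivAt (U (mu ρ)) ((W0 P ϱ x).re / 2) x := by
  obtain ⟨s, hs1, hs2⟩ := exists_between hx
  obtain ⟨ϱ', ha, hb'⟩ := exists_between h2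
  have hs0 : 0 < 4 - s ^ 2 := by nlinarith [abs_nonneg x]
  have hr := h.pd.dens
  set q := Real.sqrt (4 - s ^ 2)
  have hq : 0 < q := Real.sqrt_pos.2 hs0
  have hK : IsCompact (closedBall (0:ℂ) ϱ') := isCompact_closedBall 0 ϱ'
  have hPc : ContinuousOn P (closedBall 0 ϱ') := h.diff.continuousOn.mono (closedBall_subset_ball (hb'.trans h1))
  have hWc : ContinuousOn (W0 P ϱ) (closedBall 0 ϱ') :=
    (W0_diff h2 h1 h.diff).continuousOn.mono (closedBall_subset_ball hb')
  have uP := hK.uniformContinuousOn_of_continuous hPc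
  have uW := hK.uniformContinuousOn_of_continuous hWc
  obtain ⟨M, hM⟩ := hK.exists_bound_of_continuousOn hPc
  have hM0 : 0 ≤ M := (norm_nonneg _).trans (hM 0 (by simp; linarith))
  refine hasDerivAt_of_tendstoUniformlyOn (l := nhdsWithin (0:ℝ) (Set.Ioi 0)) (f := fun ε => Ue (mu ρ) ε)
    (f' := fun ε x => (∫ y : ℝ, 1 / ((x + ε * Complex.I : ℂ) - y) ∂(mu ρ)).re)
    (g' := fun x : ℝ => (W0 P ϱ x).re / 2)
    (s := ball 0 s) isOpen_ball ?_ ?_ ?_ (by simpa using hs1)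
  · rw [Metric.tendstoUniformlyOn_iff]
    intro η hη
    rw [Metric.uniformContinuousOn_iff] at uP uW
    obtain ⟨δ1, hδ1, u1⟩ := uP (η / 8) (by positivity)
    obtain ⟨δ2, hδ2, u2⟩ := uW (η / 8) (by positivity)
    have hm : 0 < min (min δ1 δ2) (min (ϱ' - 2) (min 1 (q * η / (8 * (M + 1))))) := by
      have : 0 < ϱ' - 2 := by linarith
      positivity
    filter_upwards [Ioo_mem_nhdsGT hm] with ε hε x hxs
    have hε0 : 0 < ε := hε.1
    have hε' := hε.2
    simp only [lt_min_iff] at hε'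
    obtain ⟨⟨hε1, hε2⟩, hε3, hε4, hε5⟩ := hε'
    have hxs' : |x| < s := by simpa using hxs
    have hxI : x ∈ Set.Icc (-2:ℝ) 2 := abs_le.1 (by linarith)
    set z : ℂ := x + ε * Complex.I with hz
    have hzx : dist z x = ε := by
      rw [dist_eq_norm, hz, add_sub_cancel_left, norm_mul, Complex.norm_I, mul_one, Complex.norm_real,
        Real.norm_eq_abs, abs_of_pos hε0]
    have hxn : ‖(x:ℂ)‖ ≤ 2 := by
      rw [Complex.norm_real, Real.norm_eq_abs]; linarith
    have hzn : ‖z‖ ≤ 2 + ε := by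
      have h3 := norm_le_norm_add_norm_sub (x:ℂ) z
      rw [← dist_eq_norm, dist_comm, hzx] at h3
      linarith
    have hzb : z ∈ closedBall (0:ℂ) ϱ' := by rw [mem_closedBall_zero_iff]; linarith
    have hxb : (x:ℂ) ∈ closedBall (0:ℂ) ϱ' := by rw [mem_closedBall_zero_iff]; linarith
    have hoff : offCut z := Or.inl (by simp [hz, hε0.ne'])
    have hst := h.st h2 h1 (by linarith : ‖z‖ < ϱ) hoff
    have d1 := u1 z hzb x hxb (by rw [hzx]; exact hε1)
    have d2 := u2 z hzb x hxb (by rw [hzx]; exact hε2)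
    have hX := Xhalf_re_small hxs'.le hs2 hε0.le
    rw [← hz] at hX
    have hXn : ‖Xhalf z‖ ≤ 4 := by
      have h3 : ‖Xhalf z‖ ^ 2 ≤ 4 ^ 2 := by
        rw [← norm_pow (Xhalf z), Xhalf_sq]
        refine (norm_sub_le _ _).trans ?_
        rw [norm_pow]; simp
        nlinarith [norm_nonneg z]
      exact abs_le_of_sq_le_sq' h3 (by norm_num) |>.2
    have e1 := congrArg Complex.re hst
    simp only [Complex.mul_re, Complex.sub_re] at e1
    norm_num at e1
    have b1 : |(W0 P ϱ z).re - (W0 P ϱ x).re| < η / 8 := by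
      rw [← Complex.sub_re]; exact (Complex.abs_re_le_norm _).trans_lt (by rwa [← dist_eq_norm])
    have b2 : |(P z).im| < η / 8 := by
      have : (P z).im = (P z - P x).im := by rw [Complex.sub_im, h.real x hxI, sub_zero]
      rw [this]; exact (Complex.abs_im_le_norm _).trans_lt (by rwa [← dist_eq_norm])
    have b3 : |(P z).re * (Xhalf z).re| ≤ η / 4 := by
      rw [abs_mul]
      have h3 : |(P z).re| ≤ M + 1 := (Complex.abs_re_le_norm _).trans ((hM z hzb).trans (by linarith))
      have h4 : 2 * ε / q ≤ η / (4 * (M + 1)) := by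
        rw [lt_div_iff₀ (by positivity)] at hε5
        rw [div_le_div_iff₀ hq (by positivity)]; nlinarith
      calc _ ≤ (M + 1) * (η / (4 * (M + 1))) := by
            gcongr; exact hX.trans h4
        _ = η / 4 := by field_simp
    have b4 : |(P z).im * (Xhalf z).im| ≤ η / 2 := by
      rw [abs_mul]
      have h3 := (Complex.abs_im_le_norm (Xhalf z)).trans hXn
      nlinarith [abs_nonneg (P z).im, abs_nonneg (Xhalf z).im]
    rw [Real.dist_eq]
    have e2 : (W0 P ϱ x).re / 2 - (∫ y : ℝ, 1 / (z - y) ∂(mu ρ)).re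
        = -((W0 P ϱ z).re - (W0 P ϱ x).re) / 2 + ((P z).re * (Xhalf z).re - (P z).im * (Xhalf z).im) / 2 := by
      simp only [one_div]
      linarith
    rw [e2, abs_lt]
    rw [abs_lt] at b1
    rw [abs_le] at b3 b4
    constructor <;> linarith [b1.1, b1.2, b3.1, b3.2, b4.1, b4.2]
  · filter_upwards [self_mem_nhdsWithin] with ε hε x _
    have hε0 : 0 < ε := hε
    exact Ue_deriv hr hε0 fun x' _ y _ => by nlinarith [sq_nonneg (x' - y)]
  · intro x _
    have h3 : Filter.Tendsto (fun η : ℝ => U (mu ρ) x + 2 * csing b * Real.sqrt η) (nhdsWithin 0 (Set.Ioi 0))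
        (nhds (U (mu ρ) x)) := by
      have : Continuous fun η : ℝ => U (mu ρ) x + 2 * csing b * Real.sqrt η := by fun_prop
      have h4 := this.tendsto 0
      simp only [Real.sqrt_zero, mul_zero, add_zero] at h4
      exact h4.mono_left nhdsWithin_le_nhds
    refine tendsto_of_tendsto_of_tendsto_of_le_of_le' tendsto_const_nhds h3 ?_ ?_
    · filter_upwards [self_mem_nhdsWithin] with ε hε using hr.U_le_Ue hb hε x
    · filter_upwards [self_mem_nhdsWithin] with ε hε using hr.Ue_le_U hb hε x

end BetaEns

/-! ### The Gaussian equilibrium problem -/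

namespace BetaEns
variable {b : ℝ} {r : Measure ℝ}

lemma JJ_eq (hb : 0 ≤ b) (hr : Dens b r) {V : ℝ → ℝ} {c : ℝ}
    (h : ∀ x ∈ Set.Icc (-2:ℝ) 2, V x - 2 * U r x = c) (x : ℝ) : JJ V r x = V x - 2 * U r x - c := by
  have := hr.prob
  have hU := hr.U_continuous hb
  have e : ∫ y, V y ∂r = ∫ y, (2 * U r y + c) ∂r := by
    refine integral_congr_ae ?_
    filter_upwards [hr.ae_mem] with y hy
    linarith [h y hy]
  have hi : Integrable (fun y => 2 * U r y) r := hr.integrable_of_cont (by fun_prop)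
  rw [integral_add hi (integrable_const c), integral_const_mul] at e
  simp at e
  unfold JJ Lr
  rw [e]; ring

lemma U_deriv_out (hr : Dens b r) {x : ℝ} (hx : 2 < |x|) :
    HasDerivAt (U r) (∫ y : ℝ, 1 / ((x:ℂ) - y) ∂r).re x := by
  have h := Ue_deriv hr (ε := 0) (x := x) (δ := (|x| - 2) / 2) (by linarith) (by
    intro x' hx' y hy
    rw [mem_ball, Real.dist_eq] at hx'
    have h1 : |x| - |x'| ≤ |x - x'| := abs_sub_abs_le_abs_sub x x'
    rw [abs_sub_comm] at h1
    have h2 : |x'| - |y| ≤ |x' - y| := abs_sub_abs_le_abs_sub x' y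
    have h3 : |y| ≤ 2 := abs_le.2 hy
    rw [← sq_abs (x' - y)]
    nlinarith)
  simp only [Complex.ofReal_zero, zero_mul, add_zero] at h
  refine h.congr_of_eventuallyEq (Filter.Eventually.of_forall fun y => (Ue_zero y).symm)

lemma eq_of_deriv_zero {F : ℝ → ℝ} {a c : ℝ} (h : a < c) (hc : ContinuousOn F (Set.Icc a c))
    (hd : ∀ x ∈ Set.Ioo a c, HasDerivAt F 0 x) : F c = F a := by
  obtain ⟨ξ, _, hξ⟩ := exists_hasDerivAt_eq_slope F (fun _ => 0) h hc hd
  have h2 : c - a ≠ 0 := by linarith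
  rw [eq_comm, div_eq_iff h2] at hξ
  linarith

lemma sc_Fac (r1 : ℝ) : Fac r1 1 scd fun _ => 1 :=
  ⟨sc_PD, differentiableOn_const _, by simp, by simp⟩

lemma sc_W0 {ϱ : ℝ} (h2 : 2 < ϱ) {z : ℂ} (hz : ‖z‖ < ϱ) : W0 (fun _ => 1) ϱ z = z := by
  unfold W0
  rw [Bf_eq h2 (lt_add_one ϱ) (differentiableOn_const _) hz]
  have : ∀ y : ℝ, dqc (fun _ => 1) z y = 0 := fun y => by unfold dqc; simp
  simp [this]

lemma scU_cont : Continuous (U (mu scd)) := sc_PD.dens.U_continuous zero_le_one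

lemma scU_deriv_in {x : ℝ} (hx : |x| < 2) : HasDerivAt (U (mu scd)) (x / 2) x := by
  have h := (sc_Fac 4).U_deriv zero_le_one (ϱ := 3) (by norm_num) (by norm_num) hx
  rw [sc_W0 (by norm_num) (by rw [Complex.norm_real, Real.norm_eq_abs]; linarith)] at h
  simpa using h

lemma scU_deriv_out {x : ℝ} (hx : 2 < |x|) : HasDerivAt (U (mu scd)) (jw x).re x := by
  have h := U_deriv_out sc_PD.dens hx
  rwa [sc_stieltjes (Or.inr (by simpa using hx))] at h

lemma jw_joukowski {u : ℝ} (h0 : 0 < u) (h1 : u < 1) : jw ((u + u⁻¹ : ℝ) : ℂ) = u := by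
  have hz : 2 < u + u⁻¹ := by
    have h2 : u * u⁻¹ = 1 := mul_inv_cancel₀ h0.ne'
    have h3 : 1 < u⁻¹ := (one_lt_inv₀ h0).2 h1
    nlinarith
  set z : ℂ := ((u + u⁻¹ : ℝ) : ℂ) with hzd
  have hn := jw_norm (z := z) (Or.inr (by rw [hzd, Complex.ofReal_re, abs_of_pos (by linarith)]; exact hz))
  have h := jw_eq z
  have hu : (u:ℂ) ≠ 0 := by exact_mod_cast h0.ne'
  have hu2 : (u:ℂ) * (z - u) = 1 := by rw [hzd]; push_cast; field_simp; ring
  have h3 : (jw z - u) * (z - jw z - u) = 0 := by linear_combination h - hu2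
  rcases mul_eq_zero.1 h3 with h4 | h4
  · exact sub_eq_zero.1 h4
  · exfalso
    have h5 : jw z = ((u⁻¹ : ℝ) : ℂ) := by
      have : jw z = z - u := by linear_combination -h4
      rw [this, hzd]; push_cast; ring
    rw [h5, Complex.norm_real, Real.norm_eq_abs, abs_of_pos (by positivity)] at hn
    have h6 : 1 < u⁻¹ := (one_lt_inv₀ h0).2 h1
    linarith

lemma scU_two : U (mu scd) 2 = 1 / 2 := by
  have := sc_PD.dens.prob
  set h : ℝ → ℝ := fun u => U (mu scd) (u + u⁻¹) - u ^ 2 / 2 + Real.log u with hh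
  have hd : ∀ u ∈ Set.Ioo (0:ℝ) 1, HasDerivAt h 0 u := by
    intro u hu
    have hu0 : u ≠ 0 := hu.1.ne'
    have hz : 2 < u + u⁻¹ := by
      have h2 : u * u⁻¹ = 1 := mul_inv_cancel₀ hu0
      have h3 : 1 < u⁻¹ := (one_lt_inv₀ hu.1).2 hu.2
      nlinarith [hu.2]
    have h1 := scU_deriv_out (x := u + u⁻¹) (by rw [abs_of_pos (by linarith)]; exact hz)
    rw [jw_joukowski hu.1 hu.2, Complex.ofReal_re] at h1
    have h2 : HasDerivAt (fun u : ℝ => u + u⁻¹) (1 + -(u ^ 2)⁻¹) u := (hasDerivAt_id u).add (hasDerivAt_inv hu0)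
    have h3 := HasDerivAt.comp u h1 h2
    have h4 : HasDerivAt (fun u : ℝ => u ^ 2 / 2) u u := ((hasDerivAt_pow 2 u).div_const 2).congr_deriv (by simp)
    refine ((h3.sub h4).add (Real.hasDerivAt_log hu0)).congr_deriv ?_
    field_simp; ring
  have hc : ∀ u : ℝ, 0 < u → u < 1 → h 1 = h u := by
    intro u h0 h1
    refine eq_of_deriv_zero h1 ?_ fun x hx => hd x ⟨by linarith [hx.1], hx.2⟩
    have hne : ∀ x ∈ Set.Icc u 1, x ≠ 0 := fun x hx => by linarith [hx.1]
    refine ContinuousOn.add (ContinuousOn.sub ?_ (by fun_prop)) (continuousOn_id.log hne)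
    exact scU_cont.comp_continuousOn (continuousOn_id.add (continuousOn_inv₀.mono hne))
  have hs : ∀ u : ℝ, 0 < u → u < 1 / 6 → |h u| ≤ 7 * u := by
    intro u h0 h1
    have e : U (mu scd) (u + u⁻¹) + Real.log u = ∫ y, Real.log (1 + (u ^ 2 - u * y)) ∂(mu scd) := by
      have : Real.log u = ∫ y, Real.log u ∂(mu scd) := by simp
      rw [this]
      unfold U
      rw [← integral_add (sc_PD.dens.log_integrable zero_le_one _) (integrable_const _)]
      refine integral_congr_ae ?_
      filter_upwards [sc_PD.dens.ae_mem] with y hy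
      have hi : 2 < u⁻¹ := by
        rw [lt_inv_comm₀ (by norm_num) h0]; norm_num; linarith
      have hp : 0 < u + u⁻¹ - y := by linarith [hy.2]
      rw [abs_of_pos hp, ← Real.log_mul hp.ne' h0.ne']
      congr 1
      field_simp; ring
    have hb : |∫ y, Real.log (1 + (u ^ 2 - u * y)) ∂(mu scd)| ≤ 6 * u := by
      rw [← Real.norm_eq_abs]
      refine sc_PD.dens.norm_integral_le fun y hy => ?_
      have hv : |u ^ 2 - u * y| ≤ 3 * u := by
        rw [abs_le]; constructor <;> nlinarith [hy.1, hy.2]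
      set v := u ^ 2 - u * y
      have hv2 := abs_le.1 hv
      rw [Real.norm_eq_abs, abs_le]
      constructor
      · have h5 := Real.one_sub_inv_le_log_of_pos (x := 1 + v) (by linarith)
        have h6 : (1 + v)⁻¹ ≤ 1 + 6 * u := by
          rw [inv_le_comm₀ (by linarith) (by linarith)]
          have : (1 + 6 * u)⁻¹ ≤ 1 - 3 * u := by
            rw [inv_le_iff_one_le_mul₀ (by linarith)]; nlinarith
          linarith
        linarith
      · have h5 := Real.log_le_sub_one_of_pos (x := 1 + v) (by linarith)
        linarith
    have e2 : h u = (∫ y, Real.log (1 + (u ^ 2 - u * y)) ∂(mu scd)) - u ^ 2 / 2 := by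
      rw [← e]; simp only [hh]; ring
    rw [e2, abs_le]
    rw [abs_le] at hb
    constructor <;> nlinarith [hb.1, hb.2]
  have h1 : h 1 = 0 := by
    by_contra hne
    have hp : 0 < |h 1| := abs_pos.2 hne
    set u := min (1 / 7) (|h 1| / 14) with hu
    have hu0 : 0 < u := by positivity
    have hu1 : u ≤ 1 / 7 := min_le_left _ _
    have hu2 : u ≤ |h 1| / 14 := min_le_right _ _
    have h3 := hs u hu0 (by linarith)
    rw [← hc u hu0 (by linarith)] at h3
    linarith
  simp only [hh] at h1
  norm_num at h1
  linarith

lemma scU_in {x : ℝ} (hx : x ∈ Set.Icc (-2:ℝ) 2) : U (mu scd) x = x ^ 2 / 4 - 1 / 2 := by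
  have hF : ∀ y, y ∈ Set.Icc (-2:ℝ) 2 → U (mu scd) 2 - 2 ^ 2 / 4 = U (mu scd) y - y ^ 2 / 4 := by
    intro y hy
    rcases hy.2.eq_or_lt with h | h
    · rw [h]
    refine eq_of_deriv_zero (F := fun y => U (mu scd) y - y ^ 2 / 4) h ?_ fun z hz => ?_
    · exact (scU_cont.sub (by fun_prop)).continuousOn
    · have h1 := scU_deriv_in (x := z) (abs_lt.2 ⟨by linarith [hz.1, hy.1], hz.2⟩)
      have h2 : HasDerivAt (fun y : ℝ => y ^ 2 / 4) (z / 2) z :=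
        ((hasDerivAt_pow 2 z).div_const 4).congr_deriv (by simp; ring)
      exact (h1.sub h2).congr_deriv (by ring)
  have := hF x hx
  rw [scU_two] at this
  linarith

/-- The Gaussian potential. -/
noncomputable def V0 (x : ℝ) : ℝ := x ^ 2 / 2

lemma V0_cont : Continuous V0 := by unfold V0; fun_prop

lemma sc_equil {x : ℝ} (hx : x ∈ Set.Icc (-2:ℝ) 2) : V0 x - 2 * U (mu scd) x = 1 := by
  rw [scU_in hx, V0]; ring

lemma sc_EE : EE V0 (mu scd) = -3 / 4 := by
  have := sc_PD.dens.prob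
  have h1 : Lr (mu scd) = ∫ y, (1 / 4 * y ^ 2 - 1 / 2) ∂(mu scd) := by
    unfold Lr
    refine integral_congr_ae ?_
    filter_upwards [sc_PD.dens.ae_mem] with y hy
    rw [scU_in hy]; ring
  have hi : Integrable (fun y : ℝ => 1 / 4 * y ^ 2) (mu scd) := sc_PD.dens.integrable_of_cont (by fun_prop)
  have h2 : ∫ y, V0 y ∂(mu scd) = ∫ y, 1 / 2 * y ^ 2 ∂(mu scd) := by
    congr 1; funext y; unfold V0; ring
  unfold EE
  rw [h1, h2, integral_sub hi (integrable_const _), integral_const_mul, integral_const_mul, sc_second_moment]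
  simp; norm_num

lemma sc_JJ_pos {x : ℝ} (hx : 2 < |x|) : 0 < JJ V0 (mu scd) x := by
  rw [JJ_eq zero_le_one sc_PD.dens fun x hx => sc_equil hx]
  set F : ℝ → ℝ := fun x => V0 x - 2 * U (mu scd) x with hF
  have hc : Continuous F := V0_cont.sub (scU_cont.const_mul 2 )
  have hd : ∀ y : ℝ, 2 < |y| → HasDerivAt F (y - 2 * (jw y).re) y := by
    intro y hy
    have h2 : HasDerivAt V0 y y := ((hasDerivAt_pow 2 y).div_const 2).congr_deriv (by simp)
    exact h2.sub ((scU_deriv_out hy).const_mul 2)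
  have hj : ∀ y : ℝ, 2 < |y| → |(jw y).re| < 1 := fun y hy =>
    (Complex.abs_re_le_norm _).trans_lt (jw_norm (Or.inr (by simpa using hy)))
  suffices h : 1 < F x by simp only [hF] at h; linarith
  rcases lt_abs.1 hx with h | h
  · obtain ⟨ξ, hξ, he⟩ := exists_hasDerivAt_eq_slope F (fun y => y - 2 * (jw y).re) h hc.continuousOn
      fun y hy => hd y (lt_of_lt_of_le hy.1 (le_abs_self y))
    have h1 := abs_lt.1 (hj ξ (lt_of_lt_of_le hξ.1 (le_abs_self ξ)))
    have h2 : F 2 = 1 := sc_equil (by norm_num)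
    have h3 : 0 < x - 2 := by linarith
    rw [eq_div_iff h3.ne', h2] at he
    nlinarith [hξ.1, h1.2]
  · have h' : x < -2 := by linarith
    have hy' : ∀ y : ℝ, y < -2 → 2 < |y| := fun y hy => by rw [lt_abs]; right; linarith
    obtain ⟨ξ, hξ, he⟩ := exists_hasDerivAt_eq_slope F (fun y => y - 2 * (jw y).re) h' hc.continuousOn
      fun y hy => hd y (hy' y hy.2)
    have h1 := abs_lt.1 (hj ξ (hy' ξ hξ.2))
    have h2 : F (-2) = 1 := sc_equil (by norm_num)
    have h3 : 0 < -2 - x := by linarith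
    rw [eq_div_iff h3.ne', h2] at he
    nlinarith [hξ.2, h1.1]

end BetaEns

/-! ### The interpolation -/

namespace BetaEns
variable {b : ℝ} {r : Measure ℝ}

/-- The interpolating potential between `V0` and `V`. -/
noncomputable def Vt (V : ℝ → ℝ) (t x : ℝ) : ℝ := t * V x + (1 - t) * V0 x
/-- The interpolating density; it is the equilibrium density of `Vt V t`. -/
noncomputable def rt (ρ : ℝ → ℝ) (t y : ℝ) : ℝ := t * ρ y + (1 - t) * scd y
/-- The analytic factor of the interpolating density. -/
noncomputable def Pt (P : ℂ → ℂ) (t : ℝ) (z : ℂ) : ℂ := t * P z + (1 - (t:ℂ))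
/-- The complex derivative of the analytic extension of `Vt V t`. -/
noncomputable def Wt (Vc : ℂ → ℂ) (t : ℝ) (z : ℂ) : ℂ := t * deriv Vc z + (1 - (t:ℂ)) * z

lemma min_out {J : ℝ → ℝ} (hJ : Continuous J) {d R : ℝ} (hd : 0 < d) (hp : ∀ x, 2 < |x| → 0 < J x) :
    ∃ j > 0, ∀ x, 2 + d ≤ |x| → |x| ≤ R → j ≤ J x := by
  have hK : IsCompact {x : ℝ | 2 + d ≤ |x| ∧ |x| ≤ R} := by
    have : {x : ℝ | 2 + d ≤ |x| ∧ |x| ≤ R} = closedBall 0 R ∩ {x | 2 + d ≤ |x|} := by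
      ext x; simp [and_comm]
    rw [this]
    exact (isCompact_closedBall 0 R).inter_right (isClosed_le continuous_const continuous_abs)
  rcases Set.eq_empty_or_nonempty {x : ℝ | 2 + d ≤ |x| ∧ |x| ≤ R} with he | hne
  · refine ⟨1, one_pos, fun x h1 h2 => ?_⟩
    have : x ∈ {x : ℝ | 2 + d ≤ |x| ∧ |x| ≤ R} := ⟨h1, h2⟩
    rw [he] at this; exact this.elim
  · obtain ⟨x0, hx0, hm⟩ := hK.exists_isMinOn hne hJ.continuousOn
    exact ⟨J x0, hp x0 (by linarith [hx0.1]), fun x h1 h2 => hm ⟨h1, h2⟩⟩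

lemma JJ_cont (hb : 0 ≤ b) (hr : Dens b r) {V : ℝ → ℝ} (hV : Continuous V) : Continuous (JJ V r) := by
  have := hr.U_continuous hb
  unfold JJ; fun_prop

/-- On the real axis the complex derivative of an analytic extension is the real derivative. -/
lemma ext_deriv {V : ℝ → ℝ} {Vc : ℂ → ℂ} {r1 : ℝ} (hVc : DifferentiableOn ℂ Vc (ball 0 r1))
    (hVR : ∀ x : ℝ, |x| < r1 → Vc x = V x) {x : ℝ} (hx : |x| < r1) :
    HasDerivAt V (deriv Vc x).re x ∧ (deriv Vc x).im = 0 := by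
  have hxb : (x:ℂ) ∈ ball (0:ℂ) r1 := by
    rw [mem_ball_zero_iff, Complex.norm_real, Real.norm_eq_abs]; exact hx
  have h1 : HasDerivAt Vc (deriv Vc x) x := (hVc.differentiableAt (isOpen_ball.mem_nhds hxb)).hasDerivAt
  have hev : ∀ᶠ y : ℝ in nhds x, |y| < r1 := (continuous_abs.tendsto x).eventually_lt_const hx
  have h2 : HasDerivAt V (deriv Vc x).re x := by
    refine h1.real_of_complex.congr_of_eventuallyEq ?_
    filter_upwards [hev] with y hy
    rw [hVR y hy, Complex.ofReal_re]
  refine ⟨h2, ?_⟩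
  have h3 : HasDerivAt (fun y : ℝ => (V y : ℂ)) (deriv Vc x) x := by
    refine h1.comp_ofReal.congr_of_eventuallyEq ?_
    filter_upwards [hev] with y hy
    rw [hVR y hy]
  rw [h3.unique h2.ofReal_comp, Complex.ofReal_im]

lemma Fac.W_eq {ρ V : ℝ → ℝ} {P Vc : ℂ → ℂ} {r1 ϱ c : ℝ} (h : Fac r1 b ρ P) (hb : 0 ≤ b) (h2 : 2 < ϱ) (h1 : ϱ < r1)
    (hVc : DifferentiableOn ℂ Vc (ball 0 r1)) (hVR : ∀ x : ℝ, |x| < r1 → Vc x = V x)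
    (he : ∀ x ∈ Set.Icc (-2:ℝ) 2, V x - 2 * U (mu ρ) x = c) :
    Set.EqOn (deriv Vc) (W0 P ϱ) (ball 0 ϱ) := by
  have key : ∀ x : ℝ, |x| < 2 → deriv Vc x = W0 P ϱ x := by
    intro x hx
    obtain ⟨e1, e2⟩ := ext_deriv hVc hVR (x := x) (by linarith)
    have hI : ∀ᶠ y : ℝ in nhds x, |y| < 2 := (continuous_abs.tendsto x).eventually_lt_const hx
    have e3 : HasDerivAt V (2 * ((W0 P ϱ x).re / 2)) x := by
      refine (((h.U_deriv hb h2 h1 hx).const_mul 2).add_const c).congr_of_eventuallyEq ?_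
      filter_upwards [hI] with y hy
      have := he y (abs_le.1 hy.le)
      linarith
    refine Complex.ext ?_ ?_
    · rw [e1.unique e3]; ring
    · rw [e2, h.W0_real h2 h1 (abs_le.1 hx.le)]
  have a1 : AnalyticOnNhd ℂ (deriv Vc) (ball 0 ϱ) :=
    ((hVc.deriv isOpen_ball).mono (ball_subset_ball h1.le)).analyticOnNhd isOpen_ball
  have a2 : AnalyticOnNhd ℂ (W0 P ϱ) (ball 0 ϱ) := (W0_diff h2 h1 h.diff).analyticOnNhd isOpen_ball
  refine a1.eqOn_of_preconnected_of_frequently_eq a2 (convex_ball _ _).isPreconnected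
    (z₀ := 0) (mem_ball_self (by linarith)) ?_
  have ht : Filter.Tendsto (fun n : ℕ => (((1 / ((n:ℝ) + 1) : ℝ)) : ℂ)) Filter.atTop (nhdsWithin 0 {0}ᶜ) := by
    rw [tendsto_nhdsWithin_iff]
    constructor
    · have := (Complex.continuous_ofReal.tendsto 0).comp tendsto_one_div_add_atTop_nhds_zero_nat
      simpa [Function.comp_def] using this
    · refine Filter.Eventually.of_forall fun n => ?_
      have : (0:ℝ) < 1 / ((n:ℝ) + 1) := by positivity
      simp only [Set.mem_compl_iff, Set.mem_singleton_iff]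
      exact_mod_cast this.ne'
  refine ht.frequently (Filter.Eventually.frequently (Filter.Eventually.of_forall fun n => key _ ?_))
  have h3 : (0:ℝ) < 1 / ((n:ℝ) + 1) := by positivity
  rw [abs_of_pos h3, div_lt_iff₀ (by positivity)]
  have : (0:ℝ) ≤ n := by positivity
  linarith

/-- Uniform `Ens` data along the interpolation between the Gaussian potential and `V`. -/
lemma build {V : ℝ → ℝ} (hV : Continuous V) {D : Set ℂ} {ρ : ℝ → ℝ} {P : ℂ → ℂ} (hC : EquilC13 V D ρ P)
    {d : ℝ} (hd : 0 < d) (hball : closedBall (0:ℂ) (2 + 3*d) ⊆ D)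
    {Vc : ℂ → ℂ} (hVc : DifferentiableOn ℂ Vc (closedBall (0:ℂ) (2 + 3*d)))
    (hVcR : ∀ x : ℝ, |x| ≤ 2 + 3*d → Vc x = (V x : ℂ))
    (hPt : ∀ t ∈ Set.Icc (0:ℝ) 1, ∀ z ∈ closedBall (0:ℂ) (2 + 3*d), (t : ℂ) * P z + (1 - (t:ℂ)) ≠ 0) :
    ∃ b : ℝ, 1 ≤ b ∧ PD b ρ ∧ ∀ R, ∃ j0 > 0, ∀ t ∈ Set.Icc (0:ℝ) 1,
      Ens d R b j0 (Vt V t) (mu (rt ρ t)) (Pt P t) (Wt Vc t) := by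
  have hPd : DifferentiableOn ℂ P (ball 0 (2 + 3 * d)) := hC.P_anal.mono (ball_subset_closedBall.trans hball)
  have hVd : DifferentiableOn ℂ Vc (ball 0 (2 + 3 * d)) := hVc.mono ball_subset_closedBall
  have hVR' : ∀ x : ℝ, |x| < 2 + 3 * d → Vc x = V x := fun x hx => hVcR x hx.le
  -- `b` collects the bounds on the compact disc `K`, the one for `1 / P_t` being uniform in `t`.
  set K := closedBall (0:ℂ) (2 + 5 * d / 2) with hKd
  have hK : IsCompact K := isCompact_closedBall _ _
  have hKb : K ⊆ ball 0 (2 + 3 * d) := closedBall_subset_ball (by linarith)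
  obtain ⟨b1, hb1⟩ := hK.exists_bound_of_continuousOn (hPd.continuousOn.mono hKb)
  have hcP : ContinuousOn (fun p : ℝ × ℂ => (Pt P p.1 p.2)⁻¹) (Set.Icc (0:ℝ) 1 ×ˢ K) := by
    refine ContinuousOn.inv₀ ?_ fun p hp => hPt p.1 hp.1 p.2 (ball_subset_closedBall (hKb hp.2))
    unfold Pt
    have h1 : ContinuousOn (fun p : ℝ × ℂ => P p.2) (Set.Icc (0:ℝ) 1 ×ˢ K) :=
      (hPd.continuousOn.mono hKb).comp continuousOn_snd fun p hp => hp.2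
    have h2 : Continuous fun p : ℝ × ℂ => (p.1 : ℂ) := by fun_prop
    exact (h2.continuousOn.mul h1).add (continuous_const.sub h2).continuousOn
  obtain ⟨b2, hb2⟩ := (isCompact_Icc.prod hK).exists_bound_of_continuousOn hcP
  obtain ⟨b3, hb3⟩ := hK.exists_bound_of_continuousOn ((hVd.deriv isOpen_ball).continuousOn.mono hKb)
  obtain ⟨b4, hb4⟩ := hK.exists_bound_of_continuousOn
    (((hVd.deriv isOpen_ball).deriv isOpen_ball).continuousOn.mono hKb)
  have h0K : (0:ℂ) ∈ K := by simp [hKd]; linarith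
  have p1 : 0 ≤ b1 := (norm_nonneg _).trans (hb1 0 h0K)
  have p2 : 0 ≤ b2 := (norm_nonneg _).trans (hb2 (0, 0) ⟨by norm_num, h0K⟩)
  have p3 : 0 ≤ b3 := (norm_nonneg _).trans (hb3 0 h0K)
  have p4 : 0 ≤ b4 := (norm_nonneg _).trans (hb4 0 h0K)
  set b := 1 + b1 + b2 + b3 + b4 + (2 + 5 * d / 2) with hb
  have hb0 : 0 ≤ b := by positivity
  have hb1' : 1 ≤ b := by rw [hb]; linarith
  have hxK : ∀ x : ℝ, x ∈ Set.Icc (-2:ℝ) 2 → (x:ℂ) ∈ K := fun x hx => by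
    rw [hKd, mem_closedBall_zero_iff, Complex.norm_real, Real.norm_eq_abs]
    have := abs_le.2 hx
    linarith
  obtain ⟨c0, hc0, hPp⟩ := hC.P_pos
  have hPD : PD b ρ := by
    refine ⟨hC.ρ_nonneg, fun y => ?_, hC.ρ_supp, hC.ρ_int⟩
    by_cases hy : y ∈ Set.Icc (-2:ℝ) 2
    · have e : ρ y = (P y).re * scd y := by rw [hC.ρ_eq y hy]; unfold scd; ring
      rw [e]
      have h1 : (P y).re ≤ b1 := (Complex.re_le_norm _).trans (hb1 y (hxK y hy))
      have h2 := sc_PD.le y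
      have h3 := sc_PD.nonneg y
      have h4 := (hPp y hy).2
      calc (P y).re * scd y ≤ b1 * 1 := by gcongr
        _ ≤ b := by rw [hb]; linarith
    · rw [hC.ρ_supp y hy]; exact hb0
  have hFac : Fac (2 + 3 * d) b ρ P := by
    refine ⟨hPD, hPd, fun x hx => (hPp x hx).1, fun x hx => ?_⟩
    rw [hC.ρ_eq x hx]; unfold scd; ring
  have hscb : PD b scd := sc_PD.mono hb1'
  obtain ⟨c, hc1, hc2⟩ := hC.equil
  have hUρ : ∀ x, ∫ μ, Real.log |x - μ| * ρ μ = U (mu ρ) x := fun x => by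
    unfold U
    rw [hPD.integral_mu]
    congr 1; funext y; rw [smul_eq_mul, mul_comm]
  simp only [hUρ] at hc1 hc2
  have he : ∀ x ∈ Set.Icc (-2:ℝ) 2, V x - 2 * U (mu ρ) x = -c := fun x hx => by linarith [hc1 x hx]
  have hJV : ∀ x, JJ V (mu ρ) x = V x - 2 * U (mu ρ) x - (-c) := JJ_eq hb0 hPD.dens he
  have hJpos : ∀ x, 2 < |x| → 0 < JJ V (mu ρ) x := fun x hx => by
    rw [hJV]
    have := hc2 x fun h => absurd (abs_le.2 h) (not_le.2 hx)
    linarith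
  have hJ0' : ∀ x, JJ V0 (mu scd) x = V0 x - 2 * U (mu scd) x - 1 :=
    JJ_eq zero_le_one sc_PD.dens fun x hx => sc_equil hx
  have hJin : ∀ x, |x| ≤ 2 → JJ V (mu ρ) x = 0 ∧ JJ V0 (mu scd) x = 0 := fun x hx => by
    rw [hJV, hJ0', he x (abs_le.1 hx), sc_equil (abs_le.1 hx)]; simp
  refine ⟨b, hb1', hPD, fun R => ?_⟩
  obtain ⟨j1, hj1, hm1⟩ := min_out (J := JJ V (mu ρ)) (R := R) (JJ_cont hb0 hPD.dens hV) hd hJpos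
  obtain ⟨j2, hj2, hm2⟩ := min_out (J := JJ V0 (mu scd)) (R := R) (JJ_cont zero_le_one sc_PD.dens V0_cont) hd
    fun x hx => sc_JJ_pos hx
  refine ⟨min j1 j2, lt_min hj1 hj2, fun t ht => ?_⟩
  have ht0 := ht.1
  have ht1 : 0 ≤ 1 - t := by linarith [ht.2]
  have hPDt : PD b (rt ρ t) := hPD.mix hscb ht
  have hUt : ∀ x, U (mu (rt ρ t)) x = t * U (mu ρ) x + (1 - t) * U (mu scd) x := fun x =>
    hPD.integral_mix hscb scd_cont.measurable ht (ρt := rt ρ t) (fun y => rfl)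
      (hPD.dens.log_integrable hb0 x) (hscb.dens.log_integrable hb0 x)
  -- Potentials and equilibrium measures are interpolated linearly, hence so is the effective potential.
  have hJt : ∀ x, JJ (Vt V t) (mu (rt ρ t)) x = t * JJ V (mu ρ) x + (1 - t) * JJ V0 (mu scd) x := fun x => by
    rw [JJ_eq hb0 hPDt.dens (c := t * (-c) + (1 - t) * 1) fun x hx => ?_, hJV, hJ0', hUt, Vt]
    · ring
    · rw [hUt, Vt]
      have e1 := he x hx
      have e2 := sc_equil hx
      linear_combination t * e1 + (1 - t) * e2
  have hnt : ‖(t:ℂ)‖ ≤ 1 := by rw [Complex.norm_real, Real.norm_eq_abs, abs_of_nonneg ht0]; exact ht.2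
  have hnt' : ‖1 - (t:ℂ)‖ ≤ 1 := by
    rw [← Complex.ofReal_one, ← Complex.ofReal_sub, Complex.norm_real, Real.norm_eq_abs, abs_of_nonneg ht1]
    linarith
  have hmul : ∀ (a u : ℂ), ‖a‖ ≤ 1 → ‖a * u‖ ≤ ‖u‖ := fun a u ha => by
    rw [norm_mul]; exact mul_le_of_le_one_left (norm_nonneg _) ha
  refine ⟨hPDt.dens, ?_, ?_, ?_, ?_, ?_, ?_, ?_, ?_, ?_⟩
  · have := V0_cont
    unfold Vt; fun_prop
  · intro x _
    rw [hJt]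
    rcases le_or_gt |x| 2 with h | h
    · rw [(hJin x h).1, (hJin x h).2]; simp
    · have := (hJpos x h).le
      have := (sc_JJ_pos h).le
      positivity
  · intro x h1 h2
    rw [hJt]
    have e1 := hm1 x h1 h2
    have e2 := hm2 x h1 h2
    have e3 := min_le_left j1 j2
    have e4 := min_le_right j1 j2
    nlinarith
  · exact (hPd.const_mul _).add_const _
  · exact ((hVd.deriv isOpen_ball).const_mul _).add (differentiableOn_id.const_mul _)
  · intro z hz
    refine ⟨hPt t ht z (ball_subset_closedBall (hKb hz)), ?_, ?_⟩
    · have h1 := hb1 z hz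
      have h2 := hmul t (P z) hnt
      refine (norm_add_le _ _).trans ?_
      rw [hb]; linarith
    · have h1 := hb2 (t, z) ⟨ht, hz⟩
      simp only at h1
      refine h1.trans ?_
      rw [hb]; linarith
  · intro z hz
    have hz2 : ‖z‖ ≤ 2 + 5 * d / 2 := by simpa [hKd] using hz
    constructor
    · have h1 := hb3 z hz
      have h2 := hmul t (deriv Vc z) hnt
      have h3 := hmul _ z hnt'
      refine (norm_add_le _ _).trans ?_
      rw [hb]; linarith
    · have hdz : DifferentiableAt ℂ (deriv Vc) z :=
        (hVd.deriv isOpen_ball).differentiableAt (isOpen_ball.mem_nhds (hKb hz))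
      have e : deriv (Wt Vc t) z = t * deriv (deriv Vc) z + (1 - (t:ℂ)) * 1 :=
        ((hdz.hasDerivAt.const_mul (t:ℂ)).add ((hasDerivAt_id z).const_mul (1 - (t:ℂ)))).deriv
      rw [e]
      have h1 := hb4 z hz
      have h2 := hmul t (deriv (deriv Vc) z) hnt
      refine (norm_add_le _ _).trans ?_
      rw [mul_one, hb]; linarith
  · intro x hx
    obtain ⟨e1, e2⟩ := ext_deriv hVd hVR' hx
    have e3 : HasDerivAt V0 x x := ((hasDerivAt_pow 2 x).div_const 2).congr_deriv (by simp)
    constructor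
    · refine ((e1.const_mul t).add (e3.const_mul (1 - t))).congr_deriv ?_
      unfold Wt; simp
    · unfold Wt; simp [e2]
  · intro z hz h2
    rw [mem_ball_zero_iff] at hz
    obtain ⟨ϱ, hϱ1, hϱ2⟩ := exists_between hz
    have hne : ∀ y ∈ Set.Icc (-2:ℝ) 2, z - (y:ℂ) ≠ 0 := fun y hy => offCut_sub_ne (offCut_of_norm h2) (abs_le.2 hy)
    have hcont : ContinuousOn (fun y : ℝ => 1 / (z - (y:ℂ))) (Set.Icc (-2:ℝ) 2) :=
      continuousOn_const.div (by fun_prop) hne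
    have e1 : ∫ y : ℝ, 1 / (z - y) ∂(mu (rt ρ t)) = t • (∫ y : ℝ, 1 / (z - y) ∂(mu ρ))
        + (1 - t) • ∫ y : ℝ, 1 / (z - y) ∂(mu scd) :=
      hPD.integral_mix hscb scd_cont.measurable ht (ρt := rt ρ t) (fun y => rfl)
        (hPD.dens.integrable_of_cont hcont) (hscb.dens.integrable_of_cont hcont)
    have e2 := hFac.st (by linarith) hϱ2 hϱ1 (offCut_of_norm h2)
    rw [← hFac.W_eq hb0 (by linarith) hϱ2 hVd hVR' he (by rw [mem_ball_zero_iff]; exact hϱ1)] at e2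
    rw [e1, sc_stieltjes (offCut_of_norm h2), Complex.real_smul, Complex.real_smul, Wt, Pt]
    push_cast
    rw [Xhalf_jw] at *
    linear_combination (t:ℂ) * e2

end BetaEns

/-! ### The complex loop functional -/

namespace BetaEns
variable {b : ℝ} {r : Measure ℝ}

/-- The fluctuation has total mass zero, so its Stieltjes transform is `O(|z|⁻²)`. -/
lemma mz_decay (hr : Dens b r) {ρ : ℝ} (hρ : 2 ≤ ρ) {n : ℕ} {x : Fin n → ℝ} (hx : ∀ i, |x i| ≤ ρ) {z : ℂ}
    (hz : ρ < ‖z‖) : ‖mz r x z‖ ≤ 2 * n * (ρ / (‖z‖ * (‖z‖ - ρ))) := by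
  have := hr.prob
  have hp : 0 < ‖z‖ - ρ := by linarith
  have hz0 : 0 < ‖z‖ := by linarith
  have hzne : z ≠ 0 := norm_pos_iff.1 hz0
  have h1 : ∀ y : ℝ, |y| ≤ ρ → ‖1 / (z - (y:ℂ)) - 1 / z‖ ≤ ρ / (‖z‖ * (‖z‖ - ρ)) := fun y hy => by
    have hne := sub_real_ne hz hy
    have e : 1 / (z - (y:ℂ)) - 1 / z = y / (z * (z - y)) := by field_simp; ring
    rw [e, norm_div, norm_mul, Complex.norm_real, Real.norm_eq_abs]
    have := norm_sub_real (z := z) hy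
    gcongr
  have hi : Integrable (fun y : ℝ => 1 / (z - (y:ℂ))) r := by
    refine hr.integrable_of_cont (continuousOn_const.div (by fun_prop) fun y hy => ?_)
    exact sub_real_ne hz ((abs_le.2 hy).trans hρ)
  have e : mz r x z = ∑ i, (1 / (z - (x i:ℂ)) - 1 / z) - n * ∫ y : ℝ, (1 / (z - y) - 1 / z) ∂r := by
    rw [integral_sub hi (integrable_const _), Finset.sum_sub_distrib]
    unfold mz
    simp; ring
  have h2 : ‖∫ y : ℝ, (1 / (z - y) - 1 / z) ∂r‖ ≤ ρ / (‖z‖ * (‖z‖ - ρ)) :=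
    hr.norm_integral_le fun y hy => h1 y ((abs_le.2 hy).trans hρ)
  have h3 : ‖∑ i, (1 / (z - (x i:ℂ)) - 1 / z)‖ ≤ n * (ρ / (‖z‖ * (‖z‖ - ρ))) := by
    refine (norm_sum_le _ _).trans ((Finset.sum_le_sum fun i _ => h1 (x i) (hx i)).trans (by simp))
  rw [e]
  refine (norm_sub_le _ _).trans ?_
  rw [norm_mul, Complex.norm_natCast]
  have := mul_le_mul_of_nonneg_left h2 (Nat.cast_nonneg (α := ℝ) n)
  linarith

/-- Cauchy's formula in the exterior of a disc, for functions vanishing at infinity. -/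
lemma ci_ext {ρ ϱ C : ℝ} (hρ : 0 < ρ) (h1 : ρ < ϱ) {F : ℂ → ℂ} (hF : ∀ z, ρ < ‖z‖ → DifferentiableAt ℂ F z)
    (hdec : ∀ z, 2 * ρ ≤ ‖z‖ → ‖F z‖ ≤ C / ‖z‖) {z0 : ℂ} (hz0 : ϱ < ‖z0‖) :
    ci ϱ (fun ζ => F ζ * (1 / (z0 - ζ))) = F z0 := by
  set S : Set ℂ := {z | ρ < ‖z‖} with hS
  have hSo : IsOpen S := isOpen_lt continuous_const continuous_norm
  have hz0S : S ∈ nhds z0 := hSo.mem_nhds (by simp only [hS, Set.mem_ofPred_eq]; linarith)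
  have hFd : DifferentiableOn ℂ F S := fun z hz => (hF z hz).differentiableWithinAt
  have hD := (Complex.differentiableOn_dslope hz0S).2 hFd
  have hCC : ∀ s, ρ < s → CC s F := fun s hs z hz => by
    have : ‖z‖ = s := by simpa using hz
    exact (hF z (by linarith)).continuousAt.continuousWithinAt
  have hds : ∀ z, z ≠ z0 → dslope F z0 z = F z * (1 / (z - z0)) - F z0 * (1 / (z - z0)) := fun z hz => by
    rw [dslope_of_ne _ hz, slope_def_field]; ring
  have hann : ∀ s, ϱ ≤ s → ci s (dslope F z0) = ci ϱ (dslope F z0) := by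
    intro s hs
    have h := Complex.circleIntegral_sub_center_inv_smul_eq_of_differentiable_on_annulus_off_countable
      (c := (0:ℂ)) (r := ϱ) (R := s) (by linarith) hs (f := fun z => z * dslope F z0 z) Set.countable_empty
      (by
        refine continuousOn_id.mul (hD.continuousOn.mono fun z hz => ?_)
        have : ϱ ≤ ‖z‖ := by simpa using hz.2
        simp only [hS, Set.mem_ofPred_eq]; linarith)
      (fun z hz => by
        have : ϱ < ‖z‖ := by simpa using hz.1.2
        exact differentiableAt_id.mul (hD.differentiableAt (hSo.mem_nhds (by simp only [hS, Set.mem_ofPred_eq]; linarith))))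
    have e : ∀ s', 0 < s' → (∮ z in C((0:ℂ), s'), (z - 0)⁻¹ • (z * dslope F z0 z)) = ∮ z in C((0:ℂ), s'), dslope F z0 z := by
      intro s' hs'
      refine circleIntegral.integral_congr hs'.le fun z hz => ?_
      have : ‖z‖ = s' := by simpa using hz
      have hz : z ≠ 0 := norm_pos_iff.1 (by linarith)
      simp only [sub_zero, smul_eq_mul]
      rw [← mul_assoc, inv_mul_cancel₀ hz, one_mul]
    rw [e s (by linarith), e ϱ (by linarith)] at h
    unfold ci; rw [h]
  have hin : ci ϱ (dslope F z0) = - ci ϱ (fun ζ => F ζ * (1 / (z0 - ζ))) := by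
    have hne : ∀ z : ℂ, ‖z‖ = ϱ → z ≠ z0 := fun z hz e => by rw [e] at hz; linarith
    have e1 : ci ϱ (dslope F z0) = ci ϱ (fun z => F z * (1 / (z - z0)) - F z0 * (1 / (z - z0))) :=
      ci_congr (by linarith) fun z hz => hds z (hne z hz)
    have e2 : ci ϱ (fun z => 1 / (z - z0)) = 0 := by
      refine ci_zero (by linarith) hz0 fun z hz => ?_
      rw [mem_ball_zero_iff] at hz
      exact ((differentiableAt_const _).div (by fun_prop)
        (sub_ne_zero.2 fun e => by rw [e] at hz; exact lt_irrefl _ hz)).differentiableWithinAt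
    rw [e1, ci_sub (by linarith) ((hCC ϱ h1).mul (CC_pole hz0.ne')) ((CC_const _ _).mul (CC_pole hz0.ne')), ci_mul, e2,
      mul_zero, sub_zero, ← neg_one_mul, ← ci_mul]
    refine ci_congr (by linarith) fun z hz => ?_
    have h3 : z - z0 ≠ 0 := sub_ne_zero.2 (hne z hz)
    rw [← neg_sub z z0, one_div_neg_eq_neg_one_div]; ring
  have hout : ∀ s, ‖z0‖ < s → ci s (dslope F z0) = ci s (fun z => F z * (1 / (z - z0))) - F z0 := by
    intro s hs
    have e1 : ci s (dslope F z0) = ci s (fun z => F z * (1 / (z - z0)) - F z0 * (1 / (z - z0))) := by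
      refine ci_congr (by linarith) fun z hz => hds z fun e => ?_
      rw [e] at hz; linarith
    rw [e1, ci_sub (by linarith) ((hCC s (by linarith)).mul (CC_pole hs.ne)) ((CC_const _ _).mul (CC_pole hs.ne)),
      ci_cauchy (lt_add_one s) (differentiableOn_const _) hs]
  have hb : ∀ s, 2 * ‖z0‖ ≤ s → ‖ci ϱ (fun ζ => F ζ * (1 / (z0 - ζ))) - F z0‖ ≤ C / (s / 2) := by
    intro s hs
    have e1 := hann s (by linarith)
    rw [hin, hout s (by linarith)] at e1
    have e2 : ci ϱ (fun ζ => F ζ * (1 / (z0 - ζ))) - F z0 = - ci s (fun z => F z * (1 / (z - z0))) := by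
      linear_combination e1
    rw [e2, norm_neg]
    have hs0 : 0 < s := by linarith
    refine (ci_norm hs0.le (C := C / s * (1 / (s / 2))) fun z hz => ?_).trans (le_of_eq (by field_simp))
    have h3 := hdec z (by linarith)
    rw [hz] at h3
    rw [norm_mul, norm_div, norm_one]
    have h4 : s / 2 ≤ ‖z - z0‖ := by
      have := norm_sub_norm_le z z0
      rw [hz] at this; linarith
    have h5 : 0 ≤ C / s := (norm_nonneg _).trans h3
    have : 1 / ‖z - z0‖ ≤ 1 / (s / 2) := one_div_le_one_div_of_le (by linarith) h4
    gcongr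
  have hlim : Filter.Tendsto (fun s : ℝ => C / (s / 2)) Filter.atTop (nhds 0) :=
    tendsto_const_nhds.div_atTop (Filter.tendsto_id.atTop_div_const (by norm_num))
  have h0 : ‖ci ϱ (fun ζ => F ζ * (1 / (z0 - ζ))) - F z0‖ ≤ 0 := by
    refine ge_of_tendsto hlim ?_
    filter_upwards [Filter.eventually_ge_atTop (2 * ‖z0‖)] with s hs using hb s hs
  exact sub_eq_zero.1 (norm_le_zero_iff.1 h0)

/-- The (complex) deformation field attached to the point `z0`. -/
noncomputable def hz (P : ℂ → ℂ) (z0 z : ℂ) : ℂ := (Xhalf z0)⁻¹ * (P z)⁻¹ * (1 / (z0 - z))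

/-- Complex loop functional. -/
noncomputable def Lc (β : ℝ) (W h : ℂ → ℂ) {n : ℕ} (x : Fin n → ℝ) : ℂ :=
  (1 - β / 2) * ∑ i, deriv h (x i) + β / 2 * (∑ i, ∑ j, dqc h (x i) (x j) - n * ∑ i, W (x i) * h (x i))

variable {d R j0 : ℝ} {V : ℝ → ℝ} {P W : ℂ → ℂ}

lemma Ens.hz_diff (hE : Ens d R b j0 V r P W) {z0 : ℂ} (hz0 : ‖z0‖ ≤ 2 + 5 * d / 2) (hd : 0 < d) :
    DifferentiableOn ℂ (hz P z0) (ball 0 ‖z0‖) := by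
  intro z h
  rw [mem_ball_zero_iff] at h
  have hP : DifferentiableAt ℂ P z :=
    hE.Pd.differentiableAt (isOpen_ball.mem_nhds (by rw [mem_ball_zero_iff]; linarith))
  have hne := (hE.Pb z (by rw [mem_closedBall_zero_iff]; linarith)).1
  have h2 : z0 - z ≠ 0 := sub_ne_zero.2 fun e => by rw [e] at h; exact lt_irrefl _ h
  unfold hz
  exact (((differentiableAt_const _).mul (hP.inv hne)).mul ((differentiableAt_const _).div (by fun_prop) h2)).differentiableWithinAt

/-- The loop functional in terms of the fluctuation. -/
lemma Ens.contour_id (hE : Ens d R b j0 V r P W) (hd : 0 < d) {n : ℕ} {x : Fin n → ℝ} (hx : ∀ i, |x i| ≤ 2 + d)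
    {ϱ : ℝ} {z0 : ℂ} (h1 : 2 + d < ϱ) (h2 : ϱ < ‖z0‖) (h3 : ‖z0‖ ≤ 2 + 5 * d / 2) (β : ℝ) :
    Lc β W (hz P z0) x = (1 - β / 2) * ∑ i, deriv (hz P z0) (x i)
      + β / 2 * (ci ϱ (fun ζ => hz P z0 ζ * mz r x ζ ^ 2) - n * mz r x z0) := by
  have hr := hE.dens
  have h0 : 0 ≤ ϱ := by linarith
  have hh := hE.hz_diff h3 hd
  set h := hz P z0 with hhd
  have hch : CC ϱ h := CC_of_diff h2 hh
  have hWd : DifferentiableOn ℂ W (ball 0 ‖z0‖) := hE.Wd.mono (ball_subset_ball (by linarith))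
  have hPd : DifferentiableOn ℂ P (ball 0 ‖z0‖) := hE.Pd.mono (ball_subset_ball (by linarith))
  have hcW : CC ϱ W := CC_of_diff h2 hWd
  have hxn : ∀ i, ‖(x i : ℂ)‖ < ϱ := fun i => by
    rw [Complex.norm_real, Real.norm_eq_abs]; exact (hx i).trans_lt h1
  have hcp : ∀ i, CC ϱ fun ζ => 1 / (ζ - (x i : ℂ)) := fun i => CC_pole (hxn i).ne
  have hcm : CC ϱ (mz r x) := CC_mz hr (by linarith) h1 hx
  have hcX : CC ϱ Xhalf := fun ζ hζ => by
    have : ‖ζ‖ = ϱ := by simpa using hζ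
    exact (Xhalf_diff (by linarith)).continuousAt.continuousWithinAt
  have e1 : ∑ i, ∑ j, dqc h (x i) (x j) = ci ϱ (fun ζ => ∑ i, ∑ j, h ζ * (1 / (ζ - x i)) * (1 / (ζ - x j))) := by
    rw [ci_sum h0 _ fun i _ => CC_sum _ fun j _ => (hch.mul (hcp i)).mul (hcp j)]
    refine Finset.sum_congr rfl fun i _ => ?_
    rw [ci_sum h0 _ fun j _ => (hch.mul (hcp i)).mul (hcp j)]
    exact Finset.sum_congr rfl fun j _ => (ci_dq h2 hh (hxn i) (hxn j)).symm
  have e2 : ∑ i, W (x i) * h (x i) = ci ϱ (fun ζ => ∑ i, W ζ * h ζ * (1 / (ζ - x i))) := by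
    rw [ci_sum h0 _ fun i _ => (hcW.mul hch).mul (hcp i)]
    exact Finset.sum_congr rfl fun i _ => (ci_cauchy h2 (hWd.mul hh) (hxn i)).symm
  have hX0 : Xhalf z0 ≠ 0 := Xhalf_ne (by linarith)
  -- exterior Cauchy formula for `m X`
  have e3 : ci ϱ (fun ζ => (mz r x ζ * Xhalf ζ) * (1 / (z0 - ζ))) = mz r x z0 * Xhalf z0 := by
    refine ci_ext (ρ := 2 + d) (F := fun ζ => mz r x ζ * Xhalf ζ) (C := 8 * n * (2 + d)) (by linarith) h1
      (fun z hz => (mz_diff hr (by linarith) hx hz).mul (Xhalf_diff (by linarith))) (fun z hz => ?_) h2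
    have hzp : 0 < ‖z‖ := by linarith
    have hm := mz_decay hr (by linarith) hx (by linarith : 2 + d < ‖z‖)
    have hX := Xhalf_upper (z := z) (by linarith)
    have hm2 : 2 * n * ((2 + d) / (‖z‖ * (‖z‖ - (2 + d)))) ≤ 2 * n * ((2 + d) / (‖z‖ * (‖z‖ / 2))) := by
      gcongr; linarith
    rw [norm_mul]
    calc ‖mz r x z‖ * ‖Xhalf z‖ ≤ (2 * n * ((2 + d) / (‖z‖ * (‖z‖ / 2)))) * (2 * ‖z‖) := by
          gcongr
          · exact hm.trans hm2
          · linarith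
      _ = 8 * n * (2 + d) / ‖z‖ := by field_simp; ring
  have e4 : ci ϱ (fun ζ => h ζ * (P ζ * Xhalf ζ) * mz r x ζ) = mz r x z0 := by
    have : ci ϱ (fun ζ => h ζ * (P ζ * Xhalf ζ) * mz r x ζ)
        = ci ϱ (fun ζ => (Xhalf z0)⁻¹ * ((mz r x ζ * Xhalf ζ) * (1 / (z0 - ζ)))) := by
      refine ci_congr h0 fun ζ hζ => ?_
      have hP := (hE.Pb ζ (by rw [mem_closedBall_zero_iff]; linarith)).1
      rw [hhd]; unfold hz
      field_simp
    rw [this, ci_mul, e3]; field_simp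
  have e5 : ci ϱ (fun ζ => h ζ * (W ζ ^ 2 - P ζ ^ 2 * (ζ ^ 2 - 4))) = 0 :=
    ci_zero h0 h2 (hh.mul ((hWd.pow 2).sub ((hPd.pow 2).mul (by fun_prop))))
  have e6 : ∑ i, ∑ j, dqc h (x i) (x j) - n * ∑ i, W (x i) * h (x i)
      = ci ϱ (fun ζ => h ζ * mz r x ζ ^ 2) - n * mz r x z0 := by
    rw [e1, e2, ← ci_mul, ← ci_sub h0 (CC_sum _ fun i _ => CC_sum _ fun j _ => (hch.mul (hcp i)).mul (hcp j))
      ((CC_const _ _).mul (CC_sum _ fun i _ => (hcW.mul hch).mul (hcp i)))]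
    have c1 : CC ϱ fun ζ => h ζ * mz r x ζ ^ 2 := hch.mul (ContinuousOn.pow hcm 2)
    have c2 : CC ϱ fun ζ => h ζ * (P ζ * Xhalf ζ) * mz r x ζ := (hch.mul ((CC_of_diff h2 hPd).mul hcX)).mul hcm
    have c3 : CC ϱ fun ζ => h ζ * (W ζ ^ 2 - P ζ ^ 2 * (ζ ^ 2 - 4)) :=
      CC_of_diff h2 (hh.mul ((hWd.pow 2).sub ((hPd.pow 2).mul (by fun_prop))))
    have key : ci ϱ (fun ζ => (∑ i, ∑ j, h ζ * (1 / (ζ - x i)) * (1 / (ζ - x j)))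
          - n * ∑ i, W ζ * h ζ * (1 / (ζ - x i)))
        = ci ϱ (fun ζ => (h ζ * mz r x ζ ^ 2 - n * (h ζ * (P ζ * Xhalf ζ) * mz r x ζ))
          - (n:ℂ) ^ 2 / 4 * (h ζ * (W ζ ^ 2 - P ζ ^ 2 * (ζ ^ 2 - 4)))) := by
      refine ci_congr h0 fun ζ hζ => ?_
      have hG := hE.G ζ (by rw [mem_ball_zero_iff]; linarith) (by linarith)
      have hX := Xhalf_sq ζ
      have hm : mz r x ζ = ∑ i, 1 / (ζ - (x i:ℂ)) - n * ∫ y : ℝ, 1 / (ζ - y) ∂r := rfl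
      set g := ∫ y : ℝ, 1 / (ζ - y) ∂r
      set G := ∑ i, 1 / (ζ - (x i:ℂ)) with hGd
      have s1 : ∑ i, ∑ j, h ζ * (1 / (ζ - (x i:ℂ))) * (1 / (ζ - (x j:ℂ))) = h ζ * G ^ 2 := by
        simp_rw [← Finset.mul_sum, ← hGd, mul_assoc, ← Finset.mul_sum, ← Finset.sum_mul]
        rw [← hGd]; ring
      have s2 : ∑ i, W ζ * h ζ * (1 / (ζ - (x i:ℂ))) = W ζ * h ζ * G := by rw [← Finset.mul_sum]
      rw [s1, s2, hm, ← hX]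
      have hg : g = (W ζ - P ζ * Xhalf ζ) / 2 := by linear_combination hG / 2
      rw [hg]; ring
    rw [key, ci_sub h0 (c1.sub ((CC_const _ _).mul c2)) ((CC_const _ _).mul c3), ci_sub h0 c1 ((CC_const _ _).mul c2),
      ci_mul, ci_mul, e4, e5]
    ring
  unfold Lc
  rw [e6]

end BetaEns

/-! ### From complex to admissible deformation fields -/

namespace BetaEns
variable {b : ℝ} {r : Measure ℝ} {d R j0 : ℝ} {V : ℝ → ℝ} {P W : ℂ → ℂ}

/-- Uniform bound for the fields `hz` well inside the circle through `z0`. -/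
noncomputable def M0 (d b : ℝ) : ℝ := 1 / Real.sqrt d * b * (8 / d)

lemma M0_nonneg (hd : 0 < d) (hb : 1 ≤ b) : 0 ≤ M0 d b := by unfold M0; positivity

lemma Ens.hz_bd (hE : Ens d R b j0 V r P W) (hd : 0 < d) {z0 z : ℂ} (h1 : 2 + 3 * d / 2 ≤ ‖z0‖)
    (hz1 : ‖z‖ ≤ 2 + 11 * d / 8) : ‖hz P z0 z‖ ≤ M0 d b := by
  have hP := (hE.Pb z (by rw [mem_closedBall_zero_iff]; linarith)).2.2
  have hX : Real.sqrt d ≤ ‖Xhalf z0‖ := by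
    refine Real.sqrt_le_iff.2 ⟨norm_nonneg _, ?_⟩
    refine le_trans ?_ (Xhalf_lower z0)
    nlinarith
  have hg : d / 8 ≤ ‖z0 - z‖ := by
    have := norm_sub_norm_le z0 z; linarith
  have hs : 0 < Real.sqrt d := Real.sqrt_pos.2 hd
  unfold hz M0
  rw [norm_mul, norm_mul, norm_inv, norm_div, norm_one]
  have e1 : ‖Xhalf z0‖⁻¹ ≤ 1 / Real.sqrt d := by
    rw [one_div]; exact inv_anti₀ hs hX
  have e2 : 1 / ‖z0 - z‖ ≤ 8 / d := by
    refine (one_div_le_one_div_of_le (by positivity) hg).trans (le_of_eq (by field_simp))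
  have hb0 : 0 ≤ b := (norm_nonneg _).trans hP
  gcongr

lemma Ens.hz_dbd (hE : Ens d R b j0 V r P W) (hd : 0 < d) {z0 z : ℂ} (h1 : 2 + 3 * d / 2 ≤ ‖z0‖)
    (h2 : ‖z0‖ ≤ 2 + 5 * d / 2)
    (hz1 : ‖z‖ ≤ 2 + 5 * d / 4) : ‖deriv (hz P z0) z‖ ≤ M0 d b / (d / 8) := by
  have hdf := hE.hz_diff h2 hd
  refine Complex.norm_deriv_le_of_forall_mem_sphere_norm_le (by positivity) ?_ ?_
  · refine (hdf.mono fun w hw => ?_).diffContOnCl_ball (U := ball 0 ‖z0‖) ?_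
    · exact hw
    · intro w hw
      rw [mem_closedBall, dist_eq_norm] at hw
      rw [mem_ball_zero_iff]
      have := norm_le_norm_sub_add w z
      linarith
  · intro w hw
    rw [mem_sphere, dist_eq_norm] at hw
    refine hE.hz_bd hd h1 ?_
    have := norm_le_norm_sub_add w z
    linarith

/-- Cutting off the real part of `ω hz` produces an admissible field whose loop functional is
the real part of `ω` times the complex loop functional, with uniform constants. -/
lemma field_exists (hd : 0 < d) (hb : 1 ≤ b) : ∃ K > 0, ∀ {R j0 : ℝ} {V : ℝ → ℝ} {r : Measure ℝ} {P W : ℂ → ℂ},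
    2 + 3 * d ≤ R → Ens d R b j0 V r P W → ∀ z0 : ℂ, 2 + 3 * d / 2 ≤ ‖z0‖ → ‖z0‖ ≤ 2 + 5 * d / 2 →
    ∀ ω : ℂ, ‖ω‖ ≤ 1 → ∃ h h' : ℝ → ℝ, Field K R V (deriv V) h h' ∧
      ∀ (n : ℕ) (x : Fin n → ℝ) (β : ℝ), (∀ i, |x i| ≤ 2 + d) →
        Lf β (deriv V) h h' x = (ω * Lc β W (hz P z0) x).re := by
  let χ : ContDiffBump (0:ℝ) := ⟨2 + 9 * d / 8, 2 + 5 * d / 4, by linarith, by linarith⟩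
  have hχs : ContDiff ℝ 1 χ := χ.contDiff
  have hχd : ∀ x, HasDerivAt χ (deriv χ x) x := fun x => (hχs.differentiable (by norm_num) x).hasDerivAt
  have hχc : Continuous (deriv χ) := hχs.continuous_deriv (by norm_num)
  obtain ⟨cχ, hcχ⟩ : ∃ c, ∀ x, ‖deriv χ x‖ ≤ c :=
    (χ.hasCompactSupport.deriv).exists_bound_of_continuous hχc
  have hc0 : 0 ≤ cχ := (norm_nonneg _).trans (hcχ 0)
  have hχout : ∀ x : ℝ, 2 + 5 * d / 4 ≤ |x| → χ x = 0 := fun x hx =>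
    χ.zero_of_le_dist (by simpa [Real.dist_eq] using hx)
  have hχout' : ∀ x : ℝ, 2 + 5 * d / 4 < |x| → deriv χ x = 0 := fun x hx => by
    have : χ =ᶠ[nhds x] fun _ => 0 := by
      filter_upwards [continuous_abs.continuousAt.eventually (lt_mem_nhds hx)] with y hy using hχout y (le_of_lt hy)
    rw [this.deriv_eq]; simp
  have hχin : ∀ x : ℝ, |x| ≤ 2 + d → χ x = 1 ∧ deriv χ x = 0 := fun x hx => by
    have h1 : χ =ᶠ[nhds x] fun _ => 1 := by
      have hx' : |x| < 2 + 9 * d / 8 := by linarith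
      filter_upwards [continuous_abs.continuousAt.eventually (gt_mem_nhds hx')] with y hy
      exact χ.one_of_mem_closedBall (by simpa [Real.norm_eq_abs] using le_of_lt hy)
    exact ⟨h1.eq_of_nhds, by rw [h1.deriv_eq]; simp⟩
  set M := M0 d b with hM
  have hM0 : 0 ≤ M := M0_nonneg hd hb
  refine ⟨M + cχ * M + M / (d / 8) + b * M + b * M ^ 2 + 4 * M / d + 1, by positivity, ?_⟩
  intro R j0 V r P W hR hE z0 h1 h2 ω hω
  set K := M + cχ * M + M / (d / 8) + b * M + b * M ^ 2 + 4 * M / d + 1 with hK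
  set F := hz P z0 with hF
  have hFd : DifferentiableOn ℂ F (ball 0 ‖z0‖) := hE.hz_diff h2 hd
  set f : ℝ → ℝ := fun x => (ω * F x).re with hf
  set f' : ℝ → ℝ := fun x => (ω * deriv F x).re with hf'
  have hmem : ∀ x : ℝ, |x| < 2 + 11 * d / 8 → (x:ℂ) ∈ ball (0:ℂ) ‖z0‖ := fun x hx => by
    rw [mem_ball_zero_iff, Complex.norm_real, Real.norm_eq_abs]; linarith
  have hfd : ∀ x : ℝ, |x| < 2 + 11 * d / 8 → HasDerivAt f (f' x) x := fun x hx =>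
    (((hFd.differentiableAt (isOpen_ball.mem_nhds (hmem x hx))).hasDerivAt).const_mul ω).real_of_complex
  have hfc' : ∀ x : ℝ, |x| < 2 + 11 * d / 8 → ContinuousAt f' x := fun x hx => by
    have h3 : ContinuousAt (deriv F) (x:ℂ) :=
      ((hFd.deriv isOpen_ball).differentiableAt (isOpen_ball.mem_nhds (hmem x hx))).continuousAt
    have h4 : ContinuousAt (fun y : ℝ => deriv F (y:ℂ)) x :=
      ContinuousAt.comp (f := fun y : ℝ => (y:ℂ)) h3 Complex.continuous_ofReal.continuousAt
    exact Complex.continuous_re.continuousAt.comp (continuousAt_const.mul h4)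
  have hfb : ∀ x : ℝ, |x| < 2 + 5 * d / 4 → |f x| ≤ M := fun x hx => by
    refine (Complex.abs_re_le_norm _).trans ?_
    rw [norm_mul]
    have := hE.hz_bd hd h1 (z := x) (by rw [Complex.norm_real, Real.norm_eq_abs]; linarith)
    calc ‖ω‖ * ‖F x‖ ≤ 1 * M := by gcongr
      _ = M := one_mul _
  have hfb' : ∀ x : ℝ, |x| < 2 + 5 * d / 4 → |f' x| ≤ M / (d / 8) := fun x hx => by
    refine (Complex.abs_re_le_norm _).trans ?_
    rw [norm_mul]
    have := hE.hz_dbd hd h1 h2 (z := x) (by rw [Complex.norm_real, Real.norm_eq_abs]; linarith)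
    calc ‖ω‖ * ‖deriv F x‖ ≤ 1 * (M / (d / 8)) := by gcongr
      _ = _ := one_mul _
  set h : ℝ → ℝ := fun x => χ x * f x with hh
  set h' : ℝ → ℝ := fun x => deriv χ x * f x + χ x * f' x with hh'
  have hχ1 : ∀ x, |χ x| ≤ 1 := fun x => by rw [abs_of_nonneg χ.nonneg]; exact χ.le_one
  have hcase : ∀ x : ℝ, |x| < 2 + 5 * d / 4 ∨ h x = 0 := fun x => by
    rcases lt_or_ge |x| (2 + 5 * d / 4) with h3 | h3
    · exact Or.inl h3
    · exact Or.inr (by simp [hh, hχout x h3])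
  have hhM : ∀ x, |h x| ≤ M := fun x => by
    rcases hcase x with h3 | h3
    · simp only [hh, abs_mul]
      calc |χ x| * |f x| ≤ 1 * M := mul_le_mul (hχ1 x) (hfb x h3) (abs_nonneg _) zero_le_one
        _ = M := one_mul _
    · rw [h3]; simpa using hM0
  have hMK : M ≤ K := by
    have : 0 ≤ cχ * M + M / (d / 8) + b * M + b * M ^ 2 + 4 * M / d + 1 := by positivity
    linarith
  have hMK1 : cχ * M + M / (d / 8) ≤ K := by
    have : 0 ≤ M + b * M + b * M ^ 2 + 4 * M / d + 1 := by positivity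
    linarith
  have hMK2 : b * M ≤ K := by
    have : 0 ≤ M + cχ * M + M / (d / 8) + b * M ^ 2 + 4 * M / d + 1 := by positivity
    linarith
  have hMK3 : b * M ^ 2 ≤ K := by
    have : 0 ≤ M + cχ * M + M / (d / 8) + b * M + 4 * M / d + 1 := by positivity
    linarith
  have hMK4 : 4 * M / d ≤ K := by
    have : 0 ≤ M + cχ * M + M / (d / 8) + b * M + b * M ^ 2 + 1 := by positivity
    linarith
  have hK0 : 0 ≤ K := hM0.trans hMK
  have hshift : ∀ x s, |s| * K ≤ 1 / 2 → |s * h x| ≤ d / 8 := fun x s hs => by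
    rw [abs_mul]
    have e1 : |s| * |h x| ≤ |s| * M := by gcongr; exact hhM x
    have e2 : |s| * (4 * M / d) ≤ 1 / 2 := (by gcongr : |s| * (4 * M / d) ≤ |s| * K).trans hs
    have e3 : |s| * M = (|s| * (4 * M / d)) * (d / 4) := by field_simp
    rw [e3] at e1
    nlinarith
  have hdV : ∀ x : ℝ, |x| < 2 + 3 * d → deriv V x = (W x).re := fun x hx => (hE.VW x hx).1.deriv
  have hWn : ∀ x : ℝ, |x| < 2 + 5 * d / 2 → |(W x).re| ≤ b := fun x hx =>
    (Complex.abs_re_le_norm _).trans (hE.Wb x (by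
      rw [mem_closedBall_zero_iff, Complex.norm_real, Real.norm_eq_abs]; linarith)).1
  refine ⟨h, h', ⟨?_, ?_, fun x => (hhM x).trans hMK, ?_, ?_, ?_, ?_, ?_⟩, ?_⟩
  · intro x
    rcases lt_or_ge |x| (2 + 11 * d / 8) with h3 | h3
    · exact (hχd x).mul (hfd x h3)
    · have h4 : 2 + 5 * d / 4 < |x| := by linarith
      have e : h' x = 0 := by simp [hh', hχout x h4.le, hχout' x h4]
      rw [e]
      refine (hasDerivAt_const x (0:ℝ)).congr_of_eventuallyEq ?_
      filter_upwards [continuous_abs.continuousAt.eventually (lt_mem_nhds h4)] with y hy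
      simp [hh, hχout y (le_of_lt hy)]
  · refine continuous_iff_continuousAt.2 fun x => ?_
    rcases lt_or_ge |x| (2 + 11 * d / 8) with h3 | h3
    · exact (hχc.continuousAt.mul (hfd x h3).continuousAt).add (χ.continuous.continuousAt.mul (hfc' x h3))
    · have h4 : 2 + 5 * d / 4 < |x| := by linarith
      refine (continuousAt_const (y := (0:ℝ))).congr ?_
      filter_upwards [continuous_abs.continuousAt.eventually (lt_mem_nhds h4)] with y hy
      simp [hh', hχout y (le_of_lt hy), hχout' y hy]
  · have key : ∀ x, |x| ≠ 2 + 5 * d / 4 → |h' x| ≤ K := fun x hx => by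
      rcases lt_or_gt_of_ne hx with h3 | h3
      · refine le_trans ?_ hMK1
        refine (abs_add_le _ _).trans ?_
        rw [abs_mul, abs_mul]
        have a1 := hcχ x
        rw [Real.norm_eq_abs] at a1
        have a2 := mul_le_mul a1 (hfb x h3) (abs_nonneg _) hc0
        have a3 := mul_le_mul (hχ1 x) (hfb' x h3) (abs_nonneg _) zero_le_one
        linarith
      · have e : h' x = 0 := by simp [hh', hχout x h3.le, hχout' x h3]
        rw [e]; simpa using hK0
    intro x
    by_cases hx : |x| = 2 + 5 * d / 4
    · have e : χ x = 0 := hχout x hx.ge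
      simp only [hh', e, zero_mul, add_zero]
      have : IsLocalMin χ x := Filter.Eventually.of_forall fun y => by rw [e]; exact χ.nonneg
      rw [this.deriv_eq_zero]; simpa using hK0
    · exact key x hx
  · intro x s hx hs
    have h3 := (hcase x).resolve_right hx
    have := hshift x s hs
    refine (abs_add_le _ _).trans ?_
    linarith
  · intro x
    rcases hcase x with h3 | h3
    · rw [abs_mul, hdV x (by linarith)]
      exact (mul_le_mul (hWn x (by linarith)) (hhM x) (abs_nonneg _) (by linarith)).trans hMK2
    · rw [h3]; simpa using hK0
  · have hm : Measurable h := by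
      have : Continuous h := by
        refine continuous_iff_continuousAt.2 fun x => ?_
        rcases lt_or_ge |x| (2 + 11 * d / 8) with h3 | h3
        · exact χ.continuous.continuousAt.mul (hfd x h3).continuousAt
        · have h4 : 2 + 5 * d / 4 < |x| := by linarith
          refine (continuousAt_const (y := (0:ℝ))).congr ?_
          filter_upwards [continuous_abs.continuousAt.eventually (lt_mem_nhds h4)] with y hy
          simp [hh, hχout y (le_of_lt hy)]
      exact this.measurable
    exact (measurable_deriv V).mul hm
  · intro x s hs
    rcases hcase x with h3 | h3
    · have hδ := hshift x s hs
      set δ := s * h x with hδd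
      -- first-order Taylor expansion on the segment, where the second derivative of the potential is at most `b`
      set S := Set.Icc (-(2 + 3 * d / 2)) (2 + 3 * d / 2) with hS
      have hxS : x ∈ S := abs_le.1 (by linarith)
      have hxS' : x + δ ∈ S := abs_le.1 ((abs_add_le _ _).trans (by linarith))
      have hWlip : ∀ y ∈ S, ∀ y' ∈ S, |(W y).re - (W y').re| ≤ b * |y - y'| := by
        intro y hy y' hy'
        have := Convex.norm_image_sub_le_of_norm_hasDerivWithin_le (f := fun y : ℝ => (W y).re)
          (f' := fun y : ℝ => (deriv W y).re) (s := S) (C := b)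
          (fun u hu => by
            have hu' : |u| ≤ 2 + 3 * d / 2 := abs_le.2 hu
            exact ((hE.Wd.differentiableAt (isOpen_ball.mem_nhds (by
              rw [mem_ball_zero_iff, Complex.norm_real, Real.norm_eq_abs]; linarith))).hasDerivAt).real_of_complex.hasDerivWithinAt)
          (fun u hu => by
            have hu' : |u| ≤ 2 + 3 * d / 2 := abs_le.2 hu
            exact (Complex.abs_re_le_norm _).trans (hE.Wb u (by
              rw [mem_closedBall_zero_iff, Complex.norm_real, Real.norm_eq_abs]; linarith)).2)
          (convex_Icc _ _) hy' hy
        simpa [Real.norm_eq_abs] using this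
      set T := Set.uIcc x (x + δ) with hT
      have hTS : T ⊆ S := Set.OrdConnected.uIcc_subset Set.ordConnected_Icc hxS hxS'
      have := Convex.norm_image_sub_le_of_norm_hasDerivWithin_le (f := fun y : ℝ => V y - y * (W x).re)
          (f' := fun y : ℝ => (W y).re - (W x).re) (s := T) (C := b * |δ|)
          (fun u hu => by
            have hu' : |u| ≤ 2 + 3 * d / 2 := abs_le.2 (hTS hu)
            exact (((hE.VW u (by linarith)).1.sub ((hasDerivAt_id u).mul_const _)).congr_deriv (by simp)).hasDerivWithinAt)
          (fun u hu => by
            refine (hWlip u (hTS hu) x hxS).trans ?_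
            have : |u - x| ≤ |δ| := by
              have := Set.abs_sub_left_of_mem_uIcc hu
              simpa using this
            gcongr)
          (convex_uIcc _ _) Set.left_mem_uIcc Set.right_mem_uIcc
      simp only [Real.norm_eq_abs, add_sub_cancel_left] at this
      have h5 := (abs_le.1 this).2
      have hb2 : b * |δ| * |δ| ≤ K * s ^ 2 := by
        have : b * |δ| * |δ| = b * |h x| ^ 2 * s ^ 2 := by
          rw [hδd, abs_mul, ← sq_abs s]; ring
        rw [this]
        refine mul_le_mul_of_nonneg_right (le_trans ?_ hMK3) (sq_nonneg _)
        gcongr; exact hhM x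
      rw [hdV x (by linarith)]
      have e : s * ((W x).re * h x) = δ * (W x).re := by rw [hδd]; ring
      rw [e]
      linarith
    · rw [h3]; simp; positivity
  · intro n x β hx
    have e1 : ∀ i, h (x i) = f (x i) := fun i => by simp [hh, (hχin _ (hx i)).1]
    have e2 : ∀ i, h' (x i) = f' (x i) := fun i => by simp [hh', (hχin _ (hx i)).1, (hχin _ (hx i)).2]
    have e3 : ∀ i j, dq h h' (x i) (x j) = (ω * dqc F (x i) (x j)).re := fun i j => by
      unfold dq dqc
      by_cases hij : x i = x j
      · simp [hij, e2]; rw [hf']; simp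
      · have : (x i : ℂ) ≠ x j := fun e => hij (Complex.ofReal_injective e)
        simp only [hij, this, if_false, e1]
        rw [← mul_div_assoc, mul_sub, ← Complex.ofReal_sub, Complex.div_ofReal_re, Complex.sub_re]
    have e4 : ∀ i, deriv V (x i) * h (x i) = (ω * (W (x i) * F (x i))).re := fun i => by
      have hW := (hE.VW (x i) (by have := hx i; linarith)).2
      rw [hdV _ (by have := hx i; linarith), e1]
      simp only [hf, Complex.mul_re, Complex.mul_im, hW]
      ring
    unfold Lf Lc
    simp only [e2, e3, e4]
    rw [hf']
    simp only [← Complex.re_sum, ← Finset.mul_sum]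
    have r1 : ∀ (a : ℝ) (z : ℂ), a * z.re = ((a:ℂ) * z).re := fun a z => by simp
    rw [r1, r1, r1, ← Complex.add_re, ← Complex.sub_re]
    congr 1
    push_cast
    ring

end BetaEns

/-! ### Moments of the fluctuation on a circle -/

namespace BetaEns
variable {b : ℝ} {r : Measure ℝ} {d R j0 : ℝ} {V : ℝ → ℝ} {P W : ℂ → ℂ}

lemma Ens.hz_bd' (hE : Ens d R b j0 V r P W) (hd : 0 < d) {z0 z : ℂ} (h1 : 2 + d ≤ ‖z0‖)
    (h2 : ‖z0‖ ≤ 2 + 5 * d / 2) (hz1 : ‖z‖ + d / 8 ≤ ‖z0‖) : ‖hz P z0 z‖ ≤ M0 d b := by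
  have hP := (hE.Pb z (by rw [mem_closedBall_zero_iff]; linarith)).2.2
  have hX : Real.sqrt d ≤ ‖Xhalf z0‖ := by
    refine Real.sqrt_le_iff.2 ⟨norm_nonneg _, ?_⟩
    refine le_trans ?_ (Xhalf_lower z0)
    nlinarith
  have hg : d / 8 ≤ ‖z0 - z‖ := by
    have := norm_sub_norm_le z0 z; linarith
  have hs : 0 < Real.sqrt d := Real.sqrt_pos.2 hd
  unfold hz M0
  rw [norm_mul, norm_mul, norm_inv, norm_div, norm_one]
  have e1 : ‖Xhalf z0‖⁻¹ ≤ 1 / Real.sqrt d := by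
    rw [one_div]; exact inv_anti₀ hs hX
  have e2 : 1 / ‖z0 - z‖ ≤ 8 / d := by
    refine (one_div_le_one_div_of_le (by positivity) hg).trans (le_of_eq (by field_simp))
  have hb0 : 0 ≤ b := (norm_nonneg _).trans hP
  gcongr

/-- `k`-th moment of the fluctuation along the circle of radius `ϱ`. -/
noncomputable def Nk (r : Measure ℝ) (ϱ : ℝ) (k : ℕ) {n : ℕ} (x : Fin n → ℝ) : ℝ :=
  ∫ θ in (0:ℝ)..2 * Real.pi, ‖mz r x (circleMap 0 ϱ θ)‖ ^ k

lemma norm_cm {ϱ : ℝ} (h : 0 ≤ ϱ) (θ : ℝ) : ‖circleMap 0 ϱ θ‖ = ϱ := by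
  simp [abs_of_nonneg h]

lemma cc_circle {ϱ : ℝ} (h : 0 ≤ ϱ) {f : ℂ → ℂ} (hf : CC ϱ f) : Continuous fun θ : ℝ => f (circleMap 0 ϱ θ) :=
  hf.comp_continuous (continuous_circleMap 0 ϱ) fun θ => circleMap_mem_sphere _ h θ

lemma mz_meas (hr : Dens b r) {ϱ : ℝ} (h2 : 2 < ϱ) (n : ℕ) :
    Measurable fun p : (Fin n → ℝ) × ℝ => mz r p.1 (circleMap 0 ϱ p.2) := by
  have h1 : Measurable fun θ : ℝ => ∫ y : ℝ, 1 / (circleMap 0 ϱ θ - y) ∂r :=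
    (cc_circle (by linarith) (CC_st hr h2)).measurable
  have h3 : Measurable fun θ : ℝ => circleMap 0 ϱ θ := (continuous_circleMap 0 ϱ).measurable
  unfold mz
  refine Measurable.sub (Finset.measurable_fun_sum _ fun i _ => ?_) (measurable_const.mul (h1.comp measurable_snd))
  refine measurable_const.div ((h3.comp measurable_snd).sub ?_)
  exact Complex.measurable_ofReal.comp ((measurable_pi_apply i).comp measurable_fst)

lemma mz_meas1 (n : ℕ) (z : ℂ) : Measurable fun x : Fin n → ℝ => mz r x z := by
  unfold mz
  refine Measurable.sub (Finset.measurable_fun_sum _ fun i _ => ?_) measurable_const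
  exact measurable_const.div (measurable_const.sub (Complex.measurable_ofReal.comp (measurable_pi_apply i)))

lemma mz_int (hr : Dens b r) (hd : 0 < d) {n : ℕ} {μ : Measure (Fin n → ℝ)} [IsFiniteMeasure μ]
    (hμ : ∀ᵐ x ∂μ, ∀ i, |x i| ≤ 2 + d) {z : ℂ} (hz : 2 + d < ‖z‖) : Integrable (fun x => mz r x z) μ := by
  refine Integrable.of_bound (C := 2 * n / (‖z‖ - (2 + d))) (mz_meas1 n z).aestronglyMeasurable ?_
  filter_upwards [hμ] with x hx using mz_bd hr (by linarith) hx hz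

lemma mz_pow_int (hr : Dens b r) (hd : 0 < d) {n : ℕ} {μ : Measure (Fin n → ℝ)} [IsFiniteMeasure μ]
    (hμ : ∀ᵐ x ∂μ, ∀ i, |x i| ≤ 2 + d) {z : ℂ} (hz : 2 + d < ‖z‖) (k : ℕ) : Integrable (fun x => ‖mz r x z‖ ^ k) μ := by
  refine Integrable.of_bound (C := (2 * n / (‖z‖ - (2 + d))) ^ k) ((mz_meas1 n z).norm.pow_const k).aestronglyMeasurable ?_
  filter_upwards [hμ] with x hx
  rw [norm_pow, norm_norm]
  gcongr
  exact mz_bd hr (by linarith) hx hz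

lemma prod_ae {n : ℕ} {μ : Measure (Fin n → ℝ)} [IsFiniteMeasure μ] {p : (Fin n → ℝ) → Prop} (hμ : ∀ᵐ x ∂μ, p x)
    (ν : Measure ℝ) [IsFiniteMeasure ν] : ∀ᵐ q ∂(μ.prod ν), p q.1 :=
  Measure.quasiMeasurePreserving_fst.ae hμ

lemma Nk_le (hr : Dens b r) (hd : 0 < d) {n : ℕ} {μ : Measure (Fin n → ℝ)} [IsFiniteMeasure μ]
    (hμ : ∀ᵐ x ∂μ, ∀ i, |x i| ≤ 2 + d) {ϱ : ℝ} (h1 : 2 + d < ϱ) (k : ℕ) {B : ℝ}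
    (hB : ∀ z, ‖z‖ = ϱ → ∫ x, ‖mz r x z‖ ^ k ∂μ ≤ B) :
    Integrable (fun x => Nk r ϱ k x) μ ∧ ∫ x, Nk r ϱ k x ∂μ ≤ 2 * Real.pi * B := by
  have h0 : 0 ≤ ϱ := by linarith
  have hpi := Real.pi_pos
  set ν : Measure ℝ := volume.restrict (Set.Ioc 0 (2 * Real.pi)) with hν
  have hInt : Integrable (fun p : (Fin n → ℝ) × ℝ => ‖mz r p.1 (circleMap 0 ϱ p.2)‖ ^ k) (μ.prod ν) := by
    refine Integrable.of_bound (C := (2 * n / (ϱ - (2 + d))) ^ k)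
      ((mz_meas hr (by linarith) n).norm.pow_const k).aestronglyMeasurable ?_
    filter_upwards [prod_ae hμ ν] with p hp
    rw [norm_pow, norm_norm]
    have := mz_bd hr (by linarith : 2 ≤ 2 + d) hp (z := circleMap 0 ϱ p.2) (by rw [norm_cm h0]; exact h1)
    rw [norm_cm h0] at this
    gcongr
  have e : ∀ x : Fin n → ℝ, Nk r ϱ k x = ∫ θ, ‖mz r x (circleMap 0 ϱ θ)‖ ^ k ∂ν := fun x => by
    unfold Nk; rw [intervalIntegral.integral_of_le (by positivity)]
  simp only [e]
  refine ⟨hInt.integral_prod_left, ?_⟩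
  rw [integral_integral_swap hInt]
  calc ∫ θ, ∫ x, ‖mz r x (circleMap 0 ϱ θ)‖ ^ k ∂μ ∂ν ≤ ∫ θ, B ∂ν := by
        refine integral_mono hInt.integral_prod_right (integrable_const _) fun θ => hB _ (norm_cm h0 θ)
    _ = 2 * Real.pi * B := by
        rw [integral_const, smul_eq_mul, measureReal_def, hν, Measure.restrict_apply_univ, Real.volume_Ioc]
        rw [ENNReal.toReal_ofReal (by linarith)]; ring

lemma ci_swap (hr : Dens b r) (hd : 0 < d) {n : ℕ} {μ : Measure (Fin n → ℝ)} [IsFiniteMeasure μ]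
    (hμ : ∀ᵐ x ∂μ, ∀ i, |x i| ≤ 2 + d) {ϱ : ℝ} (h1 : 2 + d < ϱ) {f : ℂ → ℂ} (hf : CC ϱ f) :
    Integrable (fun x => ci ϱ fun z => f z * mz r x z) μ ∧
    ∫ x, ci ϱ (fun z => f z * mz r x z) ∂μ = ci ϱ fun z => f z * ∫ x, mz r x z ∂μ := by
  have h0 : 0 ≤ ϱ := by linarith
  have hpi := Real.pi_pos
  set ν : Measure ℝ := volume.restrict (Set.Ioc 0 (2 * Real.pi)) with hν
  have hc := cc_circle h0 hf
  obtain ⟨Cf, hCf⟩ : ∃ C, ∀ z ∈ sphere (0:ℂ) ϱ, ‖f z‖ ≤ C := (isCompact_sphere 0 ϱ).exists_bound_of_continuousOn hf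
  have hInt : Integrable (fun p : (Fin n → ℝ) × ℝ => circleMap 0 ϱ p.2 * (f (circleMap 0 ϱ p.2) * mz r p.1 (circleMap 0 ϱ p.2)))
      (μ.prod ν) := by
    refine Integrable.of_bound (C := ϱ * (Cf * (2 * n / (ϱ - (2 + d)))))
      (((continuous_circleMap 0 ϱ).measurable.comp measurable_snd).mul ((hc.measurable.comp measurable_snd).mul (mz_meas hr (by linarith) n))).aestronglyMeasurable ?_
    filter_upwards [prod_ae hμ ν] with p hp
    have := mz_bd hr (by linarith : 2 ≤ 2 + d) hp (z := circleMap 0 ϱ p.2) (by rw [norm_cm h0]; exact h1)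
    rw [norm_cm h0] at this
    have h3 := hCf (circleMap 0 ϱ p.2) (circleMap_mem_sphere _ h0 _)
    rw [norm_mul, norm_mul, norm_cm h0]
    have h4 : 0 ≤ Cf := (norm_nonneg _).trans h3
    gcongr
  have e : ∀ x : Fin n → ℝ, ci ϱ (fun z => f z * mz r x z) = (2 * (Real.pi : ℂ))⁻¹ *
      ∫ θ, circleMap 0 ϱ θ * (f (circleMap 0 ϱ θ) * mz r x (circleMap 0 ϱ θ)) ∂ν := fun x => by
    rw [ci_def, intervalIntegral.integral_of_le (by positivity)]
  simp only [e]
  refine ⟨hInt.integral_prod_left.const_mul _, ?_⟩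
  rw [integral_const_mul, integral_integral_swap hInt, ci_def, intervalIntegral.integral_of_le (by positivity)]
  congr 1
  refine integral_congr_ae (Filter.Eventually.of_forall fun θ => ?_)
  simp only []
  rw [integral_const_mul, integral_const_mul]

lemma Nk_sq (hr : Dens b r) (hd : 0 < d) {n : ℕ} {x : Fin n → ℝ} (hx : ∀ i, |x i| ≤ 2 + d) {ϱ : ℝ} (h1 : 2 + d < ϱ) :
    Nk r ϱ 2 x ^ 2 ≤ 2 * Real.pi * Nk r ϱ 4 x := by
  have hpi := Real.pi_pos
  have hc : Continuous fun θ : ℝ => mz r x (circleMap 0 ϱ θ) := cc_circle (by linarith) (CC_mz hr (by linarith) h1 hx)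
  set a := Nk r ϱ 2 x with ha
  have ii : ∀ k : ℕ, IntervalIntegrable (fun θ => ‖mz r x (circleMap 0 ϱ θ)‖ ^ k) volume 0 (2 * Real.pi) := fun k =>
    (hc.norm.pow k).intervalIntegrable _ _
  -- variance inequality: `∫ (u² - avg)² ≥ 0`
  have h : 0 ≤ ∫ θ in (0:ℝ)..2 * Real.pi, (‖mz r x (circleMap 0 ϱ θ)‖ ^ 2 - a / (2 * Real.pi)) ^ 2 :=
    intervalIntegral.integral_nonneg (by positivity) fun _ _ => sq_nonneg _
  have e : ∀ θ : ℝ, (‖mz r x (circleMap 0 ϱ θ)‖ ^ 2 - a / (2 * Real.pi)) ^ 2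
      = ‖mz r x (circleMap 0 ϱ θ)‖ ^ 4 - 2 * (a / (2 * Real.pi)) * ‖mz r x (circleMap 0 ϱ θ)‖ ^ 2 + (a / (2 * Real.pi)) ^ 2 :=
    fun θ => by ring
  simp only [e] at h
  rw [intervalIntegral.integral_add ((ii 4).sub ((ii 2).const_mul _)) intervalIntegrable_const,
    intervalIntegral.integral_sub (ii 4) ((ii 2).const_mul _), intervalIntegral.integral_const_mul,
    intervalIntegral.integral_const, smul_eq_mul] at h
  change 0 ≤ Nk r ϱ 4 x - 2 * (a / (2 * Real.pi)) * a + (2 * Real.pi - 0) * (a / (2 * Real.pi)) ^ 2 at h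
  have e2 : Nk r ϱ 4 x - 2 * (a / (2 * Real.pi)) * a + (2 * Real.pi - 0) * (a / (2 * Real.pi)) ^ 2
      = (2 * Real.pi * Nk r ϱ 4 x - a ^ 2) / (2 * Real.pi) := by field_simp; ring
  rw [e2] at h
  have := (div_nonneg_iff.1 h).resolve_right (by rintro ⟨_, h⟩; linarith)
  linarith [this.1]

lemma Nk_nonneg (r : Measure ℝ) (ϱ : ℝ) (k : ℕ) {n : ℕ} (x : Fin n → ℝ) : 0 ≤ Nk r ϱ k x :=
  intervalIntegral.integral_nonneg (by have := Real.pi_pos; positivity) fun _ _ => by positivity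

/-- The quadratic term in the loop functional is controlled by the mean square on the contour. -/
lemma Ens.quad_le (hE : Ens d R b j0 V r P W) (hd : 0 < d) {n : ℕ} {x : Fin n → ℝ} (hx : ∀ i, |x i| ≤ 2 + d)
    {ϱ : ℝ} {z0 : ℂ} (h1 : 2 + d < ϱ) (h2 : ϱ + d / 8 ≤ ‖z0‖) (h3 : ‖z0‖ ≤ 2 + 5 * d / 2) :
    ‖ci ϱ (fun ζ => hz P z0 ζ * mz r x ζ ^ 2)‖ ≤ (2 + 5 * d / 2) * M0 d b * Nk r ϱ 2 x := by
  have hpi := Real.pi_gt_three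
  have h0 : 0 ≤ ϱ := by linarith
  have hM : 0 ≤ M0 d b := (norm_nonneg _).trans (hE.hz_bd' hd (by linarith) h3 (z := ϱ)
    (by rw [Complex.norm_real, Real.norm_eq_abs, abs_of_nonneg h0]; exact h2))
  have hc : Continuous fun θ : ℝ => mz r x (circleMap 0 ϱ θ) := cc_circle h0 (CC_mz hE.dens (by linarith) h1 hx)
  rw [ci_def, norm_mul]
  have hI : ‖∫ θ in (0:ℝ)..2 * Real.pi, circleMap 0 ϱ θ * (hz P z0 (circleMap 0 ϱ θ) * mz r x (circleMap 0 ϱ θ) ^ 2)‖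
      ≤ ∫ θ in (0:ℝ)..2 * Real.pi, (2 + 5 * d / 2) * M0 d b * ‖mz r x (circleMap 0 ϱ θ)‖ ^ 2 := by
    refine intervalIntegral.norm_integral_le_of_norm_le (by positivity) (Filter.Eventually.of_forall fun θ _ => ?_) ?_
    · have h4 := hE.hz_bd' hd (by linarith) h3 (z := circleMap 0 ϱ θ) (by rw [norm_cm h0]; exact h2)
      rw [norm_mul, norm_mul, norm_pow, norm_cm h0, ← mul_assoc]
      have : ϱ ≤ 2 + 5 * d / 2 := by linarith
      gcongr
    · exact ((hc.norm.pow 2).const_mul _).intervalIntegrable _ _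
  rw [intervalIntegral.integral_const_mul] at hI
  have h5 : ‖(2 * (Real.pi : ℂ))⁻¹‖ ≤ 1 := by
    rw [norm_inv, norm_mul, Complex.norm_real, Real.norm_eq_abs, abs_of_pos Real.pi_pos, Complex.norm_ofNat]
    exact inv_le_one_of_one_le₀ (by linarith)
  calc _ ≤ 1 * ((2 + 5 * d / 2) * M0 d b * Nk r ϱ 2 x) := by
        refine mul_le_mul h5 hI (norm_nonneg _) zero_le_one
    _ = _ := one_mul _

/-- Pointwise control of the fluctuation at `z0`. -/
lemma Ens.pw (hE : Ens d R b j0 V r P W) (hd : 0 < d) {β : ℝ} (hβ : 0 < β) {n : ℕ} (hn : 0 < n)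
    {x : Fin n → ℝ} (hx : ∀ i, |x i| ≤ 2 + d)
    {ϱ : ℝ} {z0 : ℂ} (h0 : 2 + 3 * d / 2 ≤ ‖z0‖) (h1 : 2 + d < ϱ) (h2 : ϱ + d / 8 ≤ ‖z0‖) (h3 : ‖z0‖ ≤ 2 + 5 * d / 2) :
    ‖mz r x z0‖ ≤ 2 / β * (‖Lc β W (hz P z0) x‖ / n) + 2 / β * (1 + β) * (M0 d b / (d / 8))
      + (2 + 5 * d / 2) * M0 d b * (Nk r ϱ 2 x / n) := by
  have hn' : (0:ℝ) < n := by exact_mod_cast hn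
  have e := hE.contour_id hd hx h1 (by linarith) h3 β
  have hq := hE.quad_le hd hx h1 h2 h3
  set q := ci ϱ (fun ζ => hz P z0 ζ * mz r x ζ ^ 2) with hqd
  set S := ∑ i, deriv (hz P z0) (x i) with hS
  have hSb : ‖S‖ ≤ n * (M0 d b / (d / 8)) := by
    refine (norm_sum_le _ _).trans ?_
    refine (Finset.sum_le_sum fun i _ => hE.hz_dbd hd h0 h3 (z := x i) ?_).trans (by simp)
    rw [Complex.norm_real, Real.norm_eq_abs]; have := hx i; linarith
  have hβc : (β:ℂ) ≠ 0 := by exact_mod_cast hβ.ne'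
  have e2 : (n:ℂ) * mz r x z0 = q + ((2 / β * (1 - β / 2) : ℝ):ℂ) * S - ((2 / β : ℝ):ℂ) * Lc β W (hz P z0) x := by
    rw [e]; push_cast; field_simp; ring
  have e3 : n * ‖mz r x z0‖ ≤ (2 + 5 * d / 2) * M0 d b * Nk r ϱ 2 x + 2 / β * (1 + β) * (n * (M0 d b / (d / 8)))
      + 2 / β * ‖Lc β W (hz P z0) x‖ := by
    have e4 : n * ‖mz r x z0‖ = ‖(n:ℂ) * mz r x z0‖ := by rw [norm_mul, Complex.norm_natCast]
    rw [e4, e2]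
    refine (norm_sub_le _ _).trans (add_le_add ((norm_add_le _ _).trans (add_le_add hq ?_)) ?_)
    · rw [norm_mul, Complex.norm_real, Real.norm_eq_abs]
      refine mul_le_mul ?_ hSb (norm_nonneg _) (by positivity)
      rw [abs_mul, abs_of_pos (by positivity : 0 < 2 / β)]
      gcongr
      rw [abs_le]; constructor <;> linarith
    · rw [norm_mul, Complex.norm_real, Real.norm_eq_abs, abs_of_pos (by positivity)]
  have e5 : ‖mz r x z0‖ = n * ‖mz r x z0‖ / n := by field_simp
  rw [e5]
  calc _ ≤ _ := div_le_div_of_nonneg_right e3 hn'.le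
    _ = _ := by field_simp; ring

end BetaEns

/-! ### Moment bounds for the fluctuation -/

namespace BetaEns
variable {b : ℝ} {r : Measure ℝ} {d R j0 : ℝ} {V : ℝ → ℝ} {P W : ℂ → ℂ}

/-- Fourth moments of the loop functional are `O(n^4)`, by the exponential moments at `s = ± 1/n`. -/
lemma Field.mom {K : ℝ} {V' h h' : ℝ → ℝ} (hF : Field K R V V' h h') {β : ℝ} (hβ : 0 < β) (hV : Continuous V) {n : ℕ}
    (hQ : 0 < Qb β V n R) (hn : 0 < n) (hK : 2 * K ≤ n) :
    ∫ x, (|Lf β V' h h' x| / n) ^ 4 ∂(Gm β V n R) ≤ 48 * Real.exp (2 * K ^ 2 + β * K ^ 2 + β * K) := by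
  have hn' : (0:ℝ) < n := by exact_mod_cast hn
  have h1 : ∀ s : ℝ, |s| = 1 / n → ∫ x, Real.exp (s * Lf β V' h h' x) ∂(Gm β V n R)
      ≤ Real.exp (2 * K ^ 2 + β * K ^ 2 + β * K) := fun s hs => by
    have := hF.expMoment hβ hV (s := s) (by rw [hs, div_mul_eq_mul_div, div_le_iff₀ hn']; linarith) hQ
    have e : s ^ 2 * (n:ℝ) ^ 2 = 1 := by rw [← sq_abs, hs]; field_simp
    rwa [e, mul_one] at this
  have e1 := h1 (1 / n) (abs_of_pos (by positivity))
  have e2 := h1 (-(1 / n)) (by rw [abs_neg]; exact abs_of_pos (by positivity))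
  have i1 := hF.exp_int hβ hV hQ (1 / n)
  have i2 := hF.exp_int hβ hV hQ (-(1 / n))
  have hpt : ∀ x : Fin n → ℝ, (|Lf β V' h h' x| / n) ^ 4
      ≤ 24 * (Real.exp (1 / n * Lf β V' h h' x) + Real.exp (-(1 / n) * Lf β V' h h' x)) := fun x => by
    set y := Lf β V' h h' x
    have h3 := Real.pow_div_factorial_le_exp (|y| / n) (by positivity) 4
    rw [div_le_iff₀ (by positivity)] at h3
    have h4 : Real.exp (|y| / n) ≤ Real.exp (1 / n * y) + Real.exp (-(1 / n) * y) := by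
      rcases abs_cases y with ⟨h, _⟩ | ⟨h, _⟩
      · rw [h, (by ring : y / n = 1 / n * y)]; linarith [Real.exp_pos (-(1 / n) * y)]
      · rw [h, (by ring : -y / n = -(1 / n) * y)]; linarith [Real.exp_pos (1 / n * y)]
    have h5 : ((Nat.factorial 4 : ℕ) : ℝ) = 24 := by norm_num [Nat.factorial]
    rw [h5] at h3
    linarith
  calc _ ≤ ∫ x, 24 * (Real.exp (1 / n * Lf β V' h h' x) + Real.exp (-(1 / n) * Lf β V' h h' x)) ∂(Gm β V n R) :=
        integral_mono_of_nonneg (Filter.Eventually.of_forall fun x => by positivity) ((i1.add i2).const_mul 24)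
          (Filter.Eventually.of_forall hpt)
    _ ≤ _ := by
        rw [integral_const_mul, integral_add i1 i2]; linarith

/-- Measurable surrogates for the complex loop functional: mean zero, bounded, with bounded fourth moment. -/
lemma lc_dom {β : ℝ} (hβ : 0 < β) (hd : 0 < d) (hb : 1 ≤ b) (hR : 2 + 3 * d ≤ R) : ∃ C > 0, ∀ᶠ n : ℕ in Filter.atTop,
    ∀ {j0 : ℝ} {V : ℝ → ℝ} {r : Measure ℝ} {P W : ℂ → ℂ}, Ens d R b j0 V r P W →
    ∀ z0 : ℂ, 2 + 3 * d / 2 ≤ ‖z0‖ → ‖z0‖ ≤ 2 + 5 * d / 2 → ∃ L : (Fin n → ℝ) → ℂ, Measurable L ∧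
      (∀ x, ‖L x‖ ≤ C * n ^ 2) ∧ (∀ x : Fin n → ℝ, (∀ i, |x i| ≤ 2 + d) → Lc β W (hz P z0) x = L x) ∧
      ∫ x, L x ∂(Gm β V n R) = 0 ∧ ∫ x, (‖L x‖ / n) ^ 4 ∂(Gm β V n R) ≤ C := by
  obtain ⟨K, hK, hfe⟩ := field_exists hd hb
  refine ⟨2 * (1 + 2 * β) * K + 1000 * Real.exp (2 * K ^ 2 + β * K ^ 2 + β * K), by positivity, ?_⟩
  set E := Real.exp (2 * K ^ 2 + β * K ^ 2 + β * K) with hEd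
  have hE0 : 0 < E := Real.exp_pos _
  filter_upwards [Filter.eventually_gt_atTop 0, (tendsto_natCast_atTop_atTop (R := ℝ)).eventually_ge_atTop (2 * K)]
    with n hn hnK j0 V r P W hE z0 h1 h2
  have hn' : (0:ℝ) < n := by exact_mod_cast hn
  obtain ⟨f1, f1', hF1, hL1⟩ := hfe hR hE z0 h1 h2 1 (by simp)
  obtain ⟨f2, f2', hF2, hL2⟩ := hfe hR hE z0 h1 h2 (-Complex.I) (by simp)
  have hQ := Qb_pos hβ hE.cont (by linarith) hE.dens (by linarith : 2 ≤ R) n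
  have := Gm_prob hβ hE.cont hQ
  set L1 := fun x : Fin n → ℝ => Lf β (deriv V) f1 f1' x with hL1d
  set L2 := fun x : Fin n → ℝ => Lf β (deriv V) f2 f2' x with hL2d
  have m1 : Measurable L1 := hF1.Lf_meas β n
  have m2 : Measurable L2 := hF2.Lf_meas β n
  have b1 : ∀ x, |L1 x| ≤ (1 + 2 * β) * K * n ^ 2 := fun x => hF1.Lf_bd hβ x
  have b2 : ∀ x, |L2 x| ≤ (1 + 2 * β) * K * n ^ 2 := fun x => hF2.Lf_bd hβ x
  have nb : ∀ x, ‖(L1 x : ℂ) + L2 x * Complex.I‖ ≤ |L1 x| + |L2 x| := fun x => by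
    refine (norm_add_le _ _).trans ?_
    simp
  refine ⟨fun x => L1 x + L2 x * Complex.I, ?_, ?_, ?_, ?_, ?_⟩
  · exact (Complex.measurable_ofReal.comp m1).add ((Complex.measurable_ofReal.comp m2).mul_const _)
  · intro x
    refine (nb x).trans ?_
    have := b1 x
    have := b2 x
    nlinarith [mul_pos hE0 (pow_pos hn' 2)]
  · intro x hx
    have e1 := hL1 n x β hx
    have e2 := hL2 n x β hx
    apply Complex.ext
    · simp [hL1d, e1]
    · simp [hL2d, e2]
  · have i1 : Integrable L1 (Gm β V n R) := hF1.Lf_int hβ hE.cont hQ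
    have i2 : Integrable L2 (Gm β V n R) := hF2.Lf_int hβ hE.cont hQ
    rw [integral_add i1.ofReal (i2.ofReal.mul_const _), integral_mul_const, integral_complex_ofReal, integral_complex_ofReal,
      hF1.loop hβ hE.cont hQ, hF2.loop hβ hE.cont hQ]
    simp
  · have q1 := hF1.mom hβ hE.cont hQ hn hnK
    have q2 := hF2.mom hβ hE.cont hQ hn hnK
    have ib : ∀ (L : (Fin n → ℝ) → ℝ), Measurable L → (∀ x, |L x| ≤ (1 + 2 * β) * K * n ^ 2) →
        Integrable (fun x => (|L x| / n) ^ 4) (Gm β V n R) := fun L hm hb => by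
      refine Integrable.of_bound (C := ((1 + 2 * β) * K * n ^ 2 / n) ^ 4)
        ((hm.abs.div_const _).pow_const 4).aestronglyMeasurable (Filter.Eventually.of_forall fun x => ?_)
      rw [Real.norm_eq_abs, abs_of_nonneg (by positivity)]
      gcongr
      exact hb x
    calc _ ≤ ∫ x, 8 * ((|L1 x| / n) ^ 4 + (|L2 x| / n) ^ 4) ∂(Gm β V n R) := by
          refine integral_mono_of_nonneg (Filter.Eventually.of_forall fun x => by positivity)
            (((ib L1 m1 b1).add (ib L2 m2 b2)).const_mul 8) (Filter.Eventually.of_forall fun x => ?_)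
          simp only []
          have h3 : ‖(L1 x : ℂ) + L2 x * Complex.I‖ / n ≤ |L1 x| / n + |L2 x| / n := by
            rw [← add_div]; exact div_le_div_of_nonneg_right (nb x) hn'.le
          calc _ ≤ (|L1 x| / n + |L2 x| / n) ^ 4 := by gcongr
            _ ≤ _ := by
              have := add_pow_le (by positivity : 0 ≤ |L1 x| / n) (by positivity : 0 ≤ |L2 x| / n) 4
              norm_num at this ⊢
              linarith
      _ ≤ _ := by
          rw [integral_const_mul, integral_add (ib L1 m1 b1) (ib L2 m2 b2)]
          have : 0 ≤ 2 * (1 + 2 * β) * K := by positivity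
          linarith

lemma cube4 (a c e : ℝ) (ha : 0 ≤ a) (hc : 0 ≤ c) (he : 0 ≤ e) : (a + c + e) ^ 4 ≤ 64 * (a ^ 4 + c ^ 4 + e ^ 4) := by
  have h1 := add_pow_le (by positivity : 0 ≤ a + c) he 4
  have h2 := add_pow_le ha hc 4
  norm_num at h1 h2
  nlinarith [pow_nonneg he 4]

set_option maxHeartbeats 1000000 in
/-- First pass: fourth moments of the fluctuation at radius `2 + 3 * d / 2` are polylogarithmic. -/
lemma step1 {β : ℝ} (hβ : 0 < β) (hd : 0 < d) (hb : 1 ≤ b) (hR : 2 + 3 * d ≤ R) (hj : 0 < j0) :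
    ∃ C > 0, ∀ᶠ n : ℕ in Filter.atTop, ∀ V r P W, Ens d R b j0 V r P W →
      ∃ A : Set (Fin n → ℝ), MeasurableSet A ∧ (∀ x ∈ A, ∀ i, |x i| ≤ 2 + d) ∧
        (Gm β V n R).real Aᶜ ≤ 1 / (n:ℝ) ^ 4 ∧
        ∀ z : ℂ, ‖z‖ = 2 + 3 * d / 2 → ∫ x in A, ‖mz r x z‖ ^ 4 ∂(Gm β V n R) ≤ C * Real.log n ^ 4 := by
  obtain ⟨C0, hC0, hg⟩ := good_set hβ hd hb hR hj
  obtain ⟨C1, hC1, hl⟩ := lc_dom hβ hd hb hR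
  have hM := M0_nonneg hd hb
  have hpi := Real.pi_pos
  set a1 := 2 / β with ha1
  set a2 := 2 / β * (1 + β) * (M0 d b / (d / 8)) with ha2
  set a3 := (2 + 5 * d / 2) * M0 d b with ha3
  set a4 := 2 * Real.pi * ((64 / d) ^ 2 * (4 * C0 + 2 * (32 / d) ^ 2)) with ha4
  have ha1' : 0 < a1 := by positivity
  have ha2' : 0 ≤ a2 := by positivity
  have ha3' : 0 ≤ a3 := by positivity
  have ha4' : 0 ≤ a4 := by positivity
  refine ⟨64 * (a1 ^ 4 * C1 + a2 ^ 4 + (a3 * a4) ^ 4) + 1, by positivity, ?_⟩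
  have hlog : ∀ᶠ n : ℕ in Filter.atTop, 1 ≤ Real.log n :=
    (Real.tendsto_log_atTop.comp (tendsto_natCast_atTop_atTop (R := ℝ))).eventually_ge_atTop 1
  filter_upwards [hg, hl, Filter.eventually_gt_atTop 0, hlog,
    (tendsto_natCast_atTop_atTop (R := ℝ)).eventually_ge_atTop (2 + 5 * d / 4),
    (tendsto_natCast_atTop_atTop (R := ℝ)).eventually_ge_atTop (32 / d)] with n hg hl hn hlog hn2 hn3 V r P W hE
  have hn' : (0:ℝ) < n := by exact_mod_cast hn
  have hn1 : (1:ℝ) ≤ n := by exact_mod_cast hn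
  obtain ⟨A, hAm, hA, hAc⟩ := hg V r P W hE
  refine ⟨A, hAm, fun x hx => (hA x hx).1, hAc, fun z hz => ?_⟩
  obtain ⟨L, hLm, hLb, hLe, -, hL4⟩ := hl hE z (by linarith) (by linarith)
  have hQ := Qb_pos hβ hE.cont (by linarith) hE.dens (by linarith : 2 ≤ R) n
  have := Gm_prob hβ hE.cont hQ
  have hn4 : 2 * (1 / (n:ℝ) ^ 2) ≤ d / 16 := by
    rw [mul_one_div, div_le_iff₀ (by positivity)]
    rw [div_le_iff₀ hd] at hn3
    nlinarith
  -- The quadratic term is `O(n log n) / n` on the smaller circle, by the energy bound.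
  have hpt : ∀ x ∈ A, ‖mz r x z‖ ^ 4 ≤ 64 * (a1 ^ 4 * (‖L x‖ / n) ^ 4 + (a2 ^ 4 + (a3 * a4) ^ 4 * Real.log n ^ 4)) := by
    intro x hx
    obtain ⟨hx1, hx2⟩ := hA x hx
    have h1 := hE.pw hd hβ hn hx1 (ϱ := 2 + 5 * d / 4) (z0 := z) (by linarith) (by linarith) (by linarith) (by linarith)
    rw [hLe x hx1] at h1
    have hN : Nk r (2 + 5 * d / 4) 2 x ≤ a4 * (n * Real.log n) := by
      have h2 : ∀ θ : ℝ, ‖mz r x (circleMap 0 (2 + 5 * d / 4) θ)‖ ^ 2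
          ≤ (64 / d) ^ 2 * (4 * C0 + 2 * (32 / d) ^ 2) * (n * Real.log n) := fun θ => by
        have h3 := mz_circle hE.dens hd hn hn4 hn2 hx1 hx2 (z := circleMap 0 (2 + 5 * d / 4) θ)
          (norm_cm (by linarith) θ)
        have hs := Real.sq_sqrt (by positivity : 0 ≤ 2 * (C0 * (n * Real.log n)))
        set sq := Real.sqrt (2 * (C0 * (n * Real.log n)))
        have h4 : (sq + 32 / d) ^ 2 ≤ 2 * sq ^ 2 + 2 * (32 / d) ^ 2 := by nlinarith [sq_nonneg (sq - 32 / d)]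
        have h5 : (1:ℝ) ≤ n * Real.log n := by nlinarith
        calc _ ≤ (64 / d * (sq + 32 / d)) ^ 2 := by gcongr
          _ = (64 / d) ^ 2 * (sq + 32 / d) ^ 2 := by ring
          _ ≤ (64 / d) ^ 2 * (2 * sq ^ 2 + 2 * (32 / d) ^ 2) := by gcongr
          _ ≤ (64 / d) ^ 2 * ((4 * C0 + 2 * (32 / d) ^ 2) * (n * Real.log n)) := by
              gcongr
              rw [hs]
              nlinarith [sq_nonneg (32 / d)]
          _ = _ := by ring
      have h6 := intervalIntegral.norm_integral_le_of_norm_le_const (a := 0) (b := 2 * Real.pi)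
        (f := fun θ => ‖mz r x (circleMap 0 (2 + 5 * d / 4) θ)‖ ^ 2)
        (C := (64 / d) ^ 2 * (4 * C0 + 2 * (32 / d) ^ 2) * (n * Real.log n))
        (fun θ _ => by rw [norm_pow, norm_norm]; exact h2 θ)
      rw [sub_zero, abs_of_pos (by positivity)] at h6
      refine (le_abs_self _).trans (h6.trans (le_of_eq ?_))
      rw [ha4]; ring
    have hN2 : Nk r (2 + 5 * d / 4) 2 x / n ≤ a4 * Real.log n := by
      rw [div_le_iff₀ hn']; linarith
    have h7 : ‖mz r x z‖ ≤ a1 * (‖L x‖ / n) + a2 + a3 * (a4 * Real.log n) := by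
      refine h1.trans ?_
      gcongr
    calc _ ≤ (a1 * (‖L x‖ / n) + a2 + a3 * (a4 * Real.log n)) ^ 4 := by gcongr
      _ ≤ _ := cube4 _ _ _ (by positivity) ha2' (by positivity)
      _ = _ := by ring
  have iL : Integrable (fun x => (‖L x‖ / n) ^ 4) (Gm β V n R) := by
    refine Integrable.of_bound (C := (C1 * n ^ 2 / n) ^ 4)
      ((hLm.norm.div_const _).pow_const 4).aestronglyMeasurable (Filter.Eventually.of_forall fun x => ?_)
    rw [Real.norm_eq_abs, abs_of_nonneg (by positivity)]
    gcongr
    exact hLb x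
  have iR : Integrable (fun x => 64 * (a1 ^ 4 * (‖L x‖ / n) ^ 4 + (a2 ^ 4 + (a3 * a4) ^ 4 * Real.log n ^ 4))) (Gm β V n R) :=
    ((iL.const_mul _).add (integrable_const _)).const_mul _
  calc _ ≤ ∫ x in A, 64 * (a1 ^ 4 * (‖L x‖ / n) ^ 4 + (a2 ^ 4 + (a3 * a4) ^ 4 * Real.log n ^ 4)) ∂(Gm β V n R) := by
        refine integral_mono_of_nonneg (Filter.Eventually.of_forall fun x => by positivity) iR.integrableOn ?_
        filter_upwards [ae_restrict_mem hAm] with x hx using hpt x hx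
    _ ≤ ∫ x, 64 * (a1 ^ 4 * (‖L x‖ / n) ^ 4 + (a2 ^ 4 + (a3 * a4) ^ 4 * Real.log n ^ 4)) ∂(Gm β V n R) :=
        setIntegral_le_integral iR (Filter.Eventually.of_forall fun x => by simp only [Pi.zero_apply]; positivity)
    _ = 64 * (a1 ^ 4 * ∫ x, (‖L x‖ / n) ^ 4 ∂(Gm β V n R) + (a2 ^ 4 + (a3 * a4) ^ 4 * Real.log n ^ 4)) := by
        rw [integral_const_mul, integral_add (iL.const_mul _) (integrable_const _), integral_const_mul]
        simp
    _ ≤ 64 * (a1 ^ 4 * C1 + (a2 ^ 4 + (a3 * a4) ^ 4 * Real.log n ^ 4)) := by gcongr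
    _ ≤ _ := by
        have h8 : 1 ≤ Real.log n ^ 4 := one_le_pow₀ hlog
        have h9 : 0 ≤ a1 ^ 4 * C1 + a2 ^ 4 := by positivity
        nlinarith

set_option maxHeartbeats 1000000 in
/-- Second pass: second moments of the fluctuation at radius `2 + 7 * d / 4` are bounded. -/
lemma step2 {β : ℝ} (hβ : 0 < β) (hd : 0 < d) (hb : 1 ≤ b) (hR : 2 + 3 * d ≤ R) (hj : 0 < j0) :
    ∃ C > 0, ∀ᶠ n : ℕ in Filter.atTop, ∀ V r P W, Ens d R b j0 V r P W →
      ∃ A : Set (Fin n → ℝ), MeasurableSet A ∧ (∀ x ∈ A, ∀ i, |x i| ≤ 2 + d) ∧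
        (Gm β V n R).real Aᶜ ≤ 1 / (n:ℝ) ^ 4 ∧
        ∀ z : ℂ, ‖z‖ = 2 + 7 * d / 4 → ∫ x in A, ‖mz r x z‖ ^ 2 ∂(Gm β V n R) ≤ C := by
  obtain ⟨C0, hC0, hg⟩ := step1 hβ hd hb hR hj
  obtain ⟨C1, hC1, hl⟩ := lc_dom hβ hd hb hR
  have hM := M0_nonneg hd hb
  have hpi := Real.pi_pos
  set a1 := 2 / β with ha1
  set a2 := 2 / β * (1 + β) * (M0 d b / (d / 8)) with ha2
  set a3 := (2 + 5 * d / 2) * M0 d b with ha3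
  have ha1' : 0 < a1 := by positivity
  have ha2' : 0 ≤ a2 := by positivity
  have ha3' : 0 ≤ a3 := by positivity
  refine ⟨3 * (a1 ^ 2 * (1 + C1) + a2 ^ 2 + a3 ^ 2 * ((2 * Real.pi) * (2 * Real.pi * C0))) + 1, by positivity, ?_⟩
  have hlog : ∀ᶠ n : ℕ in Filter.atTop, Real.log n ^ 4 ≤ (n:ℝ) ^ 2 := by
    have h2 : (fun n : ℕ => Real.log n ^ 4) =o[Filter.atTop] fun n : ℕ => (n:ℝ) ^ 2 := by
      have := (Real.isLittleO_pow_log_id_atTop (n := 4)).comp_tendsto (tendsto_natCast_atTop_atTop (R := ℝ))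
      refine this.trans_isBigO (Asymptotics.IsBigO.of_bound 1 ?_)
      filter_upwards [Filter.eventually_gt_atTop 0] with n hn
      have : (1:ℝ) ≤ n := by exact_mod_cast hn
      simp only [Function.comp, id, Real.norm_eq_abs, one_mul]
      rw [abs_of_nonneg (by positivity), abs_of_nonneg (by positivity)]
      nlinarith
    filter_upwards [h2.bound one_pos] with n hn
    simpa [abs_of_nonneg, Even.pow_abs] using (le_abs_self _).trans hn
  filter_upwards [hg, hl, Filter.eventually_gt_atTop 0, hlog] with n hg hl hn hlog V r P W hE
  have hn' : (0:ℝ) < n := by exact_mod_cast hn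
  have hn1 : (1:ℝ) ≤ n := by exact_mod_cast hn
  obtain ⟨A, hAm, hA, hAc, hA4⟩ := hg V r P W hE
  refine ⟨A, hAm, hA, hAc, fun z hz => ?_⟩
  obtain ⟨L, hLm, hLb, hLe, -, hL4⟩ := hl hE z (by linarith) (by linarith)
  have hQ := Qb_pos hβ hE.cont (by linarith) hE.dens (by linarith : 2 ≤ R) n
  have := Gm_prob hβ hE.cont hQ
  have hμ : ∀ᵐ x ∂((Gm β V n R).restrict A), ∀ i, |x i| ≤ 2 + d := by
    filter_upwards [ae_restrict_mem hAm] with x hx using hA x hx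
  obtain ⟨iN, hN⟩ := Nk_le hE.dens hd hμ (by linarith : 2 + d < 2 + 3 * d / 2) 4 hA4
  -- After division by `n` the quadratic term has second moment `O(log n ^ 4 / n ^ 2)`, by the first pass.
  have hpt : ∀ x ∈ A, ‖mz r x z‖ ^ 2 ≤ 3 * (a1 ^ 2 * (1 + (‖L x‖ / n) ^ 4) + a2 ^ 2
      + a3 ^ 2 * (2 * Real.pi * Nk r (2 + 3 * d / 2) 4 x / n ^ 2)) := by
    intro x hx
    have h1 := hE.pw hd hβ hn (hA x hx) (ϱ := 2 + 3 * d / 2) (z0 := z) (by linarith) (by linarith) (by linarith) (by linarith)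
    rw [hLe x (hA x hx)] at h1
    have hs := Nk_sq hE.dens hd (hA x hx) (by linarith : 2 + d < 2 + 3 * d / 2)
    have hN0 := Nk_nonneg r (2 + 3 * d / 2) 2 x
    set N2 := Nk r (2 + 3 * d / 2) 2 x
    set N4 := Nk r (2 + 3 * d / 2) 4 x
    set y := ‖L x‖ / n with hy
    have hy0 : 0 ≤ y := by positivity
    have h3 : (N2 / n) ^ 2 ≤ 2 * Real.pi * N4 / n ^ 2 := by
      rw [div_pow]; exact div_le_div_of_nonneg_right hs (by positivity)
    have h4 : y ^ 2 ≤ 1 + y ^ 4 := by nlinarith [sq_nonneg (y ^ 2 - 1)]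
    calc _ ≤ (a1 * y + a2 + a3 * (N2 / n)) ^ 2 := by gcongr
      _ ≤ 3 * ((a1 * y) ^ 2 + a2 ^ 2 + (a3 * (N2 / n)) ^ 2) := by
          nlinarith [sq_nonneg (a1 * y - a2), sq_nonneg (a1 * y - a3 * (N2 / n)), sq_nonneg (a2 - a3 * (N2 / n))]
      _ = 3 * (a1 ^ 2 * y ^ 2 + a2 ^ 2 + a3 ^ 2 * (N2 / n) ^ 2) := by ring
      _ ≤ _ := by gcongr
  have iL : Integrable (fun x => (‖L x‖ / n) ^ 4) (Gm β V n R) := by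
    refine Integrable.of_bound (C := (C1 * n ^ 2 / n) ^ 4)
      ((hLm.norm.div_const _).pow_const 4).aestronglyMeasurable (Filter.Eventually.of_forall fun x => ?_)
    rw [Real.norm_eq_abs, abs_of_nonneg (by positivity)]
    gcongr
    exact hLb x
  have iL' := iL.integrableOn (s := A)
  have i1 : Integrable (fun x => a1 ^ 2 * (1 + (‖L x‖ / n) ^ 4)) ((Gm β V n R).restrict A) :=
    ((integrable_const _).add iL').const_mul _
  have i2 : Integrable (fun x => a1 ^ 2 * (1 + (‖L x‖ / n) ^ 4) + a2 ^ 2) ((Gm β V n R).restrict A) :=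
    i1.add (integrable_const _)
  have i3 : Integrable (fun x => a3 ^ 2 * (2 * Real.pi * Nk r (2 + 3 * d / 2) 4 x / n ^ 2)) ((Gm β V n R).restrict A) :=
    ((iN.const_mul _).div_const _).const_mul _
  have hmass : ((Gm β V n R).restrict A).real Set.univ ≤ 1 := by
    rw [measureReal_restrict_apply_univ]; exact measureReal_le_one
  have hL5 : ∫ x in A, (‖L x‖ / n) ^ 4 ∂(Gm β V n R) ≤ C1 :=
    (setIntegral_le_integral iL (Filter.Eventually.of_forall fun x => by simp only [Pi.zero_apply]; positivity)).trans hL4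
  calc _ ≤ ∫ x in A, 3 * (a1 ^ 2 * (1 + (‖L x‖ / n) ^ 4) + a2 ^ 2
        + a3 ^ 2 * (2 * Real.pi * Nk r (2 + 3 * d / 2) 4 x / n ^ 2)) ∂(Gm β V n R) := by
        refine integral_mono_of_nonneg (Filter.Eventually.of_forall fun x => by positivity) ((i2.add i3).const_mul 3) ?_
        filter_upwards [ae_restrict_mem hAm] with x hx using hpt x hx
    _ = 3 * (a1 ^ 2 * (((Gm β V n R).restrict A).real Set.univ + ∫ x in A, (‖L x‖ / n) ^ 4 ∂(Gm β V n R))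
        + ((Gm β V n R).restrict A).real Set.univ * a2 ^ 2
        + a3 ^ 2 * (2 * Real.pi * (∫ x in A, Nk r (2 + 3 * d / 2) 4 x ∂(Gm β V n R)) / n ^ 2)) := by
        rw [integral_const_mul, integral_add i2 i3, integral_add i1 (integrable_const _), integral_const_mul,
          integral_add (integrable_const _) iL', integral_const_mul, integral_div, integral_const_mul,
          integral_const, integral_const, smul_eq_mul, smul_eq_mul, mul_one]
    _ ≤ 3 * (a1 ^ 2 * (1 + C1) + 1 * a2 ^ 2 + a3 ^ 2 * ((2 * Real.pi) * (2 * Real.pi * C0))) := by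
        have h6 : 2 * Real.pi * (∫ x in A, Nk r (2 + 3 * d / 2) 4 x ∂(Gm β V n R)) / n ^ 2
            ≤ (2 * Real.pi) * (2 * Real.pi * C0) := by
          rw [div_le_iff₀ (by positivity)]
          calc _ ≤ 2 * Real.pi * (2 * Real.pi * (C0 * Real.log n ^ 4)) := by gcongr
            _ ≤ 2 * Real.pi * (2 * Real.pi * (C0 * n ^ 2)) := by gcongr
            _ = _ := by ring
        gcongr
    _ ≤ _ := by linarith

end BetaEns

/-! ### The mean of the fluctuation -/

namespace BetaEns
variable {b : ℝ} {r : Measure ℝ} {d R j0 : ℝ} {V : ℝ → ℝ} {P W : ℂ → ℂ}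

lemma Ens.hz_dbd' (hE : Ens d R b j0 V r P W) (hd : 0 < d) {z0 z : ℂ} (h1 : 2 + d ≤ ‖z0‖)
    (h2 : ‖z0‖ ≤ 2 + 5 * d / 2)
    (hz1 : ‖z‖ + d / 4 ≤ ‖z0‖) : ‖deriv (hz P z0) z‖ ≤ M0 d b / (d / 8) := by
  have hdf := hE.hz_diff h2 hd
  refine Complex.norm_deriv_le_of_forall_mem_sphere_norm_le (by positivity) ?_ ?_
  · refine (hdf.mono fun w hw => ?_).diffContOnCl_ball (U := ball 0 ‖z0‖) ?_
    · exact hw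
    · intro w hw
      rw [mem_closedBall, dist_eq_norm] at hw
      rw [mem_ball_zero_iff]
      have := norm_le_norm_sub_add w z
      linarith
  · intro w hw
    rw [mem_sphere, dist_eq_norm] at hw
    refine hE.hz_bd' hd h1 h2 ?_
    have := norm_le_norm_sub_add w z
    linarith

set_option maxHeartbeats 1000000 in
/-- Expected fluctuation on the circle of radius `2 + 2 * d`, up to `O(1/n)`. -/
lemma step3 {β : ℝ} (hβ : 0 < β) (hd : 0 < d) (hb : 1 ≤ b) (hR : 2 + 3 * d ≤ R) (hj : 0 < j0) :
    ∃ C > 0, ∀ᶠ n : ℕ in Filter.atTop, ∀ V r P W, Ens d R b j0 V r P W →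
      ∃ A : Set (Fin n → ℝ), MeasurableSet A ∧ (∀ x ∈ A, ∀ i, |x i| ≤ 2 + d) ∧
        (Gm β V n R).real Aᶜ ≤ 1 / (n:ℝ) ^ 4 ∧
        ∀ z : ℂ, ‖z‖ = 2 + 2 * d → ‖∫ x in A, mz r x z ∂(Gm β V n R)
          - ((2 / β * (1 - β / 2) : ℝ) : ℂ) * ∫ y : ℝ, deriv (hz P z) y ∂r‖ ≤ C / n := by
  obtain ⟨C0, hC0, hg⟩ := step2 hβ hd hb hR hj
  obtain ⟨C1, hC1, hl⟩ := lc_dom hβ hd hb hR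
  have hM := M0_nonneg hd hb
  have hpi := Real.pi_pos
  set M1 := M0 d b / (d / 8) with hM1
  have hM1' : 0 ≤ M1 := by positivity
  set a := 2 / β * (1 - β / 2) with ha
  set a3 := (2 + 5 * d / 2) * M0 d b with ha3
  have ha3' : 0 ≤ a3 := by positivity
  refine ⟨|a| * (M1 + (2 + 7 * d / 4) * (M1 * (1 + C0))) + a3 * (2 * Real.pi * C0) + 2 / β * C1 + 1, by positivity, ?_⟩
  filter_upwards [hg, hl, Filter.eventually_gt_atTop 0] with n hg hl hn V r P W hE
  have hn' : (0:ℝ) < n := by exact_mod_cast hn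
  have hn1 : (1:ℝ) ≤ n := by exact_mod_cast hn
  obtain ⟨A, hAm, hA, hAc, hA2⟩ := hg V r P W hE
  refine ⟨A, hAm, hA, hAc, fun z hz0 => ?_⟩
  obtain ⟨L, hLm, hLb, hLe, hL0, -⟩ := hl hE z (by linarith) (by linarith)
  have hQ := Qb_pos hβ hE.cont (by linarith) hE.dens (by linarith : 2 ≤ R) n
  have := Gm_prob hβ hE.cont hQ
  have hr := hE.dens
  set G := Gm β V n R with hG
  set μ := G.restrict A with hμd
  have hμ : ∀ᵐ x ∂μ, ∀ i, |x i| ≤ 2 + d := by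
    filter_upwards [ae_restrict_mem hAm] with x hx using hA x hx
  have hmass : μ.real Set.univ ≤ 1 := by
    rw [measureReal_restrict_apply_univ]; exact measureReal_le_one
  have hmass2 : 1 - μ.real Set.univ ≤ 1 / (n:ℝ) ^ 4 := by
    rw [measureReal_restrict_apply_univ]
    have := probReal_compl_eq_one_sub (μ := G) hAm
    linarith
  have h1 : 2 + d < 2 + 7 * d / 4 := by linarith
  obtain ⟨iN, hN⟩ := Nk_le hr hd hμ h1 2 hA2
  set ϱ := 2 + 7 * d / 4 with hϱ
  set H := hz P z with hH
  have hHd : DifferentiableOn ℂ H (ball 0 ‖z‖) := hE.hz_diff (by linarith) hd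
  have hHd' : DifferentiableOn ℂ (deriv H) (ball 0 ‖z‖) := hHd.deriv isOpen_ball
  have hϱz : ϱ < ‖z‖ := by rw [hϱ, hz0]; linarith
  set I := ∫ y : ℝ, deriv H y ∂r with hI
  have hIb : ‖I‖ ≤ M1 := hr.norm_integral_le fun y hy => by
    refine hE.hz_dbd' hd (by linarith) (by linarith) ?_
    rw [Complex.norm_real, Real.norm_eq_abs]
    have : |y| ≤ 2 := abs_le.2 hy
    linarith
  obtain ⟨iS, hS⟩ := ci_swap hr hd hμ h1 (CC_of_diff hϱz hHd')
  have im := mz_int hr hd hμ (z := z) (by linarith)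
  have iL : Integrable L G :=
    Integrable.of_bound hLm.aestronglyMeasurable (C1 * n ^ 2) (Filter.Eventually.of_forall hLb)
  have iL' : Integrable L μ := iL.integrableOn
  set S : (Fin n → ℝ) → ℂ := fun x => ci ϱ fun ζ => deriv H ζ * mz r x ζ with hSd
  -- the quadratic term, written so that its integrability is visible
  set q : (Fin n → ℝ) → ℂ := fun x => n * mz r x z - (a:ℂ) * (n * I + S x) + ((2 / β : ℝ):ℂ) * L x with hq
  have hβc : (β:ℂ) ≠ 0 := by exact_mod_cast hβ.ne'
  have hqA : ∀ x ∈ A, ‖q x‖ ≤ a3 * Nk r ϱ 2 x := fun x hx => by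
    have e := hE.contour_id hd (hA x hx) h1 hϱz (by linarith) β
    have e2 := lin_stat hr (by linarith) h1 hϱz (hA x hx) hHd'
    have e3 : q x = ci ϱ (fun ζ => hz P z ζ * mz r x ζ ^ 2) := by
      rw [← hH, hLe x (hA x hx)] at e
      rw [e2] at e
      simp only [hq, e, hSd, ha]
      push_cast
      field_simp
      ring
    rw [e3]
    exact hE.quad_le hd (hA x hx) h1 (by rw [hϱ, hz0]; linarith) (by linarith)
  have iq : ∫ x, q x ∂μ = n * ∫ x, mz r x z ∂μ - (a:ℂ) * (n * (μ.real Set.univ * I) + ∫ x, S x ∂μ)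
      + ((2 / β : ℝ):ℂ) * ∫ x, L x ∂μ := by
    have j1 : Integrable (fun x => (n:ℂ) * mz r x z) μ := im.const_mul _
    have j2 : Integrable (fun x => (n:ℂ) * I + S x) μ := (integrable_const _).add iS
    have j3 : Integrable (fun x => (n:ℂ) * mz r x z - (a:ℂ) * (n * I + S x)) μ := j1.sub (j2.const_mul _)
    simp only [hq]
    rw [integral_add j3 (iL'.const_mul _), integral_sub j1 (j2.const_mul _), integral_const_mul, integral_const_mul,
      integral_const_mul, integral_add (integrable_const _) iS, integral_const]
    simp only [Complex.real_smul]
    ring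
  have hqn : ‖∫ x, q x ∂μ‖ ≤ a3 * (2 * Real.pi * C0) := by
    have : ‖∫ x, q x ∂μ‖ ≤ ∫ x, a3 * Nk r ϱ 2 x ∂μ := by
      refine norm_integral_le_of_norm_le (iN.const_mul _) ?_
      filter_upwards [ae_restrict_mem hAm] with x hx using hqA x hx
    rw [integral_const_mul] at this
    exact this.trans (by gcongr)
  have hLn : ‖∫ x, L x ∂μ‖ ≤ C1 := by
    have e : ∫ x in A, L x ∂G = - ∫ x in Aᶜ, L x ∂G := by
      have := integral_add_compl hAm iL
      rw [hL0] at this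
      linear_combination this
    rw [hμd, e, norm_neg]
    have h4 : ‖∫ x in Aᶜ, L x ∂G‖ ≤ (C1 * n ^ 2) * G.real Aᶜ :=
      norm_setIntegral_le_of_norm_le_const (measure_lt_top _ _) (fun x _ => hLb x)
    refine h4.trans ?_
    calc (C1 * n ^ 2) * G.real Aᶜ ≤ (C1 * n ^ 2) * (1 / (n:ℝ) ^ 4) := by gcongr
      _ = C1 * (1 / (n:ℝ) ^ 2) := by field_simp
      _ ≤ C1 * 1 := by
          gcongr
          rw [div_le_one (by positivity)]
          exact one_le_pow₀ hn1
      _ = C1 := mul_one _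
  have hSn : ‖∫ x, S x ∂μ‖ ≤ ϱ * (M1 * (1 + C0)) := by
    rw [hS]
    refine ci_norm (by rw [hϱ]; linarith) fun ζ hζ => ?_
    rw [norm_mul]
    have h5 : ‖deriv H ζ‖ ≤ M1 := hE.hz_dbd' hd (by linarith) (by linarith) (by rw [hζ, hϱ, hz0]; linarith)
    have h6 : ‖∫ x, mz r x ζ ∂μ‖ ≤ 1 + C0 := by
      have i6 := mz_pow_int hr hd hμ (z := ζ) (by linarith) 2
      calc _ ≤ ∫ x, (1 + ‖mz r x ζ‖ ^ 2) ∂μ := by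
            refine norm_integral_le_of_norm_le ((integrable_const _).add i6) (Filter.Eventually.of_forall fun x => ?_)
            nlinarith [sq_nonneg (‖mz r x ζ‖ - 1), norm_nonneg (mz r x ζ)]
        _ = μ.real Set.univ + ∫ x, ‖mz r x ζ‖ ^ 2 ∂μ := by
            rw [integral_add (integrable_const _) i6, integral_const, smul_eq_mul, mul_one]
        _ ≤ 1 + C0 := add_le_add hmass (hA2 ζ hζ)
    gcongr
  have hfin : (n:ℂ) * (∫ x, mz r x z ∂μ - (a:ℂ) * I) = ∫ x, q x ∂μ
      + (a:ℂ) * (∫ x, S x ∂μ - n * ((1 - μ.real Set.univ : ℝ) : ℂ) * I) - ((2 / β : ℝ):ℂ) * ∫ x, L x ∂μ := by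
    rw [iq]; push_cast; ring
  have hmid : ‖∫ x, S x ∂μ - n * ((1 - μ.real Set.univ : ℝ) : ℂ) * I‖ ≤ M1 + ϱ * (M1 * (1 + C0)) := by
    refine (norm_sub_le _ _).trans ?_
    have : ‖(n:ℂ) * ((1 - μ.real Set.univ : ℝ) : ℂ) * I‖ ≤ 1 * M1 := by
      rw [norm_mul]
      refine mul_le_mul ?_ hIb (norm_nonneg _) zero_le_one
      rw [norm_mul, Complex.norm_natCast, Complex.norm_real, Real.norm_eq_abs, abs_of_nonneg (by linarith)]
      calc (n:ℝ) * (1 - μ.real Set.univ) ≤ n * (1 / (n:ℝ) ^ 4) := by gcongr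
        _ ≤ 1 := by
            rw [mul_one_div, div_le_one (by positivity)]
            exact le_self_pow₀ hn1 (by norm_num)
    linarith
  have hfin2 : n * ‖∫ x, mz r x z ∂μ - (a:ℂ) * I‖
      ≤ a3 * (2 * Real.pi * C0) + |a| * (M1 + ϱ * (M1 * (1 + C0))) + 2 / β * C1 := by
    have e4 : n * ‖∫ x, mz r x z ∂μ - (a:ℂ) * I‖ = ‖(n:ℂ) * (∫ x, mz r x z ∂μ - (a:ℂ) * I)‖ := by
      rw [norm_mul, Complex.norm_natCast]
    rw [e4, hfin]
    refine (norm_sub_le _ _).trans (add_le_add ((norm_add_le _ _).trans (add_le_add hqn ?_)) ?_)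
    · rw [norm_mul, Complex.norm_real, Real.norm_eq_abs]; gcongr
    · rw [norm_mul, Complex.norm_real, Real.norm_eq_abs, abs_of_pos (by positivity)]; gcongr
  rw [le_div_iff₀ hn']
  linarith

end BetaEns

/-! ### Means of analytic linear statistics -/

namespace BetaEns
variable {b : ℝ} {r : Measure ℝ} {d R j0 : ℝ} {V : ℝ → ℝ} {P W : ℂ → ℂ}

lemma Ens.hz_hasDeriv (hE : Ens d R b j0 V r P W) (hd : 0 < d) {z0 z : ℂ} (hzn : ‖z‖ ≤ 2 + 5 * d / 2) (hne : ‖z‖ < ‖z0‖) :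
    HasDerivAt (hz P z0) ((Xhalf z0)⁻¹ * (-deriv P z / P z ^ 2 * (1 / (z0 - z)) + (P z)⁻¹ * (1 / (z0 - z) ^ 2))) z := by
  have hP : DifferentiableAt ℂ P z :=
    hE.Pd.differentiableAt (isOpen_ball.mem_nhds (by rw [mem_ball_zero_iff]; linarith))
  have hPne := (hE.Pb z (by rw [mem_closedBall_zero_iff]; linarith)).1
  have hz0 : z0 - z ≠ 0 := fun h => by rw [sub_eq_zero.1 h] at hne; exact lt_irrefl _ hne
  have h1 : HasDerivAt (fun w => (P w)⁻¹) (-deriv P z / P z ^ 2) z := hP.hasDerivAt.inv hPne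
  have h2 : HasDerivAt (fun w => 1 / (z0 - w)) (1 / (z0 - z) ^ 2) z := by
    have h : HasDerivAt (fun w : ℂ => z0 - w) (-1) z := (hasDerivAt_id z).const_sub z0
    have h' : HasDerivAt (fun w : ℂ => (z0 - w)⁻¹) (-(-1) / (z0 - z) ^ 2) z := h.inv hz0
    simpa [one_div] using h'
  have h3 := ((h1.const_mul (Xhalf z0)⁻¹).mul h2)
  unfold hz
  refine h3.congr_deriv ?_
  ring

/-- The averaged test-function derivative depends continuously on the base point. -/
lemma Ens.CC_hz (hE : Ens d R b j0 V r P W) (hd : 0 < d) :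
    CC (2 + 2 * d) fun z => ∫ y : ℝ, deriv (hz P z) y ∂r := by
  have := hE.dens.prob
  have hPn : ∀ y ∈ Set.Icc (-2:ℝ) 2, ‖(y:ℂ)‖ ≤ 2 := fun y hy => by
    rw [Complex.norm_real, Real.norm_eq_abs]; exact abs_le.2 hy
  unfold CC
  refine continuousOn_of_dominated (bound := fun _ => M0 d b / (d / 8)) ?_ ?_ (integrable_const _) ?_
  · intro z hz'
    have hz : ‖z‖ = 2 + 2 * d := by simpa using hz'
    have hdf := (hE.hz_diff (z0 := z) (by linarith) hd).deriv isOpen_ball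
    refine (hE.dens.integrable_of_cont ?_).aestronglyMeasurable
    refine hdf.continuousOn.comp Complex.continuous_ofReal.continuousOn fun y hy => ?_
    rw [mem_ball_zero_iff]; linarith [hPn y hy]
  · intro z hz'
    have hz : ‖z‖ = 2 + 2 * d := by simpa using hz'
    filter_upwards [hE.dens.ae_mem] with y hy
    exact hE.hz_dbd' hd (by linarith) (by linarith) (by linarith [hPn y hy])
  · filter_upwards [hE.dens.ae_mem] with y hy
    have h0 := hPn y hy
    have hc : ContinuousOn (fun z : ℂ => (Xhalf z)⁻¹ * (-deriv P y / P y ^ 2 * (1 / (z - y)) + (P y)⁻¹ * (1 / (z - y) ^ 2)))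
        (sphere 0 (2 + 2 * d)) := by
      have hp : ∀ z ∈ sphere (0:ℂ) (2 + 2 * d), z - y ≠ 0 := fun z hz' => by
        have hz : ‖z‖ = 2 + 2 * d := by simpa using hz'
        exact sub_real_ne (ρ := 2) (by linarith) (abs_le.2 hy)
      refine ContinuousOn.mul (ContinuousOn.inv₀ (fun z hz' => ?_) fun z hz' => ?_) ?_
      · have hz : ‖z‖ = 2 + 2 * d := by simpa using hz'
        exact (Xhalf_diff (by linarith)).continuousAt.continuousWithinAt
      · have hz : ‖z‖ = 2 + 2 * d := by simpa using hz'
        exact Xhalf_ne (by linarith)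
      · refine ContinuousOn.add (continuousOn_const.mul (continuousOn_const.div (by fun_prop) hp))
          (continuousOn_const.mul (continuousOn_const.div (by fun_prop) fun z hz => pow_ne_zero 2 (hp z hz)))
    refine hc.congr fun z hz' => ?_
    have hz : ‖z‖ = 2 + 2 * d := by simpa using hz'
    exact (hE.hz_hasDeriv hd (by linarith) (by linarith)).deriv

lemma CC_mzA (hr : Dens b r) (hd : 0 < d) {n : ℕ} {μ : Measure (Fin n → ℝ)} [IsFiniteMeasure μ]
    (hμ : ∀ᵐ x ∂μ, ∀ i, |x i| ≤ 2 + d) : CC (2 + 2 * d) fun z => ∫ x, mz r x z ∂μ := by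
  unfold CC
  refine continuousOn_of_dominated (bound := fun _ => 2 * n / d) (fun z _ => (mz_meas1 n z).aestronglyMeasurable) ?_
    (integrable_const _) ?_
  · intro z hz'
    have hz : ‖z‖ = 2 + 2 * d := by simpa using hz'
    filter_upwards [hμ] with x hx
    refine (mz_bd hr (by linarith) hx (by linarith)).trans_eq ?_
    rw [hz]; ring
  · filter_upwards [hμ] with x hx
    exact CC_mz hr (by linarith) (by linarith) hx

/-- Two-term expansion of the mean of an analytic linear statistic, uniform over the ensembles with the same
constants. -/
lemma lin_exp {β : ℝ} (hβ : 0 < β) (hd : 0 < d) (hb : 1 ≤ b) (hR : 2 + 3 * d ≤ R) (hj : 0 < j0)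
    {f : ℝ → ℝ} (hf : Continuous f) {fc : ℂ → ℂ} (hfc : DifferentiableOn ℂ fc (ball 0 (2 + 3 * d)))
    (hfr : ∀ x : ℝ, |x| ≤ 2 + d → fc x = f x) :
    ∃ C > 0, ∀ᶠ n : ℕ in Filter.atTop, ∀ V r P W, Ens d R b j0 V r P W →
      ‖((∫ x, ∑ i, f (x i) ∂(Gm β V n R) : ℝ) : ℂ) - n * ((∫ y, f y ∂r : ℝ) : ℂ)
        - ((2 / β * (1 - β / 2) : ℝ) : ℂ) * ci (2 + 2 * d) (fun z => fc z * ∫ y : ℝ, deriv (hz P z) y ∂r)‖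
      ≤ C / n := by
  obtain ⟨C1, hC1, h1⟩ := step3 hβ hd hb hR hj
  obtain ⟨F, hF⟩ := (isCompact_Icc (a := -R) (b := R)).exists_bound_of_continuousOn hf.continuousOn
  have hR0 : 0 ≤ R := by linarith
  have hF0 : 0 ≤ F := (norm_nonneg _).trans (hF 0 ⟨by linarith, by linarith⟩)
  have hcf := CC_of_diff (ϱ := 2 + 2 * d) (by linarith) hfc
  obtain ⟨F2, hF2⟩ := (isCompact_sphere (0:ℂ) (2 + 2 * d)).exists_bound_of_continuousOn hcf
  have hs : ∀ z : ℂ, ‖z‖ = 2 + 2 * d → ‖fc z‖ ≤ |F2| := fun z hz =>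
    (hF2 z (by simpa using hz)).trans (le_abs_self _)
  refine ⟨2 * F + (2 + 2 * d) * (|F2| * C1) + 1, by positivity, ?_⟩
  filter_upwards [h1, Filter.eventually_ge_atTop 1] with n h1 hn V r P W hE
  obtain ⟨A, hA, hAx, hAp, hAz⟩ := h1 V r P W hE
  have hn' : (1:ℝ) ≤ n := by exact_mod_cast hn
  have hp := Gm_prob hβ hE.cont (Qb_pos hβ hE.cont (by linarith) hE.dens (by linarith : 2 ≤ R) n)
  have hr := hE.dens
  have := hr.prob
  set G := Gm β V n R with hG
  set S : (Fin n → ℝ) → ℝ := fun x => ∑ i, f (x i) with hS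
  have hSc : Continuous S := continuous_finsetSum _ fun i _ => hf.comp (continuous_apply i)
  have hSb : ∀ᵐ x ∂G, ‖S x‖ ≤ n * F := by
    filter_upwards [Gm_ae_bx] with x hx
    refine (norm_sum_le _ _).trans ?_
    refine (Finset.sum_le_sum (g := fun _ => F) fun i _ => hF _ (abs_le.1 (hx i))).trans_eq ?_
    simp
  have hSi : Integrable S G := Integrable.of_bound hSc.aestronglyMeasurable (n * F) hSb
  have hIf : ‖∫ y, f y ∂r‖ ≤ F := hr.norm_integral_le fun y hy => hF y ⟨by linarith [hy.1], by linarith [hy.2]⟩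
  have hfI : ∫ y : ℝ, fc y ∂r = ((∫ y, f y ∂r : ℝ) : ℂ) := by
    rw [← integral_complex_ofReal]
    refine integral_congr_ae ?_
    filter_upwards [hr.ae_mem] with y hy
    exact hfr y ((abs_le.2 hy).trans (by linarith))
  have hμ : ∀ᵐ x ∂(G.restrict A), ∀ i, |x i| ≤ 2 + d := by
    filter_upwards [ae_restrict_mem hA] with x hx using hAx x hx
  obtain ⟨hsi, hsw⟩ := ci_swap hr hd hμ (ϱ := 2 + 2 * d) (by linarith) hcf
  set K : ℂ := ((2 / β * (1 - β / 2) : ℝ) : ℂ)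
  set I : ℂ := ((∫ y, f y ∂r : ℝ) : ℂ) with hI
  have hAeq : ((∫ x in A, S x ∂G : ℝ) : ℂ) = (G.real A : ℂ) * (n * I)
      + ci (2 + 2 * d) (fun z => fc z * ∫ x in A, mz r x z ∂G) := by
    rw [← hsw, ← integral_complex_ofReal]
    have : ∀ᵐ x ∂(G.restrict A), ((S x : ℝ) : ℂ) = n * I + ci (2 + 2 * d) fun z => fc z * mz r x z := by
      filter_upwards [hμ] with x hx
      have := lin_stat hr (by linarith : 2 ≤ 2 + d) (by linarith : 2 + d < 2 + 2 * d) (by linarith) hx hfc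
      rw [hfI] at this
      rw [← this, hS]
      push_cast
      exact Finset.sum_congr rfl fun i _ => (hfr _ (hx i)).symm
    rw [integral_congr_ae this, integral_add (integrable_const _) hsi, integral_const]
    simp [Measure.real]
  have hcomp : ((∫ x, S x ∂G : ℝ) : ℂ) = ((∫ x in A, S x ∂G : ℝ) : ℂ) + ((∫ x in Aᶜ, S x ∂G : ℝ) : ℂ) := by
    rw [← integral_add_compl hA hSi]; push_cast; rfl
  have hAc : ‖((∫ x in Aᶜ, S x ∂G : ℝ) : ℂ)‖ ≤ n * F * (1 / (n:ℝ) ^ 4) := by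
    rw [Complex.norm_real]
    refine (norm_setIntegral_le_of_norm_le_const_ae (C := n * F) (measure_lt_top _ _) (ae_restrict_of_ae hSb)).trans ?_
    gcongr
  have hGA : G.real A = 1 - G.real Aᶜ := by
    have := probReal_add_probReal_compl (μ := G) hA
    linarith
  have hci : ci (2 + 2 * d) (fun z => fc z * ∫ x in A, mz r x z ∂G)
      - K * ci (2 + 2 * d) (fun z => fc z * ∫ y : ℝ, deriv (hz P z) y ∂r)
      = ci (2 + 2 * d) (fun z => fc z * (∫ x in A, mz r x z ∂G - K * ∫ y : ℝ, deriv (hz P z) y ∂r)) := by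
    have hq : (0:ℝ) ≤ 2 + 2 * d := by linarith
    rw [← ci_mul, ← ci_sub hq (hcf.mul (CC_mzA hr hd hμ)) ((CC_const _ K).mul (hcf.mul (hE.CC_hz hd)))]
    exact ci_congr hq fun z _ => by ring
  have hcn := ci_norm (ϱ := 2 + 2 * d) (C := |F2| * (C1 / n)) (by linarith)
    (f := fun z => fc z * (∫ x in A, mz r x z ∂G - K * ∫ y : ℝ, deriv (hz P z) y ∂r)) (fun z hz => by
      rw [norm_mul]
      exact mul_le_mul (hs z hz) (hAz z hz) (norm_nonneg _) (abs_nonneg _))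
  have hfin : ((∫ x, S x ∂G : ℝ) : ℂ) - n * I - K * ci (2 + 2 * d) (fun z => fc z * ∫ y : ℝ, deriv (hz P z) y ∂r)
      = ((∫ x in Aᶜ, S x ∂G : ℝ) : ℂ) - (G.real Aᶜ : ℂ) * (n * I)
        + ci (2 + 2 * d) (fun z => fc z * (∫ x in A, mz r x z ∂G - K * ∫ y : ℝ, deriv (hz P z) y ∂r)) := by
    rw [hcomp, hAeq, ← hci, hGA]; push_cast; ring
  rw [hfin]
  have h3 : ‖(G.real Aᶜ : ℂ) * (n * I)‖ ≤ 1 / (n:ℝ) ^ 4 * (n * F) := by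
    rw [norm_mul, norm_mul, Complex.norm_natCast, hI, Complex.norm_real, Complex.norm_real,
      Real.norm_of_nonneg measureReal_nonneg]
    gcongr
  have h4 : 1 / (n:ℝ) ^ 4 * (n * F) ≤ F / n := by
    rw [div_mul_eq_mul_div, one_mul, div_le_div_iff₀ (by positivity) (by positivity)]
    have : (n:ℝ) ^ 2 ≤ (n:ℝ) ^ 4 := pow_le_pow_right₀ hn' (by norm_num)
    nlinarith
  calc _ ≤ n * F * (1 / (n:ℝ) ^ 4) + 1 / (n:ℝ) ^ 4 * (n * F) + (2 + 2 * d) * (|F2| * (C1 / n)) :=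
        (norm_add_le _ _).trans (add_le_add ((norm_sub_le _ _).trans (add_le_add hAc h3)) hcn)
    _ ≤ F / n + F / n + (2 + 2 * d) * (|F2| * (C1 / n)) := by
        rw [mul_comm (n * F)]; gcongr
    _ ≤ _ := by
        rw [show F / n + F / n + (2 + 2 * d) * (|F2| * (C1 / n)) = (2 * F + (2 + 2 * d) * (|F2| * C1)) / n by ring]
        exact div_le_div_of_nonneg_right (by linarith) (by linarith)

end BetaEns

/-! ### Thermodynamic integration -/

namespace BetaEns
variable {b : ℝ} {r : Measure ℝ}

/-- The perturbation `∑ (V - V₀)(x_i)`. -/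
noncomputable def Sf (V : ℝ → ℝ) (n : ℕ) (x : Fin n → ℝ) : ℝ := ∑ i, (V (x i) - V0 (x i))

lemma Sf_cont {V : ℝ → ℝ} (hV : Continuous V) (n : ℕ) : Continuous (Sf V n) :=
  continuous_finsetSum _ fun i _ => (hV.comp (continuous_apply i)).sub (V0_cont.comp (continuous_apply i))

lemma bw_Vt (β : ℝ) (V : ℝ → ℝ) (n : ℕ) (t : ℝ) (x : Fin n → ℝ) :
    betaWeight β (Vt V t) n x = betaWeight β V0 n x * Real.exp (t * (-(n * β / 2) * Sf V n x)) := by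
  unfold betaWeight Sf
  rw [← Real.exp_sum, ← Real.exp_sum, mul_right_comm, ← Real.exp_add]
  congr 2
  rw [Finset.mul_sum, Finset.mul_sum, ← Finset.sum_add_distrib]
  refine Finset.sum_congr rfl fun i _ => ?_
  unfold Vt; ring

lemma Vt_cont {V : ℝ → ℝ} (hV : Continuous V) (t : ℝ) : Continuous (Vt V t) :=
  (hV.const_mul t).add (V0_cont.const_mul (1 - t))

/-- Differentiation of unnormalized expectations along the interpolation. -/
lemma bw_deriv {β : ℝ} (hβ : 0 < β) {V : ℝ → ℝ} (hV : Continuous V) (n : ℕ) (R : ℝ) {F : (Fin n → ℝ) → ℝ}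
    (hF : Continuous F) (t : ℝ) :
    HasDerivAt (fun t => ∫ x in bx n R, betaWeight β (Vt V t) n x * F x)
      (∫ x in bx n R, betaWeight β (Vt V t) n x * (-(n * β / 2) * Sf V n x * F x)) t := by
  have hw := betaWeight_continuous hβ V0_cont n
  have hS := Sf_cont hV n
  have hwt : ∀ s, Continuous (betaWeight β (Vt V s) n) := fun s => betaWeight_continuous hβ (Vt_cont hV s) n
  have hci : ∀ {H : (Fin n → ℝ) → ℝ}, Continuous H → IntegrableOn H (bx n R) := fun h =>
    h.continuousOn.integrableOn_compact (bx_compact n R)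
  refine (hasDerivAt_integral_of_dominated_loc_of_deriv_le (μ := volume.restrict (bx n R))
    (F := fun s x => betaWeight β (Vt V s) n x * F x)
    (F' := fun s x => betaWeight β (Vt V s) n x * (-(n * β / 2) * Sf V n x * F x))
    (bound := fun x => |betaWeight β V0 n x| * Real.exp ((|t| + 1) * |-(n * β / 2) * Sf V n x|) *
      |-(n * β / 2) * Sf V n x * F x|)
    (ball_mem_nhds t one_pos) (Filter.Eventually.of_forall fun s => ((hwt s).mul hF).aestronglyMeasurable)
    (hci ((hwt t).mul hF)) ((hwt t).mul (by fun_prop)).aestronglyMeasurable ?_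
    (hci (by fun_prop)) ?_).2
  · refine Filter.Eventually.of_forall fun x s hs => ?_
    have hs' : |s| ≤ |t| + 1 := by
      rw [mem_ball, Real.dist_eq] at hs
      have := abs_sub_abs_le_abs_sub s t
      linarith
    rw [norm_mul, Real.norm_eq_abs, Real.norm_eq_abs, bw_Vt, abs_mul, Real.abs_exp]
    have h1 : s * (-(n * β / 2) * Sf V n x) ≤ (|t| + 1) * |-(n * β / 2) * Sf V n x| := by
      refine (le_abs_self _).trans ?_
      rw [abs_mul]
      exact mul_le_mul_of_nonneg_right hs' (abs_nonneg _)
    have h2 := Real.exp_le_exp.2 h1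
    exact mul_le_mul_of_nonneg_right (mul_le_mul_of_nonneg_left h2 (abs_nonneg _)) (abs_nonneg _)
  · refine Filter.Eventually.of_forall fun x s _ => ?_
    simp only [bw_Vt]
    have h1 : HasDerivAt (fun s : ℝ => Real.exp (s * (-(n * β / 2) * Sf V n x)))
        (Real.exp (s * (-(n * β / 2) * Sf V n x)) * (1 * (-(n * β / 2) * Sf V n x))) s :=
      ((hasDerivAt_id s).mul_const _).exp
    refine ((h1.const_mul (betaWeight β V0 n x)).mul_const (F x)).congr_deriv ?_
    ring

/-- The logarithmic derivative of the truncated partition function. -/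
noncomputable def Dn (β : ℝ) (V : ℝ → ℝ) (n : ℕ) (R t : ℝ) : ℝ :=
  -(n * β / 2) * ∫ x, Sf V n x ∂(Gm β (Vt V t) n R)

lemma Dn_eq {β : ℝ} (hβ : 0 < β) {V : ℝ → ℝ} (hV : Continuous V) {n : ℕ} {R : ℝ}
    (hQ : ∀ t, 0 < Qb β (Vt V t) n R) (t : ℝ) : Dn β V n R t =
      -(n * β / 2) * ((Qb β (Vt V t) n R)⁻¹ * ∫ x in bx n R, betaWeight β (Vt V t) n x * Sf V n x) := by
  unfold Dn
  rw [Gm_integral hβ (Vt_cont hV t) (hQ t)]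
  simp only [smul_eq_mul]

lemma Qb_deriv {β : ℝ} (hβ : 0 < β) {V : ℝ → ℝ} (hV : Continuous V) (n : ℕ) (R t : ℝ) :
    HasDerivAt (fun t => Qb β (Vt V t) n R)
      (-(n * β / 2) * ∫ x in bx n R, betaWeight β (Vt V t) n x * Sf V n x) t := by
  have h := bw_deriv hβ hV n R (F := fun _ => 1) continuous_const t
  simp only [mul_one] at h
  unfold Qb
  refine h.congr_deriv ?_
  rw [← integral_const_mul]
  congr 1; funext x; ring

lemma Dn_cont {β : ℝ} (hβ : 0 < β) {V : ℝ → ℝ} (hV : Continuous V) {n : ℕ} {R : ℝ}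
    (hQ : ∀ t, 0 < Qb β (Vt V t) n R) : Continuous (Dn β V n R) := by
  have h1 : Continuous fun t => Qb β (Vt V t) n R :=
    continuous_iff_continuousAt.2 fun t => (Qb_deriv hβ hV n R t).continuousAt
  have h2 : Continuous fun t => ∫ x in bx n R, betaWeight β (Vt V t) n x * Sf V n x :=
    continuous_iff_continuousAt.2 fun t => (bw_deriv hβ hV n R (Sf_cont hV n) t).continuousAt
  rw [show Dn β V n R = fun t => _ from funext fun t => Dn_eq hβ hV hQ t]
  exact continuous_const.mul ((h1.inv₀ fun t => (hQ t).ne').mul h2)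

/-- Thermodynamic integration. -/
lemma Dn_int {β : ℝ} (hβ : 0 < β) {V : ℝ → ℝ} (hV : Continuous V) {n : ℕ} {R : ℝ}
    (hQ : ∀ t, 0 < Qb β (Vt V t) n R) :
    ∫ t in (0:ℝ)..1, Dn β V n R t = Real.log (Qb β V n R) - Real.log (Qb β V0 n R) := by
  have h0 : Vt V 0 = V0 := by funext x; unfold Vt; ring
  have h1 : Vt V 1 = V := by funext x; unfold Vt; ring
  rw [intervalIntegral.integral_eq_sub_of_hasDerivAt (f := fun t => Real.log (Qb β (Vt V t) n R))
    (fun t _ => ?_) ((Dn_cont hβ hV hQ).intervalIntegrable 0 1), h0, h1]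
  refine ((Qb_deriv hβ hV n R t).log (hQ t).ne').congr_deriv ?_
  rw [Dn_eq hβ hV hQ]
  field_simp

/-- Thermodynamic integration of the leading term gives the difference of the equilibrium energies. -/
lemma energy_diff {V ρ : ℝ → ℝ} (hV : Continuous V) (hb : 1 ≤ b) (hρ : PD b ρ) {c : ℝ}
    (hc : ∀ x ∈ Set.Icc (-2:ℝ) 2, V x - 2 * U (mu ρ) x = c) :
    -(1 / 2) * (∫ y, (V y - V0 y) ∂(mu ρ) + ∫ y, (V y - V0 y) ∂(mu scd)) = EE V (mu ρ) + 3 / 4 := by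
  have hb0 : 0 ≤ b := by linarith
  have hs : PD b scd := sc_PD.mono hb
  have h1 := hρ.dens
  have h2 := hs.dens
  have := h1.prob
  have := h2.prob
  have iV : ∀ {m : Measure ℝ}, Dens b m → ∀ {f : ℝ → ℝ}, Continuous f → Integrable f m := fun h _ hf =>
    h.integrable_of_cont hf.continuousOn
  have cU1 : Continuous (U (mu ρ)) := h1.U_continuous hb0
  have cU2 : Continuous (U (mu scd)) := h2.U_continuous hb0
  have e : ∀ {m : Measure ℝ}, Dens b m → ∀ {f u : ℝ → ℝ} {k : ℝ}, Continuous u →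
      (∀ x ∈ Set.Icc (-2:ℝ) 2, f x - 2 * u x = k) → ∫ y, f y ∂m = 2 * ∫ y, u y ∂m + k := by
    intro m h f u k hu hk
    have := h.prob
    have : ∀ᵐ y ∂m, f y = 2 * u y + k := by
      filter_upwards [h.ae_mem] with y hy
      linarith [hk y hy]
    rw [integral_congr_ae this, integral_add ((iV h hu).const_mul 2) (integrable_const _), integral_const_mul]
    simp
  have hsym : ∫ y, U (mu ρ) y ∂(mu scd) = ∫ y, U (mu scd) y ∂(mu ρ) := by
    unfold U
    rw [integral_integral_swap (f := fun x y => Real.log |x - y|) (log_prod_integrable' hb0 h2 h1)]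
    simp only [abs_sub_comm]
  have e1 := e h1 cU1 hc
  have e2 := e h2 cU1 hc
  have e3 := e h1 cU2 fun x hx => sc_equil hx
  have e4 := e h2 cU2 fun x hx => sc_equil hx
  have e5 := sc_EE
  rw [integral_sub (iV h1 hV) (iV h1 V0_cont), integral_sub (iV h2 hV) (iV h2 V0_cont)]
  unfold EE at e5 ⊢
  unfold Lr at e5 ⊢
  linarith

end BetaEns

/-! ### The double contour integral -/

namespace BetaEns
variable {b : ℝ} {r : Measure ℝ} {d R j0 : ℝ} {V : ℝ → ℝ} {P W : ℂ → ℂ}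

lemma stieltjesT_eq {ρ : ℝ → ℝ} (hb : 1 ≤ b) (hρ : PD b ρ) {t : ℝ} (ht : t ∈ Set.Icc (0:ℝ) 1) {z : ℂ} (hz : 2 < ‖z‖) :
    stieltjesT ρ t z = ∫ y : ℝ, 1 / (z - y) ∂(mu (rt ρ t)) := by
  have hs : PD b scd := sc_PD.mono hb
  have hc : ContinuousOn (fun y : ℝ => 1 / (z - (y:ℂ))) (Set.Icc (-2) 2) :=
    continuousOn_const.div (by fun_prop) fun y hy => sub_real_ne hz (abs_le.2 hy)
  rw [hρ.integral_mix hs scd_cont.measurable ht (ρt := rt ρ t) (fun y => rfl) (hρ.dens.integrable_of_cont hc)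
    (hs.dens.integrable_of_cont hc), sc_stieltjes (offCut_of_norm hz), ← hρ.integral_Icc]
  unfold stieltjesT stieltjes jw
  have : ∀ l : ℝ, (ρ l : ℂ) / (z - l) = ρ l • (1 / (z - (l:ℂ))) := fun l => by
    rw [Complex.real_smul]; ring
  simp only [this, Complex.real_smul]
  push_cast; ring

/-- Integration by parts on the circle turns the correction term into the double contour integral. -/
lemma Ens.hz_contour (hE : Ens d R b j0 V r P W) (hd : 0 < d) {g : ℂ → ℂ}
    (hg : ∀ z : ℂ, 2 < ‖z‖ → g z = ∫ y : ℝ, 1 / (z - y) ∂r) {z : ℂ} (hz1 : ‖z‖ = 2 + 2 * d) :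
    ∫ y : ℝ, deriv (hz P z) y ∂r = -((Xhalf z)⁻¹ * ci (2 + d) fun ζ => deriv g ζ / (P ζ * (z - ζ))) := by
  have hdf := hE.hz_diff (z0 := z) (by linarith) hd
  rw [hz1] at hdf
  have hq : (0:ℝ) ≤ 2 + d := by linarith
  have hgd : ∀ ζ : ℂ, 2 < ‖ζ‖ → HasDerivAt g (deriv g ζ) ζ := fun ζ hζ => by
    refine DifferentiableAt.hasDerivAt ?_
    refine (st_hasDeriv hE.dens hζ).differentiableAt.congr_of_eventuallyEq ?_
    filter_upwards [(isOpen_lt continuous_const continuous_norm).mem_nhds hζ] with w hw using hg w hw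
  have hgdo : DifferentiableOn ℂ g {w | 2 < ‖w‖} := fun w hw => (hgd w hw).differentiableAt.differentiableWithinAt
  have hgc : CC (2 + d) (deriv g) := by
    refine (hgdo.deriv (isOpen_lt continuous_const continuous_norm)).continuousOn.mono fun w hw => ?_
    have : ‖w‖ = 2 + d := by simpa using hw
    change 2 < ‖w‖
    linarith
  have hgc0 : CC (2 + d) g := by
    refine hgdo.continuousOn.mono fun w hw => ?_
    have : ‖w‖ = 2 + d := by simpa using hw
    change 2 < ‖w‖
    linarith
  have h1 := ci_meas hE.dens (by linarith : 2 < 2 + d) (by linarith : 2 + d < 2 + 2 * d) (hdf.deriv isOpen_ball)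
  have hdc : CC (2 + d) (deriv (hz P z)) := CC_of_diff (by linarith) (hdf.deriv isOpen_ball)
  have hhc : CC (2 + d) (hz P z) := CC_of_diff (by linarith) hdf
  have h2 : ci (2 + d) (fun ζ => deriv (hz P z) ζ * g ζ + hz P z ζ * deriv g ζ) = 0 := by
    unfold ci
    rw [circleIntegral.integral_eq_zero_of_hasDerivWithinAt (f := fun ζ => hz P z ζ * g ζ) hq, mul_zero]
    intro ζ hζ
    have hn : ‖ζ‖ = 2 + d := by simpa using hζ
    have a1 : HasDerivAt (hz P z) (deriv (hz P z) ζ) ζ :=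
      (hdf.differentiableAt (isOpen_ball.mem_nhds (by rw [mem_ball_zero_iff]; linarith))).hasDerivAt
    exact (a1.mul (hgd ζ (by linarith))).hasDerivWithinAt
  rw [ci_add hq (hdc.mul hgc0) (hhc.mul hgc)] at h2
  rw [← h1, ci_congr hq (g := fun ζ => deriv (hz P z) ζ * g ζ) fun w hw => by rw [hg w (by linarith)],
    eq_neg_of_add_eq_zero_left h2, ← ci_mul]
  congr 1
  refine ci_congr hq fun w hw => ?_
  unfold hz
  field_simp

end BetaEns

/-! ### Asymptotics of the confined partition function -/

namespace BetaEns
variable {b : ℝ}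

lemma PD.U_mu {ρ : ℝ → ℝ} (h : PD b ρ) (x : ℝ) : U (mu ρ) x = ∫ m, Real.log |x - m| * ρ m := by
  unfold U
  rw [h.integral_mu]
  simp only [smul_eq_mul, mul_comm]

lemma PD.equilEnergy_eq {V ρ : ℝ → ℝ} (h : PD b ρ) : equilEnergy V ρ = EE V (mu ρ) := by
  unfold equilEnergy EE Lr
  rw [← h.integral_Icc, ← h.integral_Icc]
  congr 1
  · refine intervalIntegral.integral_congr fun l _ => ?_
    simp only [U, smul_eq_mul]
    rw [← h.integral_Icc, ← intervalIntegral.integral_const_mul]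
    refine intervalIntegral.integral_congr fun m _ => ?_
    simp only [smul_eq_mul]; ring
  · refine intervalIntegral.integral_congr fun l _ => ?_
    simp only [smul_eq_mul]; ring

/-- The integrand of the order-`n` term. -/
noncomputable def bt (ρ : ℝ → ℝ) (P Vc : ℂ → ℂ) (d t : ℝ) : ℂ :=
  (1 / (2 * Real.pi * Complex.I) ^ 2) *
    ∮ z in C((0:ℂ), 2 + 2*d), ((Vc z - z ^ 2 / 2) / Xhalf z) *
      ∮ ζ in C((0:ℂ), 2 + d), deriv (stieltjesT ρ t) ζ / (((t : ℂ) * P ζ + (1 - (t:ℂ))) * (z - ζ))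

lemma bt_eq {ρ : ℝ → ℝ} {P Vc W : ℂ → ℂ} {d t R j0 : ℝ} {V : ℝ → ℝ} (hd : 0 < d) (hb : 1 ≤ b) (hρ : PD b ρ)
    (ht : t ∈ Set.Icc (0:ℝ) 1) (hE : Ens d R b j0 V (mu (rt ρ t)) (Pt P t) W) :
    ci (2 + 2 * d) (fun z => (Vc z - z ^ 2 / 2) * ∫ y : ℝ, deriv (hz (Pt P t) z) y ∂(mu (rt ρ t)))
      = -bt ρ P Vc d t := by
  have hq : (0:ℝ) ≤ 2 + 2 * d := by linarith
  rw [ci_congr hq (g := fun z => (-(2 * Real.pi * Complex.I)⁻¹) * (((Vc z - z ^ 2 / 2) / Xhalf z) *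
      ∮ ζ in C((0:ℂ), 2 + d), deriv (stieltjesT ρ t) ζ / (((t : ℂ) * P ζ + (1 - (t:ℂ))) * (z - ζ)))) fun z hz => by
    rw [hE.hz_contour hd (fun w hw => stieltjesT_eq hb hρ ht hw) hz]
    simp only [ci, Pt]; ring, ci_mul]
  unfold ci bt
  rw [one_div, pow_two, mul_inv]; ring

/-- The asymptotic expansion for the ensembles confined to `[-R, R]`. -/
lemma Qb_asymp {β : ℝ} (hβ : 0 < β) {V : ℝ → ℝ} (hV : Continuous V) {ρ : ℝ → ℝ} {P Vc : ℂ → ℂ} {d R j0 c : ℝ} (hd : 0 < d)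
    (hR : 2 + 3 * d ≤ R) (hb : 1 ≤ b) (hρ : PD b ρ) (hj : 0 < j0)
    (hVc : DifferentiableOn ℂ Vc (ball (0:ℂ) (2 + 3*d)))
    (hVcR : ∀ x : ℝ, |x| ≤ 2 + 3*d → Vc x = (V x : ℂ))
    (hc : ∀ x ∈ Set.Icc (-2:ℝ) 2, V x - 2 * U (mu ρ) x = c)
    (hE : ∀ t ∈ Set.Icc (0:ℝ) 1, Ens d R b j0 (Vt V t) (mu (rt ρ t)) (Pt P t) (Wt Vc t)) :
    ∃ C > 0, ∀ᶠ n : ℕ in Filter.atTop,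
      ‖((Real.log (Qb β V n R) - Real.log (Qb β V0 n R) : ℝ) : ℂ)
        - (n:ℂ) ^ 2 * ((β / 2 * (EE V (mu ρ) + 3 / 4) : ℝ) : ℂ)
        - n * ∫ t in (0:ℝ)..1, ((1 - β / 2 : ℝ) : ℂ) * bt ρ P Vc d t‖ ≤ C := by
  set f : ℝ → ℝ := fun x => V x - V0 x with hf
  have hfc : Continuous f := hV.sub V0_cont
  obtain ⟨C, hC, h1⟩ := lin_exp hβ hd hb hR hj hfc (fc := fun z => Vc z - z ^ 2 / 2)
    (hVc.sub (by fun_prop)) (fun x hx => by rw [hVcR x (by linarith), hf]; simp [V0])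
  have hs : PD b scd := sc_PD.mono hb
  set a : ℝ → ℝ := fun t => -(β / 2) * (t * ∫ y, f y ∂(mu ρ) + (1 - t) * ∫ y, f y ∂(mu scd)) with ha
  have hac : Continuous a := by fun_prop
  have hmix : ∀ t ∈ Set.Icc (0:ℝ) 1, ∫ y, f y ∂(mu (rt ρ t)) = t * ∫ y, f y ∂(mu ρ) + (1 - t) * ∫ y, f y ∂(mu scd) :=
    fun t ht => hρ.integral_mix hs scd_cont.measurable ht (ρt := rt ρ t) (fun y => rfl)
      (hρ.dens.integrable_of_cont hfc.continuousOn) (hs.dens.integrable_of_cont hfc.continuousOn)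
  have hai : ∫ t in (0:ℝ)..1, a t = β / 2 * (EE V (mu ρ) + 3 / 4) := by
    rw [← energy_diff hV hb hρ hc]
    have e : ∀ t, a t = -(β / 2) * (∫ y, f y ∂(mu scd)) + t * (-(β / 2) * (∫ y, f y ∂(mu ρ) - ∫ y, f y ∂(mu scd))) := by
      intro t; rw [ha]; ring
    simp only [e]
    rw [intervalIntegral.integral_add (by simp) (Continuous.intervalIntegrable (by fun_prop) _ _),
      intervalIntegral.integral_const, intervalIntegral.integral_mul_const, integral_id]
    simp only [smul_eq_mul]; ring
  set B : ℝ → ℂ := fun t => ((1 - β / 2 : ℝ) : ℂ) * bt ρ P Vc d t with hB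
  have hQ : ∀ n t, 0 < Qb β (Vt V t) n R := fun n t =>
    Qb_pos hβ (Vt_cont hV t) (by linarith) hρ.dens (by linarith) n
  have key : ∀ᶠ n : ℕ in Filter.atTop, ∀ t ∈ Set.Icc (0:ℝ) 1,
      ‖((Dn β V n R t : ℝ) : ℂ) - (n:ℂ) ^ 2 * (a t : ℂ) - n * B t‖ ≤ β / 2 * C := by
    filter_upwards [h1, Filter.eventually_ge_atTop 1] with n h1 hn t ht
    have hn' : (0:ℝ) < n := by exact_mod_cast hn
    have h2 := h1 _ _ _ _ (hE t ht)
    rw [bt_eq hd hb hρ ht (hE t ht), hmix t ht] at h2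
    have e : ((Dn β V n R t : ℝ) : ℂ) - (n:ℂ) ^ 2 * (a t : ℂ) - n * B t
        = ((-(n * β / 2) : ℝ) : ℂ) * (((∫ x, ∑ i, f (x i) ∂(Gm β (Vt V t) n R) : ℝ) : ℂ)
          - n * ((t * ∫ y, f y ∂(mu ρ) + (1 - t) * ∫ y, f y ∂(mu scd) : ℝ) : ℂ)
          - ((2 / β * (1 - β / 2) : ℝ) : ℂ) * -bt ρ P Vc d t) := by
      have hD : Dn β V n R t = -(n * β / 2) * ∫ x, ∑ i, f (x i) ∂(Gm β (Vt V t) n R) := rfl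
      have hβ' : (β : ℂ) ≠ 0 := by exact_mod_cast hβ.ne'
      rw [hD, hB, ha]
      push_cast
      field_simp
      ring
    rw [e, norm_mul, Complex.norm_real, Real.norm_eq_abs, abs_neg, abs_of_pos (by positivity)]
    calc _ ≤ n * β / 2 * (C / n) := by gcongr
      _ = β / 2 * C := by field_simp
  have hBc : ContinuousOn B (Set.Icc 0 1) := by
    refine continuousOn_of_uniform_approx_of_continuousOn fun u hu => ?_
    obtain ⟨ε, hε, hεu⟩ := Metric.mem_uniformity_dist.1 hu
    have hlim : Filter.Tendsto (fun n : ℕ => β / 2 * C / (n:ℝ)) Filter.atTop (nhds 0) :=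
      tendsto_const_div_atTop_nhds_zero_nat _
    obtain ⟨n, hk, hn1, hn⟩ := (key.and ((hlim.eventually (gt_mem_nhds hε)).and (Filter.eventually_ge_atTop 1))).exists
    have hn' : (0:ℝ) < n := by exact_mod_cast hn
    have hnc : (n:ℂ) ≠ 0 := by exact_mod_cast hn'.ne'
    refine ⟨fun t => (((Dn β V n R t : ℝ) : ℂ) - (n:ℂ) ^ 2 * (a t : ℂ)) / n, ?_, fun t ht => hεu ?_⟩
    · have := Dn_cont hβ hV (hQ n)
      exact Continuous.continuousOn (by fun_prop)
    · rw [dist_comm, dist_eq_norm]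
      refine lt_of_le_of_lt ?_ hn1
      rw [le_div_iff₀ hn', ← Complex.norm_natCast (n := n), ← norm_mul]
      refine le_trans (le_of_eq ?_) (hk t ht)
      congr 1; field_simp
  refine ⟨β / 2 * C, by positivity, ?_⟩
  filter_upwards [key] with n hk
  have hDc := Dn_cont hβ hV (hQ n)
  have i1 : IntervalIntegrable (fun t => ((Dn β V n R t : ℝ) : ℂ)) volume 0 1 := Continuous.intervalIntegrable (by fun_prop) _ _
  have i2 : IntervalIntegrable (fun t => (n:ℂ) ^ 2 * (a t : ℂ)) volume 0 1 := Continuous.intervalIntegrable (by fun_prop) _ _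
  have i3 : IntervalIntegrable (fun t => n * B t) volume 0 1 := by
    refine (ContinuousOn.intervalIntegrable ?_).const_mul _
    rwa [Set.uIcc_of_le zero_le_one]
  have e : ((Real.log (Qb β V n R) - Real.log (Qb β V0 n R) : ℝ) : ℂ)
        - (n:ℂ) ^ 2 * ((β / 2 * (EE V (mu ρ) + 3 / 4) : ℝ) : ℂ) - n * ∫ t in (0:ℝ)..1, B t
      = ∫ t in (0:ℝ)..1, (((Dn β V n R t : ℝ) : ℂ) - (n:ℂ) ^ 2 * (a t : ℂ) - n * B t) := by
    rw [intervalIntegral.integral_sub (i1.sub i2) i3, intervalIntegral.integral_sub i1 i2,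
      intervalIntegral.integral_const_mul ((n:ℂ) ^ 2) fun t => (a t : ℂ),
      intervalIntegral.integral_const_mul (n:ℂ) B, intervalIntegral.integral_ofReal,
      intervalIntegral.integral_ofReal, Dn_int hβ hV (hQ n), hai]
  rw [e]
  have := intervalIntegral.norm_integral_le_of_norm_le_const (a := (0:ℝ)) (b := 1) (C := β / 2 * C)
    (f := fun t => ((Dn β V n R t : ℝ) : ℂ) - (n:ℂ) ^ 2 * (a t : ℂ) - n * B t) (fun t ht => by
      rw [Set.uIoc_of_le zero_le_one] at ht
      exact hk t ⟨ht.1.le, ht.2⟩)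
  simpa using this

end BetaEns

/-! ### Asymptotics of the partition function -/

/-- asymptotics of `log Q_{n,β}` up to `O(1)`. -/
theorem log_partition_function_asymptotics
    (β : ℝ) (hβ : 0 < β) (V : ℝ → ℝ) (hVcont : Continuous V)
    (hVgrowth : ∃ ε > 0, ∀ x : ℝ, 2 * (1 + ε) * Real.log (1 + |x|) ≤ V x)
    (D : Set ℂ) (ρ : ℝ → ℝ) (P : ℂ → ℂ) (hC : EquilC13 V D ρ P)
    (d : ℝ) (hd : 0 < d)
    (hball : closedBall (0:ℂ) (2 + 3*d) ⊆ D)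
    (Vc : ℂ → ℂ) (hVc : DifferentiableOn ℂ Vc (closedBall (0:ℂ) (2 + 3*d)))
    (hVcR : ∀ x : ℝ, |x| ≤ 2 + 3*d → Vc x = (V x : ℂ))
    (hPt : ∀ t ∈ Set.Icc (0:ℝ) 1, ∀ z ∈ closedBall (0:ℂ) (2 + 3*d),
      (t : ℂ) * P z + (1 - (t:ℂ)) ≠ 0) :
    ∃ C > 0, ∀ n : ℕ, 2 ≤ n →
      ‖(Real.log (partitionFn β V n) : ℂ)
          - (Real.log (partitionFn β (fun x => x ^ 2 / 2) n) : ℂ)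
          - (n : ℂ) ^ 2 * ((β / 2 : ℝ) : ℂ) * ((equilEnergy V ρ : ℝ) : ℂ)
          - (n : ℂ) ^ 2 * ((3 * β / 8 : ℝ) : ℂ)
          - (n : ℂ) * ((1 - β / 2 : ℝ) : ℂ) *
              (∫ t in (0:ℝ)..1, (1 / (2 * Real.pi * Complex.I) ^ 2) *
                ∮ z in C((0:ℂ), 2 + 2*d), ((Vc z - z ^ 2 / 2) / Xhalf z) *
                  ∮ ζ in C((0:ℂ), 2 + d),
                    deriv (stieltjesT ρ t) ζ /
                      (((t : ℂ) * P ζ + (1 - (t:ℂ))) * (z - ζ)))‖ ≤ C := by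
  obtain ⟨ε, hε, hg⟩ := hVgrowth
  obtain ⟨b, hb, hρ, hens⟩ := BetaEns.build hVcont hC hd hball hVc hVcR hPt
  obtain ⟨c, hc, -⟩ := hC.equil
  have hb0 : 0 < b := by linarith
  obtain ⟨R1, -, hR1⟩ := BetaEns.trunc hβ hVcont hb0 hρ.dens hε (C0 := 0) (fun x => by linarith [hg x])
  -- `4 log (1 + u) ≤ 4 * u ≤ u²/2 + 8`
  obtain ⟨R2, -, hR2⟩ := BetaEns.trunc hβ BetaEns.V0_cont hb0 hρ.dens one_pos (C0 := 8) (fun x => by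
    have h1 : Real.log (1 + |x|) ≤ |x| := by
      have := Real.log_le_sub_one_of_pos (x := 1 + |x|) (by positivity)
      linarith
    unfold BetaEns.V0
    rw [← sq_abs x]
    nlinarith [sq_nonneg (|x| - 4)])
  set R := max (max R1 R2) (2 + 3 * d) with hR
  obtain ⟨j0, hj, hE⟩ := hens R
  obtain ⟨C, hC0, hQ⟩ := BetaEns.Qb_asymp (c := -c) hβ hVcont hd (le_max_right _ _) hb hρ hj
    (hVc.mono ball_subset_closedBall) hVcR (fun x hx => by rw [hρ.U_mu]; linarith [hc x hx]) hE
  have hlog : ∀ {V' : ℝ → ℝ}, Continuous V' → ∀ {n : ℕ}, BetaEns.Qb β V' n R ≤ partitionFn β V' n ∧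
      partitionFn β V' n ≤ 2 * BetaEns.Qb β V' n R →
      |Real.log (partitionFn β V' n) - Real.log (BetaEns.Qb β V' n R)| ≤ Real.log 2 := by
    intro V' hV' n h
    have hq : 0 < BetaEns.Qb β V' n R := BetaEns.Qb_pos hβ hV' hb0 hρ.dens
      (le_trans (by linarith : (2:ℝ) ≤ 2 + 3 * d) (le_max_right _ _)) n
    have h1 := Real.log_le_log hq h.1
    have h2 := Real.log_le_log (hq.trans_le h.1) h.2
    rw [Real.log_mul two_ne_zero hq.ne'] at h2
    rw [abs_le]
    constructor <;> linarith [Real.log_nonneg one_le_two]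
  -- The quantity to be bounded; the integrand over `t` is `bt` by definition.
  set T : ℕ → ℝ := fun n => ‖(Real.log (partitionFn β V n) : ℂ)
      - (Real.log (partitionFn β (fun x => x ^ 2 / 2) n) : ℂ)
      - (n : ℂ) ^ 2 * ((β / 2 : ℝ) : ℂ) * ((equilEnergy V ρ : ℝ) : ℂ)
      - (n : ℂ) ^ 2 * ((3 * β / 8 : ℝ) : ℂ)
      - (n : ℂ) * ((1 - β / 2 : ℝ) : ℂ) * ∫ t in (0:ℝ)..1, BetaEns.bt ρ P Vc d t‖ with hT
  have hev : ∀ᶠ n : ℕ in Filter.atTop, T n ≤ C + 2 * Real.log 2 := by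
    filter_upwards [hQ, hR1 R ((le_max_left _ _).trans (le_max_left _ _)),
      hR2 R ((le_max_right _ _).trans (le_max_left _ _))] with n h1 h2 h3
    have e2 := hlog hVcont h2
    have e3 := hlog BetaEns.V0_cont h3
    rw [intervalIntegral.integral_const_mul] at h1
    have e : (Real.log (partitionFn β V n) : ℂ)
      - (Real.log (partitionFn β (fun x => x ^ 2 / 2) n) : ℂ)
      - (n : ℂ) ^ 2 * ((β / 2 : ℝ) : ℂ) * ((equilEnergy V ρ : ℝ) : ℂ)
      - (n : ℂ) ^ 2 * ((3 * β / 8 : ℝ) : ℂ)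
      - (n : ℂ) * ((1 - β / 2 : ℝ) : ℂ) * ∫ t in (0:ℝ)..1, BetaEns.bt ρ P Vc d t
      = (((Real.log (BetaEns.Qb β V n R) - Real.log (BetaEns.Qb β BetaEns.V0 n R) : ℝ) : ℂ)
        - (n:ℂ) ^ 2 * ((β / 2 * (BetaEns.EE V (BetaEns.mu ρ) + 3 / 4) : ℝ) : ℂ)
        - n * (((1 - β / 2 : ℝ) : ℂ) * ∫ t in (0:ℝ)..1, BetaEns.bt ρ P Vc d t))
        + ((Real.log (partitionFn β V n) - Real.log (BetaEns.Qb β V n R) : ℝ) : ℂ)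
        - ((Real.log (partitionFn β BetaEns.V0 n) - Real.log (BetaEns.Qb β BetaEns.V0 n R) : ℝ) : ℂ) := by
      rw [hρ.equilEnergy_eq]
      change _ - (Real.log (partitionFn β BetaEns.V0 n) : ℂ) - _ - _ - _ = _
      push_cast
      ring
    rw [hT]
    beta_reduce
    rw [e]
    refine (norm_sub_le _ _).trans ?_
    refine (add_le_add_left (norm_add_le _ _) _).trans ?_
    rw [Complex.norm_real, Complex.norm_real, Real.norm_eq_abs, Real.norm_eq_abs]
    linarith
  -- The finitely many remaining `n` are absorbed into the constant.
  obtain ⟨N, hN⟩ := Filter.eventually_atTop.1 hev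
  have hTn : ∀ n, 0 ≤ T n := fun n => norm_nonneg _
  have hsum : 0 ≤ ∑ k ∈ Finset.range N, T k := Finset.sum_nonneg fun k _ => hTn k
  have hl2 := Real.log_nonneg one_le_two
  refine ⟨C + 2 * Real.log 2 + ∑ k ∈ Finset.range N, T k, by positivity, fun n _ => ?_⟩
  change T n ≤ _
  by_cases h : n < N
  · have := Finset.single_le_sum (f := T) (fun k _ => hTn k) (Finset.mem_range.2 h)
    linarith
  · linarith [hN n (not_lt.1 h)]
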